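/- Let s = 30, k = (1,3,5), and let F = (F_1,F_2,F_3) be a system of diagonal forms in 30 variables of degrees 1, 3, 5 with nonzero integer coefficients. Then the singular integral 𝕀(F) and the singular series 𝕊(F) are convergent, and for every fixed ε > 0 one has N_F(X) = 𝕀(F)·𝕊(F)·X^{21} + O(X^{21−1/8+ε}) for X ≥ 1. If moreover the system F(x) = 0 has a nonsingular solution over ℝ and a nonsingular solution over ℚ_p for every prime p, then 𝕀(F)·𝕊(F) > 0. -/

import Mathlib

/-!
The proof is the circle method on `(ℝ/ℤ)³` with a minor arc estimate that rests on Vinogradov's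
mean value theorem in degree five, followed by a local analysis of the two constants. Throughout,
`f(α)` is the exponential sum over `|x| ≤ M` with phase `α₁ x + α₃ x³ + α₅ x⁵`; the coefficients of
the forms enter by replacing `α` with a coordinatewise integer multiple.

**Mean value.** `decoupling` is `ℓ²` decoupling for the moment curve of degree `k` at the critical
exponent `k(k+1)` over `ℤ/p^{kN}`, with loss `p^{τN}` for each `τ > 0` and all large primes `p`,
proved by induction on `k`. Two pieces of the curve with parameters distinct modulo `p` satisfy
bilinear estimates: when the second piece lies in one class modulo a high power of `p`, the first
effectively lies on a moment curve of lower degree `l`, so decoupling in degree `l` applies. This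
gives the recursion `bil_rec` between bilinear moments of different degrees and scales, which is iterated in `bil_rounds`; each
completed iteration improves on the linear estimate it started from, and the broad-narrow argument
`dec_of_bil` returns from bilinear to linear (`dec_iterate`). Choosing one large prime `p` and
averaging over translations yields `vmvt`: the thirtieth moment of a degree five Weyl sum with bounded
coefficients is `O(X^{15+ε})`.

**Minor arcs.** Substituting `x = z + y` turns `f` into a degree five Weyl sum in `z` whose
coefficients of degrees `2` and `4` depend on `y`. Averaging over `1 ≤ y ≤ M` bounds the thirtieth moment
of `f` over a set by the full degree five moment times the largest number of shifts `y` leading to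
nearby coefficients (`shift_step`, `minor_of_count`). Off the major arcs in `(α₃, α₅)` at level `L`
this number is at most `1 + M/L` (`count_minor`), which gives `minor_mean`. When `(α₃, α₅)` is on
those arcs and `α` is not on a major arc of the torus, `f` is small pointwise (`ff_on_maj`). Hence
`minor_bound`: the thirtieth moment over the minor arcs at level `R = M^{1/8}` is
`O(M^{21+ε} / R)`.

**Singular integral and series.** On a major arc `f` is a complete sum times an oscillatory
integral, up to a small error (`approx`). The arcs at level `2 * R` which are not at level `R` are
minor, so `minor_bound` bounds the thirtieth powers of the complete sums and of the oscillatory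
integrals over dyadic ranges (`transfer`). Summation over dyadic `R` gives the tails `wv_tail` and
`tv_tail` of size `R^{-1+ε}`, hence absolute convergence (`integrable_singIntInner`,
`summable_singSerTerm`) by the inequality of arithmetic and geometric means. Together with
`major_approx` on the major arcs this proves the asymptotic formula `asymp`.

**Positivity.** For the singular integral, three columns of the Jacobian are independent at a real
nonsingular zero, so local coordinates (`exists_Psi`) show that `|F| ≤ ρ` on a set of volume
`≫ ρ³` in the unit box (`volume_near_zero`). Inserting a Gaussian factor in `β` replaces the singular
integral by a Gaussian density of the values of `F` at scale `ρ` (`smoothed_singInt`), which is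
therefore bounded below as `ρ → 0`; this is `singInt_pos`. For the singular series, the sum of the
terms over the divisors of `q` is the normalised number of solutions modulo `q`
(`sum_divisors_singSerTerm`). These densities are multiplicative (`TT_mul`) and bounded below along
the powers of each prime by lifting nonsingular solutions (`TT_prime_pow_ge`), while for large primes
absolute convergence makes the product of the local densities bounded below (`divisor_sum_ge`). As
`q` runs over factorials, this gives `singSer_pos`.
-/

open MeasureTheory Finset

noncomputable def e (θ : ℝ) : ℂ := Complex.exp (2 * Real.pi * Complex.I * θ)

/-- The diagonal form `F_i(t) = ∑_j u_{i,j} t_j^{k_i}` over a commutative ring. -/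
noncomputable def dF {R : Type*} [CommRing R] {n s : ℕ} (k : Fin n → ℕ)
    (u : Fin n → Fin s → ℤ) (i : Fin n) (t : Fin s → R) : R :=
  ∑ j, (u i j : R) * t j ^ k i

noncomputable def NF {n s : ℕ} (k : Fin n → ℕ) (u : Fin n → Fin s → ℤ) (X : ℝ) : ℕ :=
  Nat.card {x : Fin s → ℤ | (∀ j, |(x j : ℝ)| ≤ X) ∧ ∀ i, dF k u i x = 0}

noncomputable def singIntInner {n s : ℕ} (k : Fin n → ℕ) (u : Fin n → Fin s → ℤ)
    (β : Fin n → ℝ) : ℂ :=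
  ∫ t in Set.Icc (fun _ : Fin s => (-1 : ℝ)) (fun _ => 1),
    e (∑ i, β i * dF k u i t)

noncomputable def singInt {n s : ℕ} (k : Fin n → ℕ) (u : Fin n → Fin s → ℤ) : ℂ :=
  ∫ β : Fin n → ℝ, singIntInner k u β

noncomputable def singSerTerm {n s : ℕ} (k : Fin n → ℕ) (u : Fin n → Fin s → ℤ)
    (q : ℕ) : ℂ :=
  (1 / (q : ℂ) ^ s) *
    ∑ a ∈ (Fintype.piFinset fun _ : Fin n => Finset.Icc 1 q).filter
        (fun a => Nat.gcd (Finset.univ.gcd a) q = 1),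
      ∑ r ∈ Fintype.piFinset fun _ : Fin s => Finset.Icc 1 q,
        e ((∑ i, (a i : ℝ) * ((dF k u i fun j => ((r j : ℤ))) : ℝ)) / q)

noncomputable def singSer {n s : ℕ} (k : Fin n → ℕ) (u : Fin n → Fin s → ℤ) : ℂ :=
  ∑' q : ℕ, singSerTerm k u (q + 1)

/-- A nonsingular solution of the system `F = 0` over a field `K`. -/
def NonsingularSol {K : Type*} [Field K] {n s : ℕ} (k : Fin n → ℕ)
    (u : Fin n → Fin s → ℤ) (η : Fin s → K) : Prop :=
  (∀ i, dF k u i η = 0) ∧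
    (Matrix.of fun i j => (k i : K) * (u i j : K) * η j ^ (k i - 1)).rank = n

/-! ### Weighted norms and p-adic decoupling -/

/-- The weighted `ℓ^r` norm `(∑ w u^r)^{1/r}` on a finite type. -/
noncomputable def Lr {G : Type*} [Fintype G] (r : ℕ) (w u : G → ℝ) : ℝ :=
  (∑ g, w g * u g ^ r) ^ (1 / (r : ℝ))

section Lr
variable {G : Type*} [Fintype G] {r : ℕ} {w u v : G → ℝ}

lemma Lr_sum_nonneg (hw : ∀ g, 0 ≤ w g) (hu : ∀ g, 0 ≤ u g) : 0 ≤ ∑ g, w g * u g ^ r :=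
  Finset.sum_nonneg fun g _ => mul_nonneg (hw g) (pow_nonneg (hu g) _)

lemma Lr_nonneg (hw : ∀ g, 0 ≤ w g) (hu : ∀ g, 0 ≤ u g) : 0 ≤ Lr r w u :=
  Real.rpow_nonneg (Lr_sum_nonneg hw hu) _

lemma Lr_pow (hr : 1 ≤ r) (hw : ∀ g, 0 ≤ w g) (hu : ∀ g, 0 ≤ u g) :
    Lr r w u ^ r = ∑ g, w g * u g ^ r := by
  unfold Lr
  rw [one_div]
  exact Real.rpow_inv_natCast_pow (Lr_sum_nonneg hw hu) (by omega)

lemma Lr_mono (hw : ∀ g, 0 ≤ w g) (hu : ∀ g, 0 ≤ u g) (huv : ∀ g, u g ≤ v g) :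
    Lr r w u ≤ Lr r w v := by
  unfold Lr
  apply Real.rpow_le_rpow (Lr_sum_nonneg hw hu) _ (by positivity)
  exact Finset.sum_le_sum fun g _ =>
    mul_le_mul_of_nonneg_left (pow_le_pow_left₀ (hu g) (huv g) _) (hw g)

lemma Lr_zero (hr : 1 ≤ r) : Lr r w (fun _ => 0) = 0 := by
  unfold Lr
  have h : ∑ g, w g * (0 : ℝ) ^ r = 0 :=
    Finset.sum_eq_zero fun g _ => by rw [zero_pow (by omega), mul_zero]
  rw [h, Real.zero_rpow]
  have : (r : ℝ) ≠ 0 := by positivity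
  positivity

lemma Lr_const_mul (hr : 1 ≤ r) (hw : ∀ g, 0 ≤ w g) (hu : ∀ g, 0 ≤ u g) {c : ℝ} (hc : 0 ≤ c) :
    Lr r w (fun g => c * u g) = c * Lr r w u := by
  unfold Lr
  have h : ∑ g, w g * (c * u g) ^ r = c ^ r * ∑ g, w g * u g ^ r := by
    rw [Finset.mul_sum]
    exact Finset.sum_congr rfl fun g _ => by ring
  rw [h, Real.mul_rpow (by positivity) (Lr_sum_nonneg hw hu), one_div,
    Real.pow_rpow_inv_natCast hc (by omega)]

lemma Lr_add_le (hr : 1 ≤ r) (hw : ∀ g, 0 ≤ w g) (hu : ∀ g, 0 ≤ u g) (hv : ∀ g, 0 ≤ v g) :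
    Lr r w (fun g => u g + v g) ≤ Lr r w u + Lr r w v := by
  have key := Real.Lp_add_le_of_nonneg (s := Finset.univ) (p := (r : ℝ))
    (f := fun g => w g ^ (1 / (r : ℝ)) * u g) (g := fun g => w g ^ (1 / (r : ℝ)) * v g)
    (by exact_mod_cast hr)
    (fun g _ => mul_nonneg (Real.rpow_nonneg (hw g) _) (hu g))
    (fun g _ => mul_nonneg (Real.rpow_nonneg (hw g) _) (hv g))
  have aux : ∀ z : G → ℝ, ∀ g, (w g ^ (1 / (r : ℝ)) * z g) ^ (r : ℝ) = w g * z g ^ r := by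
    intro z g
    rw [Real.rpow_natCast, mul_pow, one_div, Real.rpow_inv_natCast_pow (hw g) (by omega)]
  simp only [← mul_add, aux] at key
  rw [Finset.sum_congr rfl (fun g _ => aux (fun g => u g + v g) g)] at key
  exact key

/-- Minkowski's inequality. -/
lemma Lr_sum_le {ι : Type*} (s : Finset ι) (n : ι → G → ℝ) (hr : 1 ≤ r) (hw : ∀ g, 0 ≤ w g)
    (hn : ∀ c g, 0 ≤ n c g) :
    Lr r w (fun g => ∑ c ∈ s, n c g) ≤ ∑ c ∈ s, Lr r w (n c) := by
  classical
  induction s using Finset.induction_on with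
  | empty => simp [Lr_zero hr]
  | insert c s hc ih =>
    simp only [Finset.sum_insert hc]
    exact (Lr_add_le hr hw (hn c) fun g => Finset.sum_nonneg fun c _ => hn c g).trans
      (add_le_add le_rfl ih)

/-- If `t^r ≤ ∑ w u^r` then `t ≤ Lr r w u`. -/
lemma le_Lr (hr : 1 ≤ r) {t : ℝ} (ht : 0 ≤ t) (h : t ^ r ≤ ∑ g, w g * u g ^ r) :
    t ≤ Lr r w u := by
  unfold Lr
  rw [one_div]
  calc t = (t ^ r) ^ ((r : ℝ)⁻¹) := (Real.pow_rpow_inv_natCast ht (by omega)).symm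
    _ ≤ _ := Real.rpow_le_rpow (by positivity) h (by positivity)

lemma Lr_le (hr : 1 ≤ r) (hw : ∀ g, 0 ≤ w g) (hu : ∀ g, 0 ≤ u g) {t : ℝ} (ht : 0 ≤ t)
    (h : ∑ g, w g * u g ^ r ≤ t ^ r) : Lr r w u ≤ t := by
  unfold Lr
  rw [one_div]
  calc _ ≤ (t ^ r) ^ ((r : ℝ)⁻¹) := Real.rpow_le_rpow (Lr_sum_nonneg hw hu) h (by positivity)
    _ = t := Real.pow_rpow_inv_natCast ht (by omega)

end Lr

/-- The sum `∑_{x ∈ S} a_x ψ(g, x)`. -/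
noncomputable def fs {G : Type*} (a : ℤ → ℂ) (ψ : G → ℤ → ℂ) (S : Finset ℤ) (g : G) : ℂ :=
  ∑ x ∈ S, a x * ψ g x

/-- The part of `S` on which `y` lies in the residue class `c` modulo `p^n`. -/
def cls (p : ℕ) (y : ℤ → ℤ) (S : Finset ℤ) (n : ℕ) (c : ZMod (p ^ n)) : Finset ℤ :=
  S.filter fun x => ((y x : ℤ) : ZMod (p ^ n)) = c

/-- The character `z ↦ exp(2πi (α_0 + α_1 z + ⋯ + α_k z^k)/p^M)`. -/
noncomputable def ph (p k M : ℕ) [Fact p.Prime] (α : Fin (k + 1) → ZMod (p ^ M)) (z : ℤ) : ℂ :=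
  ZMod.stdAddChar (∑ j, α j * ((z : ℤ) : ZMod (p ^ M)) ^ (j : ℕ))

/-- Half the critical exponent for degree `k`. -/
def rr (k : ℕ) : ℕ := k * (k + 1) / 2

lemma two_rr (k : ℕ) : 2 * rr k = k * (k + 1) :=
  Nat.mul_div_cancel' (Nat.even_mul_succ_self k).two_dvd

lemma rr_pos {k : ℕ} (hk : 1 ≤ k) : 1 ≤ rr k := by
  have := two_rr k
  nlinarith

/-- `p`-adic `ℓ²` decoupling for the moment curve of degree `k` at scale `p^{-N}`, with squared
constant `Δ`; the spatial variable `α` runs over all polynomials modulo `p^{kN}` of degree at most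
`k`, and neither side is normalised. The points of the curve have parameters `y x`. -/
def Dec (p k N : ℕ) [Fact p.Prime] (Δ : ℝ) : Prop :=
  ∀ (S : Finset ℤ) (y : ℤ → ℤ) (a : ℤ → ℂ),
    Lr (rr k) 1 (fun α => ‖fs a (fun α x => ph p k (k * N) α (y x)) S α‖ ^ 2) ≤
      Δ * ∑ c : ZMod (p ^ N),
        Lr (rr k) 1 (fun α => ‖fs a (fun α x => ph p k (k * N) α (y x)) (cls p y S N c) α‖ ^ 2)

lemma ph_norm (p k M : ℕ) [Fact p.Prime] (α : Fin (k + 1) → ZMod (p ^ M)) (z : ℤ) :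
    ‖ph p k M α z‖ = 1 := by
  unfold ph
  rw [ZMod.stdAddChar_apply]
  exact Circle.norm_coe _

lemma ph_add (p k M : ℕ) [Fact p.Prime] (α β : Fin (k + 1) → ZMod (p ^ M)) (z : ℤ) :
    ph p k M (α + β) z = ph p k M α z * ph p k M β z := by
  unfold ph
  rw [← AddChar.map_add_eq_mul, ← Finset.sum_add_distrib]
  congr 1
  exact Finset.sum_congr rfl fun j _ => by simp [add_mul]

/-- Decoupling passes to any weighted average over a finite group `G` which contains, through an
arbitrary map `κ`, enough translations acting on the sum as the moment curve; the weight has to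
be invariant under these translations. -/
lemma Dec.transfer {p k N : ℕ} [Fact p.Prime] {Δ : ℝ} (hD : Dec p k N Δ) (hk : 1 ≤ k)
    (hΔ : 0 ≤ Δ) {G : Type*} [Fintype G] [AddCommGroup G] (ψ : G → ℤ → ℂ) (w : G → ℝ)
    (S : Finset ℤ) (a : ℤ → ℂ) (z : ℤ → ℤ) (hw : ∀ g, 0 ≤ w g)
    (hψ : ∀ g h x, ψ (g + h) x = ψ g x * ψ h x)
    (κ : (Fin (k + 1) → ZMod (p ^ (k * N))) → G)
    (hκ : ∀ t, ∀ x ∈ S, ψ (κ t) x = ph p k (k * N) t (z x))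
    (hwκ : ∀ t g, w (g + κ t) = w g) :
    Lr (rr k) w (fun g => ‖fs a ψ S g‖ ^ 2) ≤
      Δ * ∑ c : ZMod (p ^ N), Lr (rr k) w (fun g => ‖fs a ψ (cls p z S N c) g‖ ^ 2) := by
  set r := rr k
  have hr : 1 ≤ r := rr_pos hk
  let T := Fin (k + 1) → ZMod (p ^ (k * N))
  have hT : 0 < (Fintype.card T : ℝ) := by exact_mod_cast Fintype.card_pos
  -- the inner norm over the translations
  let I : Finset ℤ → G → ℝ := fun S' g => Lr r 1 (fun t : T =>
    ‖fs (fun x => a x * ψ g x) (fun α x => ph p k (k * N) α (z x)) S' t‖ ^ 2)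
  have hI0 : ∀ S' g, 0 ≤ I S' g := fun S' g =>
    Lr_nonneg (fun _ => zero_le_one) fun _ => by positivity
  have hIr : ∀ S' ⊆ S, ∑ g, w g * I S' g ^ r =
      Fintype.card T * ∑ g, w g * (‖fs a ψ S' g‖ ^ 2) ^ r := by
    intro S' hS'
    have h1 : ∀ g, I S' g ^ r = ∑ t : T, (‖fs a ψ S' (g + κ t)‖ ^ 2) ^ r := by
      intro g
      refine (Lr_pow (w := fun _ => (1 : ℝ)) hr (fun _ => zero_le_one) fun _ => by positivity).trans ?_
      refine Finset.sum_congr rfl fun t _ => ?_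
      rw [one_mul]
      congr 3
      refine Finset.sum_congr rfl fun x hx => ?_
      rw [hψ, hκ t x (hS' hx), mul_assoc]
    simp_rw [h1, Finset.mul_sum]
    rw [Finset.sum_comm]
    have h2 : ∀ t : T, ∑ g, w g * (‖fs a ψ S' (g + κ t)‖ ^ 2) ^ r =
        ∑ g, w g * (‖fs a ψ S' g‖ ^ 2) ^ r := by
      intro t
      rw [← Equiv.sum_comp (Equiv.addRight (κ t))
        (fun g => w g * (‖fs a ψ S' g‖ ^ 2) ^ r)]
      exact Finset.sum_congr rfl fun g _ => by simp [hwκ]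
    rw [Finset.sum_congr rfl fun t _ => h2 t, Finset.sum_const, nsmul_eq_mul, Finset.card_univ,
      Finset.mul_sum]
  set q : ℝ := (Fintype.card T : ℝ) ^ (1 / (r : ℝ))
  have hq : 0 < q := Real.rpow_pos_of_pos hT _
  have hIL : ∀ S' ⊆ S, Lr r w (I S') = q * Lr r w (fun g => ‖fs a ψ S' g‖ ^ 2) := by
    intro S' hS'
    have := hIr S' hS'
    unfold Lr
    rw [this, Real.mul_rpow hT.le (Lr_sum_nonneg hw fun _ => by positivity)]
  have hmain : Lr r w (I S) ≤ Δ * ∑ c : ZMod (p ^ N), Lr r w (I (cls p z S N c)) := by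
    calc Lr r w (I S) ≤ Lr r w (fun g => Δ * ∑ c : ZMod (p ^ N), I (cls p z S N c) g) :=
          Lr_mono hw (hI0 S) fun g => hD S z _
      _ = Δ * Lr r w (fun g => ∑ c : ZMod (p ^ N), I (cls p z S N c) g) :=
          Lr_const_mul hr hw (fun g => Finset.sum_nonneg fun c _ => hI0 _ g) hΔ
      _ ≤ _ := by
          refine mul_le_mul_of_nonneg_left ?_ hΔ
          exact Lr_sum_le Finset.univ (fun c => I (cls p z S N c)) hr hw fun c g => hI0 _ g
  rw [hIL S subset_rfl] at hmain
  rw [Finset.sum_congr rfl fun c _ => hIL (cls p z S N c) (Finset.filter_subset _ _),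
    ← Finset.mul_sum, mul_left_comm] at hmain
  exact le_of_mul_le_mul_left hmain hq

/-! ### Residue classes modulo prime powers -/

/-- `y` is constant modulo `p^n` on `S`. -/
def InCls (p : ℕ) (y : ℤ → ℤ) (S : Finset ℤ) (n : ℕ) : Prop :=
  ∀ x ∈ S, ∀ x₂ ∈ S, (p : ℤ) ^ n ∣ y x - y x₂

/-- The values of `y` on `S` and on `S'` never agree modulo `p`. -/
def SepCls (p : ℕ) (y : ℤ → ℤ) (S S' : Finset ℤ) : Prop :=
  ∀ x ∈ S, ∀ x' ∈ S', ¬ (p : ℤ) ∣ y x - y x'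

lemma zmod_pow_eq_iff (p n : ℕ) (u v : ℤ) :
    ((u : ℤ) : ZMod (p ^ n)) = (v : ℤ) ↔ (p : ℤ) ^ n ∣ u - v := by
  rw [ZMod.intCast_eq_intCast_iff_dvd_sub]
  push_cast
  rw [← dvd_neg, neg_sub]

lemma cls_subset (p : ℕ) (y : ℤ → ℤ) (S : Finset ℤ) (n : ℕ) (c : ZMod (p ^ n)) :
    cls p y S n c ⊆ S := Finset.filter_subset _ _

lemma mem_cls {p : ℕ} {y : ℤ → ℤ} {S : Finset ℤ} {n : ℕ} {c : ZMod (p ^ n)} {x : ℤ} :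
    x ∈ cls p y S n c ↔ x ∈ S ∧ ((y x : ℤ) : ZMod (p ^ n)) = c := Finset.mem_filter

lemma inCls_cls (p : ℕ) (y : ℤ → ℤ) (S : Finset ℤ) (n : ℕ) (c : ZMod (p ^ n)) :
    InCls p y (cls p y S n c) n := by
  intro x hx x' hx'
  rw [mem_cls] at hx hx'
  rw [← zmod_pow_eq_iff, hx.2, hx'.2]

lemma InCls.mono {p : ℕ} {y : ℤ → ℤ} {S T : Finset ℤ} {n : ℕ} (h : InCls p y S n) (hT : T ⊆ S) :
    InCls p y T n := fun x hx x' hx' => h x (hT hx) x' (hT hx')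

lemma SepCls.mono {p : ℕ} {y : ℤ → ℤ} {S S' T T' : Finset ℤ} (h : SepCls p y S S') (hT : T ⊆ S)
    (hT' : T' ⊆ S') : SepCls p y T T' := fun x hx x' hx' => h x (hT hx) x' (hT' hx')

lemma SepCls.symm {p : ℕ} {y : ℤ → ℤ} {S S' : Finset ℤ} (h : SepCls p y S S') : SepCls p y S' S :=
  fun x hx x' hx' hd => h x' hx' x hx (by rwa [← dvd_neg, neg_sub])

/-- Sums over residue classes only depend on the partition into classes. -/
lemma sum_cls_eq_parts (p : ℕ) [Fact p.Prime] (y : ℤ → ℤ) (S : Finset ℤ) (n : ℕ)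
    (Φ : Finset ℤ → ℝ) (h0 : Φ ∅ = 0) :
    ∑ c : ZMod (p ^ n), Φ (cls p y S n c) =
      ∑ J ∈ S.image (fun x => S.filter fun x' => (p : ℤ) ^ n ∣ y x' - y x), Φ J := by
  classical
  have h1 : ∑ c : ZMod (p ^ n), Φ (cls p y S n c) =
      ∑ c ∈ S.image (fun x => ((y x : ℤ) : ZMod (p ^ n))), Φ (cls p y S n c) := by
    symm
    apply Finset.sum_subset (Finset.subset_univ _)
    intro c _ hc
    have : cls p y S n c = ∅ := by
      rw [Finset.eq_empty_iff_forall_notMem]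
      intro x hx
      rw [mem_cls] at hx
      exact hc (Finset.mem_image.2 ⟨x, hx.1, hx.2⟩)
    rw [this, h0]
  have h2 : S.image (fun x => S.filter fun x' => (p : ℤ) ^ n ∣ y x' - y x) =
      (S.image (fun x => ((y x : ℤ) : ZMod (p ^ n)))).image (cls p y S n) := by
    rw [Finset.image_image]
    apply Finset.image_congr
    intro x _
    ext x'
    simp [mem_cls, zmod_pow_eq_iff]
  rw [h1, h2]
  refine (Finset.sum_image ?_).symm
  intro c hc c' _ hcc
  obtain ⟨x, hx, rfl⟩ := Finset.mem_image.1 hc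
  have : x ∈ cls p y S n ((y x : ℤ) : ZMod (p ^ n)) := mem_cls.2 ⟨hx, rfl⟩
  rw [hcc] at this
  exact (mem_cls.1 this).2

lemma sum_cls_congr (p : ℕ) [Fact p.Prime] (y z : ℤ → ℤ) (S : Finset ℤ) (n m : ℕ)
    (Φ : Finset ℤ → ℝ) (h0 : Φ ∅ = 0)
    (h : ∀ x ∈ S, ∀ x' ∈ S, (p : ℤ) ^ n ∣ y x - y x' ↔ (p : ℤ) ^ m ∣ z x - z x') :
    ∑ c : ZMod (p ^ n), Φ (cls p y S n c) = ∑ c : ZMod (p ^ m), Φ (cls p z S m c) := by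
  classical
  rw [sum_cls_eq_parts p y S n Φ h0, sum_cls_eq_parts p z S m Φ h0]
  refine Finset.sum_congr (Finset.image_congr fun x hx => ?_) fun _ _ => rfl
  exact Finset.filter_congr fun x' hx' => h x' hx' x hx

/-- Classes modulo `p^m` refine classes modulo `p^n` when `n ≤ m`. -/
lemma sum_cls_cls (p : ℕ) [Fact p.Prime] (y : ℤ → ℤ) (S : Finset ℤ) {n m : ℕ} (hnm : n ≤ m)
    (Φ : Finset ℤ → ℝ) (h0 : Φ ∅ = 0) :
    ∑ c : ZMod (p ^ n), ∑ d : ZMod (p ^ m), Φ (cls p y (cls p y S n c) m d) =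
      ∑ d : ZMod (p ^ m), Φ (cls p y S m d) := by
  classical
  rw [Finset.sum_comm]
  refine Finset.sum_congr rfl fun d _ => ?_
  have hdiv : p ^ n ∣ p ^ m := pow_dvd_pow _ hnm
  rw [Finset.sum_eq_single (ZMod.castHom hdiv (ZMod (p ^ n)) d)]
  · congr 1
    ext x
    simp only [mem_cls]
    constructor
    · rintro ⟨⟨h1, _⟩, h3⟩
      exact ⟨h1, h3⟩
    · rintro ⟨h1, h3⟩
      refine ⟨⟨h1, ?_⟩, h3⟩
      rw [← h3, map_intCast]
  · intro c _ hc
    have : cls p y (cls p y S n c) m d = ∅ := by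
      rw [Finset.eq_empty_iff_forall_notMem]
      intro x hx
      rw [mem_cls, mem_cls] at hx
      apply hc
      rw [← hx.1.2, ← hx.2, map_intCast]
    rw [this, h0]
  · simp

lemma fs_eq_sum_cls {G : Type*} (p : ℕ) [Fact p.Prime] (y : ℤ → ℤ) (S : Finset ℤ) (n : ℕ)
    (a : ℤ → ℂ) (ψ : G → ℤ → ℂ) (g : G) :
    fs a ψ S g = ∑ c : ZMod (p ^ n), fs a ψ (cls p y S n c) g := by
  unfold fs cls
  exact (Finset.sum_fiberwise_of_maps_to (s := S) (t := Finset.univ)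
    (g := fun x => ((y x : ℤ) : ZMod (p ^ n))) (fun _ _ => Finset.mem_univ _) _).symm

lemma fs_empty {G : Type*} (a : ℤ → ℂ) (ψ : G → ℤ → ℂ) (g : G) : fs a ψ ∅ g = 0 := by
  simp [fs]

/-- Cauchy-Schwarz decoupling into classes modulo `p^n`. -/
lemma trivial_dec {G : Type*} [Fintype G] (p : ℕ) [Fact p.Prime] (y : ℤ → ℤ) (S : Finset ℤ)
    (n : ℕ) (a : ℤ → ℂ) (ψ : G → ℤ → ℂ) {r : ℕ} (hr : 1 ≤ r) {w : G → ℝ} (hw : ∀ g, 0 ≤ w g) :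
    Lr r w (fun g => ‖fs a ψ S g‖ ^ 2) ≤
      (p : ℝ) ^ n * ∑ c : ZMod (p ^ n), Lr r w (fun g => ‖fs a ψ (cls p y S n c) g‖ ^ 2) := by
  calc Lr r w (fun g => ‖fs a ψ S g‖ ^ 2)
      ≤ Lr r w (fun g => (p : ℝ) ^ n * ∑ c : ZMod (p ^ n), ‖fs a ψ (cls p y S n c) g‖ ^ 2) := by
        refine Lr_mono hw (fun _ => by positivity) fun g => ?_
        rw [fs_eq_sum_cls p y S n]
        calc ‖∑ c : ZMod (p ^ n), fs a ψ (cls p y S n c) g‖ ^ 2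
            ≤ (∑ c : ZMod (p ^ n), ‖fs a ψ (cls p y S n c) g‖) ^ 2 :=
              pow_le_pow_left₀ (norm_nonneg _) (norm_sum_le _ _) 2
          _ ≤ (Finset.univ : Finset (ZMod (p ^ n))).card *
              ∑ c : ZMod (p ^ n), ‖fs a ψ (cls p y S n c) g‖ ^ 2 := sq_sum_le_card_mul_sum_sq
          _ = _ := by rw [Finset.card_univ, ZMod.card]; push_cast; rfl
    _ = (p : ℝ) ^ n * Lr r w (fun g => ∑ c : ZMod (p ^ n), ‖fs a ψ (cls p y S n c) g‖ ^ 2) :=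
        Lr_const_mul hr hw (fun g => Finset.sum_nonneg fun _ _ => by positivity) (by positivity)
    _ ≤ _ := by
        refine mul_le_mul_of_nonneg_left ?_ (by positivity)
        exact Lr_sum_le Finset.univ (fun c g => ‖fs a ψ (cls p y S n c) g‖ ^ 2) hr hw
          fun c g => by positivity

/-- Coefficient vector of a polynomial. -/
noncomputable def pcoef (k : ℕ) {R : Type*} [CommRing R] (P : Polynomial R) : Fin (k + 1) → R :=
  fun j => P.coeff j

lemma ph_pcoef (p k M : ℕ) [Fact p.Prime] (P : Polynomial (ZMod (p ^ M))) (hP : P.natDegree ≤ k)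
    (z : ℤ) : ph p k M (pcoef k P) z = ZMod.stdAddChar (P.eval ((z : ℤ) : ZMod (p ^ M))) := by
  unfold ph pcoef
  rw [Polynomial.eval_eq_sum_range' (Nat.lt_succ_of_le hP), ← Fin.sum_univ_eq_sum_range
    (fun i => P.coeff i * ((z : ℤ) : ZMod (p ^ M)) ^ i)]

/-- The standard characters modulo `p^A` and `p^M` are compatible. -/
lemma stdAddChar_pow_mul (p : ℕ) [Fact p.Prime] {A M : ℕ} (h : A ≤ M) (n : ℤ) :
    ZMod.stdAddChar (((p : ℤ) ^ (M - A) * n : ℤ) : ZMod (p ^ M)) =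
      ZMod.stdAddChar ((n : ℤ) : ZMod (p ^ A)) := by
  rw [ZMod.stdAddChar_coe, ZMod.stdAddChar_coe]
  congr 1
  have hp : (p : ℂ) ≠ 0 := by exact_mod_cast (Fact.out : p.Prime).ne_zero
  obtain ⟨B, rfl⟩ := Nat.exists_eq_add_of_le h
  rw [Nat.add_sub_cancel_left]
  push_cast
  rw [pow_add]
  field_simp

/-- Evaluating the phase on lifts: `t` is lifted by `ZMod.val`. -/
lemma ph_lift (p k A M : ℕ) [Fact p.Prime] (h : A ≤ M) (t : Fin (k + 1) → ZMod (p ^ A)) (z : ℤ) :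
    ZMod.stdAddChar (((p : ZMod (p ^ M)) ^ (M - A)) *
      ∑ j : Fin (k + 1), ((t j).val : ZMod (p ^ M)) * ((z : ℤ) : ZMod (p ^ M)) ^ (j : ℕ)) =
      ph p k A t z := by
  have := stdAddChar_pow_mul p h (∑ j : Fin (k + 1), ((t j).val : ℤ) * z ^ (j : ℕ))
  unfold ph
  push_cast at this
  rw [this]
  congr 1
  exact Finset.sum_congr rfl fun j _ => by rw [ZMod.natCast_zmod_val]

/-! ### Affine rescaling and Hermite interpolation -/

lemma InCls.exists_eq {p : ℕ} {y : ℤ → ℤ} {S : Finset ℤ} {a : ℕ} (h : InCls p y S a) {x₀ : ℤ}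
    (hx₀ : x₀ ∈ S) : ∀ x ∈ S, y x = y x₀ + (p : ℤ) ^ a * ((y x - y x₀) / (p : ℤ) ^ a) := by
  intro x hx
  rw [Int.mul_ediv_cancel' (h x hx x₀ hx₀)]
  ring

lemma InCls.dvd_iff {p : ℕ} [Fact p.Prime] {y : ℤ → ℤ} {S : Finset ℤ} {a : ℕ}
    (h : InCls p y S a) {x₀ : ℤ}
    (hx₀ : x₀ ∈ S) (n : ℕ) : ∀ x ∈ S, ∀ x' ∈ S,
      ((p : ℤ) ^ n ∣ (y x - y x₀) / (p : ℤ) ^ a - (y x' - y x₀) / (p : ℤ) ^ a ↔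
        (p : ℤ) ^ (a + n) ∣ y x - y x') := by
  intro x hx x' hx'
  have hp : (p : ℤ) ^ a ≠ 0 := pow_ne_zero _ (by exact_mod_cast (Fact.out : p.Prime).ne_zero)
  have e1 := h.exists_eq hx₀ x hx
  have e2 := h.exists_eq hx₀ x' hx'
  have : y x - y x' = (p : ℤ) ^ a *
      ((y x - y x₀) / (p : ℤ) ^ a - (y x' - y x₀) / (p : ℤ) ^ a) := by
    rw [mul_sub]; linarith
  rw [this, pow_add, mul_dvd_mul_iff_left hp]

/-- Affine rescaling: decoupling of a single class modulo `p^a` down to classes modulo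
`p^(a+N)`. -/
lemma Dec.rescale {p k N : ℕ} [Fact p.Prime] {Δ : ℝ} (hD : Dec p k N Δ) (hk : 1 ≤ k)
    (hΔ : 0 ≤ Δ) (a : ℕ) (S : Finset ℤ) (y : ℤ → ℤ) (A : ℤ → ℂ) (hS : InCls p y S a) :
    Lr (rr k) 1 (fun α => ‖fs A (fun α x => ph p k (k * (a + N)) α (y x)) S α‖ ^ 2) ≤
      Δ * ∑ c : ZMod (p ^ (a + N)),
        Lr (rr k) 1 (fun α =>
          ‖fs A (fun α x => ph p k (k * (a + N)) α (y x)) (cls p y S (a + N) c) α‖ ^ 2) := by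
  have hr : 1 ≤ rr k := rr_pos hk
  rcases S.eq_empty_or_nonempty with rfl | ⟨x₀, hx₀⟩
  · simp only [fs_empty, norm_zero, ne_eq, OfNat.ofNat_ne_zero, not_false_eq_true, zero_pow]
    rw [Lr_zero hr]
    exact mul_nonneg hΔ (Finset.sum_nonneg fun c _ =>
      Lr_nonneg (fun _ => zero_le_one) fun _ => by positivity)
  set z : ℤ → ℤ := fun x => (y x - y x₀) / (p : ℤ) ^ a with hz
  set M := k * (a + N) with hM
  set ψ : (Fin (k + 1) → ZMod (p ^ M)) → ℤ → ℂ := fun α x => ph p k M α (y x) with hψ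
  let P : (Fin (k + 1) → ZMod (p ^ (k * N))) → Polynomial (ZMod (p ^ M)) := fun t =>
    ∑ j : Fin (k + 1), Polynomial.C (((t j).val : ZMod (p ^ M)) * (p : ZMod (p ^ M)) ^ (a * (k - j))) *
      (Polynomial.X - Polynomial.C ((y x₀ : ℤ) : ZMod (p ^ M))) ^ (j : ℕ)
  have hPd : ∀ t, (P t).natDegree ≤ k := by
    intro t
    refine Polynomial.natDegree_sum_le_of_forall_le _ _ fun j _ => ?_
    refine (Polynomial.natDegree_C_mul_le _ _).trans ?_
    refine (Polynomial.natDegree_pow_le).trans ?_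
    have := Polynomial.natDegree_X_sub_C_le ((y x₀ : ℤ) : ZMod (p ^ M))
    have hj := j.2
    nlinarith
  have key := hD.transfer hk hΔ ψ 1 S A z (fun _ => zero_le_one)
    (fun g h x => ph_add p k M g h (y x)) (fun t => pcoef k (P t))
    (by
      intro t x hx
      simp only [hψ]
      rw [ph_pcoef p k M _ (hPd t)]
      have hA : k * N ≤ M := Nat.mul_le_mul_left _ (by omega)
      rw [← ph_lift p k (k * N) M hA t]
      congr 1
      have hy := hS.exists_eq hx₀ x hx
      simp only [P, Polynomial.eval_finsetSum]
      rw [Finset.mul_sum]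
      refine Finset.sum_congr rfl fun j _ => ?_
      rw [Polynomial.eval_mul, Polynomial.eval_C, Polynomial.eval_pow, Polynomial.eval_sub,
        Polynomial.eval_X, Polynomial.eval_C]
      have h1 : ((y x : ℤ) : ZMod (p ^ M)) - ((y x₀ : ℤ) : ZMod (p ^ M)) =
          (p : ZMod (p ^ M)) ^ a * ((z x : ℤ) : ZMod (p ^ M)) := by
        rw [hy]; simp only [hz]; push_cast; ring
      rw [h1, mul_pow, ← pow_mul]
      have h2 : M - k * N = a * (k - j) + a * j := by
        have hj : (j : ℕ) ≤ k := Nat.le_of_lt_succ j.2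
        obtain ⟨d, hd⟩ := Nat.exists_eq_add_of_le hj
        rw [← Nat.mul_add, Nat.sub_add_cancel hj, hM, Nat.mul_add, Nat.add_sub_cancel, mul_comm]
      rw [h2, pow_add]
      ring)
    (fun _ _ => rfl)
  refine key.trans (le_of_eq ?_)
  congr 1
  refine sum_cls_congr p z y S N (a + N) (fun T => Lr (rr k) 1 fun α => ‖fs A ψ T α‖ ^ 2) ?_
    (hS.dvd_iff hx₀ N)
  simp only [fs_empty, norm_zero, ne_eq, OfNat.ofNat_ne_zero, not_false_eq_true, zero_pow]
  exact Lr_zero hr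

section crt
open Polynomial

/-- A polynomial whose derivative is divisible by `(X - c)^m` agrees with its value at `c` up to a
multiple of `(X - c)^(m+1)`, if `1, …, m` are invertible. -/
lemma dvd_sub_of_dvd_derivative {R : Type*} [CommRing R] (m : ℕ)
    (hm : ∀ i : ℕ, 1 ≤ i → i ≤ m → IsUnit (i : R)) (P : R[X]) (c : R)
    (h : (X - C c) ^ m ∣ derivative P) : (X - C c) ^ (m + 1) ∣ P - C (P.eval c) := by
  have hcomp : ∀ Q : R[X], (Q.comp (X + C c)).comp (X - C c) = Q := by
    intro Q
    rw [comp_assoc]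
    simp
  obtain ⟨D, hD⟩ := h
  have h1 : X ^ m ∣ derivative (P.comp (X + C c)) := by
    rw [derivative_comp, hD]
    refine Dvd.dvd.mul_left ?_ _
    exact ⟨D.comp (X + C c), by simp⟩
  have h2 : X ^ (m + 1) ∣ P.comp (X + C c) - C (P.eval c) := by
    rw [X_pow_dvd_iff] at h1 ⊢
    intro d hd
    rcases d with _ | d
    · rw [coeff_sub, coeff_C_zero, coeff_zero_eq_eval_zero, eval_comp]
      simp
    · have := h1 d (by omega)
      rw [coeff_derivative] at this
      rw [coeff_sub, coeff_C_succ, sub_zero]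
      have hu := hm (d + 1) (by omega) (by omega)
      push_cast at hu
      exact hu.mul_left_eq_zero.1 this
  obtain ⟨Q, hQ⟩ := h2
  refine ⟨Q.comp (X - C c), ?_⟩
  have h3 := congrArg (fun Q : R[X] => Q.comp (X - C c)) hQ
  simp only [sub_comp, hcomp, mul_comp, pow_comp, X_comp, C_comp] at h3
  exact h3

/-- Every polynomial of degree `< k` is the derivative of one of degree `≤ k`. -/
lemma exists_antideriv {R : Type*} [CommRing R] (k : ℕ)
    (hk : ∀ i : ℕ, 1 ≤ i → i ≤ k → IsUnit (i : R)) (H : R[X]) (hH : ∀ i, k ≤ i → H.coeff i = 0) :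
    ∃ P : R[X], P.natDegree ≤ k ∧ derivative P = H := by
  refine ⟨∑ i ∈ Finset.range k, C (H.coeff i * Ring.inverse ((i + 1 : ℕ) : R)) * X ^ (i + 1), ?_, ?_⟩
  · refine natDegree_sum_le_of_forall_le _ _ fun i hi => ?_
    have := Finset.mem_range.1 hi
    exact (natDegree_C_mul_X_pow_le _ _).trans (by omega)
  · rw [derivative_sum]
    have h1 : ∀ i ∈ Finset.range k,
        derivative (C (H.coeff i * Ring.inverse ((i + 1 : ℕ) : R)) * X ^ (i + 1)) =
          C (H.coeff i) * X ^ i := by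
      intro i hi
      have hu := hk (i + 1) (by omega) (by have := Finset.mem_range.1 hi; omega)
      rw [derivative_C_mul_X_pow, Nat.add_sub_cancel, mul_assoc, Ring.inverse_mul_cancel _ hu,
        mul_one]
    rw [Finset.sum_congr rfl h1]
    ext n
    rw [finsetSum_coeff]
    simp only [coeff_C_mul_X_pow]
    rw [Finset.sum_ite_eq]
    split_ifs with hn
    · rfl
    · rw [hH n (by simpa using hn)]

/-- Hermite interpolation at two points `c`, `c'` with invertible difference, with the constant
term at `c'` left free. -/
lemma hermite {R : Type*} [CommRing R] [Nontrivial R] (k l : ℕ) (hl : l ≤ k)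
    (hk : ∀ i : ℕ, 1 ≤ i → i ≤ k → IsUnit (i : R)) (c c' : R) (hc : IsUnit (c' - c)) (A : R[X]) :
    ∃ P : R[X], P.natDegree ≤ k ∧ (X - C c) ^ (l + 1) ∣ P - A ∧
      ∃ d : R, (X - C c') ^ (k - l + 1) ∣ P - C d := by
  have hcop : IsCoprime ((X - C c) ^ l) ((X - C c') ^ (k - l)) := by
    apply IsCoprime.pow
    obtain ⟨u, hu⟩ := hc
    refine ⟨C (↑u⁻¹ : R), -C (↑u⁻¹ : R), ?_⟩
    have : C (↑u⁻¹ : R) * C (c' - c) = 1 := by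
      rw [← C_mul, ← hu, Units.inv_mul, C_1]
    rw [C_sub] at this
    linear_combination this
  obtain ⟨U, V, hUV⟩ := hcop
  set m := (X - C c) ^ l * (X - C c') ^ (k - l) with hm
  have hmm : m.Monic := ((monic_X_sub_C c).pow l).mul ((monic_X_sub_C c').pow (k - l))
  have hmd : m.natDegree = k := by
    rw [hm, Monic.natDegree_mul ((monic_X_sub_C c).pow l) ((monic_X_sub_C c').pow (k - l)),
      (monic_X_sub_C c).natDegree_pow, (monic_X_sub_C c').natDegree_pow, natDegree_X_sub_C,
      natDegree_X_sub_C]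
    omega
  set T := derivative A * (V * (X - C c') ^ (k - l)) with hT
  set H := T %ₘ m with hH
  have hdiv := modByMonic_add_div T m
  have hH1 : (X - C c) ^ l ∣ H - derivative A := by
    refine ⟨-(T /ₘ m) * (X - C c') ^ (k - l) - derivative A * U, ?_⟩
    have : H = T - m * (T /ₘ m) := eq_sub_of_add_eq hdiv
    rw [this, hT, hm]
    linear_combination (derivative A) * hUV
  have hH2 : (X - C c') ^ (k - l) ∣ H := by
    refine ⟨derivative A * V - (X - C c) ^ l * (T /ₘ m), ?_⟩
    have : H = T - m * (T /ₘ m) := eq_sub_of_add_eq hdiv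
    rw [this, hT, hm]
    ring
  have hHc : ∀ i, k ≤ i → H.coeff i = 0 := by
    intro i hi
    apply coeff_eq_zero_of_degree_lt
    refine (degree_modByMonic_lt T hmm).trans_le ?_
    rw [degree_eq_natDegree hmm.ne_zero, hmd]
    exact_mod_cast hi
  obtain ⟨P₀, hP₀, hP₀'⟩ := exists_antideriv k hk H hHc
  set P := P₀ + C (A.eval c - P₀.eval c) with hP
  have hPder : derivative P = H := by rw [hP, derivative_add, derivative_C, add_zero, hP₀']
  refine ⟨P, ?_, ?_, P.eval c', ?_⟩
  · rw [hP, natDegree_add_C]; exact hP₀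
  · have := dvd_sub_of_dvd_derivative l (fun i h1 h2 => hk i h1 (h2.trans hl)) (P - A) c
      (by rw [derivative_sub, hPder]; exact hH1)
    have h0 : (P - A).eval c = 0 := by simp [hP]
    rwa [h0, C_0, sub_zero] at this
  · exact dvd_sub_of_dvd_derivative (k - l) (fun i h1 h2 => hk i h1 (by omega)) P c'
      (by rw [hPder]; exact hH2)

end crt

/-! ### Bilinear estimates -/

/-- The square `|f_S(α)|²` of the exponential sum over the part `S` of the moment curve. -/
noncomputable def Qs (p k N : ℕ) [Fact p.Prime] (y : ℤ → ℤ) (A : ℤ → ℂ) (S : Finset ℤ)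
    (α : Fin (k + 1) → ZMod (p ^ (k * N))) : ℝ :=
  ‖fs A (fun α x => ph p k (k * N) α (y x)) S α‖ ^ 2

/-- The bilinear quantity `(∑ |f_S|^{2 r_l} |f_{S'}|^{2 (r_k - r_l)})^{1/r_l}`. -/
noncomputable def Wl (p k N : ℕ) [Fact p.Prime] (y : ℤ → ℤ) (A : ℤ → ℂ) (l : ℕ)
    (S S' : Finset ℤ) : ℝ :=
  Lr (rr l) (fun α => Qs p k N y A S' α ^ (rr k - rr l)) (Qs p k N y A S)

section
variable {p k N : ℕ} [Fact p.Prime] {y : ℤ → ℤ} {A : ℤ → ℂ}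

lemma Qs_nonneg (S : Finset ℤ) (α) : 0 ≤ Qs p k N y A S α := by unfold Qs; positivity

lemma Qs_empty (α) : Qs p k N y A ∅ α = 0 := by simp [Qs, fs_empty]

lemma Wl_nonneg (l : ℕ) (S S' : Finset ℤ) : 0 ≤ Wl p k N y A l S S' :=
  Lr_nonneg (fun _ => pow_nonneg (Qs_nonneg _ _) _) (Qs_nonneg _)

lemma Wl_empty {l : ℕ} (hl : 1 ≤ l) (S' : Finset ℤ) : Wl p k N y A l ∅ S' = 0 := by
  unfold Wl
  have : Qs p k N y A ∅ = fun _ => 0 := funext Qs_empty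
  rw [this, Lr_zero (rr_pos hl)]

lemma rr_lt {l k : ℕ} (h : l < k) : rr l < rr k := by
  have h1 := two_rr l
  have h2 := two_rr k
  nlinarith

lemma rr_mono {l k : ℕ} (h : l ≤ k) : rr l ≤ rr k := by
  have h1 := two_rr l
  have h2 := two_rr k
  nlinarith

lemma isUnit_zmod_pow_of_not_dvd (M : ℕ) (u : ℤ) (h : ¬ (p : ℤ) ∣ u) :
    IsUnit ((u : ℤ) : ZMod (p ^ M)) := by
  rw [ZMod.coe_int_isUnit_iff_isCoprime]
  push_cast
  apply IsCoprime.pow_left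
  exact (Prime.coprime_iff_not_dvd (Nat.prime_iff_prime_int.1 Fact.out)).2 h

/-- Lower-dimensional decoupling in the first factor of the bilinear quantity. The second factor
is not affected, because the translations used fix its frequencies up to a constant phase. -/
lemma bil_step {l N' a b : ℕ} {Δ : ℝ} (hN : 1 ≤ N) (hl : 1 ≤ l) (hlk : l < k) (hkp : k < p)
    (hD : Dec p l N' Δ) (hΔ : 0 ≤ Δ) {S S' : Finset ℤ} (hS : InCls p y S a)
    (hS' : InCls p y S' b) (hsep : SepCls p y S S') (h1 : l * N' ≤ a)
    (h2 : l * (a + N') ≤ b * (k - l + 1)) (h3 : l * (a + N') ≤ k * N) :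
    Wl p k N y A l S S' ≤ Δ * ∑ c : ZMod (p ^ (a + N')), Wl p k N y A l (cls p y S (a + N') c) S' := by
  have hr : 1 ≤ rr l := rr_pos hl
  rcases S.eq_empty_or_nonempty with rfl | ⟨x₀, hx₀⟩
  · rw [Wl_empty hl]
    exact mul_nonneg hΔ (Finset.sum_nonneg fun c _ => Wl_nonneg _ _ _)
  rcases S'.eq_empty_or_nonempty with rfl | ⟨x₁, hx₁⟩
  · have : Wl p k N y A l S ∅ = 0 := by
      unfold Wl Lr
      rw [Finset.sum_eq_zero, Real.zero_rpow]
      · have : 0 < (rr l : ℝ) := by exact_mod_cast hr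
        positivity
      · intro g _
        beta_reduce
        rw [Qs_empty, zero_pow, zero_mul]
        have := rr_lt hlk
        omega
    rw [this]
    exact mul_nonneg hΔ (Finset.sum_nonneg fun c _ => Wl_nonneg _ _ _)
  set z : ℤ → ℤ := fun x => (y x - y x₀) / (p : ℤ) ^ a with hz
  set M := k * N with hM
  have : Fact (1 < p ^ M) := ⟨Nat.one_lt_pow (Nat.mul_ne_zero (by omega) (by omega))
    (Fact.out : p.Prime).one_lt⟩
  set ψ : (Fin (k + 1) → ZMod (p ^ M)) → ℤ → ℂ := fun α x => ph p k M α (y x) with hψ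
  have hunits : ∀ i : ℕ, 1 ≤ i → i ≤ k → IsUnit ((i : ℕ) : ZMod (p ^ M)) := by
    intro i hi1 hi2
    have := isUnit_zmod_pow_of_not_dvd (p := p) M (i : ℤ) (by
      intro h
      have h' : p ∣ i := by exact_mod_cast h
      exact absurd (Nat.le_of_dvd hi1 h') (by omega))
    simpa using this
  have hcu : IsUnit (((y x₁ : ℤ) : ZMod (p ^ M)) - ((y x₀ : ℤ) : ZMod (p ^ M))) := by
    have := isUnit_zmod_pow_of_not_dvd (p := p) M (y x₁ - y x₀) (hsep.symm x₁ hx₁ x₀ hx₀)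
    simpa using this
  let A₀ : (Fin (l + 1) → ZMod (p ^ (l * N'))) → Polynomial (ZMod (p ^ M)) := fun t =>
    ∑ j : Fin (l + 1), Polynomial.C (((t j).val : ZMod (p ^ M)) *
      (p : ZMod (p ^ M)) ^ (a * (l - j))) *
      (Polynomial.X - Polynomial.C ((y x₀ : ℤ) : ZMod (p ^ M))) ^ (j : ℕ)
  choose P hPd hP1 d hP2 using fun t => hermite k l hlk.le hunits _ _ hcu (A₀ t)
  let κ : (Fin (l + 1) → ZMod (p ^ (l * N'))) → (Fin (k + 1) → ZMod (p ^ M)) := fun t =>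
    pcoef k (Polynomial.C ((p : ZMod (p ^ M)) ^ (M - l * (a + N'))) * P t)
  have hκd : ∀ t, (Polynomial.C ((p : ZMod (p ^ M)) ^ (M - l * (a + N'))) * P t).natDegree ≤ k :=
    fun t => (Polynomial.natDegree_C_mul_le _ _).trans (hPd t)
  have hp0 : ∀ E, M ≤ E → (p : ZMod (p ^ M)) ^ E = 0 := by
    intro E hE
    obtain ⟨F, rfl⟩ := Nat.exists_eq_add_of_le hE
    rw [pow_add, ← Nat.cast_pow, ZMod.natCast_self, zero_mul]
  have hκS : ∀ t, ∀ x ∈ S, ψ (κ t) x = ph p l (l * N') t (z x) := by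
    intro t x hx
    simp only [hψ, κ]
    rw [ph_pcoef p k M _ (hκd t)]
    have hA : l * N' ≤ M := le_trans (Nat.mul_le_mul_left _ (by omega)) h3
    rw [← ph_lift p l (l * N') M hA t]
    congr 1
    have hy := hS.exists_eq hx₀ x hx
    have hyz : ((y x : ℤ) : ZMod (p ^ M)) - ((y x₀ : ℤ) : ZMod (p ^ M)) =
        (p : ZMod (p ^ M)) ^ a * ((z x : ℤ) : ZMod (p ^ M)) := by
      rw [hy]; simp only [hz]; push_cast; ring
    obtain ⟨B, hB⟩ := hP1 t
    have hPt : P t = A₀ t + (Polynomial.X - Polynomial.C ((y x₀ : ℤ) : ZMod (p ^ M))) ^ (l + 1) * B := by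
      rw [← hB]; ring
    rw [Polynomial.eval_mul, Polynomial.eval_C, hPt, Polynomial.eval_add, Polynomial.eval_mul,
      Polynomial.eval_pow, Polynomial.eval_sub, Polynomial.eval_X, Polynomial.eval_C, hyz, mul_pow,
      ← pow_mul, mul_add]
    have hz1 : (p : ZMod (p ^ M)) ^ (M - l * (a + N')) *
        ((p : ZMod (p ^ M)) ^ (a * (l + 1)) * ((z x : ℤ) : ZMod (p ^ M)) ^ (l + 1) *
          B.eval ((y x : ℤ) : ZMod (p ^ M))) = 0 := by
      rw [← mul_assoc, ← mul_assoc, ← pow_add, hp0, zero_mul, zero_mul]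
      have : l * (a + N') ≤ a * (l + 1) := by nlinarith
      omega
    rw [hz1, add_zero]
    simp only [A₀, Polynomial.eval_finsetSum]
    rw [Finset.mul_sum, Finset.mul_sum]
    refine Finset.sum_congr rfl fun j _ => ?_
    rw [Polynomial.eval_mul, Polynomial.eval_C, Polynomial.eval_pow, Polynomial.eval_sub,
      Polynomial.eval_X, Polynomial.eval_C, hyz, mul_pow, ← pow_mul]
    have hj : (j : ℕ) ≤ l := Nat.le_of_lt_succ j.2
    have e1 : a * (l - j) + a * j = l * a := by
      rw [← Nat.mul_add, Nat.sub_add_cancel hj, mul_comm]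
    have e2 : M - l * N' = (M - l * (a + N')) + (a * (l - j) + a * j) := by
      have : l * (a + N') = l * a + l * N' := Nat.mul_add _ _ _
      omega
    rw [e2, pow_add, pow_add]
    ring
  have hκS' : ∀ t g, ‖fs A ψ S' (g + κ t)‖ = ‖fs A ψ S' g‖ := by
    intro t g
    set u : ℂ := ZMod.stdAddChar ((p : ZMod (p ^ M)) ^ (M - l * (a + N')) * d t) with hu
    have hu1 : ‖u‖ = 1 := by
      rw [hu, ZMod.stdAddChar_apply]
      exact Circle.norm_coe _
    have : fs A ψ S' (g + κ t) = u * fs A ψ S' g := by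
      unfold fs
      rw [Finset.mul_sum]
      refine Finset.sum_congr rfl fun x hx => ?_
      have h4 : ψ (κ t) x = u := by
        simp only [hψ, κ]
        rw [ph_pcoef p k M _ (hκd t), hu]
        congr 1
        obtain ⟨B, hB⟩ := hP2 t
        have hPt : P t = Polynomial.C (d t) +
            (Polynomial.X - Polynomial.C ((y x₁ : ℤ) : ZMod (p ^ M))) ^ (k - l + 1) * B := by
          rw [← hB]; ring
        have hy := hS'.exists_eq hx₁ x hx
        have hyz : ((y x : ℤ) : ZMod (p ^ M)) - ((y x₁ : ℤ) : ZMod (p ^ M)) =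
            (p : ZMod (p ^ M)) ^ b * (((y x - y x₁) / (p : ℤ) ^ b : ℤ) : ZMod (p ^ M)) := by
          have := congrArg (fun v : ℤ => (v : ZMod (p ^ M))) hy
          push_cast at this
          rw [this]; ring
        rw [Polynomial.eval_mul, Polynomial.eval_C, hPt, Polynomial.eval_add, Polynomial.eval_mul,
          Polynomial.eval_pow, Polynomial.eval_sub, Polynomial.eval_X, Polynomial.eval_C,
          Polynomial.eval_C, hyz, mul_pow, ← pow_mul, mul_add, ← mul_assoc, ← mul_assoc, ← pow_add,
          hp0 (M - l * (a + N') + b * (k - l + 1)) (by omega), zero_mul, zero_mul, add_zero]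
      have h5 : ψ (g + κ t) x = ψ g x * ψ (κ t) x := ph_add p k M g (κ t) (y x)
      rw [h5, h4]
      ring
    rw [this, norm_mul, hu1, one_mul]
  have key := hD.transfer hl hΔ ψ (fun α => Qs p k N y A S' α ^ (rr k - rr l)) S A z
    (fun _ => pow_nonneg (Qs_nonneg _ _) _) (fun g h x => ph_add p k M g h (y x)) κ hκS
    (by
      intro t g
      have := hκS' t g
      unfold Qs
      rw [this])
  refine key.trans (le_of_eq ?_)
  congr 1
  exact sum_cls_congr p z y S N' (a + N') (fun T => Wl p k N y A l T S') (Wl_empty hl S')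
    (hS.dvd_iff hx₀ N')

end

section
variable {p k N : ℕ} [Fact p.Prime] {y : ℤ → ℤ} {A : ℤ → ℂ}

/-- Iteration of `bil_step`: the first factor is decoupled down to classes modulo `p^n`, as far as
the second factor, living in a class modulo `p^b`, permits. -/
lemma bil_multi {l A₀ b : ℕ} {τ : ℝ} (hτ : 0 ≤ τ) (hN : 1 ≤ N) (hl : 1 ≤ l) (hlk : l < k)
    (hkp : k < p) (hA : 1 ≤ A₀) (hD : Dec p l A₀ ((p : ℝ) ^ (τ * A₀))) {S' : Finset ℤ}
    (hS' : InCls p y S' b) (n : ℕ) (hn : l * n ≤ b * (k - l + 1)) (hnN : n ≤ N)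
    (S : Finset ℤ) (hsep : SepCls p y S S') :
    Wl p k N y A l S S' ≤ (p : ℝ) ^ ((l + 1) * A₀) * (p : ℝ) ^ (τ * n) *
      ∑ c : ZMod (p ^ n), Wl p k N y A l (cls p y S n c) S' := by
  have hp1 : (1 : ℝ) ≤ p := by exact_mod_cast (Fact.out : p.Prime).one_lt.le
  have hp0 : (0 : ℝ) < p := by linarith
  have hr := rr_pos hl
  induction n using Nat.strong_induction_on with
  | _ n ih =>
  have hsum : ∀ m, 0 ≤ ∑ c : ZMod (p ^ m), Wl p k N y A l (cls p y S m c) S' := fun m =>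
    Finset.sum_nonneg fun c _ => Wl_nonneg _ _ _
  by_cases hsmall : n ≤ (l + 1) * A₀
  · refine (trivial_dec p y S n A (fun α x => ph p k (k * N) α (y x)) hr
      (w := fun α => Qs p k N y A S' α ^ (rr k - rr l))
      (fun _ => pow_nonneg (Qs_nonneg _ _) _)).trans ?_
    refine mul_le_mul_of_nonneg_right ?_ (hsum n)
    calc (p : ℝ) ^ n ≤ (p : ℝ) ^ ((l + 1) * A₀) := pow_le_pow_right₀ hp1 hsmall
      _ ≤ _ := le_mul_of_one_le_right (by positivity)
        (Real.one_le_rpow hp1 (by positivity))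
  · push Not at hsmall
    obtain ⟨m, rfl⟩ : ∃ m, n = m + A₀ := ⟨n - A₀, by nlinarith [Nat.sub_add_cancel (show A₀ ≤ n by nlinarith)]⟩
    have hlm : l * A₀ ≤ m := by nlinarith
    have h1 := ih m (by omega) (le_trans (Nat.mul_le_mul_left _ (by omega)) hn) (by omega)
    refine h1.trans ?_
    have h2 : ∑ c : ZMod (p ^ m), Wl p k N y A l (cls p y S m c) S' ≤
        (p : ℝ) ^ (τ * A₀) *
          ∑ c : ZMod (p ^ (m + A₀)), Wl p k N y A l (cls p y S (m + A₀) c) S' := by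
      rw [← sum_cls_cls p y S (Nat.le_add_right m A₀) (fun T => Wl p k N y A l T S')
        (Wl_empty hl S'), Finset.mul_sum]
      refine Finset.sum_le_sum fun c _ => ?_
      exact bil_step hN hl hlk hkp hD (by positivity) (inCls_cls p y S m c) hS'
        (hsep.mono (cls_subset _ _ _ _ _) subset_rfl) hlm hn
        (Nat.mul_le_mul hlk.le hnN)
    calc _ ≤ (p : ℝ) ^ ((l + 1) * A₀) * (p : ℝ) ^ (τ * m) * ((p : ℝ) ^ (τ * A₀) *
          ∑ c : ZMod (p ^ (m + A₀)), Wl p k N y A l (cls p y S (m + A₀) c) S') :=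
          mul_le_mul_of_nonneg_left h2 (by positivity)
      _ = _ := by
          push_cast
          rw [mul_add, Real.rpow_add hp0]
          ring

/-- The bilinear moment `∑ |f_S|^{2 r_l} |f_{S'}|^{2 (r_k - r_l)}`. -/
noncomputable def Ul (p k N : ℕ) [Fact p.Prime] (y : ℤ → ℤ) (A : ℤ → ℂ) (l : ℕ)
    (S S' : Finset ℤ) : ℝ :=
  ∑ α, Qs p k N y A S' α ^ (rr k - rr l) * Qs p k N y A S α ^ rr l

/-- The fully decoupled norm `∑_J ‖f_J‖²` over classes `J` modulo `p^N`. -/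
noncomputable def En (p k N : ℕ) [Fact p.Prime] (y : ℤ → ℤ) (A : ℤ → ℂ) (S : Finset ℤ) : ℝ :=
  ∑ c : ZMod (p ^ N), Lr (rr k) 1 (Qs p k N y A (cls p y S N c))

lemma Ul_nonneg (l : ℕ) (S S' : Finset ℤ) : 0 ≤ Ul p k N y A l S S' :=
  Finset.sum_nonneg fun _ _ => mul_nonneg (pow_nonneg (Qs_nonneg _ _) _)
    (pow_nonneg (Qs_nonneg _ _) _)

lemma En_nonneg (S : Finset ℤ) : 0 ≤ En p k N y A S :=
  Finset.sum_nonneg fun _ _ => Lr_nonneg (fun _ => zero_le_one) (Qs_nonneg _)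

lemma Wl_pow {l : ℕ} (hl : 1 ≤ l) (S S' : Finset ℤ) :
    Wl p k N y A l S S' ^ rr l = Ul p k N y A l S S' :=
  Lr_pow (rr_pos hl) (fun _ => pow_nonneg (Qs_nonneg _ _) _) (Qs_nonneg _)

lemma En_cls (hk : 1 ≤ k) (S : Finset ℤ) {n : ℕ} (hn : n ≤ N) :
    ∑ c : ZMod (p ^ n), En p k N y A (cls p y S n c) = En p k N y A S := by
  refine sum_cls_cls p y S hn (fun T => Lr (rr k) 1 (Qs p k N y A T)) ?_
  have : Qs p k N y A ∅ = fun _ => 0 := funext Qs_empty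
  rw [this, Lr_zero (rr_pos hk)]

/-- The exponents in `Ul_holder` match. -/
lemma holder_exp (j m : ℕ) (hm : 1 ≤ m) {s t : ℝ} (hs : 0 ≤ s) (ht : 0 ≤ t) :
    (s ^ (rr (j + 1 + m) - rr m) * t ^ rr m) ^ (1 / ((m + 1 : ℕ) : ℝ)) *
      (t ^ (rr (j + 1 + m) - rr j) * s ^ rr j) ^ ((m : ℝ) / ((m + 1 : ℕ) : ℝ)) =
      t ^ (rr (j + 1 + m) - rr (j + 1)) * s ^ rr (j + 1) := by
  set k := j + 1 + m with hkdef
  set P : ℝ := ((m + 1 : ℕ) : ℝ) with hP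
  have e1 := two_rr (j + 1)
  have e2 := two_rr j
  have e3 := two_rr m
  have e4 := two_rr k
  have hr1 : rr m ≤ rr k := rr_mono (by omega)
  have hr2 : rr (j + 1) ≤ rr k := rr_mono (by omega)
  have hr3 : rr j ≤ rr k := rr_mono (by omega)
  have E1 : (rr k - rr m) + rr j * m = rr (j + 1) * (m + 1) := by
    zify [hr1]
    zify at e1 e2 e3 e4
    rw [hkdef] at e4 ⊢
    push_cast at e4
    nlinarith
  have E2 : rr m + (rr k - rr j) * m = (rr k - rr (j + 1)) * (m + 1) := by
    zify [hr1, hr2, hr3]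
    zify at e1 e2 e3 e4
    rw [hkdef] at e4 ⊢
    push_cast at e4
    nlinarith
  have f1 : (t ^ (rr k - rr j) * s ^ rr j) ^ ((m : ℝ) / P) =
      ((t ^ (rr k - rr j) * s ^ rr j) ^ m) ^ (1 / P) := by
    rw [← Real.rpow_natCast (t ^ (rr k - rr j) * s ^ rr j) m, ← Real.rpow_mul (by positivity)]
    congr 1
    field_simp
  rw [f1, ← Real.mul_rpow (by positivity) (by positivity)]
  have f2 : s ^ (rr k - rr m) * t ^ rr m * (t ^ (rr k - rr j) * s ^ rr j) ^ m =
      (t ^ (rr k - rr (j + 1)) * s ^ rr (j + 1)) ^ (m + 1) := by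
    rw [mul_pow, mul_pow, ← pow_mul, ← pow_mul, ← pow_mul, ← pow_mul, ← E1, ← E2, pow_add,
      pow_add]
    ring
  rw [f2, one_div, hP, Real.pow_rpow_inv_natCast (by positivity) (by omega)]

/-- Hölder's inequality between the bilinear moments. -/
lemma Ul_holder {l : ℕ} (hl : 1 ≤ l) (hlk : l < k) (S S' : Finset ℤ) :
    Ul p k N y A l S S' ≤ Ul p k N y A (k - l) S' S ^ (1 / ((k - l + 1 : ℕ) : ℝ)) *
      Ul p k N y A (l - 1) S S' ^ (((k - l : ℕ) : ℝ) / ((k - l + 1 : ℕ) : ℝ)) := by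
  obtain ⟨m, rfl⟩ : ∃ m, k = l + m := ⟨k - l, by omega⟩
  obtain ⟨j, rfl⟩ : ∃ j, l = j + 1 := ⟨l - 1, by omega⟩
  simp only [Nat.add_sub_cancel_left, Nat.add_sub_cancel]
  set k := j + 1 + m with hkdef
  have hm : 1 ≤ m := by omega
  set P : ℝ := ((m + 1 : ℕ) : ℝ) with hP
  have hP1 : 1 < P := by rw [hP]; exact_mod_cast (by omega : 1 < m + 1)
  have hpq : P.HolderConjugate (P / m) := by
    rw [Real.holderConjugate_iff]
    refine ⟨hP1, ?_⟩
    have : (0 : ℝ) < m := by exact_mod_cast hm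
    rw [hP]; push_cast
    field_simp
    ring
  have key := Real.inner_le_Lp_mul_Lq_of_nonneg (s := Finset.univ) hpq
    (f := fun α => (Qs p k N y A S α ^ (rr k - rr m) * Qs p k N y A S' α ^ rr m) ^ (1 / P))
    (g := fun α => (Qs p k N y A S' α ^ (rr k - rr j) * Qs p k N y A S α ^ rr j) ^ (1 / (P / m)))
    (fun α _ => Real.rpow_nonneg (mul_nonneg (pow_nonneg (Qs_nonneg _ _) _)
      (pow_nonneg (Qs_nonneg _ _) _)) _)
    (fun α _ => Real.rpow_nonneg (mul_nonneg (pow_nonneg (Qs_nonneg _ _) _)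
      (pow_nonneg (Qs_nonneg _ _) _)) _)
  have hmpos : (0 : ℝ) < m := by exact_mod_cast hm
  have hPpos : 0 < P := by linarith
  convert key using 1
  · refine Finset.sum_congr rfl fun α _ => ?_
    rw [one_div_div]
    exact (holder_exp j m hm (Qs_nonneg _ _) (Qs_nonneg _ _)).symm
  · have g1 : ∀ α, ((Qs p k N y A S α ^ (rr k - rr m) * Qs p k N y A S' α ^ rr m) ^ (1 / P)) ^ P
        = Qs p k N y A S α ^ (rr k - rr m) * Qs p k N y A S' α ^ rr m := by
      intro α
      rw [← Real.rpow_mul (mul_nonneg (pow_nonneg (Qs_nonneg _ _) _)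
        (pow_nonneg (Qs_nonneg _ _) _)), one_div_mul_cancel hPpos.ne', Real.rpow_one]
    have g2 : ∀ α, ((Qs p k N y A S' α ^ (rr k - rr j) * Qs p k N y A S α ^ rr j) ^ (1 / (P / m)))
        ^ (P / m) = Qs p k N y A S' α ^ (rr k - rr j) * Qs p k N y A S α ^ rr j := by
      intro α
      rw [← Real.rpow_mul (mul_nonneg (pow_nonneg (Qs_nonneg _ _) _)
        (pow_nonneg (Qs_nonneg _ _) _)), one_div_mul_cancel (by positivity), Real.rpow_one]
    simp only [g1, g2]
    unfold Ul
    rw [one_div_div]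

end

lemma Lr_one_pow {G : Type*} [Fintype G] {r : ℕ} {u : G → ℝ} (hr : 1 ≤ r) (hu : ∀ g, 0 ≤ u g) :
    Lr r 1 u ^ r = ∑ g, u g ^ r := by
  have := Lr_pow (w := (1 : G → ℝ)) hr (fun _ => zero_le_one) hu
  simpa using this

/-- The bilinear estimate with constant `K`, for `S'` in a single class modulo `p^b`. -/
def Bil (p k N : ℕ) [Fact p.Prime] (y : ℤ → ℤ) (A : ℤ → ℂ) (l b : ℕ) (K : ℝ) : Prop :=
  ∀ S S' : Finset ℤ, SepCls p y S S' → InCls p y S' b →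
    Ul p k N y A l S S' ≤ K * (En p k N y A S' ^ (rr k - rr l) * En p k N y A S ^ rr l)

section
variable {p k N : ℕ} [Fact p.Prime] {y : ℤ → ℤ} {A : ℤ → ℂ}

lemma Bil.mono {l b : ℕ} {K K' : ℝ} (h : Bil p k N y A l b K) (hK : K ≤ K') :
    Bil p k N y A l b K' := fun S S' h1 h2 => (h S S' h1 h2).trans
  (mul_le_mul_of_nonneg_right hK (mul_nonneg (pow_nonneg (En_nonneg _) _)
    (pow_nonneg (En_nonneg _) _)))

lemma bil_zero {b n : ℕ} {Δ : ℝ} (hk : 1 ≤ k) (hbn : b + n = N) (hΔ : 0 ≤ Δ)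
    (hD : Dec p k n Δ) : Bil p k N y A 0 b (Δ ^ rr k) := by
  subst hbn
  intro S S' _ hS'
  have hr := rr_pos hk
  have h0 : rr 0 = 0 := rfl
  have h1 := hD.rescale hk hΔ b S' y A hS'
  have h2 : Ul p k (b + n) y A 0 S S' = Lr (rr k) 1 (Qs p k (b + n) y A S') ^ rr k := by
    rw [Lr_one_pow hr (Qs_nonneg _)]
    unfold Ul
    simp [h0]
  rw [h2, h0, pow_zero, mul_one, Nat.sub_zero, ← mul_pow]
  exact pow_le_pow_left₀ (Lr_nonneg (fun _ => zero_le_one) (Qs_nonneg _)) h1 _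

/-- One round of the bilinear recursion. -/
lemma bil_rec {l A₀ b n : ℕ} {τ K₁ K₂ : ℝ} (hτ : 0 ≤ τ) (hN : 1 ≤ N) (hl : 1 ≤ l) (hlk : l < k)
    (hkp : k < p) (hA : 1 ≤ A₀) (hD : Dec p l A₀ ((p : ℝ) ^ (τ * A₀)))
    (hn : l * n = b * (k - l + 1)) (hnN : n ≤ N) (hK₁ : 0 ≤ K₁) (hK₂ : 0 ≤ K₂)
    (h₁ : Bil p k N y A (k - l) n K₁) (h₂ : Bil p k N y A (l - 1) b K₂) :
    Bil p k N y A l b (((p : ℝ) ^ ((l + 1) * A₀) * (p : ℝ) ^ (τ * n)) ^ rr l *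
      (K₁ ^ (1 / ((k - l + 1 : ℕ) : ℝ)) * K₂ ^ (((k - l : ℕ) : ℝ) / ((k - l + 1 : ℕ) : ℝ)))) := by
  intro S S' hsep hS'
  have hr := rr_pos hl
  have hp0 : (0 : ℝ) < p := by exact_mod_cast (Fact.out : p.Prime).pos
  set D : ℝ := (p : ℝ) ^ ((l + 1) * A₀) * (p : ℝ) ^ (τ * n) with hDdef
  have hD0 : 0 ≤ D := by positivity
  set K : ℝ := K₁ ^ (1 / ((k - l + 1 : ℕ) : ℝ)) *
    K₂ ^ (((k - l : ℕ) : ℝ) / ((k - l + 1 : ℕ) : ℝ)) with hK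
  have hK0 : 0 ≤ K := by positivity
  have hm := bil_multi (A := A) hτ hN hl hlk hkp hA hD hS' n hn.le hnN S hsep
  have hE := fun T => En_nonneg (p := p) (k := k) (N := N) (y := y) (A := A) T
  have hc : ∀ c : ZMod (p ^ n), Ul p k N y A l (cls p y S n c) S' ≤
      K * (En p k N y A S' ^ (rr k - rr l) * En p k N y A (cls p y S n c) ^ rr l) := by
    intro c
    set I := cls p y S n c
    have hsepI : SepCls p y I S' := hsep.mono (cls_subset _ _ _ _ _) subset_rfl
    have b1 := h₁ S' I hsepI.symm (inCls_cls p y S n c)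
    have b2 := h₂ I S' hsepI hS'
    refine (Ul_holder hl hlk I S').trans ?_
    have hp1 : 0 ≤ En p k N y A I ^ (rr k - rr (k - l)) * En p k N y A S' ^ rr (k - l) :=
      mul_nonneg (pow_nonneg (hE _) _) (pow_nonneg (hE _) _)
    have hp2 : 0 ≤ En p k N y A S' ^ (rr k - rr (l - 1)) * En p k N y A I ^ rr (l - 1) :=
      mul_nonneg (pow_nonneg (hE _) _) (pow_nonneg (hE _) _)
    have hx : (En p k N y A I ^ (rr k - rr (k - l)) * En p k N y A S' ^ rr (k - l)) ^
        (1 / ((k - l + 1 : ℕ) : ℝ)) *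
        (En p k N y A S' ^ (rr k - rr (l - 1)) * En p k N y A I ^ rr (l - 1)) ^
        (((k - l : ℕ) : ℝ) / ((k - l + 1 : ℕ) : ℝ)) =
        En p k N y A S' ^ (rr k - rr l) * En p k N y A I ^ rr l := by
      have := holder_exp (l - 1) (k - l) (by omega) (hE I) (hE S')
      have e1 : l - 1 + 1 = l := by omega
      have e2 : l + (k - l) = k := by omega
      rw [e1, e2] at this
      exact this
    calc _ ≤ (K₁ * (En p k N y A I ^ (rr k - rr (k - l)) * En p k N y A S' ^ rr (k - l))) ^
          (1 / ((k - l + 1 : ℕ) : ℝ)) *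
          (K₂ * (En p k N y A S' ^ (rr k - rr (l - 1)) * En p k N y A I ^ rr (l - 1))) ^
          (((k - l : ℕ) : ℝ) / ((k - l + 1 : ℕ) : ℝ)) := by
          apply mul_le_mul
          · exact Real.rpow_le_rpow (Ul_nonneg _ _ _) b1 (by positivity)
          · exact Real.rpow_le_rpow (Ul_nonneg _ _ _) b2 (by positivity)
          · exact Real.rpow_nonneg (Ul_nonneg _ _ _) _
          · exact Real.rpow_nonneg (mul_nonneg hK₁ hp1) _
      _ = K * (En p k N y A S' ^ (rr k - rr l) * En p k N y A I ^ rr l) := by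
          rw [Real.mul_rpow hK₁ hp1, Real.mul_rpow hK₂ hp2, ← hx, hK]
          ring
  set Z : ℝ := (K * En p k N y A S' ^ (rr k - rr l)) ^ ((rr l : ℝ)⁻¹) with hZ
  have hKE : 0 ≤ K * En p k N y A S' ^ (rr k - rr l) := mul_nonneg hK0 (pow_nonneg (hE _) _)
  have hZ0 : 0 ≤ Z := Real.rpow_nonneg hKE _
  have hZr : Z ^ rr l = K * En p k N y A S' ^ (rr k - rr l) :=
    Real.rpow_inv_natCast_pow hKE (by omega)
  have hW : ∀ c : ZMod (p ^ n), Wl p k N y A l (cls p y S n c) S' ≤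
      Z * En p k N y A (cls p y S n c) := by
    intro c
    have := hc c
    rw [← Wl_pow hl, ← mul_assoc, ← hZr, ← mul_pow] at this
    exact le_of_pow_le_pow_left₀ (by omega) (mul_nonneg hZ0 (hE _)) this
  have hWS : Wl p k N y A l S S' ≤ D * (Z * En p k N y A S) := by
    refine hm.trans (mul_le_mul_of_nonneg_left ?_ hD0)
    refine (Finset.sum_le_sum fun c _ => hW c).trans (le_of_eq ?_)
    rw [← Finset.mul_sum, En_cls (by omega) S hnN]
  rw [← Wl_pow hl]
  calc _ ≤ (D * (Z * En p k N y A S)) ^ rr l := pow_le_pow_left₀ (Wl_nonneg _ _ _) hWS _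
    _ = _ := by rw [mul_pow D, mul_pow Z, hZr]; ring

end

/-- The gain exponents of the bilinear recursion after `r` rounds. -/
noncomputable def Gs (η τ : ℝ) (k : ℕ) : ℕ → ℕ → ℝ
  | 0, l => if l = 0 then η else 0
  | r + 1, l => if l = 0 then η else
      Gs η τ k r (k - l) / l + Gs η τ k r (l - 1) * ((k - l : ℕ) / (k - l + 1 : ℕ)) - τ

lemma Gs_zero (η τ : ℝ) (k r : ℕ) : Gs η τ k r 0 = η := by
  cases r <;> simp [Gs]

lemma Gs_sum_succ (η τ : ℝ) (K r : ℕ) :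
    ∑ m ∈ Finset.range K, Gs η τ (K + 1) (r + 1) (m + 1) =
      ∑ m ∈ Finset.range K, Gs η τ (K + 1) r (m + 1) + K * (η / (K + 1) - τ) := by
  set g := Gs η τ (K + 1) r with hg
  set h : ℕ → ℝ := fun m => g m * ((K - m : ℝ) / (K + 1 - m)) with hh
  have h1 : ∀ m ∈ Finset.range K, Gs η τ (K + 1) (r + 1) (m + 1) =
      g (K - m) / (m + 1) + h m - τ := by
    intro m hm
    have hm' := Finset.mem_range.1 hm
    simp only [Gs, Nat.add_eq_zero_iff, one_ne_zero, and_false, if_false, Nat.add_sub_cancel, hh]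
    have e1 : K + 1 - (m + 1) = K - m := by omega
    rw [e1]
    push_cast [Nat.cast_sub hm'.le]
    rw [sub_add_eq_add_sub]
  rw [Finset.sum_congr rfl h1, Finset.sum_sub_distrib, Finset.sum_add_distrib]
  have h2 : ∑ m ∈ Finset.range K, g (K - m) / ((m : ℝ) + 1) =
      ∑ m ∈ Finset.range K, g (m + 1) / (K - m) := by
    rw [← Finset.sum_range_reflect]
    refine Finset.sum_congr rfl fun m hm => ?_
    have hm' := Finset.mem_range.1 hm
    have e1 : K - (K - 1 - m) = m + 1 := by omega
    have e2 : ((K - 1 - m : ℕ) : ℝ) + 1 = K - m := by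
      have : K - 1 - m + 1 + m = K := by omega
      have : ((K - 1 - m : ℕ) : ℝ) + 1 + m = K := by exact_mod_cast this
      linarith
    rw [e1, e2]
  have h3 : ∑ m ∈ Finset.range K, h m = ∑ m ∈ Finset.range K, h (m + 1) + h 0 := by
    rw [← Finset.sum_range_succ']
    rw [Finset.sum_range_succ]
    simp [hh]
  have h4 : h 0 = η * (K / (K + 1)) := by simp [hh, hg, Gs_zero]
  rw [h2, h3, h4, ← add_assoc, ← Finset.sum_add_distrib]
  have h5 : ∀ m ∈ Finset.range K, g (m + 1) / (K - m) + h (m + 1) = g (m + 1) := by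
    intro m hm
    have hm' := Finset.mem_range.1 hm
    have : (0 : ℝ) < K - m := by
      have : (m : ℝ) < K := by exact_mod_cast hm'
      linarith
    simp only [hh]
    push_cast
    have e : (K : ℝ) + 1 - (m + 1) = K - m := by ring
    rw [e]
    field_simp
    ring
  rw [Finset.sum_congr rfl h5, Finset.sum_const, Finset.card_range, nsmul_eq_mul]
  ring

lemma Gs_sum (η τ : ℝ) (K r : ℕ) :
    ∑ m ∈ Finset.range K, Gs η τ (K + 1) r (m + 1) = r * (K * (η / (K + 1) - τ)) := by
  induction r with
  | zero => simp [Gs]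
  | succ r ih => rw [Gs_sum_succ, ih]; push_cast; ring

/-- After enough rounds some gain exponent exceeds `2`. -/
lemma exists_Gs_ge {η τ δ : ℝ} {k r : ℕ} (hk : 2 ≤ k) (h : δ ≤ η / k - τ)
    (hr : 2 ≤ r * δ) : ∃ l, 1 ≤ l ∧ l < k ∧ 2 ≤ Gs η τ k r l := by
  obtain ⟨K, rfl⟩ : ∃ K, k = K + 1 := ⟨k - 1, by omega⟩
  by_contra hcon
  push Not at hcon
  have h1 : ∑ m ∈ Finset.range K, Gs η τ (K + 1) r (m + 1) < ∑ m ∈ Finset.range K, (2 : ℝ) := by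
    apply Finset.sum_lt_sum_of_nonempty
    · exact ⟨0, Finset.mem_range.2 (by omega)⟩
    · intro m hm
      have := Finset.mem_range.1 hm
      exact hcon (m + 1) (by omega) (by omega)
  rw [Gs_sum, Finset.sum_const, Finset.card_range, nsmul_eq_mul] at h1
  push_cast at h
  have hK : (0 : ℝ) < K := by exact_mod_cast (by omega : 0 < K)
  have : (r : ℝ) * δ ≤ r * (η / (K + 1) - τ) := mul_le_mul_of_nonneg_left h (by positivity)
  nlinarith

section
variable {p k N : ℕ} [Fact p.Prime] {y : ℤ → ℤ} {A : ℤ → ℂ}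

/-- The bilinear moment is at most the linear one, which starts the recursion. -/
lemma Ul_holder_linear {l : ℕ} (hl : 1 ≤ l) (hlk : l < k) (S S' : Finset ℤ) :
    Ul p k N y A l S S' ≤ Lr (rr k) 1 (Qs p k N y A S') ^ (rr k - rr l) *
      Lr (rr k) 1 (Qs p k N y A S) ^ rr l := by
  have h1 := rr_lt hlk
  have h2 := rr_pos hl
  set r := rr k
  set s := rr l
  have hs : (0 : ℝ) < s := by exact_mod_cast h2
  have hrs : (0 : ℝ) < ((r - s : ℕ) : ℝ) := by exact_mod_cast (by omega : 0 < r - s)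
  have hsum : ((r - s : ℕ) : ℝ) + s = r := by
    have : r - s + s = r := by omega
    exact_mod_cast this
  have hr : (0 : ℝ) < r := by linarith
  have hpq : ((r : ℝ) / ((r - s : ℕ) : ℝ)).HolderConjugate ((r : ℝ) / s) := by
    rw [Real.holderConjugate_iff]
    refine ⟨by rw [one_lt_div hrs]; linarith, ?_⟩
    rw [inv_div, inv_div, ← add_div, hsum, div_self hr.ne']
  have key := Real.inner_le_Lp_mul_Lq_of_nonneg (s := Finset.univ) hpq
    (f := fun α => Qs p k N y A S' α ^ (r - s)) (g := fun α => Qs p k N y A S α ^ s)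
    (fun α _ => pow_nonneg (Qs_nonneg _ _) _) (fun α _ => pow_nonneg (Qs_nonneg _ _) _)
  have aux : ∀ (T : Finset ℤ) (n : ℕ), 0 < (n : ℝ) → ∀ α,
      (Qs p k N y A T α ^ n) ^ ((r : ℝ) / n) = Qs p k N y A T α ^ r := by
    intro T n hn α
    rw [← Real.rpow_natCast, ← Real.rpow_mul (Qs_nonneg _ _), ← Real.rpow_natCast]
    congr 1
    field_simp
  have aux2 : ∀ (T : Finset ℤ) (n : ℕ), 0 < (n : ℝ) →
      (∑ α, Qs p k N y A T α ^ r) ^ (1 / ((r : ℝ) / n)) = Lr r 1 (Qs p k N y A T) ^ n := by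
    intro T n hn
    unfold Lr
    simp only [Pi.one_apply, one_mul]
    rw [← Real.rpow_natCast, ← Real.rpow_mul (Finset.sum_nonneg fun α _ =>
      pow_nonneg (Qs_nonneg _ _) _)]
    congr 1
    field_simp
  simp only [aux S' _ hrs, aux S _ hs] at key
  rw [aux2 S' _ hrs, aux2 S _ hs] at key
  exact key

/-- The bilinear estimate after `r` rounds of the recursion, starting from the linear estimate
with exponent `η`. -/
lemma bil_rounds {τ η C : ℝ} {A₀ : ℕ} (hk : 2 ≤ k) (hkp : k < p) (hτ : 0 ≤ τ)
    (hA : 1 ≤ A₀) (hlow : ∀ l, 1 ≤ l → l < k → Dec p l A₀ ((p : ℝ) ^ (τ * A₀)))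
    (hC : 1 ≤ C) (hD : ∀ N, Dec p k N (C * (p : ℝ) ^ (η * N))) (r : ℕ) :
    ∃ C' : ℝ, 1 ≤ C' ∧ ∀ N, 1 ≤ N → ∀ (y : ℤ → ℤ) (A : ℤ → ℂ) (l b : ℕ), l < k →
      k.factorial ^ r ∣ b → k ^ r * b ≤ N →
      Bil p k N y A l b (C' * (p : ℝ) ^ ((rr k : ℝ) * (η * N - Gs η τ k r l * b))) := by
  have hp1 : (1 : ℝ) ≤ p := by exact_mod_cast (Fact.out : p.Prime).one_lt.le
  have hp0 : (0 : ℝ) < p := by linarith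
  have hrk : 1 ≤ rr k := rr_pos (by omega)
  induction r with
  | zero =>
    refine ⟨C ^ rr k, one_le_pow₀ hC, ?_⟩
    intro N hN y A l b hl _ hb
    rw [pow_zero, one_mul] at hb
    rcases Nat.eq_zero_or_pos l with rfl | hl0
    · have := bil_zero (y := y) (A := A) (by omega) (Nat.add_sub_cancel' hb) (by positivity) (hD (N - b))
      refine this.mono (le_of_eq ?_)
      rw [mul_pow, ← Real.rpow_natCast ((p : ℝ) ^ _), ← Real.rpow_mul hp0.le, Nat.cast_sub hb,
        Gs_zero]
      congr 2
      ring
    · intro S S' _ _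
      have h1 := hD N S y A
      have h2 := hD N S' y A
      have hG : Gs η τ k 0 l = 0 := by simp [Gs, hl0.ne']
      rw [hG, zero_mul, sub_zero]
      have hlr := (rr_lt hl).le
      refine (Ul_holder_linear hl0 hl S S').trans ?_
      have hL : ∀ T, 0 ≤ Lr (rr k) 1 (Qs p k N y A T) := fun T =>
        Lr_nonneg (fun _ => zero_le_one) (Qs_nonneg _)
      calc _ ≤ (C * (p : ℝ) ^ (η * N) * En p k N y A S') ^ (rr k - rr l) *
            (C * (p : ℝ) ^ (η * N) * En p k N y A S) ^ rr l :=
            mul_le_mul (pow_le_pow_left₀ (hL _) h2 _) (pow_le_pow_left₀ (hL _) h1 _)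
              (pow_nonneg (hL _) _) (pow_nonneg (mul_nonneg (by positivity) (En_nonneg _)) _)
        _ = (C * (p : ℝ) ^ (η * N)) ^ (rr k - rr l + rr l) *
            (En p k N y A S' ^ (rr k - rr l) * En p k N y A S ^ rr l) := by
            rw [mul_pow, mul_pow, pow_add]; ring
        _ = _ := by
            rw [Nat.sub_add_cancel hlr, mul_pow, ← Real.rpow_natCast ((p : ℝ) ^ _),
              ← Real.rpow_mul hp0.le, mul_comm (η * (N : ℝ))]
  | succ r ih =>
    obtain ⟨C', hC', ih⟩ := ih
    refine ⟨(p : ℝ) ^ ((k * A₀) * rr k) * C', ?_, ?_⟩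
    · exact one_le_mul_of_one_le_of_one_le (one_le_pow₀ hp1) hC'
    intro N hN y A l b hl hdvd hb
    have hkr : 1 ≤ k ^ r := Nat.one_le_pow _ _ (by omega)
    have hb' : k ^ r * b ≤ N := by
      refine le_trans (Nat.mul_le_mul_right _ ?_) hb
      exact Nat.pow_le_pow_right (by omega) (by omega)
    have hdvd' : k.factorial ^ r ∣ b := (pow_dvd_pow _ (by omega)).trans hdvd
    rcases Nat.eq_zero_or_pos l with rfl | hl0
    · refine (ih N hN y A 0 b hl hdvd' hb').mono ?_
      rw [Gs_zero, Gs_zero]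
      refine mul_le_mul_of_nonneg_right ?_ (by positivity)
      exact le_mul_of_one_le_left (by linarith) (one_le_pow₀ hp1)
    obtain ⟨b', rfl⟩ := hdvd
    obtain ⟨f, hf⟩ : l ∣ k.factorial := Nat.dvd_factorial hl0 hl.le
    set b := k.factorial ^ (r + 1) * b' with hbdef
    set n := k.factorial ^ r * (f * b' * (k - l + 1)) with hndef
    have hn : l * n = b * (k - l + 1) := by
      rw [hndef, hbdef, pow_succ]
      nth_rw 3 [hf]
      ring
    have hnb : n ≤ k * b := by
      have h1 : l * n ≤ l * (k * b) := by
        rw [hn]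
        have : k - l + 1 ≤ l * k := by
          have : k - l + 1 ≤ k := by omega
          nlinarith
        calc b * (k - l + 1) ≤ b * (l * k) := Nat.mul_le_mul_left _ this
          _ = _ := by ring
      exact Nat.le_of_mul_le_mul_left h1 hl0
    have hnN' : k ^ r * n ≤ N := by
      calc k ^ r * n ≤ k ^ r * (k * b) := Nat.mul_le_mul_left _ hnb
        _ = k ^ (r + 1) * b := by ring
        _ ≤ N := hb
    have hnN : n ≤ N := by nlinarith
    set G₁ := Gs η τ k r (k - l) with hG₁
    set G₂ := Gs η τ k r (l - 1) with hG₂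
    have B₁ := ih N hN y A (k - l) n (by omega) ⟨_, hndef⟩ hnN'
    have B₂ := ih N hN y A (l - 1) b (by omega) hdvd' hb'
    have key := bil_rec hτ hN hl0 hl hkp hA (hlow l hl0 hl) hn hnN (by positivity) (by positivity)
      B₁ B₂
    refine key.mono ?_
    set P : ℝ := ((k - l + 1 : ℕ) : ℝ) with hP
    have hPpos : 0 < P := by rw [hP]; positivity
    have hm : ((k - l : ℕ) : ℝ) = P - 1 := by rw [hP]; push_cast; ring
    have hlpos : (0 : ℝ) < l := by exact_mod_cast hl0
    have hnr : (l : ℝ) * n = b * P := by rw [hP]; exact_mod_cast hn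
    have hGs : Gs η τ k (r + 1) l = G₁ / l + G₂ * ((P - 1) / P) - τ := by
      simp only [Gs, if_neg hl0.ne', ← hG₁, ← hG₂]
      rw [← hP, hm]
    have hexp : (rr l : ℝ) * (τ * n) ≤ (rr k : ℝ) * (τ * b) := by
      have e1 : (2 : ℝ) * rr l = l * (l + 1) := by exact_mod_cast two_rr l
      have e2 : (2 : ℝ) * rr k = k * (k + 1) := by exact_mod_cast two_rr k
      have e3 : P = k - l + 1 := by rw [hP]; push_cast [Nat.cast_sub hl.le]; ring
      have hlk : (l : ℝ) + 1 ≤ k := by exact_mod_cast hl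
      have hl1 : (1 : ℝ) ≤ l := by exact_mod_cast hl0
      have e4 : (l + 1) * P ≤ (k : ℝ) * (k + 1) := by rw [e3]; nlinarith
      have e5 : (2 : ℝ) * rr l * n = (l + 1) * P * b := by
        rw [e1]; linear_combination ((l : ℝ) + 1) * hnr
      have e6 : (2 : ℝ) * rr l * n ≤ 2 * rr k * b := by
        rw [e5, e2]; exact mul_le_mul_of_nonneg_right e4 (by positivity)
      nlinarith
    have hb0 : (n : ℝ) / P = b / l := by
      field_simp; linarith
    calc ((p : ℝ) ^ ((l + 1) * A₀) * (p : ℝ) ^ (τ * n)) ^ rr l *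
          ((C' * (p : ℝ) ^ ((rr k : ℝ) * (η * N - G₁ * n))) ^ (1 / P) *
          (C' * (p : ℝ) ^ ((rr k : ℝ) * (η * N - G₂ * b))) ^ (((k - l : ℕ) : ℝ) / P))
        = (p : ℝ) ^ ((l + 1) * A₀ * rr l) * C' * ((p : ℝ) ^ ((rr l : ℝ) * (τ * n)) *
          ((p : ℝ) ^ ((rr k : ℝ) * (η * N - G₁ * n) * (1 / P)) *
          (p : ℝ) ^ ((rr k : ℝ) * (η * N - G₂ * b) * ((P - 1) / P)))) := by
          rw [mul_pow, ← pow_mul, Real.mul_rpow (by linarith) (by positivity),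
            Real.mul_rpow (by linarith) (by positivity), ← Real.rpow_mul hp0.le,
            ← Real.rpow_mul hp0.le, ← Real.rpow_natCast ((p : ℝ) ^ (τ * n)),
            ← Real.rpow_mul hp0.le, hm, mul_comm (τ * (n : ℝ))]
          have : C' ^ (1 / P) * C' ^ ((P - 1) / P) = C' := by
            rw [← Real.rpow_add (by linarith)]
            have : 1 / P + (P - 1) / P = 1 := by field_simp; ring
            rw [this, Real.rpow_one]
          generalize C' ^ (1 / P) = c1 at this ⊢
          generalize C' ^ ((P - 1) / P) = c2 at this ⊢
          rw [← this]
          ring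
      _ ≤ (p : ℝ) ^ ((k * A₀) * rr k) * C' *
          (p : ℝ) ^ ((rr k : ℝ) * (η * N - Gs η τ k (r + 1) l * b)) := by
          rw [← Real.rpow_add hp0, ← Real.rpow_add hp0]
          apply mul_le_mul
          · refine mul_le_mul_of_nonneg_right (pow_le_pow_right₀ hp1 ?_) (by linarith)
            exact Nat.mul_le_mul (Nat.mul_le_mul_right _ hl) (rr_lt hl).le
          · apply Real.rpow_le_rpow_of_exponent_le hp1
            rw [hGs]
            have e1 : (rr k : ℝ) * (η * N - G₁ * n) * (1 / P) =
                (rr k : ℝ) * (η * N / P - G₁ * (b / l)) := by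
              rw [← hb0]; field_simp
            have e2 : (rr k : ℝ) * (η * N - G₂ * b) * ((P - 1) / P) =
                (rr k : ℝ) * (η * N - η * N / P - G₂ * b * ((P - 1) / P)) := by
              field_simp
            rw [e1, e2]
            have e3 : (rr k : ℝ) * (η * N - (G₁ / l + G₂ * ((P - 1) / P) - τ) * b) =
              (rr k : ℝ) * (τ * b) + ((rr k : ℝ) * (η * N / P - G₁ * (b / l)) +
                (rr k : ℝ) * (η * N - η * N / P - G₂ * b * ((P - 1) / P))) := by ring
            rw [e3]
            linarith
          · positivity
          · positivity

end

/-! ### The broad-narrow argument and the decoupling theorem -/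

lemma Dec.mono {p k N : ℕ} [Fact p.Prime] {Δ Δ' : ℝ} (h : Dec p k N Δ) (hΔ : Δ ≤ Δ') :
    Dec p k N Δ' := fun S y a => (h S y a).trans (mul_le_mul_of_nonneg_right hΔ
  (Finset.sum_nonneg fun _ _ => Lr_nonneg (fun _ => zero_le_one) fun _ => by positivity))

lemma dec_trivial (p k N : ℕ) [Fact p.Prime] (hk : 1 ≤ k) : Dec p k N ((p : ℝ) ^ N) :=
  fun S y a => trivial_dec p y S N a _ (rr_pos hk) fun _ => zero_le_one

/-- Broad-narrow dichotomy: either one summand dominates, or two different ones are comparable to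
the largest one. -/
lemma broad_narrow {ι : Type*} [Fintype ι] [DecidableEq ι] [Nonempty ι] (f : ι → ℂ) (u v : ℕ) :
    (‖∑ i, f i‖ ^ 2) ^ (u + v) ≤ 4 ^ (u + v) * ∑ i, (‖f i‖ ^ 2) ^ (u + v) +
      (Fintype.card ι : ℝ) ^ (4 * (u + v)) *
        ∑ i, ∑ j ∈ Finset.univ.erase i, (‖f j‖ ^ 2) ^ v * (‖f i‖ ^ 2) ^ u := by
  obtain ⟨i₀, hi₀⟩ := Finite.exists_max fun i => ‖f i‖
  set n : ℝ := ((Fintype.card ι : ℕ) : ℝ) with hn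
  have hn1 : 1 ≤ n := by rw [hn]; exact_mod_cast Fintype.card_pos
  have hpos1 : 0 ≤ ∑ i, (‖f i‖ ^ 2) ^ (u + v) := by positivity
  have hpos2 : 0 ≤ ∑ i, ∑ j ∈ Finset.univ.erase i, (‖f j‖ ^ 2) ^ v * (‖f i‖ ^ 2) ^ u := by
    positivity
  by_cases hc : ∃ j, j ≠ i₀ ∧ ‖f i₀‖ ≤ n * ‖f j‖
  · obtain ⟨j, hj, hjn⟩ := hc
    have h1 : ‖∑ i, f i‖ ≤ n * ‖f i₀‖ := by
      refine (norm_sum_le _ _).trans ((Finset.sum_le_sum fun i _ => hi₀ i).trans ?_)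
      rw [Finset.sum_const, Finset.card_univ, nsmul_eq_mul]
    have h2 : (‖f j‖ ^ 2) ^ v * (‖f i₀‖ ^ 2) ^ u ≤
        ∑ i, ∑ j ∈ Finset.univ.erase i, (‖f j‖ ^ 2) ^ v * (‖f i‖ ^ 2) ^ u := by
      refine le_trans ?_ (Finset.single_le_sum
        (f := fun i => ∑ j ∈ Finset.univ.erase i, (‖f j‖ ^ 2) ^ v * (‖f i‖ ^ 2) ^ u)
        (fun i _ => by positivity) (Finset.mem_univ i₀))
      exact Finset.single_le_sum (f := fun j => (‖f j‖ ^ 2) ^ v * (‖f i₀‖ ^ 2) ^ u)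
        (fun j _ => by positivity) (Finset.mem_erase.2 ⟨hj, Finset.mem_univ _⟩)
    calc (‖∑ i, f i‖ ^ 2) ^ (u + v) ≤ ((n * ‖f i₀‖) ^ 2) ^ (u + v) := by gcongr
      _ = n ^ (2 * (u + v)) * ((‖f i₀‖ ^ 2) ^ v * (‖f i₀‖ ^ 2) ^ u) := by
          rw [mul_pow, mul_pow, ← pow_mul, ← pow_add, add_comm v u]
      _ ≤ n ^ (2 * (u + v)) * (((n * ‖f j‖) ^ 2) ^ v * (‖f i₀‖ ^ 2) ^ u) := by gcongr
      _ = n ^ (2 * (u + v) + 2 * v) * ((‖f j‖ ^ 2) ^ v * (‖f i₀‖ ^ 2) ^ u) := by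
          rw [mul_pow, mul_pow, ← pow_mul n, pow_add]; ring
      _ ≤ n ^ (4 * (u + v)) * ((‖f j‖ ^ 2) ^ v * (‖f i₀‖ ^ 2) ^ u) := by
          gcongr
          omega
      _ ≤ n ^ (4 * (u + v)) * ∑ i, ∑ j ∈ Finset.univ.erase i, (‖f j‖ ^ 2) ^ v * (‖f i‖ ^ 2) ^ u := by
          gcongr
      _ ≤ _ := le_add_of_nonneg_left (by positivity)
  · push Not at hc
    have h1 : ‖∑ i, f i‖ ≤ 2 * ‖f i₀‖ := by
      rw [← Finset.add_sum_erase _ _ (Finset.mem_univ i₀), two_mul]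
      refine (norm_add_le _ _).trans (add_le_add le_rfl ?_)
      have : ∀ i ∈ Finset.univ.erase i₀, ‖f i‖ ≤ ‖f i₀‖ / n := by
        intro i hi
        rw [le_div_iff₀ (by linarith), mul_comm]
        exact (hc i (Finset.ne_of_mem_erase hi)).le
      refine (norm_sum_le _ _).trans ((Finset.sum_le_sum this).trans ?_)
      rw [Finset.sum_const, nsmul_eq_mul]
      have h3 : ((Finset.univ.erase i₀).card : ℝ) ≤ n := by
        rw [hn]; exact_mod_cast Finset.card_le_univ _
      calc ((Finset.univ.erase i₀).card : ℝ) * (‖f i₀‖ / n) ≤ n * (‖f i₀‖ / n) := by gcongr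
        _ = ‖f i₀‖ := by field_simp
    calc (‖∑ i, f i‖ ^ 2) ^ (u + v) ≤ ((2 * ‖f i₀‖) ^ 2) ^ (u + v) := by gcongr
      _ = 4 ^ (u + v) * (‖f i₀‖ ^ 2) ^ (u + v) := by
          rw [mul_pow, mul_pow]; norm_num
      _ ≤ 4 ^ (u + v) * ∑ i, (‖f i‖ ^ 2) ^ (u + v) := by
          gcongr
          exact Finset.single_le_sum (f := fun i => (‖f i‖ ^ 2) ^ (u + v))
            (fun j _ => by positivity) (Finset.mem_univ i₀)
      _ ≤ _ := le_add_of_nonneg_right (by positivity)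

section
variable {p k N : ℕ} [Fact p.Prime] {y : ℤ → ℤ} {A : ℤ → ℂ}

lemma Bil.trivial {l b : ℕ} {K : ℝ} (hl : 1 ≤ l) (hlk : l < k) (hb : b ≤ N) (hK : 0 ≤ K)
    (h : Bil p k N y A l b K) (S S' : Finset ℤ) (hsep : SepCls p y S S') :
    Ul p k N y A l S S' ≤ ((p : ℝ) ^ b) ^ (rr k - rr l) * K *
      (En p k N y A S' ^ (rr k - rr l) * En p k N y A S ^ rr l) := by
  have hlt := rr_lt hlk
  set v := rr k - rr l with hv
  have hv1 : 1 ≤ v := by omega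
  have hw : ∀ α, 0 ≤ Qs p k N y A S α ^ rr l := fun α => pow_nonneg (Qs_nonneg _ _) _
  have hE := fun T => En_nonneg (p := p) (k := k) (N := N) (y := y) (A := A) T
  set V : Finset ℤ → ℝ := fun T => Lr v (fun α => Qs p k N y A S α ^ rr l) (Qs p k N y A T) with hV
  have hVp : ∀ T, V T ^ v = Ul p k N y A l S T := by
    intro T
    simp only [hV]
    rw [Lr_pow hv1 hw (Qs_nonneg _)]
    exact Finset.sum_congr rfl fun α _ => mul_comm _ _
  have hV0 : ∀ T, 0 ≤ V T := fun T => Lr_nonneg hw (Qs_nonneg _)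
  have h1 : V S' ≤ (p : ℝ) ^ b * ∑ c : ZMod (p ^ b), V (cls p y S' b c) :=
    trivial_dec p y S' b A (fun α x => ph p k (k * N) α (y x)) hv1 hw
  set Z : ℝ := (K * En p k N y A S ^ rr l) ^ ((v : ℝ)⁻¹) with hZ
  have hKE : 0 ≤ K * En p k N y A S ^ rr l := mul_nonneg hK (pow_nonneg (hE _) _)
  have hZ0 : 0 ≤ Z := Real.rpow_nonneg hKE _
  have hZr : Z ^ v = K * En p k N y A S ^ rr l := Real.rpow_inv_natCast_pow hKE (by omega)
  have h2 : ∀ c : ZMod (p ^ b), V (cls p y S' b c) ≤ Z * En p k N y A (cls p y S' b c) := by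
    intro c
    refine le_of_pow_le_pow_left₀ (n := v) (by omega) (mul_nonneg hZ0 (hE _)) ?_
    rw [hVp, mul_pow, hZr]
    refine (h S _ (hsep.mono subset_rfl (cls_subset _ _ _ _ _)) (inCls_cls p y S' b c)).trans
      (le_of_eq ?_)
    ring
  have h3 : V S' ≤ (p : ℝ) ^ b * (Z * En p k N y A S') := by
    refine h1.trans (mul_le_mul_of_nonneg_left ?_ (by positivity))
    refine (Finset.sum_le_sum fun c _ => h2 c).trans (le_of_eq ?_)
    rw [← Finset.mul_sum, En_cls (by omega) S' hb]
  rw [← hVp]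
  calc V S' ^ v ≤ ((p : ℝ) ^ b * (Z * En p k N y A S')) ^ v := pow_le_pow_left₀ (hV0 _) h3 _
    _ = _ := by rw [mul_pow, mul_pow Z, hZr]; ring

/-- The linear estimate from the estimate at the previous scale and a bilinear estimate. -/
lemma dec_of_bil {l M : ℕ} {Δ₁ K : ℝ} (hl : 1 ≤ l) (hlk : l < k) (hΔ₁ : 0 ≤ Δ₁) (hK : 0 ≤ K)
    (hD : Dec p k M Δ₁)
    (hB : ∀ (y : ℤ → ℤ) (A : ℤ → ℂ) (S S' : Finset ℤ), SepCls p y S S' →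
      Ul p k (1 + M) y A l S S' ≤ K *
        (En p k (1 + M) y A S' ^ (rr k - rr l) * En p k (1 + M) y A S ^ rr l))
    {Δ : ℝ} (hΔ : 0 ≤ Δ)
    (h : 4 ^ rr k * Δ₁ ^ rr k + (p : ℝ) ^ (4 * rr k + 2) * K ≤ Δ ^ rr k) :
    Dec p k (1 + M) Δ := by
  intro S y A
  have hk : 1 ≤ k := by omega
  have hr := rr_pos hk
  have hlt := rr_lt hlk
  have hE := fun T => En_nonneg (p := p) (k := k) (N := 1 + M) (y := y) (A := A) T
  set T : ZMod (p ^ 1) → Finset ℤ := fun i => cls p y S 1 i with hT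
  have hcard : Fintype.card (ZMod (p ^ 1)) = p := by rw [ZMod.card, pow_one]
  have hpt : ∀ α, Qs p k (1 + M) y A S α ^ rr k ≤
      4 ^ rr k * ∑ i, Qs p k (1 + M) y A (T i) α ^ rr k +
      (p : ℝ) ^ (4 * rr k) * ∑ i, ∑ j ∈ Finset.univ.erase i,
        Qs p k (1 + M) y A (T j) α ^ (rr k - rr l) * Qs p k (1 + M) y A (T i) α ^ rr l := by
    intro α
    have := broad_narrow (fun i : ZMod (p ^ 1) =>
      fs A (fun α x => ph p k (k * (1 + M)) α (y x)) (T i) α) (rr l) (rr k - rr l)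
    rw [hcard, Nat.add_sub_cancel' hlt.le, ← fs_eq_sum_cls p y S 1] at this
    exact this
  have hEi : ∑ i, En p k (1 + M) y A (T i) = En p k (1 + M) y A S := En_cls hk S (by omega)
  have hEle : ∀ i, En p k (1 + M) y A (T i) ≤ En p k (1 + M) y A S := by
    intro i
    rw [← hEi]
    exact Finset.single_le_sum (f := fun i => En p k (1 + M) y A (T i)) (fun i _ => hE _)
      (Finset.mem_univ i)
  set L := fun U => Lr (rr k) 1 (Qs p k (1 + M) y A U) with hL
  have hL0 : ∀ U, 0 ≤ L U := fun U => Lr_nonneg (fun _ => zero_le_one) (Qs_nonneg _)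
  have hnarrow : ∑ i, L (T i) ^ rr k ≤ Δ₁ ^ rr k * En p k (1 + M) y A S ^ rr k := by
    have h1 : ∀ i, L (T i) ≤ Δ₁ * En p k (1 + M) y A (T i) := fun i =>
      hD.rescale hk hΔ₁ 1 (T i) y A (inCls_cls p y S 1 i)
    calc ∑ i, L (T i) ^ rr k ≤ ∑ i, (Δ₁ * En p k (1 + M) y A (T i)) ^ rr k :=
          Finset.sum_le_sum fun i _ => pow_le_pow_left₀ (hL0 _) (h1 i) _
      _ = Δ₁ ^ rr k * ∑ i, En p k (1 + M) y A (T i) ^ rr k := by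
          rw [Finset.mul_sum]; exact Finset.sum_congr rfl fun i _ => mul_pow _ _ _
      _ ≤ _ := by
          refine mul_le_mul_of_nonneg_left ?_ (by positivity)
          obtain ⟨r', hr'⟩ : ∃ r', rr k = r' + 1 := ⟨rr k - 1, by omega⟩
          rw [hr']
          calc ∑ i, En p k (1 + M) y A (T i) ^ (r' + 1)
              ≤ ∑ i, En p k (1 + M) y A S ^ r' * En p k (1 + M) y A (T i) :=
                Finset.sum_le_sum fun i _ => by
                  rw [pow_succ]
                  exact mul_le_mul_of_nonneg_right (pow_le_pow_left₀ (hE _) (hEle i) _) (hE _)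
            _ = _ := by rw [← Finset.mul_sum, hEi, pow_succ]
  have hbroad : ∑ i, ∑ j ∈ Finset.univ.erase i, Ul p k (1 + M) y A l (T i) (T j) ≤
      (p : ℝ) ^ 2 * (K * En p k (1 + M) y A S ^ rr k) := by
    have h1 : ∀ i, ∀ j ∈ Finset.univ.erase i, Ul p k (1 + M) y A l (T i) (T j) ≤
        K * En p k (1 + M) y A S ^ rr k := by
      intro i j hj
      have hne := Finset.ne_of_mem_erase hj
      have hsep : SepCls p y (T i) (T j) := by
        intro x hx x' hx' hd
        have e1 := (mem_cls.1 hx).2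
        have e2 := (mem_cls.1 hx').2
        apply hne
        rw [← e1, ← e2, eq_comm, zmod_pow_eq_iff, pow_one]
        exact hd
      refine (hB y A _ _ hsep).trans (mul_le_mul_of_nonneg_left ?_ hK)
      calc _ ≤ En p k (1 + M) y A S ^ (rr k - rr l) * En p k (1 + M) y A S ^ rr l :=
            mul_le_mul (pow_le_pow_left₀ (hE _) (hEle j) _) (pow_le_pow_left₀ (hE _) (hEle i) _)
              (pow_nonneg (hE _) _) (pow_nonneg (hE _) _)
        _ = _ := by rw [← pow_add, Nat.sub_add_cancel hlt.le]
    have hKE : 0 ≤ K * En p k (1 + M) y A S ^ rr k := mul_nonneg hK (pow_nonneg (hE _) _)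
    calc _ ≤ ∑ i : ZMod (p ^ 1), ∑ j ∈ Finset.univ.erase i, K * En p k (1 + M) y A S ^ rr k :=
          Finset.sum_le_sum fun i _ => Finset.sum_le_sum (h1 i)
      _ ≤ ∑ i : ZMod (p ^ 1), ∑ j : ZMod (p ^ 1), K * En p k (1 + M) y A S ^ rr k :=
          Finset.sum_le_sum fun i _ => Finset.sum_le_sum_of_subset_of_nonneg
            (Finset.subset_univ _) fun _ _ _ => hKE
      _ = _ := by
          rw [Finset.sum_const, Finset.sum_const, Finset.card_univ, hcard, nsmul_eq_mul,
            nsmul_eq_mul]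
          ring
  have hfin : L S ^ rr k ≤ (Δ * En p k (1 + M) y A S) ^ rr k := by
    calc L S ^ rr k = ∑ α, Qs p k (1 + M) y A S α ^ rr k := Lr_one_pow hr (Qs_nonneg _)
      _ ≤ ∑ α, (4 ^ rr k * ∑ i, Qs p k (1 + M) y A (T i) α ^ rr k +
          (p : ℝ) ^ (4 * rr k) * ∑ i, ∑ j ∈ Finset.univ.erase i,
          Qs p k (1 + M) y A (T j) α ^ (rr k - rr l) * Qs p k (1 + M) y A (T i) α ^ rr l) :=
          Finset.sum_le_sum fun α _ => hpt α
      _ = 4 ^ rr k * ∑ i, L (T i) ^ rr k + (p : ℝ) ^ (4 * rr k) *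
          ∑ i, ∑ j ∈ Finset.univ.erase i, Ul p k (1 + M) y A l (T i) (T j) := by
          rw [Finset.sum_add_distrib, ← Finset.mul_sum, ← Finset.mul_sum]
          congr 2
          · rw [Finset.sum_comm]
            exact Finset.sum_congr rfl fun i _ => (Lr_one_pow hr (Qs_nonneg _)).symm
          · rw [Finset.sum_comm]
            refine Finset.sum_congr rfl fun i _ => ?_
            rw [Finset.sum_comm]
            rfl
      _ ≤ 4 ^ rr k * (Δ₁ ^ rr k * En p k (1 + M) y A S ^ rr k) + (p : ℝ) ^ (4 * rr k) *
          ((p : ℝ) ^ 2 * (K * En p k (1 + M) y A S ^ rr k)) := by gcongr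
      _ = (4 ^ rr k * Δ₁ ^ rr k + (p : ℝ) ^ (4 * rr k + 2) * K) *
          En p k (1 + M) y A S ^ rr k := by ring
      _ ≤ Δ ^ rr k * En p k (1 + M) y A S ^ rr k :=
          mul_le_mul_of_nonneg_right h (pow_nonneg (hE _) _)
      _ = _ := (mul_pow _ _ _).symm
  exact le_of_pow_le_pow_left₀ (by omega) (mul_nonneg hΔ (hE _)) hfin

end

/-- One improvement of the decoupling exponent. -/
lemma dec_improve {p k : ℕ} [Fact p.Prime] {τ η η' δ C : ℝ} {A₀ r : ℕ} (hk : 2 ≤ k) (hkp : k < p)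
    (hτ : 0 ≤ τ) (hA : 1 ≤ A₀)
    (hlow : ∀ l, 1 ≤ l → l < k → Dec p l A₀ ((p : ℝ) ^ (τ * A₀)))
    (hC : 1 ≤ C) (hD : ∀ N, Dec p k N (C * (p : ℝ) ^ (η * N)))
    (h : δ ≤ η / k - τ) (hr : 2 ≤ r * δ) (hη' : η - 1 / (k : ℝ) ^ r ≤ η')
    (h8 : 8 ≤ (p : ℝ) ^ η') :
    ∃ C' : ℝ, 1 ≤ C' ∧ ∀ N : ℕ, Dec p k N (C' * (p : ℝ) ^ (η' * N)) := by
  have hp1 : (1 : ℝ) ≤ p := by exact_mod_cast (Fact.out : p.Prime).one_lt.le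
  have hp0 : (0 : ℝ) < p := by linarith
  obtain ⟨l, hl, hlk, hG⟩ := exists_Gs_ge hk h hr
  obtain ⟨C₁, hC₁, hB⟩ := bil_rounds hk hkp hτ hA hlow hC hD r
  have hlt := rr_lt hlk
  have hR := rr_pos (show 1 ≤ k by omega)
  set R := rr k with hRdef
  have hk0 : (0 : ℝ) < (k : ℝ) ^ r := by positivity
  set F := k.factorial ^ r with hF
  have hFpos : 0 < F := by positivity
  have hkr : 0 < k ^ r := by positivity
  set C₂ : ℝ := (p : ℝ) ^ (4 * R + 2) * (C₁ * (p : ℝ) ^ ((R : ℝ) * F)) with hC₂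
  have hC₂1 : 1 ≤ C₂ := by
    have h1 : (1 : ℝ) ≤ (p : ℝ) ^ (4 * R + 2) := one_le_pow₀ hp1
    have h2 : (1 : ℝ) ≤ (p : ℝ) ^ ((R : ℝ) * F) := Real.one_le_rpow hp1 (by positivity)
    exact one_le_mul_of_one_le_of_one_le h1 (one_le_mul_of_one_le_of_one_le hC₁ h2)
  -- the bilinear estimate after decoupling the second factor trivially
  have key : ∀ M : ℕ, ∀ (y : ℤ → ℤ) (A : ℤ → ℂ) (S S' : Finset ℤ), SepCls p y S S' →
      Ul p k (1 + M) y A l S S' ≤ (C₁ * (p : ℝ) ^ ((R : ℝ) * F) *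
        (p : ℝ) ^ ((R : ℝ) * (η' * (1 + M : ℕ)))) *
        (En p k (1 + M) y A S' ^ (rr k - rr l) * En p k (1 + M) y A S ^ rr l) := by
    intro M y A S S' hsep
    set N := 1 + M with hN
    set b := F * (N / (k ^ r * F)) with hb
    have hb1 : k ^ r * b ≤ N := by
      rw [hb, ← mul_assoc]; exact Nat.mul_div_le _ _
    have hbN : b ≤ N := (Nat.le_mul_of_pos_left b hkr).trans hb1
    have hb2 : (N : ℝ) / (k : ℝ) ^ r - F ≤ b := by
      have h1 : N < k ^ r * F * (N / (k ^ r * F)) + k ^ r * F :=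
        (Nat.lt_mul_div_succ N (show 0 < k ^ r * F by positivity)).trans_eq (by ring)
      have h2 : N < k ^ r * (b + F) := by rw [hb]; calc
        N < _ := h1
        _ = _ := by ring
      have h3 : (N : ℝ) < (k : ℝ) ^ r * (b + F) := by exact_mod_cast h2
      rw [sub_le_iff_le_add, div_le_iff₀ hk0]
      linarith
    have h0 := hB N (by omega) y A l b hlk (Dvd.intro _ rfl) hb1
    have hK0 : 0 ≤ C₁ * (p : ℝ) ^ ((R : ℝ) * (η * N - Gs η τ k r l * b)) := by positivity
    refine (h0.trivial hl hlk hbN hK0 S S' hsep).trans (mul_le_mul_of_nonneg_right ?_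
      (mul_nonneg (pow_nonneg (En_nonneg _) _) (pow_nonneg (En_nonneg _) _)))
    have e1 : ((p : ℝ) ^ b) ^ (R - rr l) ≤ (p : ℝ) ^ ((R : ℝ) * b) := by
      rw [← pow_mul, ← Real.rpow_natCast]
      refine Real.rpow_le_rpow_of_exponent_le hp1 ?_
      rw [mul_comm b]
      push_cast
      gcongr
      exact_mod_cast Nat.sub_le _ _
    calc ((p : ℝ) ^ b) ^ (R - rr l) * (C₁ * (p : ℝ) ^ ((R : ℝ) * (η * N - Gs η τ k r l * b)))
        ≤ (p : ℝ) ^ ((R : ℝ) * b) * (C₁ * (p : ℝ) ^ ((R : ℝ) * (η * N - Gs η τ k r l * b))) := by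
          gcongr
      _ = C₁ * (p : ℝ) ^ ((R : ℝ) * b + (R : ℝ) * (η * N - Gs η τ k r l * b)) := by
          rw [Real.rpow_add hp0]; ring
      _ ≤ C₁ * (p : ℝ) ^ ((R : ℝ) * F + (R : ℝ) * (η' * N)) := by
          refine mul_le_mul_of_nonneg_left (Real.rpow_le_rpow_of_exponent_le hp1 ?_) (by linarith)
          have hb0 : (0 : ℝ) ≤ b := by positivity
          have hN0 : (0 : ℝ) ≤ N := by positivity
          rw [← mul_add, ← mul_add]
          refine mul_le_mul_of_nonneg_left ?_ (by positivity)
          have h4 : (η - 1 / (k : ℝ) ^ r) * N ≤ η' * N := by gcongr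
          have h5 : (η - 1 / (k : ℝ) ^ r) * N = η * N - N / (k : ℝ) ^ r := by ring
          nlinarith
      _ = _ := by rw [Real.rpow_add hp0]; ring
  refine ⟨2 * C₂, by linarith, fun N => ?_⟩
  induction N with
  | zero =>
    refine (dec_trivial p k 0 (by omega)).mono ?_
    simp
    linarith
  | succ M ih =>
    rw [add_comm M 1]
    refine dec_of_bil hl hlk (by positivity) (by positivity) ih (key M) (by positivity) ?_
    set P : ℝ := (p : ℝ) ^ (η' * M) with hP
    have hP0 : 0 < P := by positivity
    have hsucc : (p : ℝ) ^ (η' * (1 + M : ℕ)) = (p : ℝ) ^ η' * P := by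
      rw [hP, ← Real.rpow_add hp0]; congr 1; push_cast; ring
    have hpow : (p : ℝ) ^ ((R : ℝ) * (η' * (1 + M : ℕ))) = ((p : ℝ) ^ η' * P) ^ R := by
      rw [← hsucc, mul_comm, Real.rpow_mul_natCast hp0.le]
    rw [hpow, hsucc]
    set Q := (p : ℝ) ^ η' with hQ
    have hA1 : 4 ^ R * (2 * C₂ * P) ^ R ≤ (2 * C₂ * (Q * P)) ^ R / 2 := by
      have : (2 : ℝ) * (4 * (2 * C₂ * P)) ^ R ≤ (2 * C₂ * (Q * P)) ^ R := calc
        (2 : ℝ) * (4 * (2 * C₂ * P)) ^ R ≤ 2 ^ R * (4 * (2 * C₂ * P)) ^ R := by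
            gcongr; exact le_self_pow₀ (by norm_num) (by omega)
        _ = (8 * (2 * C₂ * P)) ^ R := by rw [← mul_pow]; ring_nf
        _ ≤ (Q * (2 * C₂ * P)) ^ R := by gcongr
        _ = _ := by ring_nf
      rw [← mul_pow]; linarith
    have hA2 : (p : ℝ) ^ (4 * R + 2) * (C₁ * (p : ℝ) ^ ((R : ℝ) * F) * (Q * P) ^ R) ≤
        (2 * C₂ * (Q * P)) ^ R / 2 := by
      have e1 : (2 : ℝ) * C₂ ≤ (2 * C₂) ^ R := le_self_pow₀ (by linarith) (by omega)
      have e2 : (0 : ℝ) ≤ (Q * P) ^ R := by positivity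
      calc _ = C₂ * (Q * P) ^ R := by rw [hC₂]; ring
        _ = (2 * C₂) * (Q * P) ^ R / 2 := by ring
        _ ≤ (2 * C₂) ^ R * (Q * P) ^ R / 2 := by gcongr
        _ = _ := by rw [← mul_pow]
    linarith

/-- Decoupling in degree `k` from decoupling at one fixed scale `A₀` in all lower degrees. The exponent
starts from the trivial value `1` and `dec_improve` lowers it by `k^{-r}` in each step until it
reaches `σ`. -/
lemma dec_iterate {p k : ℕ} [Fact p.Prime] {τ σ : ℝ} {A₀ : ℕ} (hk : 2 ≤ k) (hkp : k < p)
    (hτ : 0 < τ) (hA : 1 ≤ A₀)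
    (hlow : ∀ l, 1 ≤ l → l < k → Dec p l A₀ ((p : ℝ) ^ (τ * A₀)))
    (hσ : 2 * k * τ ≤ σ) (h8 : 8 ≤ (p : ℝ) ^ σ) :
    ∃ C : ℝ, 1 ≤ C ∧ ∀ N : ℕ, Dec p k N (C * (p : ℝ) ^ (σ * N)) := by
  have hp1 : (1 : ℝ) ≤ p := by exact_mod_cast (Fact.out : p.Prime).one_lt.le
  obtain ⟨r, hr⟩ := exists_nat_ge (2 / τ)
  rw [div_le_iff₀ hτ] at hr
  set β : ℝ := 1 / (k : ℝ) ^ r with hβ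
  have hk0 : (0 : ℝ) < k := by positivity
  have hβ0 : 0 < β := by positivity
  have step : ∀ m : ℕ, ∃ C : ℝ, 1 ≤ C ∧ ∀ N : ℕ,
      Dec p k N (C * (p : ℝ) ^ (max (1 - m * β) σ * N)) := by
    intro m
    induction m with
    | zero =>
      refine ⟨1, le_rfl, fun N => (dec_trivial p k N (by omega)).mono ?_⟩
      rw [one_mul, ← Real.rpow_natCast]
      refine Real.rpow_le_rpow_of_exponent_le hp1 ?_
      have : (1 : ℝ) ≤ max (1 - ((0 : ℕ) : ℝ) * β) σ := by simp
      nlinarith [(Nat.cast_nonneg N : (0 : ℝ) ≤ N)]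
    | succ m ih =>
      obtain ⟨C, hC, hD⟩ := ih
      refine dec_improve hk hkp hτ.le hA hlow hC hD (δ := τ) ?_ hr ?_ ?_
      · have : 2 * k * τ ≤ max (1 - m * β) σ := hσ.trans (le_max_right _ _)
        rw [le_sub_iff_add_le, le_div_iff₀ hk0]
        linarith
      · rw [← hβ, sub_le_iff_le_add]
        refine max_le ?_ ?_
        · have := le_max_left (1 - ((m + 1 : ℕ) : ℝ) * β) σ
          push_cast at this ⊢
          linarith
        · have := le_max_right (1 - ((m + 1 : ℕ) : ℝ) * β) σ
          linarith
      · exact h8.trans (Real.rpow_le_rpow_of_exponent_le hp1 (le_max_right _ _))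
  obtain ⟨m, hm⟩ := exists_nat_ge (1 / β)
  obtain ⟨C, hC, hD⟩ := step m
  refine ⟨C, hC, fun N => ?_⟩
  rw [div_le_iff₀ hβ0] at hm
  have hσ0 : 0 ≤ σ := le_trans (by positivity) hσ
  have := hD N
  rwa [max_eq_right (by linarith)] at this

lemma ph_orthogonal (p N : ℕ) [Fact p.Prime] {z z' : ℤ}
    (h : ((z : ℤ) : ZMod (p ^ (1 * N))) ≠ ((z' : ℤ) : ZMod (p ^ (1 * N)))) :
    ∑ α : Fin 2 → ZMod (p ^ (1 * N)), ph p 1 (1 * N) α z * starRingEnd ℂ (ph p 1 (1 * N) α z') = 0 := by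
  have h1 : ∀ α : Fin 2 → ZMod (p ^ (1 * N)),
      ph p 1 (1 * N) α z * starRingEnd ℂ (ph p 1 (1 * N) α z') =
      ZMod.stdAddChar (α 1 * ((z : ZMod (p ^ (1 * N))) - (z' : ZMod (p ^ (1 * N))))) := by
    intro α
    unfold ph
    rw [← AddChar.map_neg_eq_conj, ← AddChar.map_add_eq_mul]
    congr 1
    simp [Fin.sum_univ_two]
    ring
  set d := ((z : ZMod (p ^ (1 * N))) - (z' : ZMod (p ^ (1 * N)))) with hd
  have hd0 : d ≠ 0 := sub_ne_zero.2 h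
  rw [Finset.sum_congr rfl fun α _ => h1 α]
  -- translating `α` multiplies the sum by a nontrivial root of unity
  have h2 : ∑ α : Fin 2 → ZMod (p ^ (1 * N)), (ZMod.stdAddChar (α 1 * d) : ℂ) =
      (ZMod.stdAddChar d : ℂ) *
        ∑ α : Fin 2 → ZMod (p ^ (1 * N)), (ZMod.stdAddChar (α 1 * d) : ℂ) := by
    rw [Finset.mul_sum]
    refine (Equiv.sum_comp (Equiv.addRight (1 : Fin 2 → ZMod (p ^ (1 * N)))) _).symm.trans
      (Finset.sum_congr rfl fun α _ => ?_)
    rw [← AddChar.map_add_eq_mul]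
    congr 1
    simp
    ring
  have h3 : (ZMod.stdAddChar d : ℂ) ≠ 1 := by
    intro h4
    rw [← AddChar.map_zero_eq_one (ZMod.stdAddChar (N := p ^ (1 * N)))] at h4
    exact hd0 (ZMod.injective_stdAddChar h4)
  by_contra h5
  exact h3 (mul_right_cancel₀ h5 (h2.symm.trans (one_mul (_ : ℂ)).symm))

/-- Orthogonality: the case `k = 1`. -/
lemma dec_one (p N : ℕ) [Fact p.Prime] : Dec p 1 N 1 := by
  intro S y a
  have hr : rr 1 = 1 := rfl
  set ψ := (fun (α : Fin 2 → ZMod (p ^ (1 * N))) x => ph p 1 (1 * N) α (y x)) with hψ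
  have hL : ∀ T, Lr (rr 1) 1 (fun α => ‖fs a ψ T α‖ ^ 2) = ∑ α, ‖fs a ψ T α‖ ^ 2 := by
    intro T
    have := Lr_one_pow (r := 1) (u := fun α => ‖fs a ψ T α‖ ^ 2) le_rfl fun _ => by positivity
    rw [hr]
    simpa using this
  rw [one_mul (_ : ℝ), hL, Finset.sum_congr rfl fun c _ => hL _]
  refine le_of_eq ?_
  rw [← Complex.ofReal_inj]
  have hsq : ∀ w : ℂ, ((‖w‖ ^ 2 : ℝ) : ℂ) = w * starRingEnd ℂ w := fun w => by
    rw [Complex.mul_conj, Complex.normSq_eq_norm_sq]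
  push_cast
  simp only [← Complex.ofReal_pow, hsq]
  have key : ∀ c c' : ZMod (p ^ N), c ≠ c' →
      ∑ α, fs a ψ (cls p y S N c) α * starRingEnd ℂ (fs a ψ (cls p y S N c') α) = 0 := by
    intro c c' hc
    unfold fs
    simp only [map_sum, map_mul, Finset.sum_mul_sum]
    rw [Finset.sum_comm]
    refine Finset.sum_eq_zero fun x hx => ?_
    rw [Finset.sum_comm]
    refine Finset.sum_eq_zero fun x' hx' => ?_
    have : ((y x : ℤ) : ZMod (p ^ (1 * N))) ≠ ((y x' : ℤ) : ZMod (p ^ (1 * N))) := by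
      intro h
      rw [zmod_pow_eq_iff, one_mul, ← zmod_pow_eq_iff, (mem_cls.1 hx).2, (mem_cls.1 hx').2] at h
      exact hc h
    have h0 := ph_orthogonal p N this
    calc _ = ∑ α, (a x * starRingEnd ℂ (a x')) *
        (ph p 1 (1 * N) α (y x) * starRingEnd ℂ (ph p 1 (1 * N) α (y x'))) :=
          Finset.sum_congr rfl fun α _ => by simp only [hψ]; ring
      _ = 0 := by rw [← Finset.mul_sum, h0, mul_zero]
  have h1 : ∀ α, fs a ψ S α = ∑ c : ZMod (p ^ N), fs a ψ (cls p y S N c) α :=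
    fun α => fs_eq_sum_cls p y S N a ψ α
  simp only [h1, map_sum, Finset.sum_mul_sum]
  rw [Finset.sum_comm]
  refine Finset.sum_congr rfl fun c _ => ?_
  rw [Finset.sum_comm]
  exact Finset.sum_eq_single c (fun c' _ hc => key c c' hc.symm) (by simp)

/-- Decoupling for the moment curve in degree `k`, with an arbitrarily small loss `p^{τN}` once
`p` is large enough. -/
theorem decoupling (k : ℕ) (hk : 1 ≤ k) : ∀ τ : ℝ, 0 < τ → ∀ᶠ p : ℕ in Filter.atTop,
    ∀ _ : Fact p.Prime, ∃ C : ℝ, 1 ≤ C ∧ ∀ N : ℕ, Dec p k N (C * (p : ℝ) ^ (τ * N)) := by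
  induction k using Nat.strong_induction_on with
  | _ k ih =>
  intro σ hσ
  rcases hk.eq_or_lt with rfl | hk2
  · refine Filter.Eventually.of_forall fun p hp => ⟨1, le_rfl, fun N => (dec_one p N).mono ?_⟩
    rw [one_mul]
    exact Real.one_le_rpow (by exact_mod_cast hp.out.one_lt.le) (by positivity)
  have hk0 : (0 : ℝ) < k := by positivity
  set τ := σ / (2 * k) with hτ
  have hτ0 : 0 < τ := by positivity
  have hall : ∀ᶠ p : ℕ in Filter.atTop, ∀ l ∈ Finset.Ico 1 k, ∀ _ : Fact p.Prime,
      ∃ C : ℝ, 1 ≤ C ∧ ∀ N : ℕ, Dec p l N (C * (p : ℝ) ^ (τ / 2 * N)) := by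
    rw [Filter.eventually_all_finset]
    intro l hl
    rw [Finset.mem_Ico] at hl
    exact ih l hl.2 hl.1 (τ / 2) (by positivity)
  have h8 : ∀ᶠ p : ℕ in Filter.atTop, (8 : ℝ) ≤ (p : ℝ) ^ σ :=
    ((tendsto_rpow_atTop hσ).comp tendsto_natCast_atTop_atTop).eventually_ge_atTop 8
  filter_upwards [hall, h8, Filter.eventually_gt_atTop k] with p hp h8 hkp hF
  have hp1 : (1 : ℝ) < p := by exact_mod_cast hF.out.one_lt
  have : ∀ l, ∃ A : ℕ, l ∈ Finset.Ico 1 k → ∀ A₀, A ≤ A₀ → Dec p l A₀ ((p : ℝ) ^ (τ * A₀)) := by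
    intro l
    by_cases hl : l ∈ Finset.Ico 1 k
    swap
    · exact ⟨0, fun h => absurd h hl⟩
    obtain ⟨C, hC, hD⟩ := hp l hl hF
    have hbase : 1 < (p : ℝ) ^ (τ / 2) := Real.one_lt_rpow hp1 (by positivity)
    obtain ⟨A, hA⟩ := pow_unbounded_of_one_lt C hbase
    refine ⟨A, fun _ A₀ hA₀ => (hD A₀).mono ?_⟩
    have h1 : C ≤ (p : ℝ) ^ (τ / 2 * A₀) := by
      rw [Real.rpow_mul_natCast (by linarith)]
      exact hA.le.trans (pow_le_pow_right₀ hbase.le hA₀)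
    calc C * (p : ℝ) ^ (τ / 2 * A₀) ≤ (p : ℝ) ^ (τ / 2 * A₀) * (p : ℝ) ^ (τ / 2 * A₀) := by
          gcongr
      _ = _ := by rw [← Real.rpow_add (by linarith)]; congr 1; ring
  choose A hA using this
  set A₀ := 1 + ∑ l ∈ Finset.Ico 1 k, A l with hA₀
  refine dec_iterate (τ := τ) (A₀ := A₀) hk2 hkp hτ0 (by omega) ?_ ?_ h8
  · intro l h1 h2
    have hl : l ∈ Finset.Ico 1 k := Finset.mem_Ico.2 ⟨h1, h2⟩
    refine hA l hl A₀ ?_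
    have := Finset.single_le_sum (f := A) (fun _ _ => Nat.zero_le _) hl
    omega
  · rw [hτ]
    apply le_of_eq
    field_simp

/-! ### Vinogradov's mean value theorem in degree five -/

/-- The circle `ℝ/ℤ`. -/
abbrev Tor := UnitAddCircle

/-- The standard character of `ℝ/ℤ`. -/
noncomputable def chi (t : Tor) : ℂ := (AddCircle.toCircle t : ℂ)

lemma chi_add (s t : Tor) : chi (s + t) = chi s * chi t := by
  unfold chi
  rw [AddCircle.toCircle_add, Circle.coe_mul]

lemma norm_chi (t : Tor) : ‖chi t‖ = 1 := Circle.norm_coe _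

lemma chi_zero : chi 0 = 1 := by simp [chi]

lemma continuous_chi : Continuous chi :=
  continuous_subtype_val.comp AddCircle.continuous_toCircle

lemma chi_coe (t : ℝ) : chi (t : Tor) = e t := by
  unfold chi e
  rw [AddCircle.toCircle_apply_mk, Circle.coe_exp]
  congr 1
  push_cast
  ring

lemma volume_tor : (volume : Measure Tor) Set.univ = 1 := UnitAddCircle.measure_univ

lemma lintegral_tor_const (c : ENNReal) : ∫⁻ _ : Tor, c = c := by
  rw [lintegral_const, volume_tor, mul_one]

/-- The weighted exponential sum over the full moment curve of degree `5`. -/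
noncomputable def F5 (c : ℤ → ℂ) (S : Finset ℤ) (a1 a2 a3 a4 a5 : Tor) : ℂ :=
  ∑ x ∈ S, c x * chi (x • a1 + x ^ 2 • a2 + x ^ 3 • a3 + x ^ 4 • a4 + x ^ 5 • a5)

/-- Iterated lower integral over `(ℝ/ℤ)^5`. -/
noncomputable def J5 (g : Tor → Tor → Tor → Tor → Tor → ENNReal) : ENNReal :=
  ∫⁻ a5, ∫⁻ a3, ∫⁻ a1, ∫⁻ a2, ∫⁻ a4, g a1 a2 a3 a4 a5

lemma J5_mono {g h : Tor → Tor → Tor → Tor → Tor → ENNReal}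
    (H : ∀ a1 a2 a3 a4 a5, g a1 a2 a3 a4 a5 ≤ h a1 a2 a3 a4 a5) : J5 g ≤ J5 h :=
  lintegral_mono fun a5 => lintegral_mono fun a3 => lintegral_mono fun a1 => lintegral_mono
    fun a2 => lintegral_mono fun a4 => H a1 a2 a3 a4 a5

lemma J5_const (c : ENNReal) : J5 (fun _ _ _ _ _ => c) = c := by
  simp only [J5, lintegral_tor_const]

lemma J5_shift (g : Tor → Tor → Tor → Tor → Tor → ENNReal) (t1 t2 t3 t4 t5 : Tor) :
    J5 (fun a1 a2 a3 a4 a5 => g (a1 + t1) (a2 + t2) (a3 + t3) (a4 + t4) (a5 + t5)) = J5 g := by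
  unfold J5
  symm
  rw [← lintegral_add_right_eq_self _ t5]
  refine lintegral_congr fun a5 => ?_
  rw [← lintegral_add_right_eq_self _ t3]
  refine lintegral_congr fun a3 => ?_
  rw [← lintegral_add_right_eq_self _ t1]
  refine lintegral_congr fun a1 => ?_
  rw [← lintegral_add_right_eq_self _ t2]
  refine lintegral_congr fun a2 => ?_
  rw [← lintegral_add_right_eq_self _ t4]

lemma le_lintegral_sum {α ι : Type*} [MeasurableSpace α] {μ : Measure α} (s : Finset ι)
    (g : ι → α → ENNReal) : ∑ i ∈ s, ∫⁻ a, g i a ∂μ ≤ ∫⁻ a, ∑ i ∈ s, g i a ∂μ := by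
  classical
  induction s using Finset.induction_on with
  | empty => simp
  | insert i s hi ih =>
    simp only [Finset.sum_insert hi]
    exact (add_le_add le_rfl ih).trans (le_lintegral_add _ _)

lemma J5_sum_le {ι : Type*} (s : Finset ι) (g : ι → Tor → Tor → Tor → Tor → Tor → ENNReal) :
    ∑ i ∈ s, J5 (g i) ≤ J5 (fun a1 a2 a3 a4 a5 => ∑ i ∈ s, g i a1 a2 a3 a4 a5) := by
  unfold J5
  refine (le_lintegral_sum s _).trans (lintegral_mono fun a5 => ?_)
  refine (le_lintegral_sum s _).trans (lintegral_mono fun a3 => ?_)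
  refine (le_lintegral_sum s _).trans (lintegral_mono fun a1 => ?_)
  refine (le_lintegral_sum s _).trans (lintegral_mono fun a2 => ?_)
  exact le_lintegral_sum s _

lemma chi_toAddCircle {N : ℕ} [NeZero N] (j : ZMod N) : chi (ZMod.toAddCircle j) = ZMod.stdAddChar j :=
  rfl

/-- Translating by a point of order `p^M` turns `F5` into a `p`-adic exponential sum. -/
lemma F5_translate (p M : ℕ) [Fact p.Prime] (c : ℤ → ℂ) (S : Finset ℤ) (a1 a2 a3 a4 a5 : Tor)
    (α : Fin 6 → ZMod (p ^ M)) :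
    ‖F5 c S (a1 + ZMod.toAddCircle (α 1)) (a2 + ZMod.toAddCircle (α 2))
      (a3 + ZMod.toAddCircle (α 3)) (a4 + ZMod.toAddCircle (α 4)) (a5 + ZMod.toAddCircle (α 5))‖ =
    ‖fs (fun x => c x * chi (x • a1 + x ^ 2 • a2 + x ^ 3 • a3 + x ^ 4 • a4 + x ^ 5 • a5))
      (fun α x => ph p 5 M α x) S α‖ := by
  have h1 : ‖(ZMod.stdAddChar (α 0) : ℂ)‖ = 1 := Circle.norm_coe _
  refine (one_mul ‖F5 _ _ _ _ _ _ _‖).symm.trans ((congrArg (· * _) h1.symm).trans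
    ((norm_mul _ _).symm.trans (congrArg _ ?_)))
  unfold F5 fs ph
  rw [Finset.mul_sum]
  refine Finset.sum_congr rfl fun x _ => ?_
  have h2 : (∑ j : Fin 6, α j * ((x : ℤ) : ZMod (p ^ M)) ^ (j : ℕ)) =
      α 0 + (x • α 1 + x ^ 2 • α 2 + x ^ 3 • α 3 + x ^ 4 • α 4 + x ^ 5 • α 5) := by
    simp [Fin.sum_univ_succ]
    ring
  beta_reduce
  rw [h2, AddChar.map_add_eq_mul, ← chi_toAddCircle (x • α 1 + _ + _ + _ + _)]
  have h3 : x • (a1 + ZMod.toAddCircle (α 1)) + x ^ 2 • (a2 + ZMod.toAddCircle (α 2)) +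
      x ^ 3 • (a3 + ZMod.toAddCircle (α 3)) + x ^ 4 • (a4 + ZMod.toAddCircle (α 4)) +
      x ^ 5 • (a5 + ZMod.toAddCircle (α 5)) =
      (x • a1 + x ^ 2 • a2 + x ^ 3 • a3 + x ^ 4 • a4 + x ^ 5 • a5) +
      ZMod.toAddCircle (x • α 1 + x ^ 2 • α 2 + x ^ 3 • α 3 + x ^ 4 • α 4 + x ^ 5 • α 5) := by
    simp only [map_add, map_zsmul, smul_add]
    abel
  rw [h3, chi_add]
  ring

/-- The `p`-adic mean value when the residue classes separate the points of `S`. -/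
lemma dec_points {p N : ℕ} [Fact p.Prime] {Δ : ℝ} (hD : Dec p 5 N Δ) (S : Finset ℤ)
    (hS : ∀ x ∈ S, ∀ y ∈ S, (p : ℤ) ^ N ∣ x - y → x = y) (a : ℤ → ℂ) (hΔ : 0 ≤ Δ) :
    ∑ α, ‖fs a (fun α x => ph p 5 (5 * N) α x) S α‖ ^ 30 ≤
      (Δ * ∑ x ∈ S, ‖a x‖ ^ 2) ^ 15 * Fintype.card (Fin 6 → ZMod (p ^ (5 * N))) := by
  have hr : rr 5 = 15 := rfl
  set ψ := (fun (α : Fin 6 → ZMod (p ^ (5 * N))) (x : ℤ) => ph p 5 (5 * N) α x) with hψ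
  have hψ1 : ∀ α x, ‖ψ α x‖ = 1 := fun α x => Circle.norm_coe _
  have h0 := hD S (fun x => x) a
  rw [hr] at h0
  set n : ℝ := ((Fintype.card (Fin 6 → ZMod (p ^ (5 * N))) : ℕ) : ℝ) with hn
  have hn0 : 0 ≤ n := by positivity
  set κ : ℝ := n ^ (((15 : ℕ) : ℝ)⁻¹) with hκ
  have hκ0 : 0 ≤ κ := by positivity
  have hκn : κ ^ 15 = n := Real.rpow_inv_natCast_pow hn0 (by norm_num)
  have h1 : ∀ c : ZMod (p ^ N), Lr 15 1 (fun α => ‖fs a ψ (cls p (fun x => x) S N c) α‖ ^ 2) ≤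
      ∑ x ∈ cls p (fun x => x) S N c, ‖a x‖ ^ 2 * κ := by
    intro c
    rcases (cls p (fun x => x) S N c).eq_empty_or_nonempty with h | ⟨x, hx⟩
    · rw [h]
      simp only [fs, Finset.sum_empty, norm_zero]
      exact (Lr_zero (r := 15) (w := fun _ => (1 : ℝ)) (by norm_num)).le.trans' (by norm_num; rfl)
    · have h2 : cls p (fun x => x) S N c = {x} := by
        refine Finset.eq_singleton_iff_unique_mem.2 ⟨hx, fun y hy => ?_⟩
        have e1 := mem_cls.1 hx
        have e2 := mem_cls.1 hy
        exact hS y e2.1 x e1.1 ((zmod_pow_eq_iff _ _ _ _).1 (e2.2.trans e1.2.symm))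
      rw [h2, Finset.sum_singleton]
      refine Lr_le (by norm_num) (fun _ => zero_le_one) (fun _ => by positivity) (by positivity) ?_
      have h3 : ∀ α, ‖fs a ψ {x} α‖ = ‖a x‖ := by
        intro α
        rw [fs, Finset.sum_singleton, norm_mul, hψ1, mul_one]
      simp only [h3, one_mul]
      rw [Finset.sum_const, Finset.card_univ, nsmul_eq_mul, mul_pow, hκn, mul_comm]
  have h2 : Lr 15 1 (fun α => ‖fs a ψ S α‖ ^ 2) ≤ Δ * ((∑ x ∈ S, ‖a x‖ ^ 2) * κ) := by
    refine h0.trans (mul_le_mul_of_nonneg_left ((Finset.sum_le_sum fun c _ => h1 c).trans ?_) hΔ)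
    rw [Finset.sum_mul]
    exact (Finset.sum_fiberwise_of_maps_to (s := S) (t := Finset.univ)
      (g := fun x => ((x : ℤ) : ZMod (p ^ N))) (fun _ _ => Finset.mem_univ _) _).le
  calc ∑ α, ‖fs a ψ S α‖ ^ 30 = Lr 15 1 (fun α => ‖fs a ψ S α‖ ^ 2) ^ 15 := by
        rw [Lr_one_pow (by norm_num) fun _ => by positivity]
        exact Finset.sum_congr rfl fun α _ => by rw [← pow_mul]
    _ ≤ (Δ * ((∑ x ∈ S, ‖a x‖ ^ 2) * κ)) ^ 15 :=
        pow_le_pow_left₀ (Lr_nonneg (fun _ => zero_le_one) fun _ => by positivity) h2 _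
    _ = _ := by rw [← mul_assoc, mul_pow _ κ, hκn]

/-- The mean value over the torus. -/
lemma J5_of_dec {p N : ℕ} [Fact p.Prime] {Δ : ℝ} (hD : Dec p 5 N Δ) (S : Finset ℤ)
    (hS : ∀ x ∈ S, ∀ y ∈ S, (p : ℤ) ^ N ∣ x - y → x = y) (c : ℤ → ℂ) (hΔ : 0 ≤ Δ) :
    J5 (fun a1 a2 a3 a4 a5 => ENNReal.ofReal (‖F5 c S a1 a2 a3 a4 a5‖ ^ 30)) ≤
      ENNReal.ofReal ((Δ * ∑ x ∈ S, ‖c x‖ ^ 2) ^ 15) := by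
  set g := (fun a1 a2 a3 a4 a5 => ENNReal.ofReal (‖F5 c S a1 a2 a3 a4 a5‖ ^ 30)) with hg
  set m := Fintype.card (Fin 6 → ZMod (p ^ (5 * N))) with hm
  have hm0 : m ≠ 0 := Fintype.card_ne_zero
  set τ : ZMod (p ^ (5 * N)) →+ Tor := ZMod.toAddCircle with hτ
  have h1 : (m : ENNReal) * J5 g ≤ m * ENNReal.ofReal ((Δ * ∑ x ∈ S, ‖c x‖ ^ 2) ^ 15) := by
    calc (m : ENNReal) * J5 g = ∑ α : Fin 6 → ZMod (p ^ (5 * N)),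
          J5 (fun a1 a2 a3 a4 a5 => g (a1 + τ (α 1)) (a2 + τ (α 2)) (a3 + τ (α 3)) (a4 + τ (α 4))
            (a5 + τ (α 5))) := by
          rw [Finset.sum_congr rfl fun α _ => J5_shift g _ _ _ _ _, Finset.sum_const,
            Finset.card_univ, nsmul_eq_mul]
      _ ≤ _ := J5_sum_le _ _
      _ ≤ J5 (fun _ _ _ _ _ => m * ENNReal.ofReal ((Δ * ∑ x ∈ S, ‖c x‖ ^ 2) ^ 15)) := by
          refine J5_mono fun a1 a2 a3 a4 a5 => ?_
          have h2 := dec_points hD S hS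
            (fun x => c x * chi (x • a1 + x ^ 2 • a2 + x ^ 3 • a3 + x ^ 4 • a4 + x ^ 5 • a5)) hΔ
          simp only [norm_mul (c _), norm_chi, mul_one] at h2
          simp only [hg, hτ, F5_translate]
          rw [← ENNReal.ofReal_sum_of_nonneg fun _ _ => by positivity,
            ← ENNReal.ofReal_natCast, ← ENNReal.ofReal_mul (by positivity)]
          exact ENNReal.ofReal_le_ofReal (h2.trans (mul_comm _ _).le)
      _ = _ := J5_const _
  exact (ENNReal.mul_le_mul_iff_right (by exact_mod_cast hm0) (ENNReal.natCast_ne_top m)).1 h1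

/-- Vinogradov's mean value theorem in degree `5` at the critical exponent, with bounded weights. -/
theorem vmvt {ε : ℝ} (hε : 0 < ε) : ∃ C : ℝ, 0 < C ∧ ∀ (X : ℝ), 1 ≤ X → ∀ (S : Finset ℤ),
    (∀ x ∈ S, |(x : ℝ)| ≤ X) → ∀ c : ℤ → ℂ, (∀ x ∈ S, ‖c x‖ ≤ 4) →
    J5 (fun a1 a2 a3 a4 a5 => ENNReal.ofReal (‖F5 c S a1 a2 a3 a4 a5‖ ^ 30)) ≤
      ENNReal.ofReal (C * X ^ (15 + ε)) := by
  obtain ⟨p, hp, hpr⟩ := ((decoupling 5 (by norm_num) (ε / 15) (by positivity)).and_frequently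
    (Filter.frequently_atTop.2 Nat.exists_infinite_primes)).exists
  have : Fact p.Prime := ⟨hpr⟩
  obtain ⟨C, hC, hD⟩ := hp this
  have hp1 : (1 : ℝ) < p := by exact_mod_cast hpr.one_lt
  refine ⟨(C * (3 * p : ℝ) ^ (ε / 15) * 48) ^ 15, by positivity, fun X hX S hS c hc => ?_⟩
  obtain ⟨N, hN1, hN2⟩ : ∃ N : ℕ, 2 * X < (p : ℝ) ^ N ∧ (p : ℝ) ^ N ≤ 3 * p * X := by
    obtain ⟨n, h1, h2⟩ := exists_nat_pow_near (show (1 : ℝ) ≤ 2 * X by linarith) hp1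
    refine ⟨n + 1, h2, ?_⟩
    rw [pow_succ]
    nlinarith
  have hcard : (S.card : ℝ) ≤ 3 * X := by
    have hsub : S ⊆ Finset.Icc (-⌊X⌋) ⌊X⌋ := by
      intro x hx
      have := abs_le.1 (hS x hx)
      rw [Finset.mem_Icc]
      constructor
      · rw [neg_le]
        apply Int.le_floor.2
        push_cast; linarith
      · exact Int.le_floor.2 this.2
    have h1 := Finset.card_le_card hsub
    rw [Int.card_Icc] at h1
    have h2 : 0 ≤ ⌊X⌋ := Int.floor_nonneg.2 (by linarith)
    have h3 : (S.card : ℤ) ≤ 2 * ⌊X⌋ + 1 := by omega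
    have h4 : (S.card : ℝ) ≤ 2 * ⌊X⌋ + 1 := by exact_mod_cast h3
    linarith [Int.floor_le X]
  refine (J5_of_dec (hD N) S ?_ c (by positivity)).trans (ENNReal.ofReal_le_ofReal ?_)
  · intro x hx y hy hd
    by_contra hne
    have h1 := Int.le_of_dvd (abs_pos.2 (sub_ne_zero.2 hne)) ((dvd_abs _ _).2 hd)
    have h2 : (p : ℝ) ^ N ≤ |(x : ℝ) - y| := by exact_mod_cast h1
    have h3 := abs_sub (x : ℝ) y
    linarith [hS x hx, hS y hy]
  · have h1 : ∑ x ∈ S, ‖c x‖ ^ 2 ≤ 48 * X := by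
      calc ∑ x ∈ S, ‖c x‖ ^ 2 ≤ ∑ x ∈ S, (4 : ℝ) ^ 2 :=
            Finset.sum_le_sum fun x hx => pow_le_pow_left₀ (norm_nonneg _) (hc x hx) 2
        _ = S.card * 16 := by rw [Finset.sum_const, nsmul_eq_mul]; norm_num
        _ ≤ _ := by linarith
    have h2 : (p : ℝ) ^ (ε / 15 * N) ≤ (3 * p : ℝ) ^ (ε / 15) * X ^ (ε / 15) := by
      rw [← Real.mul_rpow (by positivity) (by positivity), mul_comm (ε / 15), Real.rpow_natCast_mul (by positivity)]
      exact Real.rpow_le_rpow (by positivity) hN2 (by positivity)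
    calc (C * (p : ℝ) ^ (ε / 15 * N) * ∑ x ∈ S, ‖c x‖ ^ 2) ^ 15
        ≤ (C * ((3 * p : ℝ) ^ (ε / 15) * X ^ (ε / 15)) * (48 * X)) ^ 15 := by gcongr
      _ = (C * (3 * p : ℝ) ^ (ε / 15) * 48) ^ 15 * ((X ^ (ε / 15)) ^ 15 * X ^ 15) := by ring
      _ = _ := by
          congr 1
          rw [Real.rpow_add (by linarith), ← Real.rpow_mul_natCast (by linarith)]
          norm_num
          ring

/-! ### Characters of the circle and averaging -/

/-- Weighted Jensen inequality for the power `30`. -/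
lemma jensen30 {α : Type*} [MeasurableSpace α] {μ : Measure α} {D h : α → ENNReal}
    (hD : AEMeasurable D μ) (hh : AEMeasurable h μ) :
    (∫⁻ a, D a * h a ∂μ) ^ 30 ≤ (∫⁻ a, D a ∂μ) ^ 29 * ∫⁻ a, D a * h a ^ 30 ∂μ := by
  have key := ENNReal.lintegral_mul_norm_pow_le hD (hD.mul (hh.pow_const 30))
    (p := 29 / 30) (q := 1 / 30) (by norm_num) (by norm_num) (by norm_num)
  have h1 : ∀ a, D a ^ (29 / 30 : ℝ) * (D * fun a => h a ^ 30) a ^ (1 / 30 : ℝ) = D a * h a := by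
    intro a
    rw [Pi.mul_apply, ENNReal.mul_rpow_of_nonneg _ _ (by norm_num), ← mul_assoc,
      ← ENNReal.rpow_add_of_nonneg _ _ (by norm_num) (by norm_num), ← ENNReal.rpow_natCast,
      ← ENNReal.rpow_mul]
    norm_num
  simp only [h1] at key
  refine (pow_le_pow_left' key 30).trans (le_of_eq ?_)
  rw [mul_pow, ← ENNReal.rpow_mul_natCast, ← ENNReal.rpow_mul_natCast]
  norm_num

lemma tor_rep (t : Tor) : ∃ x : ℝ, (x : Tor) = t ∧ |x| = ‖t‖ ∧ |x| ≤ 1 / 2 := by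
  induction t using QuotientAddGroup.induction_on with
  | H t =>
  refine ⟨t - round t, ?_, (UnitAddCircle.norm_eq (x := t)).symm, abs_sub_round t⟩
  rw [AddCircle.coe_sub, sub_eq_self]
  have := AddCircle.coe_eq_zero_iff (p := (1 : ℝ)) (x := ((round t : ℤ) : ℝ))
  exact this.2 ⟨round t, by simp⟩

lemma e_sub_one (x : ℝ) : ‖e x - 1‖ = 2 * |Real.sin (Real.pi * x)| := by
  have := Complex.norm_exp_I_mul_ofReal_sub_one (2 * Real.pi * x)
  unfold e
  rw [show (2 : ℂ) * Real.pi * Complex.I * x = Complex.I * ((2 * Real.pi * x : ℝ) : ℂ) by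
    push_cast; ring, this, Real.norm_eq_abs, abs_mul, abs_two]
  congr 3
  ring

lemma norm_chi_sub_one_le (t : Tor) : ‖chi t - 1‖ ≤ 2 * Real.pi * ‖t‖ := by
  obtain ⟨x, rfl, h1, -⟩ := tor_rep t
  rw [chi_coe, ← h1, e_sub_one]
  have := Real.abs_sin_le_abs (x := Real.pi * x)
  rw [abs_mul, abs_of_pos Real.pi_pos] at this
  linarith

lemma le_norm_chi_sub_one (t : Tor) : 4 * ‖t‖ ≤ ‖chi t - 1‖ := by
  obtain ⟨x, rfl, h1, h2⟩ := tor_rep t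
  rw [chi_coe, ← h1, e_sub_one]
  have := Real.mul_abs_le_abs_sin (x := Real.pi * x) (by
    rw [abs_mul, abs_of_pos Real.pi_pos]; nlinarith [Real.pi_pos])
  rw [abs_mul, abs_of_pos Real.pi_pos] at this
  have h3 : 2 / Real.pi * (Real.pi * |x|) = 2 * |x| := by field_simp
  linarith

lemma chi_zsmul (n : ℤ) (t : Tor) : chi (n • t) = chi t ^ n := by
  unfold chi
  rw [AddCircle.toCircle_zsmul, Circle.coe_zpow]

lemma chi_neg (t : Tor) : chi (-t) = (chi t)⁻¹ := by
  unfold chi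
  rw [AddCircle.toCircle_neg, Circle.coe_inv]

lemma chi_eq_one {t : Tor} (h : chi t = 1) : t = 0 := by
  have := le_norm_chi_sub_one t
  rw [h, sub_self, norm_zero] at this
  exact norm_le_zero_iff.1 (by linarith)

instance : IsProbabilityMeasure (volume : Measure Tor) := ⟨volume_tor⟩

lemma integral_chi_zsmul (n : ℤ) : ∫ t : Tor, chi (n • t) = if n = 0 then 1 else 0 := by
  split_ifs with h
  · simp [h, chi_zero]
  · set c : Tor := (((1 : ℝ) / (2 * n) : ℝ) : Tor)
    have h1 : ∫ t : Tor, chi (n • t) = ∫ t : Tor, chi (n • (t + c)) :=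
      (integral_add_right_eq_self (fun t : Tor => chi (n • t)) c).symm
    have h2 : ∀ t, chi (n • (t + c)) = chi (n • c) * chi (n • t) := fun t => by
      rw [smul_add, chi_add, mul_comm]
    simp only [h2] at h1
    rw [integral_const_mul] at h1
    have h3 : chi (n • c) = -1 := by
      rw [← AddCircle.coe_zsmul, chi_coe, e]
      have hn : (n : ℂ) ≠ 0 := by exact_mod_cast h
      rw [show (2 : ℂ) * Real.pi * Complex.I * ((n • (1 / (2 * (n : ℝ))) : ℝ) : ℂ) =
        Real.pi * Complex.I by rw [zsmul_eq_mul]; push_cast; field_simp]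
      exact Complex.exp_pi_mul_I
    rw [h3] at h1
    linear_combination h1 / 2

lemma measurable_norm_tor : Measurable (fun t : Tor => ‖t‖) := continuous_norm.measurable

/-- `‖t‖^(ε-1)` is integrable on the circle. -/
lemma lintegral_norm_rpow_lt_top {ε : ℝ} (hε : 0 < ε) :
    ∫⁻ t : Tor, ENNReal.ofReal (‖t‖ ^ (ε - 1)) < ⊤ := by
  rw [← UnitAddCircle.lintegral_preimage (-1 / 2)]
  have h0 : ∀ x ∈ Set.Ioc (-1 / 2 : ℝ) (-1 / 2 + 1),
      ENNReal.ofReal (‖(x : Tor)‖ ^ (ε - 1)) = ENNReal.ofReal (|x| ^ (ε - 1)) := by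
    intro x hx
    rw [(AddCircle.norm_coe_eq_abs_iff (p := (1:ℝ)) (x := x) one_ne_zero).2]
    rw [abs_le, abs_one]
    constructor <;> linarith [hx.1, hx.2]
  rw [setLIntegral_congr_fun measurableSet_Ioc h0]
  have h1 : IntervalIntegrable (fun x : ℝ => |x| ^ (ε - 1)) volume 0 (1 / 2) := by
    refine (intervalIntegral.intervalIntegrable_rpow' (r := ε - 1) (by linarith)).congr ?_
    intro x hx
    rw [Set.uIoc_of_le (by norm_num)] at hx
    simp only [abs_of_pos hx.1]
  have h2 : IntervalIntegrable (fun x : ℝ => |x| ^ (ε - 1)) volume (-1 / 2) 0 := by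
    have := (IntervalIntegrable.iff_comp_neg (f := fun x : ℝ => |x| ^ (ε - 1))
      (a := 0) (b := 1 / 2)).1 h1
    simp only [abs_neg, neg_zero] at this
    convert this.symm using 1
    norm_num
  have h3 := h2.trans h1
  rw [intervalIntegrable_iff_integrableOn_Ioc_of_le (by norm_num)] at h3
  have h4 := h3.lintegral_lt_top
  rwa [show (-1 / 2 + 1 : ℝ) = 1 / 2 by norm_num]

/-- The Dirichlet kernel of the interval `[A, B]`. -/
noncomputable def Dir (A B : ℤ) (t : Tor) : ℂ := ∑ x ∈ Finset.Icc A B, chi (x • t)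

lemma continuous_chi_zsmul (n : ℤ) : Continuous (fun t : Tor => chi (n • t)) :=
  continuous_chi.comp (continuous_zsmul n)

lemma continuous_Dir (A B : ℤ) : Continuous (Dir A B) :=
  continuous_finsetSum _ fun x _ => continuous_chi_zsmul x

lemma card_Icc_le {A B : ℤ} {n : ℝ} (hn : 0 ≤ n) (h : (B : ℝ) - A + 1 ≤ n) :
    ((Finset.Icc A B).card : ℝ) ≤ n := by
  rw [Int.card_Icc]
  rcases le_total (B + 1 - A) 0 with h1 | h1
  · rw [Int.toNat_of_nonpos h1]; simpa
  · have : (((B + 1 - A).toNat : ℤ) : ℝ) = ((B + 1 - A : ℤ) : ℝ) := by rw [Int.toNat_of_nonneg h1]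
    push_cast at this
    rw [this]; linarith

lemma norm_Dir_le {A B : ℤ} {n : ℝ} (hn : 0 ≤ n) (h : (B : ℝ) - A + 1 ≤ n) (t : Tor) :
    ‖Dir A B t‖ ≤ n := by
  refine (norm_sum_le _ _).trans ?_
  simp only [norm_chi, Finset.sum_const, nsmul_eq_mul, mul_one]
  exact card_Icc_le hn h

lemma Dir_mul (A B : ℤ) (hAB : A ≤ B + 1) (t : Tor) :
    (chi t - 1) * Dir A B t = chi ((B + 1) • t) - chi (A • t) := by
  obtain ⟨n, rfl⟩ : ∃ n : ℕ, B = A - 1 + n := ⟨(B + 1 - A).toNat, by omega⟩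
  clear hAB
  induction n with
  | zero => simp [Dir]
  | succ n ih =>
    have h1 : Finset.Icc A (A - 1 + ((n + 1 : ℕ) : ℤ)) =
        insert (A + n) (Finset.Icc A (A - 1 + (n : ℕ))) := by
      ext x; simp only [Finset.mem_Icc, Finset.mem_insert]; push_cast; omega
    have h2 : A + (n : ℤ) ∉ Finset.Icc A (A - 1 + (n : ℕ)) := by simp only [Finset.mem_Icc]; omega
    unfold Dir at ih ⊢
    rw [h1, Finset.sum_insert h2, mul_add, ih]
    have h3 : chi ((A - 1 + ((n + 1 : ℕ) : ℤ) + 1) • t) = chi t * chi ((A + (n : ℤ)) • t) := by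
      rw [← chi_add, ← one_add_zsmul]
      congr 2
      push_cast; ring
    rw [h3, show A - 1 + (n : ℤ) + 1 = A + n by ring]
    ring

lemma norm_Dir_mul_le (A B : ℤ) (t : Tor) : 2 * ‖t‖ * ‖Dir A B t‖ ≤ 1 := by
  rcases le_or_gt A (B + 1) with h | h
  · have h1 := congrArg norm (Dir_mul A B h t)
    rw [norm_mul] at h1
    have h2 : ‖chi ((B + 1) • t) - chi (A • t)‖ ≤ 2 := by
      refine (norm_sub_le _ _).trans ?_
      rw [norm_chi, norm_chi]; norm_num
    have h3 := mul_le_mul_of_nonneg_right (le_norm_chi_sub_one t) (norm_nonneg (Dir A B t))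
    linarith
  · simp [Dir, Finset.Icc_eq_empty_of_lt (show B < A by omega)]

/-- The `L¹` norm of a Dirichlet kernel grows at most like an arbitrarily small power. -/
lemma lintegral_Dir {ε : ℝ} (hε : 0 < ε) (hε1 : ε < 1) : ∃ C : ℝ, 0 < C ∧ ∀ (A B : ℤ) (n : ℝ), 0 ≤ n →
    (B : ℝ) - A + 1 ≤ n → ∫⁻ t, ENNReal.ofReal ‖Dir A B t‖ ≤ ENNReal.ofReal (C * n ^ ε) := by
  have h0 := lintegral_norm_rpow_lt_top hε
  set I := ∫⁻ t : Tor, ENNReal.ofReal (‖t‖ ^ (ε - 1)) with hI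
  refine ⟨I.toReal + 1, by positivity, fun A B n hn h => ?_⟩
  have h1 : ∀ t : Tor, t ≠ 0 → ‖Dir A B t‖ ≤ n ^ ε * ‖t‖ ^ (ε - 1) := by
    intro t ht
    have ht0 : 0 < ‖t‖ := norm_pos_iff.2 ht
    have h2 := norm_Dir_le hn h t
    have h3 : ‖Dir A B t‖ ≤ ‖t‖⁻¹ := by
      have := norm_Dir_mul_le A B t
      rw [← one_div, le_div_iff₀ ht0]
      nlinarith [norm_nonneg (Dir A B t)]
    calc ‖Dir A B t‖ = ‖Dir A B t‖ ^ ε * ‖Dir A B t‖ ^ (1 - ε) := by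
          rw [← Real.rpow_add' (norm_nonneg _) (by norm_num)]; norm_num
      _ ≤ n ^ ε * (‖t‖⁻¹) ^ (1 - ε) := by
          gcongr
      _ = _ := by rw [Real.inv_rpow ht0.le, ← Real.rpow_neg ht0.le, neg_sub]
  have h2 : ∀ᵐ t : Tor, t ≠ 0 := by
    have := AddCircle.volume_closedBall (T := 1) (x := (0 : Tor)) 0
    rw [Metric.closedBall_zero, mul_zero, min_eq_right zero_le_one, ENNReal.ofReal_zero] at this
    exact compl_mem_ae_iff.2 this
  calc ∫⁻ t, ENNReal.ofReal ‖Dir A B t‖ ≤ ∫⁻ t : Tor, ENNReal.ofReal (n ^ ε) * ENNReal.ofReal (‖t‖ ^ (ε - 1)) := by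
        refine lintegral_mono_ae ?_
        filter_upwards [h2] with t ht
        rw [← ENNReal.ofReal_mul (by positivity)]
        exact ENNReal.ofReal_le_ofReal (h1 t ht)
    _ = ENNReal.ofReal (n ^ ε) * I := lintegral_const_mul' _ _ ENNReal.ofReal_ne_top
    _ ≤ _ := by
      refine (congrArg _ (ENNReal.ofReal_toReal h0.ne).symm).le.trans ?_
      rw [← ENNReal.ofReal_mul (by positivity)]
      refine ENNReal.ofReal_le_ofReal ?_
      have : 0 ≤ n ^ ε := by positivity
      nlinarith

lemma integrable_tor {f : Tor → ℂ} (hf : Continuous f) : Integrable f :=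
  hf.integrable_of_hasCompactSupport (HasCompactSupport.of_compactSpace f)

/-- Restricting the frequencies to an interval costs at most an arbitrarily small power in `L^30`. -/
lemma cutoff {ε : ℝ} (hε : 0 < ε) : ∃ C : ℝ, 0 < C ∧ ∀ (A B : ℤ) (n : ℝ), 0 ≤ n →
    (B : ℝ) - A + 1 ≤ n → ∀ (S : Finset ℤ) (b : ℤ → ℂ), Finset.Icc A B ⊆ S →
    ∫⁻ a : Tor, ENNReal.ofReal (‖∑ x ∈ Finset.Icc A B, b x * chi (x • a)‖ ^ 30) ≤
      ENNReal.ofReal (C * n ^ ε) *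
        ∫⁻ a : Tor, ENNReal.ofReal (‖∑ x ∈ S, b x * chi (x • a)‖ ^ 30) := by
  obtain ⟨C, hC, H⟩ := lintegral_Dir (ε := min (ε / 30) (1 / 2)) (by positivity)
    ((min_le_right _ _).trans_lt (by norm_num))
  refine ⟨C ^ 30, by positivity, fun A B n hn hAB S b hS => ?_⟩
  rcases (Finset.Icc A B).eq_empty_or_nonempty with h0 | h0
  · rw [h0]; simp
  have hn1 : 1 ≤ n := by
    have := Finset.nonempty_Icc.1 h0
    have : (A : ℝ) ≤ B := by exact_mod_cast this
    linarith
  have hD := H A B n hn hAB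
  set g : Tor → ℂ := fun a => ∑ x ∈ S, b x * chi (x • a) with hg
  have hgc : Continuous g := continuous_finsetSum _ fun x _ =>
    continuous_const.mul (continuous_chi_zsmul x)
  set D : Tor → ENNReal := fun t => ENNReal.ofReal ‖Dir A B t‖ with hDdef
  have hDc : Continuous D := ENNReal.continuous_ofReal.comp (continuous_Dir A B).norm
  have h1 : ∀ a, ∑ x ∈ Finset.Icc A B, b x * chi (x • a) = ∫ t, Dir A B t * g (a - t) := by
    intro a
    have e1 : ∀ t, Dir A B t * g (a - t) =
        ∑ y ∈ Finset.Icc A B, ∑ x ∈ S, (b x * chi (x • a)) * chi ((y - x) • t) := by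
      intro t
      simp only [Dir, hg, Finset.sum_mul_sum]
      refine Finset.sum_congr rfl fun y _ => Finset.sum_congr rfl fun x _ => ?_
      rw [mul_assoc, ← chi_add, mul_left_comm, ← chi_add]
      congr 2
      rw [smul_sub, sub_smul]
      abel
    simp only [e1]
    have c1 : ∀ (c : ℂ) (m : ℤ), Integrable fun t : Tor => c * chi (m • t) := fun c m =>
      integrable_tor (continuous_const.mul (continuous_chi_zsmul m))
    rw [integral_finsetSum _ fun y _ => integrable_finsetSum _ fun x _ => c1 _ _]
    refine Finset.sum_congr rfl fun y hy => ?_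
    rw [integral_finsetSum _ fun x _ => c1 _ _]
    simp only [integral_const_mul, integral_chi_zsmul, mul_ite, mul_one, mul_zero, sub_eq_zero]
    rw [Finset.sum_ite_eq S y, if_pos (hS hy)]
  have h2 : ∀ a, ENNReal.ofReal (‖∑ x ∈ Finset.Icc A B, b x * chi (x • a)‖ ^ 30) ≤
      (∫⁻ t, D t) ^ 29 * ∫⁻ t, D t * ENNReal.ofReal (‖g (a - t)‖ ^ 30) := by
    intro a
    have hc : Continuous fun t => ENNReal.ofReal ‖g (a - t)‖ :=
      ENNReal.continuous_ofReal.comp (hgc.comp (continuous_const.sub continuous_id)).norm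
    have := jensen30 (μ := (volume : Measure Tor)) hDc.measurable.aemeasurable
      hc.measurable.aemeasurable
    simp only [← ENNReal.ofReal_pow (norm_nonneg _)] at this
    refine le_trans ?_ this
    rw [ENNReal.ofReal_pow (norm_nonneg _)]
    refine pow_le_pow_left' ?_ 30
    rw [h1, ofReal_norm]
    refine (enorm_integral_le_lintegral_enorm _).trans (le_of_eq (lintegral_congr fun t => ?_))
    simp only [enorm_mul, hDdef, ofReal_norm]
  have hm : Measurable fun z : Tor × Tor => D z.2 * ENNReal.ofReal (‖g (z.1 - z.2)‖ ^ 30) := by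
    refine (hDc.measurable.comp measurable_snd).mul (Continuous.measurable ?_)
    exact ENNReal.continuous_ofReal.comp
      ((hgc.comp (continuous_fst.sub continuous_snd)).norm.pow 30)
  calc _ ≤ ∫⁻ a, (∫⁻ t, D t) ^ 29 * ∫⁻ t, D t * ENNReal.ofReal (‖g (a - t)‖ ^ 30) :=
        lintegral_mono h2
    _ = (∫⁻ t, D t) ^ 29 * ∫⁻ a, ∫⁻ t, D t * ENNReal.ofReal (‖g (a - t)‖ ^ 30) :=
        lintegral_const_mul' _ _ (ENNReal.pow_ne_top (hD.trans_lt ENNReal.ofReal_lt_top).ne)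
    _ = (∫⁻ t, D t) ^ 29 * ∫⁻ t, ∫⁻ a, D t * ENNReal.ofReal (‖g (a - t)‖ ^ 30) := by
        rw [lintegral_lintegral_swap hm.aemeasurable]
    _ = (∫⁻ t, D t) ^ 29 * ∫⁻ t, D t * ∫⁻ a, ENNReal.ofReal (‖g a‖ ^ 30) := by
        congr 1
        refine lintegral_congr fun t => ?_
        rw [lintegral_const_mul' _ _ ENNReal.ofReal_ne_top,
          lintegral_sub_right_eq_self (fun a => ENNReal.ofReal (‖g a‖ ^ 30)) t]
    _ = (∫⁻ t, D t) ^ 30 * ∫⁻ a, ENNReal.ofReal (‖g a‖ ^ 30) := by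
        rw [lintegral_mul_const _ hDc.measurable]; ring
    _ ≤ _ := by
        gcongr
        refine (pow_le_pow_left' hD 30).trans ?_
        rw [← ENNReal.ofReal_pow (by positivity), mul_pow]
        refine ENNReal.ofReal_le_ofReal ?_
        gcongr
        rw [← Real.rpow_mul_natCast hn]
        refine Real.rpow_le_rpow_of_exponent_le hn1 ?_
        have := min_le_left (ε / 30) (1 / 2)
        push_cast; linarith

/-- Local averaging: an exponential sum is dominated by its `L^30` average over a short interval,
after changing the coefficients by bounded weights. -/
lemma local_avg (S : Finset ℤ) (n : ℤ → ℤ) {ρ : ℝ} (hρ : 0 < ρ) (hρ2 : ρ ≤ 1 / 2)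
    (hn : ∀ x ∈ S, 2 * Real.pi * |(n x : ℝ)| * ρ ≤ 1 / 2) :
    ∃ w : ℤ → ℂ, (∀ x ∈ S, ‖w x‖ ≤ 2) ∧ ∀ (b : ℤ → ℂ) (θ : Tor),
      ENNReal.ofReal (2 * ρ) * ENNReal.ofReal (‖∑ x ∈ S, b x * chi (n x • θ)‖ ^ 30) ≤
        ∫⁻ α : Tor, (if ‖α - θ‖ ≤ ρ then 1 else 0) *
          ENNReal.ofReal (‖∑ x ∈ S, b x * w x * chi (n x • α)‖ ^ 30) := by
  set Bl : Set Tor := Metric.closedBall 0 ρ with hBl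
  have hvol : volume Bl = ENNReal.ofReal (2 * ρ) := by
    rw [hBl, AddCircle.volume_closedBall, min_eq_right (by linarith)]
  have hvr : (volume.real Bl) = 2 * ρ := by
    rw [Measure.real, hvol, ENNReal.toReal_ofReal (by positivity)]
  have hBm : MeasurableSet Bl := Metric.isClosed_closedBall.measurableSet
  set s : ℤ → ℂ := fun x => ∫ ν in Bl, chi (n x • ν) with hs
  have hs1 : ∀ x ∈ S, ‖s x - (2 * ρ : ℝ)‖ ≤ ρ := by
    intro x hx
    have e1 : s x - (2 * ρ : ℝ) = ∫ ν in Bl, (chi (n x • ν) - 1) := by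
      rw [integral_sub (integrable_tor (continuous_chi_zsmul _)).integrableOn
        (integrable_tor continuous_const).integrableOn]
      simp [hs, hvr]
    rw [e1]
    refine (norm_setIntegral_le_of_norm_le_const (C := 1 / 2) ?_ ?_).trans ?_
    · rw [hvol]; exact ENNReal.ofReal_lt_top
    · intro ν hν
      refine (norm_chi_sub_one_le _).trans ?_
      have h1 : ‖n x • ν‖ ≤ |(n x : ℝ)| * ‖ν‖ := by
        exact norm_zsmul_le (n x) ν
      have h2 : ‖ν‖ ≤ ρ := by simpa [hBl] using hν
      refine le_trans ?_ (hn x hx)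
      rw [mul_assoc _ _ ρ]
      gcongr
      exact h1.trans (by gcongr)
    · rw [hvr]; linarith
  have hs2 : ∀ x ∈ S, ρ ≤ ‖s x‖ := by
    intro x hx
    have h1 := norm_sub_norm_le ((2 * ρ : ℝ) : ℂ) (s x)
    rw [norm_sub_rev] at h1
    have h2 := hs1 x hx
    rw [Complex.norm_real, Real.norm_of_nonneg (by positivity)] at h1
    linarith
  refine ⟨fun x => (2 * ρ : ℝ) / s x, fun x hx => ?_, fun b θ => ?_⟩
  · rw [norm_div, Complex.norm_real, Real.norm_of_nonneg (by positivity),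
      div_le_iff₀ (hρ.trans_le (hs2 x hx))]
    linarith [hs2 x hx]
  · set g : Tor → ℂ := fun α => ∑ x ∈ S, b x * ((2 * ρ : ℝ) / s x) * chi (n x • α) with hg
    have hgc : Continuous g := continuous_finsetSum _ fun x _ =>
      continuous_const.mul (continuous_chi_zsmul _)
    have h1 : ((2 * ρ : ℝ) : ℂ) * ∑ x ∈ S, b x * chi (n x • θ) = ∫ ν in Bl, g (ν + θ) := by
      simp only [hg]
      have c1 : ∀ (c : ℂ) (m : ℤ), Integrable (fun ν : Tor => c * chi (m • (ν + θ)))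
          (volume.restrict Bl) := fun c m => (integrable_tor (continuous_const.mul
        ((continuous_chi_zsmul m).comp (continuous_add_const θ)))).integrableOn
      rw [integral_finsetSum _ fun x _ => c1 _ _, Finset.mul_sum]
      refine Finset.sum_congr rfl fun x hx => ?_
      have h2 : s x ≠ 0 := norm_pos_iff.1 (hρ.trans_le (hs2 x hx))
      simp only [smul_add, chi_add]
      rw [integral_const_mul, integral_mul_const]
      change _ = _ * (s x * _)
      field_simp
    have h2 : ∫⁻ α : Tor, (if ‖α - θ‖ ≤ ρ then 1 else 0) * ENNReal.ofReal (‖g α‖ ^ 30) =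
        ∫⁻ ν in Bl, ENNReal.ofReal ‖g (ν + θ)‖ ^ 30 := by
      rw [← lintegral_add_right_eq_self _ θ, ← lintegral_indicator hBm]
      refine lintegral_congr fun ν => ?_
      rw [add_sub_cancel_right, ENNReal.ofReal_pow (norm_nonneg _)]
      by_cases h : ‖ν‖ ≤ ρ
      · rw [if_pos h, Set.indicator_of_mem (by simpa [hBl] using h), one_mul]
      · rw [if_neg h, Set.indicator_of_notMem (by simpa [hBl] using h), zero_mul]
    rw [h2]
    have hc : Continuous fun ν => ENNReal.ofReal ‖g (ν + θ)‖ :=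
      ENNReal.continuous_ofReal.comp (hgc.comp (continuous_add_const θ)).norm
    have h3 := jensen30 (μ := volume.restrict Bl) (D := fun _ => 1) aemeasurable_const
      hc.measurable.aemeasurable
    simp only [one_mul, lintegral_const, Measure.restrict_apply MeasurableSet.univ, Set.univ_inter,
      hvol] at h3
    have h4 : (ENNReal.ofReal (2 * ρ) * ENNReal.ofReal ‖∑ x ∈ S, b x * chi (n x • θ)‖) ≤
        ∫⁻ ν in Bl, ENNReal.ofReal ‖g (ν + θ)‖ := by
      rw [← ENNReal.ofReal_mul (by positivity)]
      have := enorm_integral_le_lintegral_enorm (μ := volume.restrict Bl) (fun ν => g (ν + θ))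
      rw [← h1, ← ofReal_norm, norm_mul, Complex.norm_real,
        Real.norm_of_nonneg (by positivity)] at this
      simpa only [ofReal_norm] using this
    have h5 := (pow_le_pow_left' h4 30).trans h3
    have h6 : ENNReal.ofReal (2 * ρ) ^ 29 ≠ 0 := by
      exact pow_ne_zero _ (ENNReal.ofReal_pos.2 (by positivity)).ne'
    refine (ENNReal.mul_le_mul_iff_right h6 (ENNReal.pow_ne_top ENNReal.ofReal_ne_top)).1
      (le_trans (le_of_eq ?_) h5)
    rw [ENNReal.ofReal_pow (norm_nonneg _)]
    ring

/-! ### Minor arcs in the coefficients of degrees three and five -/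

/-- The exponential sum `∑_{|x| ≤ M} e(a₁ x + a₃ x³ + a₅ x⁵)`. -/
noncomputable def f3 (M : ℤ) (a1 a3 a5 : Tor) : ℂ :=
  ∑ x ∈ Finset.Icc (-M) M, chi (x • a1 + x ^ 3 • a3 + x ^ 5 • a5)

/-- The substitution `x = z + y`. Replacing `a3` by `a3 - 10 y² a5` keeps the coefficient of `z³` equal to
`a3`, so that only the coefficients of degrees `1`, `2` and `4` depend on `y`. -/
lemma norm_f3_shift (M y : ℤ) (a1 a3 a5 : Tor) :
    ‖f3 M a1 (a3 - (10 * y ^ 2) • a5) a5‖ =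
      ‖∑ z ∈ Finset.Icc (-M - y) (M - y),
        chi (z ^ 2 • ((3 * y) • a3 - (20 * y ^ 3) • a5) + z ^ 3 • a3 + z ^ 4 • ((5 * y) • a5) + z ^ 5 • a5)
          * chi (z • (a1 + ((3 * y ^ 2) • a3 - (25 * y ^ 4) • a5)))‖ := by
  have h1 : f3 M a1 (a3 - (10 * y ^ 2) • a5) a5 =
      chi (y • a1 + y ^ 3 • (a3 - (10 * y ^ 2) • a5) + y ^ 5 • a5) *
      ∑ z ∈ Finset.Icc (-M - y) (M - y),
        chi (z ^ 2 • ((3 * y) • a3 - (20 * y ^ 3) • a5) + z ^ 3 • a3 + z ^ 4 • ((5 * y) • a5) + z ^ 5 • a5)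
          * chi (z • (a1 + ((3 * y ^ 2) • a3 - (25 * y ^ 4) • a5))) := by
    rw [f3, Finset.mul_sum]
    refine Finset.sum_bij' (fun x _ => x - y) (fun z _ => z + y) ?_ ?_ ?_ ?_ ?_
    · intro x hx; simp only [Finset.mem_Icc] at hx ⊢; omega
    · intro x hx; simp only [Finset.mem_Icc] at hx ⊢; omega
    · intro x _; ring
    · intro x _; ring
    · intro x _
      rw [← chi_add, ← chi_add]
      congr 1
      simp only [smul_add, smul_sub, smul_smul]
      module
  rw [h1, norm_mul, norm_chi, one_mul]

/-- For a fixed shift `y`, the mean value of `f3` in `a₁` is dominated by a mean value of the full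
degree five sum over a small box around the point produced by the shift. -/
lemma shift_step {ε : ℝ} (hε : 0 < ε) : ∃ C : ℝ, 0 < C ∧ ∀ M : ℤ, 1 ≤ M → ∃ c : ℤ → ℂ,
    (∀ x ∈ Finset.Icc (-(2 * M)) (2 * M), ‖c x‖ ≤ 4) ∧ ∀ y ∈ Finset.Icc 1 M, ∀ a3 a5 : Tor,
    ∫⁻ a1, ENNReal.ofReal (‖f3 M a1 (a3 - (10 * y ^ 2) • a5) a5‖ ^ 30) ≤
      ENNReal.ofReal (C * (M : ℝ) ^ (6 + ε)) * ∫⁻ a1, ∫⁻ a2, ∫⁻ a4,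
        (if ‖a2 - ((3 * y) • a3 - (20 * y ^ 3) • a5)‖ ≤ 1 / (64 * (M : ℝ) ^ 2) ∧
          ‖a4 - (5 * y) • a5‖ ≤ 1 / (256 * (M : ℝ) ^ 4) then 1 else 0) *
        ENNReal.ofReal (‖F5 c (Finset.Icc (-(2 * M)) (2 * M)) a1 a2 a3 a4 a5‖ ^ 30) := by
  obtain ⟨C, hC, H⟩ := cutoff hε
  refine ⟨C * 3 ^ ε * 2 ^ 12, by positivity, fun M hM => ?_⟩
  have hM1 : (1 : ℝ) ≤ M := by exact_mod_cast hM
  set S := Finset.Icc (-(2 * M)) (2 * M) with hS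
  set ρ2 : ℝ := 1 / (64 * (M : ℝ) ^ 2) with hρ2
  set ρ4 : ℝ := 1 / (256 * (M : ℝ) ^ 4) with hρ4
  have hSx : ∀ x ∈ S, |(x : ℝ)| ≤ 2 * M := by
    intro x hx
    rw [hS, Finset.mem_Icc] at hx
    rw [abs_le]
    constructor
    · have : ((-(2 * M) : ℤ) : ℝ) ≤ x := by exact_mod_cast hx.1
      push_cast at this; linarith
    · exact_mod_cast hx.2
  have hpi := Real.pi_lt_d2
  have hpi0 := Real.pi_pos
  obtain ⟨w2, hw2, H2⟩ := local_avg S (fun x => x ^ 2) (ρ := ρ2) (by positivity) (by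
      rw [hρ2, div_le_div_iff₀ (by positivity) (by norm_num)]; nlinarith) (by
      intro x hx
      have h1 := hSx x hx
      have h2 : |((x ^ 2 : ℤ) : ℝ)| ≤ (2 * M) ^ 2 := by
        push_cast; rw [abs_pow]; gcongr
      calc 2 * Real.pi * |((x ^ 2 : ℤ) : ℝ)| * ρ2 ≤ 2 * Real.pi * (2 * M) ^ 2 * ρ2 := by gcongr
        _ = Real.pi / 8 := by rw [hρ2]; field_simp; ring
        _ ≤ 1 / 2 := by linarith)
  obtain ⟨w4, hw4, H4⟩ := local_avg S (fun x => x ^ 4) (ρ := ρ4) (by positivity) (by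
      rw [hρ4, div_le_div_iff₀ (by positivity) (by norm_num)]; nlinarith [one_le_pow₀ hM1 (n := 4)]) (by
      intro x hx
      have h1 := hSx x hx
      have h2 : |((x ^ 4 : ℤ) : ℝ)| ≤ (2 * M) ^ 4 := by
        push_cast; rw [abs_pow]; gcongr
      calc 2 * Real.pi * |((x ^ 4 : ℤ) : ℝ)| * ρ4 ≤ 2 * Real.pi * (2 * M) ^ 4 * ρ4 := by gcongr
        _ = Real.pi / 8 := by rw [hρ4]; field_simp; ring
        _ ≤ 1 / 2 := by linarith)
  refine ⟨fun x => w2 x * w4 x, fun x hx => ?_, fun y hy a3 a5 => ?_⟩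
  · rw [norm_mul]
    nlinarith [hw2 x hx, hw4 x hx, norm_nonneg (w2 x), norm_nonneg (w4 x)]
  set θ2 : Tor := (3 * y) • a3 - (20 * y ^ 3) • a5
  set θ4 : Tor := (5 * y) • a5
  rw [Finset.mem_Icc] at hy
  set b : ℤ → ℂ := fun z => chi (z ^ 2 • θ2 + z ^ 3 • a3 + z ^ 4 • θ4 + z ^ 5 • a5) with hb
  have h1 : ∫⁻ a1, ENNReal.ofReal (‖f3 M a1 (a3 - (10 * y ^ 2) • a5) a5‖ ^ 30) =
      ∫⁻ a1 : Tor, ENNReal.ofReal (‖∑ z ∈ Finset.Icc (-M - y) (M - y), b z * chi (z • a1)‖ ^ 30) := by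
    rw [← lintegral_add_right_eq_self (fun a1 : Tor => ENNReal.ofReal
      (‖∑ z ∈ Finset.Icc (-M - y) (M - y), b z * chi (z • a1)‖ ^ 30))
      ((3 * y ^ 2) • a3 - (25 * y ^ 4) • a5)]
    exact lintegral_congr fun a1 => by rw [norm_f3_shift]
  have h2 := H (-M - y) (M - y) (3 * M) (by positivity) (by push_cast; linarith) S b (by
    intro z hz; rw [hS]; rw [Finset.mem_Icc] at *; omega)
  rw [← h1] at h2
  refine h2.trans ?_
  have h3 : ∀ a1 : Tor, ENNReal.ofReal (2 * ρ2) * (ENNReal.ofReal (2 * ρ4) *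
      ENNReal.ofReal (‖∑ x ∈ S, b x * chi (x • a1)‖ ^ 30)) ≤
      ∫⁻ a2, ∫⁻ a4, (if ‖a2 - θ2‖ ≤ ρ2 ∧ ‖a4 - θ4‖ ≤ ρ4 then 1 else 0) *
        ENNReal.ofReal (‖F5 (fun x => w2 x * w4 x) S a1 a2 a3 a4 a5‖ ^ 30) := by
    intro a1
    rw [mul_left_comm]
    have e2 := H2 (fun x => chi (x ^ 3 • a3 + x ^ 4 • θ4 + x ^ 5 • a5 + x • a1)) θ2
    have e3 : ∀ x, chi (x ^ 3 • a3 + x ^ 4 • θ4 + x ^ 5 • a5 + x • a1) * chi (x ^ 2 • θ2) =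
        b x * chi (x • a1) := by
      intro x; simp only [hb]; rw [← chi_add, ← chi_add]; congr 1; abel
    simp only [e3] at e2
    refine (mul_le_mul_right e2 _).trans ?_
    rw [← lintegral_const_mul' _ _ ENNReal.ofReal_ne_top]
    refine lintegral_mono fun a2 => ?_
    by_cases hc : ‖a2 - θ2‖ ≤ ρ2
    · simp only [hc, if_true, one_mul, true_and]
      have e4 := H4 (fun x => w2 x * chi (x ^ 2 • a2 + x ^ 3 • a3 + x ^ 5 • a5 + x • a1)) θ4
      have e5 : ∀ x, w2 x * chi (x ^ 2 • a2 + x ^ 3 • a3 + x ^ 5 • a5 + x • a1) * chi (x ^ 4 • θ4) =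
          chi (x ^ 3 • a3 + x ^ 4 • θ4 + x ^ 5 • a5 + x • a1) * w2 x * chi (x ^ 2 • a2) := by
        intro x
        rw [mul_assoc, ← chi_add, mul_comm (chi _) (w2 x), mul_assoc, ← chi_add]
        congr 2; abel
      simp only [e5] at e4
      refine e4.trans (le_of_eq (lintegral_congr fun a4 => ?_))
      congr 4
      rw [F5]
      refine Finset.sum_congr rfl fun x _ => ?_
      rw [mul_right_comm (w2 x), mul_assoc, ← chi_add]
      congr 2; abel
    · simp [hc]
  have h4 := lintegral_mono (μ := (volume : Measure Tor)) h3
  rw [lintegral_const_mul' _ _ ENNReal.ofReal_ne_top, lintegral_const_mul' _ _ ENNReal.ofReal_ne_top] at h4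
  refine le_trans ?_ (mul_le_mul_right h4 _)
  rw [← mul_assoc, ← mul_assoc, ← ENNReal.ofReal_mul (by positivity), ← ENNReal.ofReal_mul (by positivity)]
  refine mul_le_mul_left (ENNReal.ofReal_le_ofReal ?_) _
  rw [hρ2, hρ4, Real.mul_rpow (by norm_num) (by positivity), Real.rpow_add (by positivity)]
  have : (M : ℝ) ^ (6 : ℝ) = (M : ℝ) ^ 6 := by norm_cast
  rw [this]
  apply le_of_eq
  field_simp
  norm_num

open Classical in
/-- A mean value over a set of `(a₃, a₅)` for which few shifts `y` produce the same point is small. -/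
lemma minor_of_count {ε : ℝ} (hε : 0 < ε) : ∃ C : ℝ, 0 < C ∧ ∀ M : ℤ, 1 ≤ M →
    ∀ (P : Tor → Tor → Prop) (Z : ℝ), 0 ≤ Z →
    (∀ a2 a3 a4 a5 : Tor, (((Finset.Icc 1 M).filter fun y => P (a3 - (10 * y ^ 2) • a5) a5 ∧
      ‖a2 - ((3 * y) • a3 - (20 * y ^ 3) • a5)‖ ≤ 1 / (64 * (M : ℝ) ^ 2) ∧
      ‖a4 - (5 * y) • a5‖ ≤ 1 / (256 * (M : ℝ) ^ 4)).card : ℝ) ≤ Z) →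
    ∫⁻ a5, ∫⁻ a3, (if P a3 a5 then 1 else 0) *
      ∫⁻ a1, ENNReal.ofReal (‖f3 M a1 a3 a5‖ ^ 30) ≤ ENNReal.ofReal (C * (M : ℝ) ^ (20 + ε) * Z) := by
  obtain ⟨C1, hC1, H1⟩ := shift_step (half_pos hε)
  obtain ⟨C2, hC2, H2⟩ := vmvt (half_pos hε)
  refine ⟨C1 * C2 * 2 ^ (15 + ε / 2), by positivity, fun M hM P Z hZ0 hZ => ?_⟩
  have hM1 : (1 : ℝ) ≤ M := by exact_mod_cast hM
  obtain ⟨c, hc, H3⟩ := H1 M hM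
  set S := Finset.Icc (-(2 * M)) (2 * M) with hS
  have hV := H2 (2 * M) (by linarith) S (by
    intro x hx
    rw [hS, Finset.mem_Icc] at hx
    rw [abs_le]
    constructor
    · have : ((-(2 * M) : ℤ) : ℝ) ≤ x := by exact_mod_cast hx.1
      push_cast at this; linarith
    · exact_mod_cast hx.2) c hc
  set I := ∫⁻ a5, ∫⁻ a3, (if P a3 a5 then 1 else 0) *
      ∫⁻ a1, ENNReal.ofReal (‖f3 M a1 a3 a5‖ ^ 30) with hI
  set K := ENNReal.ofReal (C1 * (M : ℝ) ^ (6 + ε / 2)) with hK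
  set Q : ℤ → Tor → Tor → Tor → Tor → Prop := fun y a2 a3 a4 a5 => P (a3 - (10 * y ^ 2) • a5) a5 ∧
      ‖a2 - ((3 * y) • a3 - (20 * y ^ 3) • a5)‖ ≤ 1 / (64 * (M : ℝ) ^ 2) ∧
      ‖a4 - (5 * y) • a5‖ ≤ 1 / (256 * (M : ℝ) ^ 4) with hQ
  set G : Tor → Tor → Tor → Tor → Tor → ENNReal := fun a1 a2 a3 a4 a5 =>
    ENNReal.ofReal (‖F5 c S a1 a2 a3 a4 a5‖ ^ 30) with hG
  have h1 : ∀ y ∈ Finset.Icc 1 M, I ≤ K * J5 fun a1 a2 a3 a4 a5 =>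
      (if Q y a2 a3 a4 a5 then 1 else 0) * G a1 a2 a3 a4 a5 := by
    intro y hy
    rw [J5, ← lintegral_const_mul' _ _ ENNReal.ofReal_ne_top, hI]
    refine lintegral_mono fun a5 => ?_
    rw [← lintegral_sub_right_eq_self _ ((10 * y ^ 2) • a5),
      ← lintegral_const_mul' _ _ ENNReal.ofReal_ne_top]
    refine lintegral_mono fun a3 => ?_
    by_cases hP : P (a3 - (10 * y ^ 2) • a5) a5
    · have h2 := H3 y hy a3 a5
      simp only [hQ, hP, true_and, if_true, one_mul]
      exact h2
    · simp [hP]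
  have h2 : (M.toNat : ENNReal) * I ≤ K * (ENNReal.ofReal Z * J5 G) := by
    calc (M.toNat : ENNReal) * I = ∑ y ∈ Finset.Icc 1 M, I := by
          rw [Finset.sum_const, nsmul_eq_mul, Int.card_Icc, add_sub_cancel_right]
      _ ≤ ∑ y ∈ Finset.Icc 1 M, K * J5 fun a1 a2 a3 a4 a5 =>
          (if Q y a2 a3 a4 a5 then 1 else 0) * G a1 a2 a3 a4 a5 := Finset.sum_le_sum h1
      _ ≤ K * J5 fun a1 a2 a3 a4 a5 => ∑ y ∈ Finset.Icc 1 M,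
          (if Q y a2 a3 a4 a5 then 1 else 0) * G a1 a2 a3 a4 a5 := by
          rw [← Finset.mul_sum]
          exact mul_le_mul_right (J5_sum_le _ _) _
      _ ≤ K * J5 fun a1 a2 a3 a4 a5 => ENNReal.ofReal Z * G a1 a2 a3 a4 a5 := by
          refine mul_le_mul_right (J5_mono fun a1 a2 a3 a4 a5 => ?_) _
          rw [← Finset.sum_mul]
          refine mul_le_mul_left ?_ _
          rw [Finset.sum_boole, ← ENNReal.ofReal_natCast]
          exact ENNReal.ofReal_le_ofReal (hZ a2 a3 a4 a5)
      _ = _ := by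
          simp only [J5, lintegral_const_mul' _ _ ENNReal.ofReal_ne_top]
  have h3 : ENNReal.ofReal M * I ≤ ENNReal.ofReal M * ENNReal.ofReal
      (C1 * C2 * 2 ^ (15 + ε / 2) * (M : ℝ) ^ (20 + ε) * Z) := by
    have e1 : (M.toNat : ENNReal) = ENNReal.ofReal M := by
      rw [← ENNReal.ofReal_natCast]
      congr 1
      have : ((M.toNat : ℤ) : ℝ) = (M : ℤ) := by rw [Int.toNat_of_nonneg (by omega)]
      exact_mod_cast this
    rw [← e1]
    refine h2.trans ((mul_le_mul_right (mul_le_mul_right hV _) _).trans ?_)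
    rw [e1, hK, ← ENNReal.ofReal_mul (by positivity), ← ENNReal.ofReal_mul (by positivity),
      ← ENNReal.ofReal_mul (by positivity)]
    refine ENNReal.ofReal_le_ofReal (le_of_eq ?_)
    have e2 : (M : ℝ) * (M : ℝ) ^ (20 + ε) = (M : ℝ) ^ (6 + ε / 2) * (M : ℝ) ^ (15 + ε / 2) := by
      rw [← Real.rpow_add (by positivity), ← Real.rpow_one_add' (by positivity) (by positivity)]
      congr 1; ring
    rw [Real.mul_rpow (by norm_num) (by positivity)]
    linear_combination (-C1 * C2 * 2 ^ (15 + ε / 2) * Z) * e2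
  have hM0 : ENNReal.ofReal (M : ℝ) ≠ 0 := (ENNReal.ofReal_pos.2 (by positivity)).ne'
  exact (ENNReal.mul_le_mul_iff_right hM0 ENNReal.ofReal_ne_top).1 h3

lemma coe_int_tor (m : ℤ) : (((m : ℤ) : ℝ) : Tor) = 0 := by
  have := AddCircle.coe_eq_zero_iff (p := (1 : ℝ)) (x := ((m : ℤ) : ℝ))
  exact this.2 ⟨m, by simp⟩

lemma norm_coe_tor_le (x : ℝ) : ‖(x : Tor)‖ ≤ |x| := by
  rw [UnitAddCircle.norm_eq]
  have := round_le x 0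
  simpa using this

lemma norm_coe_le_iff {x δ : ℝ} : ‖(x : Tor)‖ ≤ δ ↔ ∃ m : ℤ, |x - m| ≤ δ := by
  constructor
  · intro h
    rw [UnitAddCircle.norm_eq] at h
    exact ⟨_, h⟩
  · rintro ⟨m, h⟩
    have : ((x : ℝ) : Tor) = ((x - m : ℝ) : Tor) := by
      rw [AddCircle.coe_sub, coe_int_tor, sub_zero]
    rw [this]
    exact (norm_coe_tor_le _).trans h

/-- If `(y - y')θ` is close to an integer for all `y, y'` in a set of `Z` integers in an interval of
length `D`, then `θ` is close to a rational number whose denominator `q ≤ D / (Z - 1)` divides all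
the differences. -/
lemma count_core (Y : Finset ℤ) (A : ℤ) (D : ℕ) (hY : Y ⊆ Finset.Icc A (A + D)) (hZ : 2 ≤ Y.card)
    (θ δ : ℝ) (hδ : 2 * D * δ < 1) (hδ0 : 0 ≤ δ)
    (h : ∀ y ∈ Y, ∀ y' ∈ Y, ∃ m : ℤ, |((y - y' : ℤ) : ℝ) * θ - m| ≤ δ) :
    ∃ (q : ℕ) (a : ℤ), 1 ≤ q ∧ q * (Y.card - 1) ≤ D ∧ (∀ y ∈ Y, ∀ y' ∈ Y, (q : ℤ) ∣ y - y') ∧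
      ∀ y ∈ Y, ∀ y' ∈ Y, |θ - a / q| * |((y - y' : ℤ) : ℝ)| ≤ δ := by
  classical
  -- the smallest positive difference
  have hex : ∃ d : ℕ, 0 < d ∧ ∃ y ∈ Y, ∃ y' ∈ Y, y - y' = d := by
    obtain ⟨y, hy, y', hy', hne⟩ := Finset.one_lt_card.1 hZ
    rcases lt_or_gt_of_ne hne with hl | hl
    · exact ⟨(y' - y).toNat, by omega, y', hy', y, hy, by omega⟩
    · exact ⟨(y - y').toNat, by omega, y, hy, y', hy', by omega⟩
  set d := Nat.find hex with hd
  obtain ⟨hd0, y1, hy1, y2, hy2, h12⟩ := Nat.find_spec hex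
  rw [← hd] at hd0 h12
  have hmin : ∀ y ∈ Y, ∀ y' ∈ Y, y' < y → (d : ℤ) ≤ y - y' := by
    intro y hy y' hy' hlt
    have := Nat.find_min' hex (m := (y - y').toNat) ⟨by omega, y, hy, y', hy', by omega⟩
    omega
  have hcard : d * (Y.card - 1) ≤ D := by
    have h1 : Y.card ≤ (Finset.range (D / d + 1)).card := by
      refine Finset.card_le_card_of_injOn (fun y => ((y - A).toNat / d)) ?_ ?_
      · intro y hy
        have := Finset.mem_Icc.1 (hY hy)
        simp only [Finset.coe_range, Set.mem_Iio]
        exact Nat.lt_succ_of_le (Nat.div_le_div_right (by omega))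
      · have key : ∀ y ∈ Y, ∀ y' ∈ Y, y' < y → (y' - A).toNat / d ≠ (y - A).toNat / d := by
          intro y hy y' hy' hlt heq
          have h3 := hmin y hy y' hy' hlt
          have h4 := Finset.mem_Icc.1 (hY hy)
          have h5 := Finset.mem_Icc.1 (hY hy')
          have h6 := Nat.div_add_mod (y - A).toNat d
          have h7 := Nat.div_add_mod (y' - A).toNat d
          have h8 := Nat.mod_lt (y - A).toNat hd0
          have h9 := Nat.mod_lt (y' - A).toNat hd0
          rw [heq] at h7
          omega
        intro y hy y' hy' heq
        by_contra hne
        rcases lt_or_gt_of_ne hne with hl | hl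
        · exact key y' hy' y hy hl heq
        · exact key y hy y' hy' hl heq.symm
    rw [Finset.card_range] at h1
    calc d * (Y.card - 1) ≤ d * (D / d) := Nat.mul_le_mul_left _ (by omega)
      _ ≤ D := Nat.mul_div_le D d
  obtain ⟨m, hm⟩ := h y1 hy1 y2 hy2
  rw [h12] at hm
  push_cast at hm
  set g := Int.gcd d m with hg
  have hg0 : 0 < g := Int.gcd_pos_of_ne_zero_left _ (by omega)
  obtain ⟨q, hq⟩ : g ∣ d := by exact_mod_cast Int.gcd_dvd_left (d : ℤ) m
  obtain ⟨a, ha⟩ : (g : ℤ) ∣ m := Int.gcd_dvd_right (d : ℤ) m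
  have hq0 : 0 < q := by
    rcases Nat.eq_zero_or_pos q with h0 | h0
    · rw [h0] at hq; omega
    · exact h0
  have hqd : q ≤ d := by rw [hq]; exact Nat.le_mul_of_pos_left _ hg0
  have hcop : IsCoprime (q : ℤ) a := by
    rw [Int.isCoprime_iff_gcd_eq_one]
    have h1 : g = g * Int.gcd q a := by
      conv_lhs => rw [hg, hq, ha]
      push_cast
      rw [Int.gcd_mul_left]; simp
    exact Nat.eq_of_mul_eq_mul_left hg0 (by rw [← h1, mul_one])
  have hqR : (0 : ℝ) < q := by exact_mod_cast hq0
  have hdR : (0 : ℝ) < d := by exact_mod_cast hd0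
  have hgR : (0 : ℝ) < g := by exact_mod_cast hg0
  set β := θ - a / q with hβ
  have hdβ : d * |β| ≤ δ := by
    have : (d : ℝ) * β = d * θ - m := by
      rw [hβ, ha, hq]; push_cast; field_simp
    calc d * |β| = |d * β| := by rw [abs_mul, abs_of_pos hdR]
      _ ≤ δ := by rw [this]; exact hm
  have hdD : d ≤ D := by
    calc d = d * 1 := (mul_one d).symm
      _ ≤ d * (Y.card - 1) := Nat.mul_le_mul_left _ (by omega)
      _ ≤ D := hcard
  have hdDR : (d : ℝ) ≤ D := by exact_mod_cast hdD
  have hqdR : (q : ℝ) ≤ d := by exact_mod_cast hqd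
  have hdiff : ∀ y ∈ Y, ∀ y' ∈ Y, |((y - y' : ℤ) : ℝ)| ≤ D := by
    intro y hy y' hy'
    have h4 := Finset.mem_Icc.1 (hY hy)
    have h5 := Finset.mem_Icc.1 (hY hy')
    have : |y - y'| ≤ (D : ℤ) := by rw [abs_le]; omega
    exact_mod_cast this
  have hdvd : ∀ y ∈ Y, ∀ y' ∈ Y, (q : ℤ) ∣ y - y' := by
    intro y hy y' hy'
    obtain ⟨n, hn⟩ := h y hy y' hy'
    have h3 := hdiff y hy y' hy'
    set k := y - y' with hk
    have h4 : |((k * a - q * n : ℤ) : ℝ)| < 1 := by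
      have e1 : ((k * a - q * n : ℤ) : ℝ) = q * ((k : ℝ) * θ - n) - q * (k * β) := by
        rw [hβ]; push_cast; field_simp; ring
      rw [e1]
      refine (abs_sub _ _).trans_lt ?_
      rw [abs_mul, abs_mul, abs_mul, abs_of_pos hqR]
      have e2 : (q : ℝ) * |(k : ℝ) * θ - n| ≤ D * δ := by
        have := abs_nonneg ((k : ℝ) * θ - n)
        gcongr
        linarith
      have e3 : (q : ℝ) * (|(k : ℝ)| * |β|) ≤ D * δ := by
        have := abs_nonneg β
        calc (q : ℝ) * (|(k : ℝ)| * |β|) ≤ d * (D * |β|) := by gcongr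
          _ = D * (d * |β|) := by ring
          _ ≤ D * δ := by gcongr
      linarith
    have h5 : k * a - q * n = 0 := by
      have : |k * a - q * n| < 1 := by exact_mod_cast h4
      exact Int.abs_lt_one_iff.1 this
    exact hcop.dvd_of_dvd_mul_right ⟨n, by linarith⟩
  refine ⟨q, a, hq0, (Nat.mul_le_mul_right _ hqd).trans hcard, hdvd, fun y hy y' hy' => ?_⟩
  obtain ⟨n, hn⟩ := h y hy y' hy'
  obtain ⟨l, hl⟩ := hdvd y hy y' hy'
  have h3 := hdiff y hy y' hy'
  have h4 : ((y - y' : ℤ) : ℝ) * θ - n = ((y - y' : ℤ) : ℝ) * β + (l * a - n : ℤ) := by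
    rw [hβ, hl]; push_cast; field_simp; ring
  have h5 : |((y - y' : ℤ) : ℝ) * β| ≤ D * δ := by
    rw [abs_mul]
    have : |β| ≤ δ := by
      have : (1 : ℝ) ≤ d := by exact_mod_cast hd0
      nlinarith [abs_nonneg β]
    gcongr
  have h6 : l * a - n = 0 := by
    have h7 : |((l * a - n : ℤ) : ℝ)| < 1 := by
      have : ((l * a - n : ℤ) : ℝ) = (((y - y' : ℤ) : ℝ) * θ - n) - ((y - y' : ℤ) : ℝ) * β := by
        rw [h4]; ring
      rw [this]
      refine (abs_sub _ _).trans_lt ?_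
      have hD1 : (1 : ℝ) ≤ D := by
        have : 1 ≤ D := le_trans hd0 hdD
        exact_mod_cast this
      nlinarith
    have : |l * a - n| < 1 := by exact_mod_cast h7
    exact Int.abs_lt_one_iff.1 this
  rw [h4, h6] at hn
  rw [mul_comm, ← abs_mul]
  simpa using hn

/-- The major arcs in the variables `(a₃, a₅)`: simultaneous rational approximation with
denominator `O(L)`. -/
def Maj (L : ℝ) (M : ℤ) (a3 a5 : Tor) : Prop :=
  ∃ Q : ℕ, 1 ≤ Q ∧ (Q : ℝ) ≤ 15 * L ∧ ∃ b3 b5 : ℤ,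
    ‖a3 - (((b3 : ℝ) / Q : ℝ) : Tor)‖ ≤ L / (M : ℝ) ^ 3 ∧
    ‖a5 - (((b5 : ℝ) / Q : ℝ) : Tor)‖ ≤ L / (M : ℝ) ^ 5

open Classical in
/-- Off the major arcs, few shifts `y` lead to nearby coefficients in degrees `2` and `4`: many such
shifts would force good rational approximations to `a5` and then to `a3`. -/
lemma count_minor {L : ℝ} {M : ℤ} (hL : 0 < L) (hM : 1 ≤ M) (a2 a3 a4 a5 : Tor) :
    (((Finset.Icc 1 M).filter fun y => (¬ Maj L M (a3 - (10 * y ^ 2) • a5) a5) ∧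
      ‖a2 - ((3 * y) • a3 - (20 * y ^ 3) • a5)‖ ≤ 1 / (64 * (M : ℝ) ^ 2) ∧
      ‖a4 - (5 * y) • a5‖ ≤ 1 / (256 * (M : ℝ) ^ 4)).card : ℝ) ≤ 1 + M / L := by
  have hM1 : (1 : ℝ) ≤ M := by exact_mod_cast hM
  by_contra! hcon
  set Y := (Finset.Icc 1 M).filter fun y => (¬ Maj L M (a3 - (10 * y ^ 2) • a5) a5) ∧
      ‖a2 - ((3 * y) • a3 - (20 * y ^ 3) • a5)‖ ≤ 1 / (64 * (M : ℝ) ^ 2) ∧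
      ‖a4 - (5 * y) • a5‖ ≤ 1 / (256 * (M : ℝ) ^ 4) with hYdef
  have hmem : ∀ y ∈ Y, (1 ≤ y ∧ y ≤ M) ∧ (¬ Maj L M (a3 - (10 * y ^ 2) • a5) a5) ∧
      ‖a2 - ((3 * y) • a3 - (20 * y ^ 3) • a5)‖ ≤ 1 / (64 * (M : ℝ) ^ 2) ∧
      ‖a4 - (5 * y) • a5‖ ≤ 1 / (256 * (M : ℝ) ^ 4) := by
    intro y hy
    rw [hYdef, Finset.mem_filter, Finset.mem_Icc] at hy
    exact hy
  have hML : 0 < M / L := by positivity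
  have hZ2 : 2 ≤ Y.card := by
    have : (1 : ℝ) < Y.card := by linarith
    exact_mod_cast this
  obtain ⟨t3, rfl, -⟩ := tor_rep a3
  obtain ⟨t5, rfl, -⟩ := tor_rep a5
  -- the closeness of the degree four coefficients gives a rational approximation to `5 * t5`
  have hY : Y ⊆ Finset.Icc 1 (1 + ((M - 1).toNat : ℤ)) := by
    intro y hy
    have := (hmem y hy).1
    rw [Finset.mem_Icc]; omega
  have hD : ((M - 1).toNat : ℝ) ≤ M := by
    have : (((M - 1).toNat : ℤ)) ≤ M := by omega
    exact_mod_cast this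
  have hδ4 : ∀ y ∈ Y, ∀ y' ∈ Y, ∃ m : ℤ, |((y - y' : ℤ) : ℝ) * (5 * t5) - m| ≤
      1 / (128 * (M : ℝ) ^ 4) := by
    intro y hy y' hy'
    rw [← norm_coe_le_iff]
    have e1 : ((((y - y' : ℤ) : ℝ) * (5 * t5) : ℝ) : Tor) =
        (a4 - (5 * y') • (t5 : Tor)) - (a4 - (5 * y) • (t5 : Tor)) := by
      rw [sub_sub_sub_cancel_left, ← sub_smul, ← AddCircle.coe_zsmul, zsmul_eq_mul]
      congr 1; push_cast; ring
    rw [e1]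
    refine (norm_sub_le _ _).trans ((add_le_add (hmem y' hy').2.2.2 (hmem y hy).2.2.2).trans ?_)
    apply le_of_eq; field_simp; norm_num
  have hM4 : (1 : ℝ) ≤ (M : ℝ) ^ 3 := one_le_pow₀ hM1
  obtain ⟨q, a, hq1, hqZ, hqd, hβ⟩ := count_core Y 1 (M - 1).toNat hY hZ2 (5 * t5)
    (1 / (128 * (M : ℝ) ^ 4)) (by
      rw [mul_one_div, div_lt_one (by positivity)]
      nlinarith) (by positivity) hδ4
  set β := 5 * t5 - a / q with hβdef
  have hqR : (0 : ℝ) < q := by exact_mod_cast hq1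
  -- given the approximation to `5 * t5`, the degree two coefficients determine `3 * t3`
  have hδ3 : ∀ y ∈ Y, ∀ y' ∈ Y, ∃ m : ℤ, |((y - y' : ℤ) : ℝ) * (3 * t3) - m| ≤
      1 / (8 * (M : ℝ) ^ 2) := by
    intro y hy y' hy'
    have e0 : ‖((((y - y' : ℤ) : ℝ) * (3 * t3) - ((20 * y ^ 3 : ℤ) : ℝ) * t5 +
        ((20 * y' ^ 3 : ℤ) : ℝ) * t5 : ℝ) : Tor)‖ ≤ 1 / (32 * (M : ℝ) ^ 2) := by
      have e1 : ((((y - y' : ℤ) : ℝ) * (3 * t3) - ((20 * y ^ 3 : ℤ) : ℝ) * t5 +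
        ((20 * y' ^ 3 : ℤ) : ℝ) * t5 : ℝ) : Tor) =
          (a2 - ((3 * y') • (t3 : Tor) - (20 * y' ^ 3) • (t5 : Tor))) -
          (a2 - ((3 * y) • (t3 : Tor) - (20 * y ^ 3) • (t5 : Tor))) := by
        rw [sub_sub_sub_cancel_left]
        simp only [← AddCircle.coe_zsmul, zsmul_eq_mul, ← AddCircle.coe_sub]
        congr 1; push_cast; ring
      rw [e1]
      refine (norm_sub_le _ _).trans ((add_le_add (hmem y' hy').2.2.1 (hmem y hy).2.2.1).trans ?_)
      apply le_of_eq; field_simp; norm_num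
    obtain ⟨m, hm⟩ := norm_coe_le_iff.1 e0
    obtain ⟨l, hl⟩ := hqd y hy y' hy'
    set s : ℤ := y ^ 2 + y * y' + y' ^ 2 with hs
    refine ⟨m + 4 * l * s * a, ?_⟩
    have e2 : ((y - y' : ℤ) : ℝ) * (3 * t3) - ((m + 4 * l * s * a : ℤ) : ℝ) =
        (((y - y' : ℤ) : ℝ) * (3 * t3) - ((20 * y ^ 3 : ℤ) : ℝ) * t5 +
        ((20 * y' ^ 3 : ℤ) : ℝ) * t5 - m) + 4 * s * (((y - y' : ℤ) : ℝ) * β) := by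
      have e3 : ((20 * y ^ 3 : ℤ) : ℝ) - ((20 * y' ^ 3 : ℤ) : ℝ) = 20 * s * ((y - y' : ℤ) : ℝ) := by
        rw [hs]; push_cast; ring
      have e4 : ((y - y' : ℤ) : ℝ) * β = ((y - y' : ℤ) : ℝ) * (5 * t5) - l * a := by
        rw [hβdef, hl]; push_cast; field_simp
      rw [e4]
      push_cast at e3 ⊢
      linear_combination t5 * e3
    rw [e2]
    refine (abs_add_le _ _).trans ?_
    have e5 : |4 * (s : ℝ) * (((y - y' : ℤ) : ℝ) * β)| ≤ 12 * M ^ 2 * (1 / (128 * (M : ℝ) ^ 4)) := by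
      rw [abs_mul]
      have e6 : |4 * (s : ℝ)| ≤ 12 * M ^ 2 := by
        have h1 : (1 : ℝ) ≤ y ∧ (y : ℝ) ≤ M := by exact_mod_cast (hmem y hy).1
        have h2 : (1 : ℝ) ≤ y' ∧ (y' : ℝ) ≤ M := by exact_mod_cast (hmem y' hy').1
        rw [hs]
        push_cast
        rw [abs_of_nonneg (by nlinarith)]
        nlinarith
      have e7 : |((y - y' : ℤ) : ℝ) * β| ≤ 1 / (128 * (M : ℝ) ^ 4) := by
        rw [abs_mul, mul_comm]; exact hβ y hy y' hy'
      gcongr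
    have e8 : 12 * (M : ℝ) ^ 2 * (1 / (128 * (M : ℝ) ^ 4)) = 12 / 128 * (1 / M ^ 2) := by
      field_simp
    have e9 : 1 / (32 * (M : ℝ) ^ 2) = 1 / 32 * (1 / M ^ 2) := by field_simp
    have e10 : 1 / (8 * (M : ℝ) ^ 2) = 1 / 8 * (1 / M ^ 2) := by field_simp
    rw [e8] at e5
    rw [e9] at hm
    rw [e10]
    linarith
  have hYne : Y.Nonempty := Finset.card_pos.1 (by omega)
  set y0 := Y.min' hYne with hy0
  have hy0m : y0 ∈ Y := Finset.min'_mem _ _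
  have hy0le : ∀ y ∈ Y, y0 ≤ y := fun y hy => Finset.min'_le _ _ hy
  have hdiv : ∀ y ∈ Y, (y - y0) / (q : ℤ) * q = y - y0 := fun y hy =>
    Int.ediv_mul_cancel (hqd y hy y0 hy0m)
  set W := Y.image fun y => (y - y0) / (q : ℤ) with hW
  have hWcard : W.card = Y.card := by
    refine Finset.card_image_of_injOn fun y hy y' hy' heq => ?_
    have h1 := hdiv y hy
    have h2 := hdiv y' hy'
    rw [heq] at h1
    linarith
  have hqz : (0 : ℤ) < q := by exact_mod_cast hq1
  have hWs : W ⊆ Finset.Icc 0 (0 + (((M - 1).toNat / q : ℕ) : ℤ)) := by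
    intro w hw
    obtain ⟨y, hy, rfl⟩ := Finset.mem_image.1 hw
    rw [Finset.mem_Icc]
    have h1 := (hmem y hy).1
    have h2 := (hmem y0 hy0m).1
    refine ⟨Int.ediv_nonneg (by have := hy0le y hy; omega) hqz.le, ?_⟩
    rw [zero_add]
    push_cast
    exact Int.ediv_le_ediv hqz (by omega)
  have hD' : (((M - 1).toNat / q : ℕ) : ℝ) ≤ M := by
    refine le_trans ?_ hD
    exact_mod_cast Nat.div_le_self _ _
  obtain ⟨q', a', hq1', hqZ', -, hβ'⟩ := count_core W 0 ((M - 1).toNat / q) hWs (by omega)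
    (q * (3 * t3)) (1 / (8 * (M : ℝ) ^ 2)) (by
      rw [mul_one_div, div_lt_one (by positivity)]
      nlinarith) (by positivity) (by
      intro w hw w' hw'
      obtain ⟨y, hy, rfl⟩ := Finset.mem_image.1 hw
      obtain ⟨y', hy', rfl⟩ := Finset.mem_image.1 hw'
      obtain ⟨m, hm⟩ := hδ3 y hy y' hy'
      refine ⟨m, ?_⟩
      have h1 := hdiv y hy
      have h2 := hdiv y' hy'
      have h3 : (y - y' : ℤ) = ((y - y0) / (q : ℤ) - (y' - y0) / (q : ℤ)) * q := by
        rw [sub_mul, h1, h2]; ring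
      rw [h3] at hm
      push_cast at hm ⊢
      rwa [← mul_assoc])
  set β' := q * (3 * t3) - a' / q' with hβ'def
  have hqR' : (0 : ℝ) < q' := by exact_mod_cast hq1'
  rw [hWcard] at hqZ'
  set y1 := Y.max' hYne with hy1
  have hy1m : y1 ∈ Y := Finset.max'_mem _ _
  have hrange : (Y.card : ℤ) - 1 ≤ y1 - y0 := by
    have h1 : Y ⊆ Finset.Icc y0 y1 := fun y hy => Finset.mem_Icc.2 ⟨hy0le y hy, Finset.le_max' _ _ hy⟩
    have h2 := Finset.card_le_card h1
    rw [Int.card_Icc] at h2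
    omega
  have hrangeR : M / L ≤ ((y1 - y0 : ℤ) : ℝ) := by
    have : ((Y.card : ℤ) : ℝ) - 1 ≤ ((y1 - y0 : ℤ) : ℝ) := by exact_mod_cast hrange
    push_cast at this ⊢
    linarith
  have hβb : |β| ≤ L / (128 * (M : ℝ) ^ 5) := by
    have h1 := hβ y1 hy1m y0 hy0m
    rw [abs_of_pos (hML.trans_le hrangeR)] at h1
    have h2 : |β| * (M / L) ≤ 1 / (128 * (M : ℝ) ^ 4) :=
      le_trans (by gcongr) h1
    rw [← le_div_iff₀ hML] at h2
    refine h2.trans (le_of_eq ?_)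
    field_simp
  have hβb' : |β' / q| ≤ L / (8 * (M : ℝ) ^ 3) := by
    have h1 := hβ' _ (Finset.mem_image_of_mem _ hy1m) _ (Finset.mem_image_of_mem _ hy0m)
    have h3 : (((y1 - y0) / (q : ℤ) - (y0 - y0) / (q : ℤ) : ℤ) : ℝ) = ((y1 - y0 : ℤ) : ℝ) / q := by
      rw [sub_self, Int.zero_ediv, sub_zero, eq_div_iff hqR.ne']
      exact_mod_cast hdiv y1 hy1m
    rw [h3, abs_div, abs_of_pos (hML.trans_le hrangeR), abs_of_pos hqR] at h1
    have h2 : |β' / q| * (M / L) ≤ 1 / (8 * (M : ℝ) ^ 2) := by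
      refine le_trans ?_ h1
      rw [abs_div, abs_of_pos hqR, div_mul_eq_mul_div, mul_div_assoc]
      gcongr
    rw [← le_div_iff₀ hML] at h2
    refine h2.trans (le_of_eq ?_)
    field_simp
  have hQ : ((q * q' : ℕ) : ℝ) ≤ L := by
    have h1 : q * q' * (Y.card - 1) ≤ (M - 1).toNat := by
      calc q * q' * (Y.card - 1) = q * (q' * (Y.card - 1)) := by ring
        _ ≤ q * ((M - 1).toNat / q) := Nat.mul_le_mul_left _ hqZ'
        _ ≤ _ := Nat.mul_div_le _ _
    have h2 : ((q * q' : ℕ) : ℝ) * ((Y.card - 1 : ℕ) : ℝ) ≤ M := by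
      refine le_trans ?_ hD
      exact_mod_cast h1
    rw [Nat.cast_sub (by omega)] at h2
    push_cast at h2 ⊢
    have h3 : (q : ℝ) * q' * (M / L) ≤ M := le_trans (by gcongr; linarith) h2
    rw [mul_div_assoc', div_le_iff₀ hL] at h3
    nlinarith
  -- the smallest element of `Y` yields a point on the major arcs
  refine (hmem y0 hy0m).2.1 ⟨15 * (q * q'), by
    have := Nat.mul_pos hq1 hq1'; omega, by push_cast at hQ ⊢; linarith,
    5 * a' - 10 * y0 ^ 2 * (3 * q' * a), 3 * q' * a, ?_, ?_⟩
  · rw [← AddCircle.coe_zsmul, zsmul_eq_mul, ← AddCircle.coe_sub, ← AddCircle.coe_sub]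
    refine (norm_coe_tor_le _).trans ?_
    have e1 : t3 - ((10 * y0 ^ 2 : ℤ) : ℝ) * t5 -
        ((5 * a' - 10 * y0 ^ 2 * (3 * q' * a) : ℤ) : ℝ) / ((15 * (q * q') : ℕ) : ℝ) =
        (β' / q) / 3 - 2 * y0 ^ 2 * β := by
      rw [hβ'def, hβdef]; push_cast; field_simp; ring
    rw [e1]
    refine (abs_sub _ _).trans ?_
    rw [abs_div, abs_mul, abs_of_pos (show (0 : ℝ) < 3 by norm_num)]
    have h1 : (1 : ℝ) ≤ y0 ∧ (y0 : ℝ) ≤ M := by exact_mod_cast (hmem y0 hy0m).1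
    have h2 : |2 * (y0 : ℝ) ^ 2| ≤ 2 * (M : ℝ) ^ 2 := by
      rw [abs_of_nonneg (by positivity)]
      nlinarith
    have h3 : |2 * (y0 : ℝ) ^ 2| * |β| ≤ 2 * (M : ℝ) ^ 2 * (L / (128 * (M : ℝ) ^ 5)) := by gcongr
    have h4 : 2 * (M : ℝ) ^ 2 * (L / (128 * (M : ℝ) ^ 5)) = 1 / 64 * (L / M ^ 3) := by
      field_simp; norm_num
    have h5 : L / (8 * (M : ℝ) ^ 3) = 1 / 8 * (L / M ^ 3) := by field_simp
    have h6 : 0 < L / (M : ℝ) ^ 3 := by positivity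
    rw [h4] at h3
    rw [h5] at hβb'
    linarith
  · rw [← AddCircle.coe_sub]
    refine (norm_coe_tor_le _).trans ?_
    have e1 : t5 - ((3 * q' * a : ℤ) : ℝ) / ((15 * (q * q') : ℕ) : ℝ) = β / 5 := by
      rw [hβdef]; push_cast; field_simp; ring
    rw [e1, abs_div, abs_of_pos (show (0 : ℝ) < 5 by norm_num)]
    have h5 : L / (128 * (M : ℝ) ^ 5) = 1 / 128 * (L / M ^ 5) := by field_simp
    have h6 : 0 < L / (M : ℝ) ^ 5 := by positivity
    rw [h5] at hβb
    linarith

open Classical in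
/-- The mean value over the minor arcs in `(a₃, a₅)`. -/
theorem minor_mean {ε : ℝ} (hε : 0 < ε) : ∃ C : ℝ, 0 < C ∧ ∀ (M : ℤ) (L : ℝ), 1 ≤ M → 0 < L → L ≤ M →
    ∫⁻ a5, ∫⁻ a3, (if ¬ Maj L M a3 a5 then 1 else 0) *
      ∫⁻ a1, ENNReal.ofReal (‖f3 M a1 a3 a5‖ ^ 30) ≤ ENNReal.ofReal (C * (M : ℝ) ^ (21 + ε) / L) := by
  obtain ⟨C, hC, H⟩ := minor_of_count hε
  refine ⟨2 * C, by positivity, fun M L hM hL hLM => ?_⟩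
  have hM1 : (1 : ℝ) ≤ M := by exact_mod_cast hM
  have h0 := H M hM (fun a3 a5 => ¬ Maj L M a3 a5) (1 + M / L) (by positivity)
    (fun a2 a3 a4 a5 => by convert count_minor hL hM a2 a3 a4 a5)
  refine le_trans (le_of_eq ?_) (h0.trans (ENNReal.ofReal_le_ofReal ?_))
  · refine lintegral_congr fun a5 => lintegral_congr fun a3 => ?_
    by_cases h : Maj L M a3 a5 <;> simp [h]
  have h1 : 1 + M / L ≤ 2 * (M / L) := by
    have : 1 ≤ M / L := (one_le_div hL).2 hLM
    linarith
  have h2 : (M : ℝ) ^ (21 + ε) = (M : ℝ) ^ (20 + ε) * M := by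
    rw [← Real.rpow_add_one (by positivity)]; congr 1; ring
  rw [h2]
  calc C * (M : ℝ) ^ (20 + ε) * (1 + M / L) ≤ C * (M : ℝ) ^ (20 + ε) * (2 * (M / L)) := by gcongr
    _ = _ := by ring

/-! ### Minor arcs on the torus -/

/-- Shifting the range of summation of a unimodular sequence by `Q` costs at most `2 Q`. -/
lemma shift_sum (g : ℤ → ℂ) (hg : ∀ x, ‖g x‖ = 1) (A B : ℤ) (Q : ℕ) :
    ‖∑ x ∈ Icc A B, g (x + Q) - ∑ x ∈ Icc A B, g x‖ ≤ 2 * Q := by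
  have h1 : ∑ x ∈ Icc A B, g (x + Q) = ∑ x ∈ Icc (A + Q) (B + Q), g x := by
    rw [← Finset.map_add_right_Icc, Finset.sum_map]; rfl
  have hb : ∀ S : Finset ℤ, ∀ c : ℤ, S ⊆ Ico c (c + Q) → ‖∑ x ∈ S, g x‖ ≤ Q := by
    intro S c hS
    refine (norm_sum_le _ _).trans ?_
    simp only [hg, sum_const, nsmul_eq_mul, mul_one]
    have := card_le_card hS
    rw [Int.card_Ico] at this
    have h2 : S.card ≤ Q := by omega
    exact_mod_cast h2
  rw [h1, ← Finset.sum_sdiff_sub_sum_sdiff]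
  refine (norm_sub_le _ _).trans ?_
  have a1 := hb (Icc (A + Q) (B + Q) \ Icc A B) (B + 1) (by
    intro x hx; simp only [mem_sdiff, mem_Icc, mem_Ico] at hx ⊢; omega)
  have a2 := hb (Icc A B \ Icc (A + Q) (B + Q)) A (by
    intro x hx; simp only [mem_sdiff, mem_Icc, mem_Ico] at hx ⊢; omega)
  linarith

lemma zsmul_frac (n : ℤ) (b : ℤ) (Q : ℕ) (hQ : 1 ≤ Q) : ((Q : ℤ) * n) • (((b : ℝ) / Q : ℝ) : Tor) = 0 := by
  rw [← AddCircle.coe_zsmul, zsmul_eq_mul, ← coe_int_tor (n * b)]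
  congr 1
  have : (Q : ℝ) ≠ 0 := by positivity
  push_cast
  field_simp

lemma norm_zsmul_tor_le (n : ℤ) (t : Tor) : ‖n • t‖ ≤ |(n : ℝ)| * ‖t‖ := by
  refine (norm_zsmul_le _ _).trans ?_
  rw [Int.norm_eq_abs]

/-- On the major arcs in `(a₃, a₅)`, the sum is small unless `Q • a1` is close to `0`. -/
lemma f3_pointwise {M : ℤ} (hM : 1 ≤ M) {Q : ℕ} (hQ : 1 ≤ Q) (hQM : (Q : ℤ) ≤ M) {L : ℝ} (hL : 0 ≤ L)
    (a1 a3 a5 : Tor) (b3 b5 : ℤ) (h3 : ‖a3 - (((b3 : ℝ) / Q : ℝ) : Tor)‖ ≤ L / (M : ℝ) ^ 3)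
    (h5 : ‖a5 - (((b5 : ℝ) / Q : ℝ) : Tor)‖ ≤ L / (M : ℝ) ^ 5) :
    ‖(Q : ℤ) • a1‖ * ‖f3 M a1 a3 a5‖ ≤ 200 * Q * (1 + L) := by
  set g : ℤ → ℂ := fun x => chi (x • a1 + x ^ 3 • a3 + x ^ 5 • a5) with hg
  have hM1 : (1 : ℝ) ≤ M := by exact_mod_cast hM
  have hQ1 : (1 : ℝ) ≤ Q := by exact_mod_cast hQ
  have hQM1 : (Q : ℝ) ≤ M := by exact_mod_cast hQM
  have hf : f3 M a1 a3 a5 = ∑ x ∈ Icc (-M) M, g x := rfl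
  -- advancing `x` by `Q` multiplies the summand by `chi (Q • a1)`, up to a small error
  have key : ∀ x ∈ Icc (-M) M, ‖g (x + Q) - chi ((Q : ℤ) • a1) * g x‖ ≤ 2 * Real.pi * (38 * Q * L / M) := by
    intro x hx
    have hx1 : |(x : ℝ)| ≤ M := by
      rw [mem_Icc] at hx
      rw [abs_le]; exact_mod_cast hx
    set n3 : ℤ := 3 * x ^ 2 + 3 * x * Q + Q ^ 2 with hn3
    set n5 : ℤ := 5 * x ^ 4 + 10 * x ^ 3 * Q + 10 * x ^ 2 * Q ^ 2 + 5 * x * Q ^ 3 + Q ^ 4 with hn5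
    set d3 := a3 - (((b3 : ℝ) / Q : ℝ) : Tor) with hd3
    set d5 := a5 - (((b5 : ℝ) / Q : ℝ) : Tor) with hd5
    have e3 : ((Q : ℤ) * n3) • a3 = ((Q : ℤ) * n3) • d3 := by
      rw [hd3, smul_sub, zsmul_frac _ _ _ hQ, sub_zero]
    have e5 : ((Q : ℤ) * n5) • a5 = ((Q : ℤ) * n5) • d5 := by
      rw [hd5, smul_sub, zsmul_frac _ _ _ hQ, sub_zero]
    have e0 : (x + Q) • a1 + (x + Q) ^ 3 • a3 + (x + Q) ^ 5 • a5 =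
        (((Q : ℤ) * n3) • d3 + ((Q : ℤ) * n5) • d5) +
          ((Q : ℤ) • a1 + (x • a1 + x ^ 3 • a3 + x ^ 5 • a5)) := by
      rw [← e3, ← e5, hn3, hn5]; module
    have e1 : g (x + Q) - chi ((Q : ℤ) • a1) * g x =
        (chi (((Q : ℤ) * n3) • d3 + ((Q : ℤ) * n5) • d5) - 1) * (chi ((Q : ℤ) • a1) * g x) := by
      simp only [hg]
      rw [e0, chi_add, chi_add ((Q : ℤ) • a1)]; ring
    rw [e1, norm_mul, norm_mul, norm_chi, hg, norm_chi, mul_one, mul_one]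
    refine (norm_chi_sub_one_le _).trans ?_
    refine mul_le_mul_of_nonneg_left ?_ (by positivity)
    have b3' : |(n3 : ℝ)| ≤ 7 * (M : ℝ) ^ 2 := by
      rw [hn3]; push_cast
      refine (abs_add_three _ _ _).trans ?_
      simp only [abs_mul, abs_pow, Nat.abs_ofNat, Nat.abs_cast]
      calc _ ≤ 3 * (M : ℝ) ^ 2 + 3 * M * M + (M : ℝ) ^ 2 := by gcongr
        _ = _ := by ring
    have b5' : |(n5 : ℝ)| ≤ 31 * (M : ℝ) ^ 4 := by
      rw [hn5]; push_cast
      refine (abs_add_le _ _).trans ((add_le_add ((abs_add_le _ _).trans (add_le_add (abs_add_three _ _ _) le_rfl)) le_rfl).trans ?_)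
      simp only [abs_mul, abs_pow, Nat.abs_ofNat, Nat.abs_cast]
      calc _ ≤ 5 * (M : ℝ) ^ 4 + 10 * (M : ℝ) ^ 3 * M + 10 * (M : ℝ) ^ 2 * M ^ 2 + 5 * M * M ^ 3 + (M : ℝ) ^ 4 := by gcongr
        _ = _ := by ring
    refine (norm_add_le _ _).trans ?_
    have c3 : ‖((Q : ℤ) * n3) • d3‖ ≤ Q * (7 * (M : ℝ) ^ 2) * (L / (M : ℝ) ^ 3) := by
      refine (norm_zsmul_tor_le _ _).trans ?_
      push_cast
      rw [abs_mul, Nat.abs_cast]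
      gcongr
    have c5 : ‖((Q : ℤ) * n5) • d5‖ ≤ Q * (31 * (M : ℝ) ^ 4) * (L / (M : ℝ) ^ 5) := by
      refine (norm_zsmul_tor_le _ _).trans ?_
      push_cast
      rw [abs_mul, Nat.abs_cast]
      gcongr
    refine (add_le_add c3 c5).trans (le_of_eq ?_)
    field_simp
    norm_num
  have hs := shift_sum g (fun x => norm_chi _) (-M) M Q
  have h1 : ‖∑ x ∈ Icc (-M) M, (g (x + Q) - chi ((Q : ℤ) • a1) * g x)‖ ≤ 3 * M * (2 * Real.pi * (38 * Q * L / M)) := by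
    refine (norm_sum_le _ _).trans ((sum_le_sum key).trans ?_)
    rw [sum_const, nsmul_eq_mul]
    gcongr
    refine card_Icc_le (by positivity) ?_
    push_cast; linarith
  have h2 : (chi ((Q : ℤ) • a1) - 1) * f3 M a1 a3 a5 =
      (∑ x ∈ Icc (-M) M, g (x + Q) - ∑ x ∈ Icc (-M) M, g x) -
        ∑ x ∈ Icc (-M) M, (g (x + Q) - chi ((Q : ℤ) • a1) * g x) := by
    rw [sum_sub_distrib, ← mul_sum, hf]; ring
  have h3 : 4 * ‖(Q : ℤ) • a1‖ * ‖f3 M a1 a3 a5‖ ≤ 2 * Q + 3 * M * (2 * Real.pi * (38 * Q * L / M)) := by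
    refine (mul_le_mul_of_nonneg_right (le_norm_chi_sub_one _) (norm_nonneg _)).trans ?_
    rw [← norm_mul, h2]
    exact (norm_sub_le _ _).trans (add_le_add hs h1)
  have h4 : 3 * M * (2 * Real.pi * (38 * Q * L / M)) = 228 * (Q * L) * Real.pi := by
    field_simp; ring
  have h5 : 228 * (Q * L) * Real.pi ≤ 228 * (Q * L) * 3.15 := by
    gcongr; exact Real.pi_lt_d2.le
  rw [h4] at h3
  nlinarith [mul_nonneg (by linarith : (0:ℝ) ≤ Q) hL]

lemma lintegral_fin3 {g : (Fin 3 → Tor) → ENNReal} (hg : Measurable g) :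
    ∫⁻ α, g α = ∫⁻ a5, ∫⁻ a3, ∫⁻ a1, g ![a1, a3, a5] := by
  have h1 := (volume_preserving_piFinSuccAbove (fun _ : Fin 3 => Tor) 2).symm
  rw [← h1.lintegral_comp hg, Measure.volume_eq_prod, lintegral_prod _ (by
    exact (hg.comp (MeasurableEquiv.measurable _)).aemeasurable)]
  refine lintegral_congr fun a5 => ?_
  have h2 := (volume_preserving_finTwoArrow Tor).symm
  have hm : Measurable fun y : Fin 2 → Tor =>
      g ((MeasurableEquiv.piFinSuccAbove (fun _ : Fin 3 => Tor) 2).symm (a5, y)) :=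
    (hg.comp (MeasurableEquiv.measurable _)).comp measurable_prodMk_left
  rw [← h2.lintegral_comp hm, Measure.volume_eq_prod, lintegral_prod_symm _ (by
    exact (hm.comp (MeasurableEquiv.measurable _)).aemeasurable)]
  refine lintegral_congr fun a3 => lintegral_congr fun a1 => ?_
  congr 1
  ext i
  fin_cases i <;> rfl

/-- The exponential sum with degrees `1, 3, 5` as a function on the torus. -/
noncomputable def ff (M : ℤ) (α : Fin 3 → Tor) : ℂ := f3 M (α 0) (α 1) (α 2)

/-- Coordinatewise multiplication by integers on the torus. -/
def sc (c : Fin 3 → ℤ) (α : Fin 3 → Tor) : Fin 3 → Tor := fun i => c i • α i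

lemma measurePreserving_sc {c : Fin 3 → ℤ} (hc : ∀ i, c i ≠ 0) : MeasurePreserving (sc c) :=
  volume_preserving_pi (f := fun i (t : Tor) => c i • t)
    fun i => Measure.measurePreserving_zsmul (volume : Measure Tor) (hc i)

lemma continuous_ff (M : ℤ) : Continuous (ff M) := by
  unfold ff f3
  refine continuous_finsetSum _ fun x _ => continuous_chi.comp ?_
  fun_prop

lemma continuous_sc (c : Fin 3 → ℤ) : Continuous (sc c) := by
  unfold sc; fun_prop

/-- The rational point `a / q` of the torus. -/
noncomputable def pt (q : ℕ) (a : Fin 3 → ℤ) : Fin 3 → Tor := fun i => (((a i : ℝ) / q : ℝ) : Tor)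

/-- The half-widths of the major arcs at level `R`. -/
noncomputable def dl (R : ℝ) (M : ℤ) : Fin 3 → ℝ := ![R ^ 2 / M, R / M ^ 3, R / M ^ 5]

/-- The union of the major arcs at level `R`. -/
def MajArc (R : ℝ) (M : ℤ) : Set (Fin 3 → Tor) :=
  {α | ∃ q : ℕ, 1 ≤ q ∧ (q : ℝ) ≤ R ∧ ∃ a : Fin 3 → ℤ, ∀ i, ‖α i - pt q a i‖ ≤ dl R M i}

lemma measurableSet_MajArc (R : ℝ) (M : ℤ) : MeasurableSet (MajArc R M) := by
  have : MajArc R M = ⋃ q : ℕ, ⋃ _ : 1 ≤ q ∧ (q : ℝ) ≤ R, ⋃ a : Fin 3 → ℤ,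
      {α : Fin 3 → Tor | ∀ i, ‖α i - pt q a i‖ ≤ dl R M i} := by
    ext α; simp [MajArc, and_assoc]
  rw [this]
  refine MeasurableSet.iUnion fun q => MeasurableSet.iUnion fun _ => MeasurableSet.iUnion fun a => ?_
  rw [Set.ofPred_forall]
  refine MeasurableSet.iInter fun i => (isClosed_le ?_ continuous_const).measurableSet
  fun_prop

lemma measurableSet_Maj (L : ℝ) (M : ℤ) : MeasurableSet {α : Fin 3 → Tor | Maj L M (α 1) (α 2)} := by
  have : {α : Fin 3 → Tor | Maj L M (α 1) (α 2)} = ⋃ Q : ℕ, ⋃ _ : 1 ≤ Q ∧ (Q : ℝ) ≤ 15 * L, ⋃ b3 : ℤ, ⋃ b5 : ℤ,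
      ({α : Fin 3 → Tor | ‖α 1 - (((b3 : ℝ) / Q : ℝ) : Tor)‖ ≤ L / M ^ 3} ∩
       {α : Fin 3 → Tor | ‖α 2 - (((b5 : ℝ) / Q : ℝ) : Tor)‖ ≤ L / M ^ 5}) := by
    ext α; simp only [Maj, Set.mem_iUnion, Set.mem_inter_iff, Set.mem_ofPred_eq, and_assoc, exists_prop]
  rw [this]
  refine MeasurableSet.iUnion fun q => MeasurableSet.iUnion fun _ => MeasurableSet.iUnion fun a =>
    MeasurableSet.iUnion fun b => MeasurableSet.inter ?_ ?_ <;>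
  refine (isClosed_le ?_ continuous_const).measurableSet <;>
  fun_prop

lemma frac_emod (b : ℤ) (Q : ℕ) (hQ : 1 ≤ Q) :
    (((b : ℝ) / Q : ℝ) : Tor) = (((((b % Q).toNat : ℕ) : ℝ) / Q : ℝ) : Tor) := by
  have h1 : ((b % Q).toNat : ℤ) = b % Q := Int.toNat_of_nonneg (Int.emod_nonneg _ (by omega))
  have h2 : (((b % Q).toNat : ℕ) : ℝ) = ((b % Q : ℤ) : ℝ) := by exact_mod_cast congrArg (Int.cast (R := ℝ)) h1
  have h3 : (b : ℝ) = ((b % Q : ℤ) : ℝ) + Q * ((b / Q : ℤ) : ℝ) := by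
    exact_mod_cast (Int.emod_add_mul_ediv b Q).symm
  have hq : (Q : ℝ) ≠ 0 := by positivity
  have h4 : (b : ℝ) / Q = ((b % Q : ℤ) : ℝ) / Q + ((b / Q : ℤ) : ℝ) := by
    rw [h3, add_div, mul_div_cancel_left₀ _ hq]
  rw [h2, h4, AddCircle.coe_add, coe_int_tor, add_zero]

lemma volume_Maj {L : ℝ} (hL : 0 < L) {M : ℤ} (hM : 1 ≤ M) :
    volume {α : Fin 3 → Tor | Maj L M (α 1) (α 2)} ≤
      ENNReal.ofReal ((15 * L) ^ 3 * (4 * L ^ 2 / M ^ 8)) := by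
  have hM1 : (1 : ℝ) ≤ M := by exact_mod_cast hM
  set K := ⌊15 * L⌋₊ with hK
  have hKL : (K : ℝ) ≤ 15 * L := Nat.floor_le (by positivity)
  set I : Finset (ℕ × ℕ × ℕ) := (Icc 1 K) ×ˢ (range K ×ˢ range K) with hI
  set Bx : ℕ × ℕ × ℕ → Set (Fin 3 → Tor) := fun p => Set.pi Set.univ
    ![Set.univ, Metric.closedBall (((p.2.1 : ℝ) / p.1 : ℝ) : Tor) (L / (M : ℝ) ^ 3),
      Metric.closedBall (((p.2.2 : ℝ) / p.1 : ℝ) : Tor) (L / (M : ℝ) ^ 5)] with hBx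
  have hsub : {α : Fin 3 → Tor | Maj L M (α 1) (α 2)} ⊆ ⋃ p ∈ I, Bx p := by
    rintro α ⟨Q, hQ1, hQL, b3, b5, h3, h5⟩
    have hQK : Q ≤ K := Nat.le_floor hQL
    have hb : ∀ b : ℤ, (b % Q).toNat < K := fun b => by
      have := Int.emod_lt_of_pos b (show (0 : ℤ) < Q by omega)
      omega
    simp only [Set.mem_iUnion]
    refine ⟨(Q, (b3 % Q).toNat, (b5 % Q).toNat), ?_, ?_⟩
    · simp only [hI, mem_product, mem_Icc, mem_range]
      exact ⟨⟨hQ1, hQK⟩, hb _, hb _⟩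
    · rw [hBx, Set.mem_univ_pi]
      intro i
      fin_cases i
      · simp
      · simpa [dist_eq_norm, ← frac_emod b3 Q hQ1] using h3
      · simpa [dist_eq_norm, ← frac_emod b5 Q hQ1] using h5
  refine (measure_mono hsub).trans ((measure_biUnion_finset_le _ _).trans ?_)
  have hv : ∀ p ∈ I, volume (Bx p) ≤ ENNReal.ofReal (4 * L ^ 2 / M ^ 8) := by
    intro p _
    rw [hBx, volume_pi_pi, Fin.prod_univ_three]
    simp only [Matrix.cons_val_zero, Matrix.cons_val_one, Matrix.cons_val]
    rw [volume_tor, AddCircle.volume_closedBall, AddCircle.volume_closedBall, one_mul,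
      ← ENNReal.ofReal_mul (by positivity)]
    refine ENNReal.ofReal_le_ofReal ?_
    calc _ ≤ (2 * (L / (M : ℝ) ^ 3)) * (2 * (L / (M : ℝ) ^ 5)) := by
          gcongr <;> exact min_le_right _ _
      _ = _ := by field_simp; norm_num
  refine (sum_le_sum hv).trans ?_
  rw [sum_const, nsmul_eq_mul, ENNReal.ofReal_mul (by positivity)]
  refine mul_le_mul_left ?_ _
  rw [← ENNReal.ofReal_natCast]
  refine ENNReal.ofReal_le_ofReal ?_
  rw [hI, card_product, card_product, card_range, Nat.card_Icc]
  push_cast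
  calc ((K + 1 - 1 : ℕ) : ℝ) * (K * K) = (K : ℝ) ^ 3 := by push_cast [Nat.add_sub_cancel]; ring
    _ ≤ _ := by gcongr

lemma descend {c : ℤ} (hc : c ≠ 0) {Q : ℕ} (hQ : 1 ≤ Q) {t : Tor} {b : ℤ} {δ : ℝ} (hδ : 0 ≤ δ)
    (h : ‖c • t - (((b : ℝ) / Q : ℝ) : Tor)‖ ≤ δ) :
    ∃ b' : ℤ, ‖t - (((b' : ℝ) / (Q * c) : ℝ) : Tor)‖ ≤ δ := by
  obtain ⟨x, rfl, -, -⟩ := tor_rep t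
  rw [← AddCircle.coe_zsmul, zsmul_eq_mul, ← AddCircle.coe_sub, norm_coe_le_iff] at h
  obtain ⟨m, hm⟩ := h
  refine ⟨b + m * Q, ?_⟩
  rw [← AddCircle.coe_sub]
  refine (norm_coe_tor_le _).trans ?_
  have hq : (Q : ℝ) ≠ 0 := by positivity
  have hc' : (c : ℝ) ≠ 0 := by exact_mod_cast hc
  have h1 : x - ((b + m * Q : ℤ) : ℝ) / (Q * c) = (c * x - b / Q - m) / c := by
    push_cast; field_simp; ring
  have h2 : (1 : ℝ) ≤ |(c : ℝ)| := by exact_mod_cast Int.one_le_abs hc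
  rw [h1, abs_div, div_le_iff₀ (by positivity)]
  nlinarith

lemma descend0 {Q : ℕ} (hQ : 1 ≤ Q) {t : Tor} {δ : ℝ} 
    (h : ‖(Q : ℤ) • t‖ ≤ Q * δ) : ∃ b : ℤ, ‖t - (((b : ℝ) / Q : ℝ) : Tor)‖ ≤ δ := by
  obtain ⟨x, rfl, -, -⟩ := tor_rep t
  rw [← AddCircle.coe_zsmul, zsmul_eq_mul, norm_coe_le_iff] at h
  obtain ⟨m, hm⟩ := h
  refine ⟨m, ?_⟩
  rw [← AddCircle.coe_sub]
  refine (norm_coe_tor_le _).trans ?_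
  have hq : (0 : ℝ) < Q := by positivity
  have h1 : x - (m : ℝ) / Q = (Q * x - m) / Q := by field_simp
  rw [h1, abs_div, Nat.abs_cast, div_le_iff₀ hq]
  push_cast at hm
  linarith

lemma mem_MajArc_of {c : Fin 3 → ℤ} (hc : ∀ i, c i ≠ 0) {R : ℝ} {M : ℤ} {Q : ℕ} (hQ : 1 ≤ Q)
    (hQR : (Q : ℝ) * |((c 0 * c 1 * c 2 : ℤ) : ℝ)| ≤ R) {α : Fin 3 → Tor} {b : Fin 3 → ℤ}
    (h : ∀ i, ‖α i - (((b i : ℝ) / (Q * c i) : ℝ) : Tor)‖ ≤ dl R M i) : α ∈ MajArc R M := by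
  obtain ⟨σ, hσ⟩ : ∃ σ : ℤ, |c 0 * c 1 * c 2| = σ * (c 0 * c 1 * c 2) :=
    ⟨Int.sign (c 0 * c 1 * c 2), (Int.sign_mul_self_eq_abs _).symm⟩
  have hn : c 0 * c 1 * c 2 ≠ 0 := mul_ne_zero (mul_ne_zero (hc 0) (hc 1)) (hc 2)
  have hσ0 : σ ≠ 0 := by rintro rfl; simp at hσ; simp_all
  have hU : (((c 0 * c 1 * c 2).natAbs : ℕ) : ℝ) = (σ : ℝ) * (c 0 * c 1 * c 2) := by
    rw [Nat.cast_natAbs]; rw [hσ]; push_cast; ring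
  have hr : ∀ i, (c i : ℝ) ≠ 0 := fun i => by exact_mod_cast hc i
  have hσr : (σ : ℝ) ≠ 0 := by exact_mod_cast hσ0
  have hq : (Q : ℝ) ≠ 0 := by positivity
  have h0 := hr 0
  have h1 := hr 1
  have h2 := hr 2
  refine ⟨Q * (c 0 * c 1 * c 2).natAbs, ?_, ?_, ![b 0 * (σ * (c 1 * c 2)), b 1 * (σ * (c 0 * c 2)),
    b 2 * (σ * (c 0 * c 1))], fun i => ?_⟩
  · exact Nat.mul_pos hQ (Int.natAbs_pos.2 hn)
  · rw [Nat.cast_mul, Nat.cast_natAbs, Int.cast_abs]; exact hQR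
  · refine le_trans (le_of_eq ?_) (h i)
    congr 2
    unfold pt
    congr 1
    rw [Nat.cast_mul, hU]
    fin_cases i
    all_goals
      simp
      field_simp

/-- Points off the major arcs of the torus whose last two coordinates are on the major arcs for `(a₃, a₅)`:
the first coordinate is then far from rational and the sum is small. -/
lemma ff_on_maj {c : Fin 3 → ℤ} (hc : ∀ i, c i ≠ 0) {R : ℝ} (hR : 1 ≤ R) {M : ℤ} (hM : (M : ℝ) = R ^ 8)
    {L : ℝ} (hL : 0 < L) (hLR : 15 * L * |((c 0 * c 1 * c 2 : ℤ) : ℝ)| ≤ R) {α : Fin 3 → Tor} (hα : α ∉ MajArc R M)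
    (hmaj : Maj L M (sc c α 1) (sc c α 2)) : ‖ff M (sc c α)‖ ≤ 400 * M / R := by
  obtain ⟨Q, hQ1, hQL, b3, b5, h3, h5⟩ := hmaj
  have hU : (1 : ℝ) ≤ |((c 0 * c 1 * c 2 : ℤ) : ℝ)| := by
    exact_mod_cast Int.one_le_abs (mul_ne_zero (mul_ne_zero (hc 0) (hc 1)) (hc 2))
  have hL1 : 15 * L ≤ R := by nlinarith
  have hRM : R ≤ M := by rw [hM]; exact le_self_pow₀ hR (by norm_num)
  have hM1 : (1 : ℝ) ≤ M := hR.trans hRM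
  have hMi : 1 ≤ M := by exact_mod_cast hM1
  have hQM : (Q : ℤ) ≤ M := by
    have : (Q : ℝ) ≤ M := by linarith
    exact_mod_cast this
  have hp := f3_pointwise hMi hQ1 hQM hL.le (sc c α 0) (sc c α 1) (sc c α 2) b3 b5 h3 h5
  have hQ0 : (0 : ℝ) < Q := by positivity
  have hbig : Q * (R ^ 2 / M) < ‖(Q : ℤ) • sc c α 0‖ := by
    by_contra! hcon
    obtain ⟨b1, hb1⟩ := descend0 hQ1 hcon
    obtain ⟨d0, hd0⟩ := descend (hc 0) hQ1 (by positivity) hb1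
    obtain ⟨d1, hd1⟩ := descend (hc 1) hQ1 (by positivity) h3
    obtain ⟨d2, hd2⟩ := descend (hc 2) hQ1 (by positivity) h5
    refine hα (mem_MajArc_of hc hQ1 (b := ![d0, d1, d2]) ?_ ?_)
    · exact le_trans (by gcongr) hLR
    · have hLR' : L ≤ R := by linarith
      intro i
      fin_cases i
      · simpa [dl] using hd0
      · refine le_trans (by simpa using hd1) ?_
        simp only [dl]
        simp
        gcongr
      · refine le_trans (by simpa using hd2) ?_
        simp only [dl]
        simp
        gcongr
  have h1 : Q * (R ^ 2 / M) * ‖ff M (sc c α)‖ ≤ 200 * Q * (1 + L) :=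
    (mul_le_mul_of_nonneg_right hbig.le (norm_nonneg _)).trans hp
  have h2 : R ^ 2 / M * ‖ff M (sc c α)‖ ≤ 400 * R := by
    have : Q * (R ^ 2 / M * ‖ff M (sc c α)‖) ≤ Q * (400 * R) := by
      have := mul_le_mul_of_nonneg_left (show 200 * (1 + L) ≤ 400 * R by linarith) hQ0.le
      linarith
    exact le_of_mul_le_mul_left this hQ0
  rw [le_div_iff₀ (by positivity)]
  have h3 : R ^ 2 / M * ‖ff M (sc c α)‖ = R * (‖ff M (sc c α)‖ * R) / M := by ring
  rw [h3, div_le_iff₀ (by positivity)] at h2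
  have h4 : R * (‖ff M (sc c α)‖ * R) ≤ R * (400 * M) := by linarith
  exact le_of_mul_le_mul_left h4 (by positivity)

/-- The mean value over the minor arcs on the torus. -/
theorem minor_bound {c : Fin 3 → ℤ} (hc : ∀ i, c i ≠ 0) {ε : ℝ} (hε : 0 < ε) :
    ∃ C : ℝ, 0 < C ∧ ∀ (M : ℤ) (R : ℝ), 1 ≤ R → (M : ℝ) = R ^ 8 →
      ∫⁻ α in (MajArc R M)ᶜ, ENNReal.ofReal (‖ff M (sc c α)‖ ^ 30) ≤
        ENNReal.ofReal (C * (M : ℝ) ^ (21 + ε) / R) := by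
  classical
  obtain ⟨C, hC, H⟩ := minor_mean hε
  set U : ℝ := |((c 0 * c 1 * c 2 : ℤ) : ℝ)| with hUdef
  have hU : 1 ≤ U := by
    rw [hUdef]
    exact_mod_cast Int.one_le_abs (mul_ne_zero (mul_ne_zero (hc 0) (hc 1)) (hc 2))
  refine ⟨C * (15 * U) + 400 ^ 30 * 4, by positivity, fun M R hR hM => ?_⟩
  have hRM : R ≤ M := by rw [hM]; exact le_self_pow₀ hR (by norm_num)
  have hM1 : (1 : ℝ) ≤ M := hR.trans hRM
  have hMi : 1 ≤ M := by exact_mod_cast hM1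
  set L := R / (15 * U) with hLdef
  have hL : 0 < L := by positivity
  have hLR : 15 * L * U = R := by rw [hLdef]; field_simp
  have hL1 : 15 * L ≤ R := by nlinarith
  set g : (Fin 3 → Tor) → ENNReal := fun α => ENNReal.ofReal (‖ff M α‖ ^ 30) with hg
  have hgm : Measurable g :=
    ENNReal.measurable_ofReal.comp ((continuous_ff M).norm.pow 30).measurable
  set N : Set (Fin 3 → Tor) := {α | Maj L M (α 1) (α 2)} with hN
  have hNm : MeasurableSet N := measurableSet_Maj L M
  have hsc := measurePreserving_sc hc
  have hsub : (MajArc R M)ᶜ ⊆ (sc c ⁻¹' Nᶜ) ∪ ((MajArc R M)ᶜ ∩ sc c ⁻¹' N) := by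
    intro α hα
    by_cases h : sc c α ∈ N
    · exact Or.inr ⟨hα, h⟩
    · exact Or.inl h
  refine (lintegral_mono_set hsub).trans ((lintegral_union_le _ _ _).trans ?_)
  have h1 : ∫⁻ α in sc c ⁻¹' Nᶜ, ENNReal.ofReal (‖ff M (sc c α)‖ ^ 30) ≤
      ENNReal.ofReal (C * (15 * U) * (M : ℝ) ^ (21 + ε) / R) := by
    rw [hsc.setLIntegral_comp_preimage hNm.compl hgm, ← lintegral_indicator hNm.compl,
      lintegral_fin3 (hgm.indicator hNm.compl)]
    refine le_trans ?_ ((H M L hMi hL (by linarith)).trans (ENNReal.ofReal_le_ofReal (le_of_eq ?_)))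
    · refine lintegral_mono fun a5 => lintegral_mono fun a3 => ?_
      by_cases h : Maj L M a3 a5
      · simp [h, hN, Set.indicator]
      · simp [h, hN, Set.indicator, hg, ff]
    · rw [hLdef]; field_simp
  have h2 : ∫⁻ α in (MajArc R M)ᶜ ∩ sc c ⁻¹' N, ENNReal.ofReal (‖ff M (sc c α)‖ ^ 30) ≤
      ENNReal.ofReal (400 ^ 30 * 4 * (M : ℝ) ^ (21 + ε) / R) := by
    calc _ ≤ ∫⁻ α in (MajArc R M)ᶜ ∩ sc c ⁻¹' N, ENNReal.ofReal ((400 * M / R) ^ 30) := by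
          refine setLIntegral_mono' ((measurableSet_MajArc R M).compl.inter (hsc.measurable hNm)) ?_
          rintro α ⟨hα, hα2⟩
          refine ENNReal.ofReal_le_ofReal ?_
          gcongr
          exact ff_on_maj hc hR hM hL hLR.le hα hα2
      _ ≤ ENNReal.ofReal ((400 * M / R) ^ 30) * volume (sc c ⁻¹' N) := by
          rw [setLIntegral_const]
          gcongr
          exact Set.inter_subset_right
      _ ≤ ENNReal.ofReal ((400 * M / R) ^ 30) * ENNReal.ofReal ((15 * L) ^ 3 * (4 * L ^ 2 / M ^ 8)) := by
          rw [hsc.measure_preimage hNm.nullMeasurableSet]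
          gcongr
          exact volume_Maj hL hMi
      _ ≤ _ := by
          rw [← ENNReal.ofReal_mul (by positivity)]
          refine ENNReal.ofReal_le_ofReal ?_
          calc (400 * M / R) ^ 30 * ((15 * L) ^ 3 * (4 * L ^ 2 / (M : ℝ) ^ 8))
              ≤ (400 * M / R) ^ 30 * (R ^ 3 * (4 * R ^ 2 / (M : ℝ) ^ 8)) := by
                gcongr
                linarith
            _ = 400 ^ 30 * 4 * ((M : ℝ) ^ 21 * (M / R ^ 24)) / R := by field_simp
            _ ≤ 400 ^ 30 * 4 * ((M : ℝ) ^ (21 + ε) * 1) / R := by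
                gcongr
                · rw [Real.rpow_add (by positivity)]
                  have h3 : (1 : ℝ) ≤ (M : ℝ) ^ ε := Real.one_le_rpow hM1 hε.le
                  have h4 : (M : ℝ) ^ (21 : ℝ) = (M : ℝ) ^ 21 := by norm_cast
                  rw [h4]
                  exact le_mul_of_one_le_right (by positivity) h3
                · rw [div_le_one (by positivity), hM]
                  exact pow_le_pow_right₀ hR (by norm_num)
            _ = _ := by ring
  refine (add_le_add h1 h2).trans ?_
  rw [← ENNReal.ofReal_add (by positivity) (by positivity)]
  refine ENNReal.ofReal_le_ofReal (le_of_eq ?_)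
  ring

/-! ### Local approximation of the generating function -/

/-- The phase polynomial `β₀ x + β₁ x³ + β₂ x⁵`. -/
def PP (β : Fin 3 → ℝ) (x : ℝ) : ℝ := β 0 * x + β 1 * x ^ 3 + β 2 * x ^ 5

/-- The oscillatory integral of one variable over `[-1, 1]`. -/
noncomputable def vv (β : Fin 3 → ℝ) : ℂ := ∫ t in (-1 : ℝ)..1, e (PP β t)

/-- The complete exponential sum of one variable modulo `q`. -/
noncomputable def SS (q : ℕ) (a : Fin 3 → ℤ) : ℂ := ∑ r ∈ range q, e (PP (fun i => (a i : ℝ) / q) r)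

/-- The degrees `1, 3, 5`. -/
def kk : Fin 3 → ℕ := ![1, 3, 5]

/-- The point of the torus with coordinates `γᵢ / M ^ kᵢ`. -/
noncomputable def tc (M : ℤ) (γ : Fin 3 → ℝ) : Fin 3 → Tor := fun i => ((γ i / (M : ℝ) ^ kk i : ℝ) : Tor)

lemma e_add (x y : ℝ) : e (x + y) = e x * e y := by
  rw [e, e, e, ← Complex.exp_add]; push_cast; ring_nf

lemma norm_e (x : ℝ) : ‖e x‖ = 1 := by rw [← chi_coe, norm_chi]

lemma e_zero : e 0 = 1 := by simp [e]

lemma e_int (m : ℤ) : e m = 1 := by rw [← chi_coe, coe_int_tor, chi_zero]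

lemma continuous_e : Continuous e := by unfold e; fun_prop

lemma norm_e_sub_le (x y : ℝ) : ‖e x - e y‖ ≤ 2 * Real.pi * |x - y| := by
  have h : e x - e y = (e (x - y) - 1) * e y := by
    rw [sub_mul, ← e_add]; simp
  rw [h, norm_mul, norm_e, mul_one, ← chi_coe]
  exact (norm_chi_sub_one_le _).trans (by gcongr; exact norm_coe_tor_le _)

lemma continuous_PP (β : Fin 3 → ℝ) : Continuous (PP β) := by unfold PP; fun_prop

lemma ff_coe (M : ℤ) (θ : Fin 3 → ℝ) :
    ff M (fun i => (θ i : Tor)) = ∑ x ∈ Icc (-M) M, e (PP θ x) := by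
  unfold ff f3
  refine sum_congr rfl fun x _ => ?_
  rw [← chi_coe]
  congr 1
  rw [← AddCircle.coe_zsmul, ← AddCircle.coe_zsmul, ← AddCircle.coe_zsmul, ← AddCircle.coe_add, ← AddCircle.coe_add]
  congr 1
  simp only [zsmul_eq_mul, PP]
  push_cast; ring

lemma sum_period {ψ : ℤ → ℂ} {q : ℕ} (hψ : ∀ x, ψ (x + q) = ψ x) (c : ℤ) :
    ∑ i ∈ range q, ψ (c + i) = ∑ i ∈ range q, ψ i := by
  have step : ∀ c : ℤ, ∑ i ∈ range q, ψ (c + 1 + i) = ∑ i ∈ range q, ψ (c + i) := by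
    intro c
    have h1 := sum_range_succ (fun i : ℕ => ψ (c + i)) q
    have h2 := sum_range_succ' (fun i : ℕ => ψ (c + i)) q
    rw [h1] at h2
    simp only [hψ, Nat.cast_zero, add_zero] at h2
    rw [add_right_cancel h2]
    refine sum_congr rfl fun i _ => ?_
    push_cast; congr 1; ring
  induction c using Int.induction_on with
  | zero => simp
  | succ n ih => rw [step]; exact ih
  | pred n ih => rw [← ih, ← step]; simp

/-- Comparison of a sum twisted by a periodic factor with an integral, block by block. -/
lemma block_approx {ψ : ℤ → ℂ} {q : ℕ} (hq : 1 ≤ q) (hψ : ∀ x, ψ (x + q) = ψ x) (hψ1 : ∀ x, ‖ψ x‖ ≤ 1)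
    {G : ℝ → ℂ} (hG : Continuous G) (hG1 : ∀ x, ‖G x‖ ≤ 1) {M : ℕ} {D : ℝ} (hD : 0 ≤ D)
    (hLip : ∀ x y : ℝ, |x| ≤ M → |y| ≤ M → ‖G x - G y‖ ≤ D * |x - y|) :
    ‖∑ x ∈ Icc (-M : ℤ) M, ψ x * G x - (∑ i ∈ range q, ψ i) / q * ∫ x in (-M : ℝ)..M, G x‖ ≤
      4 * M * q * D + 2 * q := by
  set S := ∑ i ∈ range q, ψ i with hS
  have hq0 : (0 : ℝ) < q := by positivity
  have hSq : ‖S / q‖ ≤ 1 := by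
    rw [norm_div, Complex.norm_natCast, div_le_one hq0]
    refine (norm_sum_le _ _).trans ((sum_le_sum (fun (i : ℕ) _ => hψ1 i)).trans ?_)
    simp
  have hInt : ∀ a b : ℝ, IntervalIntegrable G volume a b := fun a b => hG.intervalIntegrable a b
  set h : ℕ → ℂ := fun i => ψ (-M + i) * G (-M + i) with hh
  have hblock : ∀ B : ℕ, B * q ≤ 2 * M →
      ‖∑ i ∈ range (B * q), h i - S / q * ∫ x in (-M : ℝ)..(-M + (B * q : ℕ)), G x‖ ≤ B * (2 * q ^ 2 * D) := by
    intro B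
    induction B with
    | zero => intro _; simp
    | succ B ih =>
      intro hB
      have hB0 : B * q ≤ 2 * M := le_trans (by gcongr; omega) hB
      have hBr : ((B : ℝ) * q + q) ≤ 2 * M := by
        have : (((B + 1) * q : ℕ) : ℝ) ≤ (2 * M : ℕ) := by exact_mod_cast hB
        push_cast at this; linarith
      set c : ℝ := -M + (B * q : ℕ) with hc
      have hcc : c = -M + B * q := by rw [hc]; push_cast; ring
      have hB0r : (0 : ℝ) ≤ B * q := by positivity
      have e1 : (-M + ((B + 1) * q : ℕ) : ℝ) = c + q := by rw [hc]; push_cast; ring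
      have e2 : ∑ i ∈ range ((B + 1) * q), h i = ∑ i ∈ range (B * q), h i + ∑ i ∈ range q, h (B * q + i) := by
        rw [add_mul, one_mul, sum_range_add]
      rw [e1, e2, ← intervalIntegral.integral_add_adjacent_intervals (hInt _ c) (hInt c _)]
      have hin : ∀ x : ℝ, 0 ≤ x → x ≤ q → |c + x| ≤ M := by
        intro x h0 h1
        rw [hcc, abs_le]; constructor <;> linarith
      have h3 : ‖∑ i ∈ range q, h (B * q + i) - S * G c‖ ≤ q * (D * q) := by
        have e3 : S = ∑ i ∈ range q, ψ ((-M + (B * q : ℕ) : ℤ) + i) := (sum_period hψ _).symm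
        rw [e3, sum_mul, ← sum_sub_distrib]
        refine (norm_sum_le _ _).trans ?_
        have : ∀ i ∈ range q, ‖h (B * q + i) - ψ ((-M + (B * q : ℕ) : ℤ) + i) * G c‖ ≤ D * q := by
          intro i hi
          have hi' : (i : ℝ) ≤ q := by exact_mod_cast (mem_range.1 hi).le
          have e4 : h (B * q + i) = ψ ((-M + (B * q : ℕ) : ℤ) + i) * G (c + i) := by
            simp only [hh]; rw [hc]; push_cast; rw [add_assoc, add_assoc]
          rw [e4, ← mul_sub, norm_mul]
          have h5 := hLip (c + i) c (hin i (by positivity) hi') (by simpa using hin 0 le_rfl hq0.le)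
          rw [add_sub_cancel_left, Nat.abs_cast] at h5
          calc _ ≤ 1 * (D * i) := by gcongr; exact hψ1 _
            _ ≤ D * q := by rw [one_mul]; gcongr
        refine (sum_le_sum this).trans ?_
        simp
      have h4 : ‖S * G c - S / q * ∫ x in c..(c + q), G x‖ ≤ q * (D * q) := by
        have e5 : S * G c = S / q * ∫ x in c..(c + q), G c := by
          rw [intervalIntegral.integral_const]
          simp only [add_sub_cancel_left, Complex.real_smul, Complex.ofReal_natCast]
          have : (q : ℂ) ≠ 0 := by exact_mod_cast hq0.ne'
          field_simp
        rw [e5, ← mul_sub, ← intervalIntegral.integral_sub (by simp) (hInt _ _), norm_mul]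
        have h6 := intervalIntegral.norm_integral_le_of_norm_le_const (a := c) (b := c + q)
          (f := fun x => G c - G x) (C := D * q) (by
            intro x hx
            rw [Set.uIoc_of_le (by linarith)] at hx
            have h7 := hLip c x (by simpa using hin 0 le_rfl hq0.le)
              (by simpa using hin (x - c) (by linarith [hx.1]) (by linarith [hx.2]))
            refine h7.trans ?_
            gcongr
            rw [abs_le]; constructor <;> linarith [hx.1, hx.2])
        rw [add_sub_cancel_left, abs_of_pos hq0] at h6
        calc _ ≤ 1 * (D * q * q) := by gcongr
          _ = _ := by ring
      have := ih hB0
      have e6 : (∑ i ∈ range (B * q), h i + ∑ i ∈ range q, h (B * q + i)) -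
          S / q * ((∫ x in (-M : ℝ)..c, G x) + ∫ x in c..(c + q), G x) =
          (∑ i ∈ range (B * q), h i - S / q * ∫ x in (-M : ℝ)..c, G x) +
          (∑ i ∈ range q, h (B * q + i) - S * G c) + (S * G c - S / q * ∫ x in c..(c + q), G x) := by ring
      rw [e6]
      refine (norm_add₃_le).trans ?_
      push_cast
      nlinarith
  set B := 2 * M / q with hB
  set r := 2 * M % q with hr
  have hBr : 2 * M = B * q + r := (Nat.div_add_mod' _ _).symm
  have hrq : r < q := Nat.mod_lt _ hq
  have hBrr : (2 * M : ℝ) = B * q + r := by exact_mod_cast hBr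
  have e0 : ∑ x ∈ Icc (-M : ℤ) M, ψ x * G x = ∑ i ∈ range (2 * M + 1), h i := by
    symm
    refine sum_nbij (fun i => -M + i) ?_ ?_ ?_ ?_
    · intro i hi; simp only [mem_range, mem_Icc] at hi ⊢; omega
    · intro i _ j _ hij; simp only at hij; omega
    · intro x hx
      simp only [coe_Icc, Set.mem_Icc] at hx
      exact ⟨(x + M).toNat, by simp only [coe_range, Set.mem_Iio]; omega, by simp only; omega⟩
    · intro i _; simp [hh]
  have e1 : ∑ i ∈ range (2 * M + 1), h i = ∑ i ∈ range (B * q), h i + ∑ i ∈ range (r + 1), h (B * q + i) := by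
    rw [hBr, add_assoc, sum_range_add]
  rw [e0, e1, ← intervalIntegral.integral_add_adjacent_intervals (hInt _ (-M + (B * q : ℕ))) (hInt _ _)]
  have h1 := hblock B (by omega)
  have h2 : ‖∑ i ∈ range (r + 1), h (B * q + i)‖ ≤ q := by
    have : ∀ i ∈ range (r + 1), ‖h (B * q + i)‖ ≤ 1 := fun i _ => by
      simp only [hh]; rw [norm_mul]
      exact mul_le_one₀ (hψ1 _) (norm_nonneg _) (hG1 _)
    refine (norm_sum_le _ _).trans ((sum_le_sum this).trans ?_)
    simp only [sum_const, card_range, nsmul_eq_mul, mul_one]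
    exact_mod_cast hrq
  have h3 : ‖S / q * ∫ x in (-M + (B * q : ℕ) : ℝ)..M, G x‖ ≤ q := by
    rw [norm_mul]
    have h6 := intervalIntegral.norm_integral_le_of_norm_le_const (a := -M + (B * q : ℕ)) (b := M)
          (f := G) (C := 1) (fun x _ => hG1 x)
    have e7 : (M : ℝ) - (-M + (B * q : ℕ)) = r := by push_cast; linarith
    rw [e7, Nat.abs_cast, one_mul] at h6
    have : (r : ℝ) ≤ q := by exact_mod_cast hrq.le
    calc _ ≤ 1 * (r : ℝ) := by gcongr
      _ ≤ q := by linarith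
  have e6 : (∑ i ∈ range (B * q), h i + ∑ i ∈ range (r + 1), h (B * q + i)) -
      S / q * ((∫ x in (-M : ℝ)..(-M + (B * q : ℕ)), G x) + ∫ x in (-M + (B * q : ℕ) : ℝ)..M, G x) =
      (∑ i ∈ range (B * q), h i - S / q * ∫ x in (-M : ℝ)..(-M + (B * q : ℕ)), G x) +
      ∑ i ∈ range (r + 1), h (B * q + i) - S / q * ∫ x in (-M + (B * q : ℕ) : ℝ)..M, G x := by ring
  rw [e6]
  refine (norm_sub_le _ _).trans ((add_le_add (norm_add_le _ _) le_rfl).trans ?_)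
  have h7 : (B : ℝ) * (2 * q ^ 2 * D) ≤ 4 * M * q * D := by
    have : (B : ℝ) * q ≤ 2 * M := by rw [hBrr]; linarith [Nat.cast_nonneg (α := ℝ) r]
    calc (B : ℝ) * (2 * q ^ 2 * D) = (B * q) * (2 * q * D) := by ring
      _ ≤ (2 * M) * (2 * q * D) := by gcongr
      _ = _ := by ring
  linarith

lemma PP_add (β γ : Fin 3 → ℝ) (x : ℝ) : PP (β + γ) x = PP β x + PP γ x := by
  simp [PP]; ring

lemma PP_frac_periodic (q : ℕ) (hq : 1 ≤ q) (a : Fin 3 → ℤ) (x : ℤ) :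
    e (PP (fun i => (a i : ℝ) / q) ((x + q : ℤ) : ℝ)) = e (PP (fun i => (a i : ℝ) / q) x) := by
  have hq0 : (q : ℝ) ≠ 0 := by positivity
  set m : ℤ := a 0 + a 1 * (3 * x ^ 2 + 3 * x * q + q ^ 2) +
    a 2 * (5 * x ^ 4 + 10 * x ^ 3 * q + 10 * x ^ 2 * q ^ 2 + 5 * x * q ^ 3 + q ^ 4) with hm
  have h : PP (fun i => (a i : ℝ) / q) ((x + q : ℤ) : ℝ) = PP (fun i => (a i : ℝ) / q) x + m := by
    rw [hm]; simp only [PP]; push_cast; field_simp; ring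
  rw [h, e_add, e_int, mul_one]

lemma vv_scale {M : ℕ} (hM : 1 ≤ M) (γ : Fin 3 → ℝ) :
    ∫ x in (-M : ℝ)..M, e (PP (fun i => γ i / (M : ℝ) ^ kk i) x) = M * vv γ := by
  have hM0 : (M : ℝ) ≠ 0 := by positivity
  have h := intervalIntegral.smul_integral_comp_mul_left (a := (-1 : ℝ)) (b := 1)
    (fun x => e (PP (fun i => γ i / (M : ℝ) ^ kk i) x)) (M : ℝ)
  rw [mul_neg_one, mul_one] at h
  rw [← h, vv, Complex.real_smul, Complex.ofReal_natCast]
  congr 1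
  refine intervalIntegral.integral_congr fun x _ => ?_
  simp only [PP, kk]
  congr 1
  simp
  field_simp

lemma approx_one {M : ℕ} (hM : 1 ≤ M) {q : ℕ} (hq : 1 ≤ q) (a : Fin 3 → ℤ) (γ : Fin 3 → ℝ) :
    ‖ff M (pt q a + tc M γ) - M * (SS q a / q) * vv γ‖ ≤ 130 * q * (1 + |γ 0| + |γ 1| + |γ 2|) := by
  have hM0 : (0 : ℝ) < M := by positivity
  set β : Fin 3 → ℝ := fun i => γ i / (M : ℝ) ^ kk i with hβ
  have e0 : pt q a + tc M γ = fun i => (((fun i => (a i : ℝ) / q) + β) i : Tor) := by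
    ext i; simp [pt, tc, hβ]
  set D : ℝ := 2 * Real.pi * ((|γ 0| + 3 * |γ 1| + 5 * |γ 2|) / M) with hD
  have hb := block_approx (ψ := fun x => e (PP (fun i => (a i : ℝ) / q) x)) (q := q) hq
    (PP_frac_periodic q hq a) (fun x => (norm_e _).le) (G := fun x => e (PP β x))
    (continuous_e.comp (continuous_PP β)) (fun x => (norm_e _).le) (M := M) (D := D) (by positivity) (by
      intro x y hx hy
      refine (norm_e_sub_le _ _).trans ?_
      rw [hD, mul_assoc (2 * Real.pi) (_ / _)]
      refine mul_le_mul_of_nonneg_left ?_ (by positivity)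
      have e1 : PP β x - PP β y = (β 0 + β 1 * (x ^ 2 + x * y + y ^ 2) +
        β 2 * (x ^ 4 + x ^ 3 * y + x ^ 2 * y ^ 2 + x * y ^ 3 + y ^ 4)) * (x - y) := by
          simp only [PP]; ring
      rw [e1, abs_mul]
      refine mul_le_mul_of_nonneg_right ?_ (abs_nonneg _)
      have e2 : (|γ 0| + 3 * |γ 1| + 5 * |γ 2|) / M = |β 0| + |β 1| * (3 * (M : ℝ) ^ 2) + |β 2| * (5 * (M : ℝ) ^ 4) := by
        simp only [hβ, abs_div, kk]
        simp
        field_simp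
      rw [e2]
      refine (abs_add_three _ _ _).trans ?_
      rw [abs_mul, abs_mul]
      gcongr
      · refine (abs_add_three _ _ _).trans ?_
        simp only [abs_mul, abs_pow]
        calc _ ≤ (M : ℝ) ^ 2 + M * M + (M : ℝ) ^ 2 := by gcongr
          _ = _ := by ring
      · refine (abs_add_le _ _).trans ((add_le_add ((abs_add_le _ _).trans (add_le_add (abs_add_three _ _ _) le_rfl)) le_rfl).trans ?_)
        simp only [abs_mul, abs_pow]
        calc _ ≤ (M : ℝ) ^ 4 + (M : ℝ) ^ 3 * M + (M : ℝ) ^ 2 * M ^ 2 + M * M ^ 3 + (M : ℝ) ^ 4 := by gcongr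
          _ = _ := by ring)
  have e3 : ff M (pt q a + tc M γ) = ∑ x ∈ Icc (-M : ℤ) M, e (PP (fun i => (a i : ℝ) / q) x) * e (PP β x) := by
    rw [e0]
    erw [ff_coe M ((fun i => (a i : ℝ) / q) + β)]
    refine sum_congr rfl fun x _ => ?_
    rw [PP_add, e_add]
  have e4 : (M : ℂ) * (SS q a / q) * vv γ = (∑ i ∈ range q, e (PP (fun i => (a i : ℝ) / q) ((i : ℤ) : ℝ))) / q *
      ∫ x in (-M : ℝ)..M, e (PP β x) := by
    rw [vv_scale hM γ, SS]
    push_cast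
    ring
  rw [e3, e4]
  refine hb.trans ?_
  have e5 : 4 * M * q * D = 8 * q * Real.pi * (|γ 0| + 3 * |γ 1| + 5 * |γ 2|) := by
    rw [hD]; field_simp; ring
  rw [e5]
  have hq0 : (0 : ℝ) < q := by positivity
  have h1 : 8 * q * Real.pi * (|γ 0| + 3 * |γ 1| + 5 * |γ 2|) ≤
      8 * q * 3.15 * (5 * (|γ 0| + |γ 1| + |γ 2|)) := by
    gcongr
    · exact Real.pi_lt_d2.le
    · linarith [abs_nonneg (γ 0), abs_nonneg (γ 1)]
  have h2 : 0 ≤ q * (|γ 0| + |γ 1| + |γ 2|) := by positivity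
  nlinarith

lemma sc_pt_tc (c : Fin 3 → ℤ) (q : ℕ) (a : Fin 3 → ℤ) (M : ℤ) (γ : Fin 3 → ℝ) :
    sc c (pt q a + tc M γ) = pt q (fun i => c i * a i) + tc M (fun i => c i * γ i) := by
  ext i
  simp only [sc, Pi.add_apply, pt, tc, smul_add, ← AddCircle.coe_zsmul, zsmul_eq_mul]
  push_cast
  rw [mul_div_assoc, mul_div_assoc]

/-- The approximation of the generating function near a rational point. -/
lemma approx (c : Fin 3 → ℤ) : ∃ C : ℝ, 1 ≤ C ∧ ∀ (M : ℕ), 1 ≤ M → ∀ (q : ℕ), 1 ≤ q →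
    ∀ (a : Fin 3 → ℤ) (γ : Fin 3 → ℝ),
    ‖ff M (sc c (pt q a + tc M γ)) - M * (SS q (fun i => c i * a i) / q) * vv (fun i => c i * γ i)‖ ≤
      C * q * (1 + |γ 0| + |γ 1| + |γ 2|) := by
  set U : ℝ := 1 + |(c 0 : ℝ)| + |(c 1 : ℝ)| + |(c 2 : ℝ)| with hU
  have h0 := abs_nonneg (c 0 : ℝ)
  have h1 := abs_nonneg (c 1 : ℝ)
  have h2 := abs_nonneg (c 2 : ℝ)
  refine ⟨130 * U, by linarith, fun M hM q hq a γ => ?_⟩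
  rw [sc_pt_tc]
  refine (approx_one hM hq _ _).trans ?_
  simp only [abs_mul]
  have : 1 + |(c 0 : ℝ)| * |γ 0| + |(c 1 : ℝ)| * |γ 1| + |(c 2 : ℝ)| * |γ 2| ≤ U * (1 + |γ 0| + |γ 1| + |γ 2|) := by
    rw [hU]
    nlinarith [abs_nonneg (γ 0), abs_nonneg (γ 1), abs_nonneg (γ 2), mul_nonneg h0 (abs_nonneg (γ 1)),
      mul_nonneg h0 (abs_nonneg (γ 2)), mul_nonneg h1 (abs_nonneg (γ 0)), mul_nonneg h1 (abs_nonneg (γ 2)),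
      mul_nonneg h2 (abs_nonneg (γ 0)), mul_nonneg h2 (abs_nonneg (γ 1))]
  calc _ ≤ 130 * (q : ℝ) * (U * (1 + |γ 0| + |γ 1| + |γ 2|)) := by gcongr
    _ = _ := by ring

lemma chi_sum {ι : Type*} (s : Finset ι) (f : ι → Tor) : chi (∑ i ∈ s, f i) = ∏ i ∈ s, chi (f i) := by
  classical
  induction s using Finset.induction_on with
  | empty => simp [chi_zero]
  | insert a s ha ih => rw [sum_insert ha, prod_insert ha, chi_add, ih]

lemma e_sum {ι : Type*} (s : Finset ι) (f : ι → ℝ) : e (∑ i ∈ s, f i) = ∏ i ∈ s, e (f i) := by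
  classical
  induction s using Finset.induction_on with
  | empty => simp [e_zero]
  | insert a s ha ih => rw [sum_insert ha, prod_insert ha, e_add, ih]

lemma ff_sc (M : ℤ) (c : Fin 3 → ℤ) (α : Fin 3 → Tor) :
    ff M (sc c α) = ∑ x ∈ Icc (-M) M, chi (∑ i, (c i * x ^ (![1, 3, 5] : Fin 3 → ℕ) i) • α i) := by
  unfold ff f3 sc
  refine sum_congr rfl fun x _ => ?_
  congr 1
  rw [Fin.sum_univ_three]
  simp only [smul_smul]
  simp [mul_comm]

lemma prod_ff (M : ℤ) (u : Fin 3 → Fin 30 → ℤ) (α : Fin 3 → Tor) :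
    ∏ j, ff M (sc (fun i => u i j) α) =
      ∑ x ∈ Fintype.piFinset fun _ : Fin 30 => Icc (-M) M,
        ∏ i, chi ((dF ![1, 3, 5] u i x) • α i) := by
  simp only [ff_sc]
  rw [prod_univ_sum]
  refine sum_congr rfl fun x _ => ?_
  rw [← chi_sum, ← chi_sum, sum_comm]
  congr 1
  refine sum_congr rfl fun i _ => ?_
  rw [dF, sum_smul]
  simp

/-- The number of solutions as an integral over the torus, by orthogonality. -/
lemma NF_eq_integral (u : Fin 3 → Fin 30 → ℤ) {X : ℝ} (hX : 0 ≤ X) :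
    (NF ![1, 3, 5] u X : ℂ) = ∫ α : Fin 3 → Tor, ∏ j, ff (⌊X⌋₊ : ℤ) (sc (fun i => u i j) α) := by
  classical
  simp only [prod_ff]
  have hcont : ∀ x : Fin 30 → ℤ, Continuous fun α : Fin 3 → Tor => ∏ i, chi ((dF ![1, 3, 5] u i x) • α i) :=
    fun x => continuous_finsetProd _ fun i _ => (continuous_chi_zsmul _).comp (continuous_apply i)
  rw [integral_finsetSum _ fun x _ => by
    exact (hcont x).integrable_of_hasCompactSupport (HasCompactSupport.of_compactSpace _)]
  have h1 : ∀ x : Fin 30 → ℤ, ∫ α : Fin 3 → Tor, ∏ i, chi ((dF ![1, 3, 5] u i x) • α i) =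
      if ∀ i, dF ![1, 3, 5] u i x = 0 then 1 else 0 := by
    intro x
    have := integral_fintype_prod_volume_eq_prod (𝕜 := ℂ) (fun i (t : Tor) => chi ((dF ![1, 3, 5] u i x) • t))
    rw [this]
    simp only [integral_chi_zsmul]
    split_ifs with h
    · simp [h]
    · push Not at h
      obtain ⟨i, hi⟩ := h
      exact prod_eq_zero (mem_univ i) (by simp [hi])
  simp only [h1]
  rw [← sum_filter, sum_const, nsmul_eq_mul, mul_one, NF]
  congr 1
  rw [← Nat.card_eq_finsetCard]
  refine Nat.card_congr (Equiv.subtypeEquivRight fun x => ?_)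
  simp only [mem_filter, Fintype.mem_piFinset, mem_Icc]
  change ((∀ j, |(x j : ℝ)| ≤ X) ∧ _) ↔ _
  refine and_congr_left fun _ => forall_congr' fun j => ?_
  have h9 : -⌊X⌋ ≤ x j ↔ -(x j) ≤ ⌊X⌋ := neg_le
  rw [abs_le, Int.natCast_floor_eq_floor hX, Int.le_floor, h9, Int.le_floor]
  push_cast
  constructor
  · rintro ⟨h, h'⟩; exact ⟨by linarith, h'⟩
  · rintro ⟨h, h'⟩; exact ⟨by linarith, h'⟩

lemma dF_phase (u : Fin 3 → Fin 30 → ℤ) (γ : Fin 3 → ℝ) (t : Fin 30 → ℝ) :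
    ∑ i, γ i * dF ![1, 3, 5] u i t = ∑ j, PP (fun i => u i j * γ i) (t j) := by
  simp only [dF, PP, Fin.sum_univ_three, mul_sum, ← sum_add_distrib]
  refine sum_congr rfl fun j _ => ?_
  simp
  ring

lemma singIntInner_eq (u : Fin 3 → Fin 30 → ℤ) (γ : Fin 3 → ℝ) :
    singIntInner ![1, 3, 5] u γ = ∏ j, vv (fun i => u i j * γ i) := by
  unfold singIntInner
  simp only [dF_phase, e_sum]
  have h : Set.Icc (fun _ : Fin 30 => (-1 : ℝ)) (fun _ => 1) = Set.pi Set.univ fun _ => Set.Icc (-1) 1 :=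
    (Set.pi_univ_Icc _ _).symm
  rw [h, volume_pi, Measure.restrict_pi_pi]
  have := integral_fintype_prod_eq_prod (𝕜 := ℂ) (μ := fun _ : Fin 30 => (volume : Measure ℝ).restrict (Set.Icc (-1) 1))
    (fun j (t : ℝ) => e (PP (fun i => u i j * γ i) t))
  rw [this]
  refine prod_congr rfl fun j _ => ?_
  rw [vv, intervalIntegral.integral_of_le (by norm_num), integral_Icc_eq_integral_Ioc]

/-- The reduced numerators modulo `q`. -/
def AA (q : ℕ) : Finset (Fin 3 → ℕ) :=
  (Fintype.piFinset fun _ : Fin 3 => Finset.Icc 1 q).filter (fun a => Nat.gcd (Finset.univ.gcd a) q = 1)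

lemma SS_eq_Icc {q : ℕ} (hq : 1 ≤ q) (a : Fin 3 → ℤ) :
    SS q a = ∑ r ∈ Icc 1 q, e (PP (fun i => (a i : ℝ) / q) r) := by
  have h := sum_period (ψ := fun x => e (PP (fun i => (a i : ℝ) / q) x)) (PP_frac_periodic q hq a) 1
  rw [SS]
  simp only [Int.cast_natCast] at h
  rw [← h, ← Finset.Ico_add_one_right_eq_Icc, Finset.sum_Ico_eq_sum_range]
  simp

/-- The complete exponential sum in `30` variables factors, because the forms are diagonal. -/
lemma sum_e_eq_prod_SS (u : Fin 3 → Fin 30 → ℤ) {q : ℕ} (hq : 1 ≤ q) (a : Fin 3 → ℕ) :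
    (1 / (q : ℂ) ^ 30) * ∑ r ∈ Fintype.piFinset fun _ : Fin 30 => Finset.Icc 1 q,
        e ((∑ i, (a i : ℝ) * ((dF ![1, 3, 5] u i fun j => ((r j : ℤ))) : ℝ)) / q) =
      ∏ j, (SS q (fun i => u i j * a i) / q) := by
  rw [prod_div_distrib, prod_const, card_univ, Fintype.card_fin, one_div, inv_mul_eq_div]
  congr 1
  simp only [SS_eq_Icc hq]
  rw [prod_univ_sum]
  refine sum_congr rfl fun r _ => ?_
  rw [← e_sum]
  congr 1
  have hq0 : (q : ℝ) ≠ 0 := by positivity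
  rw [sum_div]
  have h3 := dF_phase u (fun i => (a i : ℝ) / q) (fun j => (r j : ℝ))
  calc _ = ∑ i, (a i : ℝ) / q * dF ![1, 3, 5] u i (fun j => (r j : ℝ)) :=
        sum_congr rfl fun i _ => by
          simp only [Int.cast_natCast]; ring
    _ = _ := h3
    _ = _ := sum_congr rfl fun j _ => by
      congr 1; ext i; push_cast; ring

lemma singSerTerm_eq (u : Fin 3 → Fin 30 → ℤ) {q : ℕ} (hq : 1 ≤ q) :
    singSerTerm ![1, 3, 5] u q = ∑ a ∈ AA q, ∏ j, (SS q (fun i => u i j * a i) / q) := by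
  unfold singSerTerm
  rw [mul_sum]
  exact sum_congr rfl fun a _ => sum_e_eq_prod_SS u hq a

/-! ### Geometry of the major arcs -/

lemma norm_coe_of_abs_le {x : ℝ} (hx : |x| ≤ 1 / 2) : ‖(x : Tor)‖ = |x| := by
  exact (AddCircle.norm_coe_eq_abs_iff (1 : ℝ) one_ne_zero).2 (by simpa using hx)

/-- Unfolding of a short arc of the circle, rescaled by `L`. -/
lemma map_arc (c : Tor) {L ρ : ℝ} (hL : 0 < L) (hρ : ρ / L < 1 / 2) :
    (volume.restrict (Set.Icc (-ρ) ρ)).map (fun γ : ℝ => c + ((γ / L : ℝ) : Tor)) =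
      ENNReal.ofReal L • volume.restrict {t : Tor | ‖t - c‖ ≤ ρ / L} := by
  have hmeas : Measurable fun γ : ℝ => c + ((γ / L : ℝ) : Tor) := by
    have : Continuous fun γ : ℝ => c + ((γ / L : ℝ) : Tor) := by
      refine continuous_const.add ((AddCircle.continuous_mk' 1).comp ?_)
      fun_prop
    exact this.measurable
  ext E hE
  rw [Measure.map_apply hmeas hE, Measure.restrict_apply (hmeas hE), Measure.smul_apply,
    Measure.restrict_apply hE, smul_eq_mul]
  have hB : MeasurableSet {t : Tor | ‖t - c‖ ≤ ρ / L} :=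
    (isClosed_le (by fun_prop) continuous_const).measurableSet
  -- translate the arc to the origin
  have h1 : volume (E ∩ {t : Tor | ‖t - c‖ ≤ ρ / L}) =
      volume ((fun t => c + t) ⁻¹' (E ∩ {t : Tor | ‖t - c‖ ≤ ρ / L})) :=
    (measure_preimage_add volume c _).symm
  have hE' : MeasurableSet ((fun t => c + t) ⁻¹' (E ∩ {t : Tor | ‖t - c‖ ≤ ρ / L})) :=
    (measurable_const_add c) (hE.inter hB)
  have h2 := (UnitAddCircle.measurePreserving_mk (-(1 / 2))).measure_preimage hE'.nullMeasurableSet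
  rw [h1, ← h2, Measure.restrict_apply ((UnitAddCircle.measurePreserving_mk (-(1 / 2))).measurable hE')]
  have h3 := Real.volume_preimage_mul_left (a := L⁻¹) (inv_ne_zero hL.ne')
    ((fun x : ℝ => (x : Tor)) ⁻¹' ((fun t => c + t) ⁻¹' (E ∩ {t : Tor | ‖t - c‖ ≤ ρ / L})) ∩
      Set.Ioc (-(1 / 2)) (-(1 / 2) + 1))
  rw [inv_inv, abs_of_pos hL] at h3
  rw [← h3]
  congr 1
  ext γ
  simp only [Set.mem_inter_iff, Set.mem_preimage, Set.mem_Icc, Set.mem_ofPred_eq, Set.mem_Ioc, add_sub_cancel_left]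
  rw [show γ / L = L⁻¹ * γ by rw [div_eq_inv_mul]]
  have e1 : (-ρ ≤ γ ∧ γ ≤ ρ) ↔ |L⁻¹ * γ| ≤ ρ / L := by
    rw [abs_mul, abs_of_pos (inv_pos.2 hL), ← div_eq_inv_mul, div_le_div_iff_of_pos_right hL, abs_le]
  rw [e1]
  constructor
  · rintro ⟨hE1, h⟩
    have h' : |L⁻¹ * γ| < 1 / 2 := lt_of_le_of_lt h hρ
    rw [abs_lt] at h'
    refine ⟨⟨hE1, (norm_coe_tor_le _).trans h⟩, by linarith, by linarith⟩
  · rintro ⟨⟨hE1, h⟩, h2, h3⟩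
    refine ⟨hE1, ?_⟩
    rwa [norm_coe_of_abs_le (abs_le.2 ⟨by linarith, by linarith⟩)] at h

/-- The half-sides of the rescaled box at level `R`. -/
def hs3 (R : ℝ) : Fin 3 → ℝ := ![R ^ 2, R, R]

/-- The rescaled box at level `R`. -/
def rb (R : ℝ) : Set (Fin 3 → ℝ) := Set.pi Set.univ fun i => Set.Icc (-(hs3 R i)) (hs3 R i)

/-- The arc around the point `c` of the torus at level `R`. -/
def Box (R : ℝ) (M : ℤ) (c : Fin 3 → Tor) : Set (Fin 3 → Tor) := {α | ∀ i, ‖α i - c i‖ ≤ dl R M i}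

lemma measurableSet_Box (R : ℝ) (M : ℤ) (c : Fin 3 → Tor) : MeasurableSet (Box R M c) := by
  rw [Box, Set.ofPred_forall]
  refine MeasurableSet.iInter fun i => (isClosed_le ?_ continuous_const).measurableSet
  fun_prop

lemma isCompact_rb (R : ℝ) : IsCompact (rb R) := isCompact_univ_pi fun _ => isCompact_Icc

lemma measurableSet_rb (R : ℝ) : MeasurableSet (rb R) := (isCompact_rb R).measurableSet

lemma dl_eq (R : ℝ) (M : ℤ) (i : Fin 3) : dl R M i = hs3 R i / (M : ℝ) ^ kk i := by
  fin_cases i <;> simp [dl, hs3, kk]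

lemma continuous_tc (M : ℤ) (c : Fin 3 → Tor) : Continuous fun γ => c + tc M γ := by
  refine continuous_const.add (continuous_pi fun i => (AddCircle.continuous_mk' 1).comp ?_)
  fun_prop

/-- Unfolding of an arc of the torus. -/
lemma map_Box {R : ℝ} {M : ℤ} (hM : 1 ≤ M) (c : Fin 3 → Tor) (hδ : ∀ i, dl R M i < 1 / 2) :
    (volume.restrict (rb R)).map (fun γ => c + tc M γ) =
      ENNReal.ofReal ((M : ℝ) ^ 9) • volume.restrict (Box R M c) := by
  have hM0 : (0 : ℝ) < M := by exact_mod_cast hM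
  have h1 : ∀ i, (volume.restrict (Set.Icc (-(hs3 R i)) (hs3 R i))).map
      (fun γ : ℝ => c i + ((γ / (M : ℝ) ^ kk i : ℝ) : Tor)) =
      ENNReal.ofReal ((M : ℝ) ^ kk i) • volume.restrict {t : Tor | ‖t - c i‖ ≤ hs3 R i / (M : ℝ) ^ kk i} :=
    fun i => map_arc (c i) (by positivity) (by rw [← dl_eq]; exact hδ i)
  rw [rb, volume_pi, Measure.restrict_pi_pi]
  have hmeas : ∀ i, AEMeasurable (fun γ : ℝ => c i + ((γ / (M : ℝ) ^ kk i : ℝ) : Tor))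
      (volume.restrict (Set.Icc (-(hs3 R i)) (hs3 R i))) := by
    intro i
    have : Continuous fun γ : ℝ => c i + ((γ / (M : ℝ) ^ kk i : ℝ) : Tor) := by
      refine continuous_const.add ((AddCircle.continuous_mk' 1).comp ?_)
      fun_prop
    exact this.measurable.aemeasurable
  have h2 := Measure.pi_map_pi (μ := fun i => volume.restrict (Set.Icc (-(hs3 R i)) (hs3 R i))) hmeas
  have e1 : (fun γ : Fin 3 → ℝ => c + tc M γ) = fun (x : Fin 3 → ℝ) i => c i + ((x i / (M : ℝ) ^ kk i : ℝ) : Tor) := by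
    ext γ i; rfl
  rw [e1, h2]
  simp only [h1]
  have hfin : ∀ i, SigmaFinite (ENNReal.ofReal ((M : ℝ) ^ kk i) •
      volume.restrict {t : Tor | ‖t - c i‖ ≤ hs3 R i / (M : ℝ) ^ kk i}) := fun i => by
    rw [← h1 i]; infer_instance
  refine Measure.pi_eq fun s hs => ?_
  have e2 : Box R M c = Set.pi Set.univ fun i => {t : Tor | ‖t - c i‖ ≤ hs3 R i / (M : ℝ) ^ kk i} := by
    ext α
    simp [Box, dl_eq]
  rw [Measure.smul_apply, Measure.restrict_apply (MeasurableSet.univ_pi hs), e2, ← Set.pi_inter_distrib, volume_pi_pi]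
  simp only [Measure.smul_apply, smul_eq_mul, prod_mul_distrib]
  congr 1
  · rw [← ENNReal.ofReal_prod_of_nonneg fun i _ => by positivity]
    congr 1
    rw [Fin.prod_univ_three]; simp only [kk]; simp; ring
  · refine prod_congr rfl fun i _ => ?_
    rw [Measure.restrict_apply (hs i)]

lemma lintegral_Box {R : ℝ} {M : ℤ} (hM : 1 ≤ M) (c : Fin 3 → Tor) (hδ : ∀ i, dl R M i < 1 / 2)
    {h : (Fin 3 → Tor) → ENNReal} (hh : Measurable h) :
    ∫⁻ γ in rb R, h (c + tc M γ) = ENNReal.ofReal ((M : ℝ) ^ 9) * ∫⁻ α in Box R M c, h α := by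
  rw [← smul_eq_mul, ← lintegral_smul_measure, ← map_Box hM c hδ, lintegral_map hh (continuous_tc M c).measurable]

lemma integral_Box {R : ℝ} {M : ℤ} (hM : 1 ≤ M) (c : Fin 3 → Tor) (hδ : ∀ i, dl R M i < 1 / 2)
    {h : (Fin 3 → Tor) → ℂ} (hh : Continuous h) :
    ∫ γ in rb R, h (c + tc M γ) = ((M : ℂ) ^ 9) * ∫ α in Box R M c, h α := by
  have hM0 : (0 : ℝ) < M := by exact_mod_cast hM
  have e1 : ((M : ℂ) ^ 9) * ∫ α in Box R M c, h α = ((M : ℝ) ^ 9) • ∫ α in Box R M c, h α := by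
    rw [Complex.real_smul]; push_cast; rfl
  rw [e1, ← ENNReal.toReal_ofReal (by positivity : (0 : ℝ) ≤ (M : ℝ) ^ 9), ← integral_smul_measure, ← map_Box hM c hδ,
    integral_map (continuous_tc M c).measurable.aemeasurable hh.aestronglyMeasurable]

/-- The index set of the major arcs at level `R`: a denominator and a reduced numerator. -/
noncomputable def arcs (R : ℝ) : Finset (Σ _ : ℕ, (Fin 3 → ℕ)) := (Icc 1 ⌊R⌋₊).sigma AA

/-- The centre of a major arc. -/
noncomputable def cen (x : Σ _ : ℕ, (Fin 3 → ℕ)) : Fin 3 → Tor := pt x.1 (fun i => (x.2 i : ℤ))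

lemma mem_AA {q : ℕ} {a : Fin 3 → ℕ} :
    a ∈ AA q ↔ (∀ i, 1 ≤ a i ∧ a i ≤ q) ∧ Nat.gcd (Finset.univ.gcd a) q = 1 := by
  simp [AA]

lemma mem_arcs {R : ℝ} (hR : 0 ≤ R) {x : Σ _ : ℕ, (Fin 3 → ℕ)} :
    x ∈ arcs R ↔ (1 ≤ x.1 ∧ (x.1 : ℝ) ≤ R) ∧ x.2 ∈ AA x.1 := by
  simp [arcs, Nat.le_floor_iff hR]

/-- Distinct reduced rational points are separated. -/
lemma arcs_sep {q q' : ℕ} (hq : 1 ≤ q) (hq' : 1 ≤ q') {a a' : Fin 3 → ℕ} (ha : a ∈ AA q) (ha' : a' ∈ AA q')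
    (h : ∀ i, ‖pt q (fun i => (a i : ℤ)) i - pt q' (fun i => (a' i : ℤ)) i‖ * (q * q') < 1) :
    q = q' ∧ a = a' := by
  rw [mem_AA] at ha ha'
  have hq0 : (0 : ℝ) < q := by positivity
  have hq0' : (0 : ℝ) < q' := by positivity
  have key : ∀ i, ∃ m : ℤ, (a i : ℤ) * q' - a' i * q = m * (q * q') := by
    intro i
    have h1 := h i
    simp only [pt, ← AddCircle.coe_sub] at h1
    obtain ⟨m, hm⟩ := norm_coe_le_iff.1 (le_refl ‖(((((a i : ℤ) : ℝ) / q - ((a' i : ℤ) : ℝ) / q' : ℝ)) : Tor)‖)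
    refine ⟨m, ?_⟩
    have h2 : |(((a i : ℤ) * q' - a' i * q - m * (q * q') : ℤ) : ℝ)| < 1 := by
      have e1 : (((a i : ℤ) * q' - a' i * q - m * (q * q') : ℤ) : ℝ) =
          (((a i : ℤ) : ℝ) / q - ((a' i : ℤ) : ℝ) / q' - m) * (q * q') := by
        push_cast; field_simp
      rw [e1, abs_mul, abs_of_pos (by positivity : (0 : ℝ) < q * q')]
      exact lt_of_le_of_lt (by gcongr) h1
    rw [← Int.cast_abs] at h2
    have h3 : |(a i : ℤ) * q' - a' i * q - m * (q * q')| < 1 := by exact_mod_cast h2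
    have := Int.abs_lt_one_iff.1 h3
    linarith
  have dv : ∀ {q q' : ℕ} {a a' : Fin 3 → ℕ}, Nat.gcd (Finset.univ.gcd a) q = 1 →
      (∀ i, ∃ m : ℤ, (a i : ℤ) * q' - a' i * q = m * (q * q')) → q ∣ q' := by
    intro q q' a a' hg hk
    have h1 : q ∣ Finset.univ.gcd (fun i => a i * q') := by
      refine Finset.dvd_gcd fun i _ => ?_
      obtain ⟨m, hm⟩ := hk i
      have : (q : ℤ) ∣ (a i : ℤ) * q' := ⟨m * q' + a' i, by linarith⟩
      exact_mod_cast this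
    rw [Finset.gcd_mul_right, normalize_eq] at h1
    exact (Nat.Coprime.symm hg).dvd_of_dvd_mul_left h1
  have e1 : q = q' := by
    refine Nat.dvd_antisymm (dv ha.2 key) (dv (a' := a) ha'.2 fun i => ?_)
    obtain ⟨m, hm⟩ := key i
    exact ⟨-m, by linarith⟩
  refine ⟨e1, ?_⟩
  subst e1
  ext i
  obtain ⟨m, hm⟩ := key i
  have hqz : (0 : ℤ) < q := by exact_mod_cast hq
  have h4 : (a i : ℤ) - a' i = m * q := by
    have : ((a i : ℤ) - a' i) * q = (m * q) * q := by linarith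
    exact mul_right_cancel₀ hqz.ne' this
  obtain ⟨b1, b2⟩ := ha.1 i
  obtain ⟨b3, b4⟩ := ha'.1 i
  have h5 : m < 1 := by
    by_contra hc
    push Not at hc
    have : (q : ℤ) ≤ m * q := by nlinarith
    omega
  have h6 : -1 < m := by
    by_contra hc
    push Not at hc
    have : m * q ≤ -(q : ℤ) := by nlinarith
    omega
  have h7 : m = 0 := by omega
  rw [h7] at h4
  omega

lemma exists_reduced {q : ℕ} (hq : 1 ≤ q) (b : Fin 3 → ℤ) :
    ∃ q' : ℕ, 1 ≤ q' ∧ q' ≤ q ∧ ∃ a ∈ AA q', pt q b = pt q' (fun i => (a i : ℤ)) := by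
  set g := Nat.gcd (Finset.univ.gcd fun i => (b i).natAbs) q with hg
  have hg0 : 0 < g := Nat.gcd_pos_of_pos_right _ hq
  obtain ⟨q', hq'⟩ : g ∣ q := Nat.gcd_dvd_right _ _
  have hgb : ∀ i, (g : ℤ) ∣ b i := by
    intro i
    rw [← Int.dvd_natAbs]
    exact_mod_cast (Nat.gcd_dvd_left _ _).trans (Finset.gcd_dvd (mem_univ i))
  choose c hc using hgb
  have hq0' : 1 ≤ q' := by
    rcases Nat.eq_zero_or_pos q' with h | h
    · rw [h] at hq'; omega
    · exact h
  have hqz : (0 : ℤ) < q' := by exact_mod_cast hq0'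
  have hn : ∀ i, 0 ≤ (c i - 1) % q' := fun i => Int.emod_nonneg _ hqz.ne'
  have hl : ∀ i, (c i - 1) % q' < q' := fun i => Int.emod_lt_of_pos _ hqz
  set a : Fin 3 → ℕ := fun i => ((c i - 1) % q' + 1).toNat with ha
  have haz : ∀ i, (a i : ℤ) = (c i - 1) % q' + 1 := fun i => Int.toNat_of_nonneg (by linarith [hn i])
  have hac : ∀ i, c i = a i + q' * ((c i - 1) / q') := by
    intro i; rw [haz]; linarith [Int.emod_add_mul_ediv (c i - 1) q']
  refine ⟨q', hq0', ?_, a, ?_, ?_⟩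
  · rw [hq']; exact Nat.le_mul_of_pos_left _ hg0
  · rw [mem_AA]
    refine ⟨fun i => ⟨?_, ?_⟩, ?_⟩
    · have := haz i; have := hn i; omega
    · have := haz i; have := hl i; omega
    · set d := Nat.gcd (Finset.univ.gcd a) q' with hd
      have h1 : d ∣ q' := Nat.gcd_dvd_right _ _
      have h2 : ∀ i, (d : ℤ) ∣ c i := by
        intro i
        rw [hac i]
        refine dvd_add ?_ (Dvd.dvd.mul_right (by exact_mod_cast h1) _)
        exact_mod_cast (Nat.gcd_dvd_left _ _).trans (Finset.gcd_dvd (mem_univ i))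
      have h3 : g * d ∣ g := by
        conv_rhs => rw [hg]
        refine Nat.dvd_gcd (Finset.dvd_gcd fun i _ => ?_) (by rw [hq']; exact Nat.mul_dvd_mul_left g h1)
        have : ((g * d : ℕ) : ℤ) ∣ b i := by
          rw [hc i]; push_cast; exact mul_dvd_mul_left _ (h2 i)
        rw [← Int.dvd_natAbs] at this
        exact_mod_cast this
      have h4 : g * d ∣ g * 1 := by simpa using h3
      exact Nat.dvd_one.1 (Nat.dvd_of_mul_dvd_mul_left hg0 h4)
  · ext i
    have hqr : (q' : ℝ) ≠ 0 := by positivity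
    have hgr : (g : ℝ) ≠ 0 := by positivity
    have e1 : (b i : ℝ) / q = ((a i : ℤ) : ℝ) / q' + (((c i - 1) / q' : ℤ) : ℝ) := by
      have h1 : (b i : ℝ) = g * c i := by exact_mod_cast hc i
      have h2 : (c i : ℝ) = a i + q' * (((c i - 1) / q' : ℤ) : ℝ) := by exact_mod_cast hac i
      have h3 : (q : ℝ) = g * q' := by exact_mod_cast hq'
      rw [h1, h3, h2]
      field_simp
      push_cast
      ring
    simp only [pt]
    rw [e1, AddCircle.coe_add, coe_int_tor, add_zero]

lemma MajArc_eq {R : ℝ} (hR : 0 ≤ R) (M : ℤ) : MajArc R M = ⋃ x ∈ arcs R, Box R M (cen x) := by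
  ext α
  simp only [MajArc, Set.mem_ofPred_eq, Set.mem_iUnion, exists_prop, mem_arcs hR, Box, cen]
  constructor
  · rintro ⟨q, hq, hqR, b, hb⟩
    obtain ⟨q', hq', hle, a, ha, he⟩ := exists_reduced hq b
    refine ⟨⟨q', a⟩, ⟨⟨hq', le_trans (by exact_mod_cast hle) hqR⟩, ha⟩, ?_⟩
    rw [← he]; exact hb
  · rintro ⟨⟨q, a⟩, ⟨⟨h1, h2⟩, h3⟩, h4⟩
    exact ⟨q, h1, h2, _, h4⟩

lemma Box_disjoint {S : ℝ} (hS : 1 ≤ S) {M : ℤ} (hδ : ∀ i, 2 * dl S M i * S ^ 2 < 1) :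
    Set.PairwiseDisjoint (↑(arcs S)) (fun x => Box S M (cen x)) := by
  rintro ⟨q, a⟩ hx ⟨q', a'⟩ hx' hne
  rw [Function.onFun, Set.disjoint_left]
  intro α hα hα'
  apply hne
  rw [mem_coe, mem_arcs (by linarith)] at hx hx'
  obtain ⟨⟨h1, h2⟩, h3⟩ := hx
  obtain ⟨⟨h1', h2'⟩, h3'⟩ := hx'
  simp only at h1 h2 h3 h1' h2' h3'
  obtain ⟨e1, e2⟩ := arcs_sep h1 h1' h3 h3' (fun i => by
    have b1 : ‖α i - pt q (fun i => (a i : ℤ)) i‖ ≤ dl S M i := hα i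
    have b2 : ‖α i - pt q' (fun i => (a' i : ℤ)) i‖ ≤ dl S M i := hα' i
    have b3 : ‖pt q (fun i => (a i : ℤ)) i - pt q' (fun i => (a' i : ℤ)) i‖ ≤ 2 * dl S M i := by
      calc _ = ‖(α i - pt q' (fun i => (a' i : ℤ)) i) - (α i - pt q (fun i => (a i : ℤ)) i)‖ := by congr 1; abel
        _ ≤ _ := norm_sub_le _ _
        _ ≤ _ := by linarith
    have b4 : (q : ℝ) * q' ≤ S ^ 2 := by rw [sq]; gcongr
    calc _ ≤ 2 * dl S M i * S ^ 2 := mul_le_mul b3 b4 (by positivity) (le_trans (norm_nonneg _) b3)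
      _ < 1 := hδ i)
  subst e1; subst e2; rfl

lemma dl_small {R S : ℝ} (hR : 3 ≤ R) (hS : 1 ≤ S) (hSR : S ≤ 2 * R) {M : ℤ} (hM : (M : ℝ) = R ^ 8) (i : Fin 3) :
    2 * dl S M i * S ^ 2 < 1 := by
  have hM1 : (1 : ℝ) ≤ M := by rw [hM]; exact one_le_pow₀ (by linarith)
  have hM0 : (0 : ℝ) < M := by linarith
  have h1 : dl S M i ≤ S ^ 2 / M := by
    fin_cases i
    · simp [dl]
    · simp only [dl]; simp
      gcongr
      · nlinarith
      · exact le_self_pow₀ hM1 (by norm_num)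
    · simp only [dl]; simp
      gcongr
      · nlinarith
      · exact le_self_pow₀ hM1 (by norm_num)
  have h2 : S ^ 2 ≤ (2 * R) ^ 2 := by gcongr
  have h3 : S ^ 2 * S ^ 2 ≤ (2 * R) ^ 2 * (2 * R) ^ 2 := by gcongr
  calc 2 * dl S M i * S ^ 2 ≤ 2 * (S ^ 2 / M) * S ^ 2 := by gcongr
    _ = 2 * (S ^ 2 * S ^ 2) / M := by ring
    _ < 1 := by
      rw [div_lt_one hM0, hM]
      have h81 : (3 : ℝ) ^ 4 ≤ R ^ 4 := by gcongr
      nlinarith [pow_pos (by linarith : 0 < R) 4]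

lemma dl_lt_half {S : ℝ} (hS : 1 ≤ S) {M : ℤ} {i : Fin 3} (h : 2 * dl S M i * S ^ 2 < 1) : dl S M i < 1 / 2 := by
  by_contra hc
  push Not at hc
  nlinarith [one_le_pow₀ hS (n := 2)]

/-- Restricting a lower integral over the torus to the arcs at level `S` and unfolding them. -/
lemma sum_arcs_le {S : ℝ} (hS : 1 ≤ S) {M : ℤ} (hM : 1 ≤ M) (hδ : ∀ i, 2 * dl S M i * S ^ 2 < 1)
    {h : (Fin 3 → Tor) → ENNReal} (hh : Measurable h) :
    ∑ x ∈ arcs S, ∫⁻ γ in rb S, h (cen x + tc M γ) ≤ ENNReal.ofReal ((M : ℝ) ^ 9) * ∫⁻ α, h α := by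
  simp only [fun x => lintegral_Box hM (cen x) (fun i => dl_lt_half hS (hδ i)) hh]
  rw [← mul_sum]
  gcongr
  rw [← lintegral_biUnion_finset (Box_disjoint hS hδ) (fun x _ => measurableSet_Box _ _ _)]
  exact setLIntegral_le_lintegral _ _

lemma integral_MajArc {S : ℝ} (hS : 1 ≤ S) {M : ℤ} (hM : 1 ≤ M) (hδ : ∀ i, 2 * dl S M i * S ^ 2 < 1)
    {h : (Fin 3 → Tor) → ℂ} (hh : Continuous h) :
    (M : ℂ) ^ 9 * ∫ α in MajArc S M, h α = ∑ x ∈ arcs S, ∫ γ in rb S, h (cen x + tc M γ) := by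
  simp only [fun x => integral_Box hM (cen x) (fun i => dl_lt_half hS (hδ i)) hh]
  rw [← mul_sum, MajArc_eq (by linarith), integral_biUnion_finset _ (fun x _ => measurableSet_Box _ _ _)
    (Box_disjoint hS hδ) fun x _ => (hh.integrable_of_hasCompactSupport (HasCompactSupport.of_compactSpace _)).integrableOn]

/-! ### Tails of the singular integral and the singular series -/

lemma continuous_vv : Continuous vv := by
  unfold vv
  refine intervalIntegral.continuous_parametric_intervalIntegral_of_continuous' (f := fun β t => e (PP β t)) ?_ _ _
  refine continuous_e.comp ?_
  unfold PP
  fun_prop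

/-- The local weight of the arc `x` for one variable. -/
noncomputable def sv (c : Fin 3 → ℤ) (x : Σ _ : ℕ, (Fin 3 → ℕ)) : ℝ :=
  ‖SS x.1 (fun i => c i * x.2 i) / x.1‖ ^ 30

/-- The archimedean weight for one variable. -/
noncomputable def wv (c : Fin 3 → ℤ) (γ : Fin 3 → ℝ) : ℝ := ‖vv (fun i => c i * γ i)‖ ^ 30

lemma sv_nonneg (c : Fin 3 → ℤ) (x) : 0 ≤ sv c x := by unfold sv; positivity
lemma wv_nonneg (c : Fin 3 → ℤ) (x) : 0 ≤ wv c x := by unfold wv; positivity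

lemma continuous_wv (c : Fin 3 → ℤ) : Continuous (wv c) := by
  unfold wv
  exact ((continuous_vv.comp (by fun_prop)).norm).pow 30

lemma card_arcs_le {R : ℝ} (hR : 1 ≤ R) : ((arcs R).card : ℝ) ≤ R ^ 4 := by
  rw [arcs, card_sigma]
  have h1 : ∀ q ∈ Icc 1 ⌊R⌋₊, (AA q).card ≤ ⌊R⌋₊ ^ 3 := by
    intro q hq
    rw [mem_Icc] at hq
    calc (AA q).card ≤ (Fintype.piFinset fun _ : Fin 3 => Finset.Icc 1 q).card := card_filter_le _ _
      _ = q ^ 3 := by simp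
      _ ≤ _ := by gcongr; exact hq.2
  have h2 : ∑ q ∈ Icc 1 ⌊R⌋₊, (AA q).card ≤ ⌊R⌋₊ ^ 4 := by
    calc _ ≤ ∑ q ∈ Icc 1 ⌊R⌋₊, ⌊R⌋₊ ^ 3 := sum_le_sum h1
      _ = _ := by simp; ring
  calc ((∑ q ∈ Icc 1 ⌊R⌋₊, (AA q).card : ℕ) : ℝ) ≤ ((⌊R⌋₊ ^ 4 : ℕ) : ℝ) := by exact_mod_cast h2
    _ = (⌊R⌋₊ : ℝ) ^ 4 := by push_cast; rfl
    _ ≤ _ := by gcongr; exact Nat.floor_le (by linarith)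

lemma volume_rb (R : ℝ) : volume (rb R) = ENNReal.ofReal (∏ i, 2 * hs3 R i) ∨ R < 0 := by
  by_cases h : R < 0
  · exact Or.inr h
  left
  push Not at h
  have : ∀ i, 0 ≤ hs3 R i := by
    intro i; fin_cases i <;> simp [hs3] <;> positivity
  rw [rb, volume_pi_pi, ENNReal.ofReal_prod_of_nonneg fun i _ => by linarith [this i]]
  refine prod_congr rfl fun i _ => ?_
  rw [Real.volume_Icc]; congr 1; ring

lemma volume_rb' {R : ℝ} (hR : 0 ≤ R) : volume (rb R) = ENNReal.ofReal (8 * R ^ 4) := by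
  rcases volume_rb R with h | h
  · rw [h, Fin.prod_univ_three]; congr 1; simp [hs3]; ring
  · linarith

lemma mem_rb {R : ℝ} {γ : Fin 3 → ℝ} : γ ∈ rb R ↔ |γ 0| ≤ R ^ 2 ∧ |γ 1| ≤ R ∧ |γ 2| ≤ R := by
  simp only [rb, Set.mem_pi, Set.mem_univ, true_imp_iff, Set.mem_Icc, ← abs_le, Fin.forall_fin_succ]
  simp [hs3]

lemma rb_mono {R S : ℝ} (hR : 0 ≤ R) (h : R ≤ S) : rb R ⊆ rb S := by
  intro γ hγ
  rw [mem_rb] at *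
  exact ⟨hγ.1.trans (by gcongr), hγ.2.1.trans h, hγ.2.2.trans h⟩

lemma arcs_mono {R S : ℝ} (hR : 0 ≤ R) (h : R ≤ S) : arcs R ⊆ arcs S := by
  intro x hx
  rw [mem_arcs hR] at hx
  rw [mem_arcs (hR.trans h)]
  exact ⟨⟨hx.1.1, hx.1.2.trans h⟩, hx.2⟩

lemma dl_mono {R S : ℝ} (hR : 0 ≤ R) (h : R ≤ S) {M : ℤ} (hM : 1 ≤ M) (i : Fin 3) : dl R M i ≤ dl S M i := by
  have hM0 : (0 : ℝ) < M := by exact_mod_cast hM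
  rw [dl_eq, dl_eq]
  gcongr
  fin_cases i <;> simp [hs3] <;> gcongr

lemma mem_Box_cen {R : ℝ} {M : ℤ} (hM : 1 ≤ M) (c : Fin 3 → Tor) {γ : Fin 3 → ℝ} (hγ : γ ∈ rb R) :
    c + tc M γ ∈ Box R M c := by
  have hM0 : (0 : ℝ) < M := by exact_mod_cast hM
  intro i
  rw [Pi.add_apply, add_sub_cancel_left, dl_eq]
  refine (norm_coe_tor_le _).trans ?_
  rw [abs_div, abs_of_pos (by positivity : (0 : ℝ) < (M : ℝ) ^ kk i)]
  gcongr
  exact abs_le.2 (hγ i (Set.mem_univ i))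

lemma mem_rb_of_mem_Box {R S : ℝ} {M : ℤ} (hM : 1 ≤ M) (c : Fin 3 → Tor) {γ : Fin 3 → ℝ} (hγ : γ ∈ rb S)
    (hS : ∀ i, dl S M i < 1 / 2) (h : c + tc M γ ∈ Box R M c) : γ ∈ rb R := by
  have hM0 : (0 : ℝ) < M := by exact_mod_cast hM
  intro i _
  have h1 := h i
  have h2 := hS i
  have h3 := abs_le.2 (hγ i (Set.mem_univ i))
  have h0 : (0 : ℝ) < (M : ℝ) ^ kk i := by positivity
  have h4 : |γ i / (M : ℝ) ^ kk i| ≤ dl S M i := by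
    rw [abs_div, abs_of_pos h0, dl_eq]; gcongr
  rw [Pi.add_apply, add_sub_cancel_left, tc, norm_coe_of_abs_le (by linarith), dl_eq, abs_div, abs_of_pos h0,
    div_le_div_iff_of_pos_right h0] at h1
  exact Set.mem_Icc.2 (abs_le.1 h1)

/-- Points of arcs of level `2 * R` which do not belong to the corresponding level-`R` arc are minor at level `R`. -/
lemma notMem_MajArc {R : ℝ} (hR : 3 ≤ R) {M : ℤ} (hM : (M : ℝ) = R ^ 8) {x : Σ _ : ℕ, (Fin 3 → ℕ)}
    (hx : x ∈ arcs (2 * R)) {γ : Fin 3 → ℝ} (hγ : γ ∈ rb (2 * R)) (h : x ∉ arcs R ∨ γ ∉ rb R) :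
    cen x + tc M γ ∉ MajArc R M := by
  have hM1 : 1 ≤ M := by
    have : (1 : ℝ) ≤ M := by rw [hM]; exact one_le_pow₀ (by linarith)
    exact_mod_cast this
  have hS : (1 : ℝ) ≤ 2 * R := by linarith
  have hδ := fun i => dl_small hR hS le_rfl hM i
  intro hmem
  rw [MajArc_eq (by linarith)] at hmem
  simp only [Set.mem_iUnion, exists_prop] at hmem
  obtain ⟨y, hy, hbox⟩ := hmem
  have hy2 : y ∈ arcs (2 * R) := arcs_mono (by linarith) (by linarith) hy
  have hbox2 : cen x + tc M γ ∈ Box (2 * R) M (cen y) := fun i =>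
    (hbox i).trans (dl_mono (by linarith) (by linarith) hM1 i)
  have hxy : x = y := by
    by_contra hne
    exact Set.disjoint_left.1 (Box_disjoint hS hδ (mem_coe.2 hx) (mem_coe.2 hy2) hne) (mem_Box_cen hM1 _ hγ) hbox2
  subst hxy
  rcases h with h | h
  · exact h hy
  · exact h (mem_rb_of_mem_Box hM1 _ hγ (fun i => dl_lt_half hS (hδ i)) hbox)

lemma add_pow_thirty_le {a b : ℝ} (ha : 0 ≤ a) (hb : 0 ≤ b) : (a + b) ^ 30 ≤ 2 ^ 29 * (a ^ 30 + b ^ 30) :=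
  add_pow_le ha hb 30

/-- The minor arc estimate, applied to a sum of length `R^8`, bounds the local weights over a set of
pairs of an arc centre and an offset which are at level `2 * R` but not at level `R`. -/
lemma transfer {c : Fin 3 → ℤ} (hc : ∀ i, c i ≠ 0) {ε : ℝ} (hε : 0 < ε) : ∃ C : ℝ, 0 < C ∧ ∀ R : ℕ, 3 ≤ R →
    ∀ T ⊆ arcs (2 * R), ∀ B ⊆ rb (2 * R), MeasurableSet B →
    (∀ x ∈ T, ∀ γ ∈ B, x ∉ arcs R ∨ γ ∉ rb R) →
    (∑ x ∈ T, ENNReal.ofReal (sv c x)) * ∫⁻ γ in B, ENNReal.ofReal (wv c γ) ≤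
      ENNReal.ofReal (C * (R : ℝ) ^ (-1 + ε)) := by
  obtain ⟨C1, hC1, hmin⟩ := minor_bound hc (ε := ε / 8) (by positivity)
  obtain ⟨C2, hC2, happ⟩ := approx c
  refine ⟨2 ^ 29 * (C1 + (18 * C2) ^ 30 * 2048), by positivity, fun R hR T hT B hB hBm hTB => ?_⟩
  have hR3 : (3 : ℝ) ≤ R := by exact_mod_cast hR
  have hR0 : (0 : ℝ) < R := by linarith
  set M : ℕ := R ^ 8 with hMdef
  have hM : ((M : ℤ) : ℝ) = (R : ℝ) ^ 8 := by rw [hMdef]; push_cast; rfl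
  have hMr : (M : ℝ) = (R : ℝ) ^ 8 := by rw [hMdef]; push_cast; rfl
  have hM1 : 1 ≤ M := Nat.one_le_pow _ _ (by omega)
  have hM1z : (1 : ℤ) ≤ M := by exact_mod_cast hM1
  have hM0 : (0 : ℝ) < M := by exact_mod_cast hM1
  have hS : (1 : ℝ) ≤ 2 * R := by linarith
  have hδ := fun i => dl_small hR3 hS le_rfl hM i
  set f : (Fin 3 → Tor) → ENNReal := fun α => ENNReal.ofReal (‖ff M (sc c α)‖ ^ 30) with hf
  have hfm : Measurable f := by
    have : Continuous fun α => ‖ff M (sc c α)‖ ^ 30 := (((continuous_ff M).comp (continuous_sc c)).norm).pow 30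
    exact this.measurable.ennreal_ofReal
  set E : ℝ := C2 * (18 * (R : ℝ) ^ 3) with hE
  have hE0 : 0 ≤ E := by positivity
  -- pointwise comparison of the local model with the exponential sum
  have hpt : ∀ x ∈ T, ∀ γ ∈ B, ENNReal.ofReal ((M : ℝ) ^ 30) * (ENNReal.ofReal (sv c x) * ENNReal.ofReal (wv c γ)) ≤
      ENNReal.ofReal (2 ^ 29) * (f (cen x + tc M γ) + ENNReal.ofReal (E ^ 30)) := by
    intro x hx γ hγ
    have hx2 := (mem_arcs (by linarith)).1 (hT hx)
    have hγ2 := mem_rb.1 (hB hγ)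
    have h1 := happ M hM1 x.1 hx2.1.1 (fun i => (x.2 i : ℤ)) γ
    have h2 : C2 * x.1 * (1 + |γ 0| + |γ 1| + |γ 2|) ≤ E := by
      rw [hE, mul_assoc]
      refine mul_le_mul_of_nonneg_left ?_ (by linarith)
      calc (x.1 : ℝ) * (1 + |γ 0| + |γ 1| + |γ 2|) ≤ (2 * R) * (1 + (2 * R) ^ 2 + 2 * R + 2 * R) := by
            gcongr
            · exact hx2.1.2
            · exact hγ2.1
            · exact hγ2.2.1
            · exact hγ2.2.2
        _ ≤ _ := by nlinarith [mul_pos hR0 hR0, pow_pos hR0 3]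
    have h3 : (M : ℝ) * ‖SS x.1 (fun i => c i * x.2 i) / x.1‖ * ‖vv (fun i => c i * γ i)‖ ≤
        ‖ff M (sc c (cen x + tc M γ))‖ + E := by
      have e1 : (M : ℝ) * ‖SS x.1 (fun i => c i * x.2 i) / x.1‖ * ‖vv (fun i => c i * γ i)‖ =
          ‖(M : ℂ) * (SS x.1 (fun i => c i * x.2 i) / x.1) * vv (fun i => c i * γ i)‖ := by
        rw [norm_mul, norm_mul, Complex.norm_natCast]
      rw [e1]
      have := norm_le_norm_add_norm_sub' ((M : ℂ) * (SS x.1 (fun i => c i * x.2 i) / x.1) * vv (fun i => c i * γ i))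
        (ff M (sc c (cen x + tc M γ)))
      rw [norm_sub_rev] at this
      have h1' : ‖ff M (sc c (cen x + tc M γ)) - (M : ℂ) * (SS x.1 (fun i => c i * x.2 i) / x.1) * vv (fun i => c i * γ i)‖ ≤
        E := h1.trans h2
      linarith
    rw [← ENNReal.ofReal_mul (sv_nonneg _ _), ← ENNReal.ofReal_mul (by positivity), hf]
    beta_reduce
    rw [← ENNReal.ofReal_add (by positivity) (by positivity), ← ENNReal.ofReal_mul (by positivity)]
    refine ENNReal.ofReal_le_ofReal ?_
    calc (M : ℝ) ^ 30 * (sv c x * wv c γ) =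
        ((M : ℝ) * ‖SS x.1 (fun i => c i * x.2 i) / x.1‖ * ‖vv (fun i => c i * γ i)‖) ^ 30 := by
          rw [sv, wv]; ring
      _ ≤ (‖ff M (sc c (cen x + tc M γ))‖ + E) ^ 30 := by gcongr
      _ ≤ _ := add_pow_thirty_le (norm_nonneg _) hE0
  have hwm : Measurable fun γ => ENNReal.ofReal (wv c γ) := (continuous_wv c).measurable.ennreal_ofReal
  -- the contribution of the exponential sum
  have hmain : ∑ x ∈ T, ∫⁻ γ in B, f (cen x + tc M γ) ≤ ENNReal.ofReal ((M : ℝ) ^ 30 * (C1 * (R : ℝ) ^ (-1 + ε))) := by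
    set h : (Fin 3 → Tor) → ENNReal := (MajArc R M)ᶜ.indicator f with hh
    have hhm : Measurable h := hfm.indicator (measurableSet_MajArc _ _).compl
    calc ∑ x ∈ T, ∫⁻ γ in B, f (cen x + tc M γ) = ∑ x ∈ T, ∫⁻ γ in B, h (cen x + tc M γ) := by
          refine sum_congr rfl fun x hx => setLIntegral_congr_fun hBm fun γ hγ => ?_
          rw [hh]
          exact (Set.indicator_of_mem (notMem_MajArc hR3 hM (hT hx) (hB hγ) (hTB x hx γ hγ)) _).symm
      _ ≤ ∑ x ∈ T, ∫⁻ γ in rb (2 * R), h (cen x + tc M γ) := sum_le_sum fun x _ => lintegral_mono_set hB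
      _ ≤ ∑ x ∈ arcs (2 * R), ∫⁻ γ in rb (2 * R), h (cen x + tc M γ) := sum_le_sum_of_subset hT
      _ ≤ ENNReal.ofReal (((M : ℤ) : ℝ) ^ 9) * ∫⁻ α, h α := sum_arcs_le hS hM1z hδ hhm
      _ ≤ ENNReal.ofReal (((M : ℤ) : ℝ) ^ 9) * ENNReal.ofReal (C1 * ((M : ℤ) : ℝ) ^ (21 + ε / 8) / R) := by
          gcongr
          rw [hh, lintegral_indicator (measurableSet_MajArc _ _).compl]
          exact hmin M R (by linarith) hM
      _ = _ := by
          rw [← ENNReal.ofReal_mul (by positivity)]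
          congr 1
          rw [hM, hMr]
          have e1 : ((R : ℝ) ^ 8) ^ (21 + ε / 8) = (R : ℝ) ^ (168 : ℕ) * (R : ℝ) ^ ε := by
            rw [← Real.rpow_natCast (R : ℝ) 8, ← Real.rpow_mul hR0.le, ← Real.rpow_natCast (R : ℝ) 168, ← Real.rpow_add hR0]
            congr 1; push_cast; ring
          rw [e1, Real.rpow_add hR0, Real.rpow_neg_one]
          field_simp
  have herr : ∑ x ∈ T, ∫⁻ γ in B, ENNReal.ofReal (E ^ 30) ≤
      ENNReal.ofReal ((M : ℝ) ^ 30 * ((18 * C2) ^ 30 * 2048 * (R : ℝ) ^ (-1 + ε))) := by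
    calc ∑ x ∈ T, ∫⁻ γ in B, ENNReal.ofReal (E ^ 30) ≤ ∑ x ∈ arcs (2 * R), ∫⁻ γ in rb (2 * R), ENNReal.ofReal (E ^ 30) :=
          (sum_le_sum fun x _ => lintegral_mono_set hB).trans (sum_le_sum_of_subset hT)
      _ = (arcs (2 * R)).card * (ENNReal.ofReal (E ^ 30) * ENNReal.ofReal (8 * (2 * R) ^ 4)) := by
          simp only [lintegral_const, Measure.restrict_apply_univ, sum_const, nsmul_eq_mul]
          rw [volume_rb' (by linarith)]
      _ = ENNReal.ofReal ((arcs (2 * R)).card * (E ^ 30 * (8 * (2 * R) ^ 4))) := by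
          rw [ENNReal.ofReal_mul (p := ((arcs (2 * R)).card : ℝ)) (by positivity), ENNReal.ofReal_mul (p := E ^ 30) (by positivity),
            ENNReal.ofReal_natCast]
      _ ≤ _ := by
          refine ENNReal.ofReal_le_ofReal ?_
          have h1 := card_arcs_le hS
          calc ((arcs (2 * R)).card : ℝ) * (E ^ 30 * (8 * (2 * R) ^ 4)) ≤ (2 * R) ^ 4 * (E ^ 30 * (8 * (2 * R) ^ 4)) := by gcongr
            _ = (18 * C2) ^ 30 * 2048 * (R : ℝ) ^ 98 := by rw [hE]; ring
            _ ≤ (18 * C2) ^ 30 * 2048 * ((R : ℝ) ^ 240 * (R : ℝ) ^ (-1 + ε)) := by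
              gcongr
              rw [Real.rpow_add hR0, Real.rpow_neg_one]
              have h2 : (1 : ℝ) ≤ (R : ℝ) ^ ε := Real.one_le_rpow (by linarith) hε.le
              calc (R : ℝ) ^ 98 ≤ (R : ℝ) ^ 239 := pow_le_pow_right₀ (by linarith) (by norm_num)
                _ = (R : ℝ) ^ 240 * ((R : ℝ)⁻¹ * 1) := by field_simp
                _ ≤ _ := by gcongr
            _ = _ := by rw [hMr]; ring
  have hfin : ENNReal.ofReal ((M : ℝ) ^ 30) * ((∑ x ∈ T, ENNReal.ofReal (sv c x)) * ∫⁻ γ in B, ENNReal.ofReal (wv c γ)) ≤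
      ENNReal.ofReal ((M : ℝ) ^ 30) * ENNReal.ofReal (2 ^ 29 * (C1 + (18 * C2) ^ 30 * 2048) * (R : ℝ) ^ (-1 + ε)) := by
    have hmz : ∀ x, Measurable fun γ => f (cen x + tc M γ) := fun x => hfm.comp (continuous_tc M (cen x)).measurable
    calc _ = ∑ x ∈ T, ∫⁻ γ in B, ENNReal.ofReal ((M : ℝ) ^ 30) * (ENNReal.ofReal (sv c x) * ENNReal.ofReal (wv c γ)) := by
          rw [sum_mul, mul_sum]
          refine sum_congr rfl fun x _ => ?_
          rw [lintegral_const_mul _ (hwm.const_mul _), lintegral_const_mul _ hwm]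
      _ ≤ ∑ x ∈ T, ∫⁻ γ in B, ENNReal.ofReal (2 ^ 29) * (f (cen x + tc M γ) + ENNReal.ofReal (E ^ 30)) :=
          sum_le_sum fun x hx => setLIntegral_mono' hBm fun γ hγ => hpt x hx γ hγ
      _ = ENNReal.ofReal (2 ^ 29) * ((∑ x ∈ T, ∫⁻ γ in B, f (cen x + tc M γ)) + ∑ x ∈ T, ∫⁻ γ in B, ENNReal.ofReal (E ^ 30)) := by
          rw [← sum_add_distrib, mul_sum]
          refine sum_congr rfl fun x _ => ?_
          rw [lintegral_const_mul _ ((hmz x).add_const _), lintegral_add_left (hmz x)]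
      _ ≤ ENNReal.ofReal (2 ^ 29) * (ENNReal.ofReal ((M : ℝ) ^ 30 * (C1 * (R : ℝ) ^ (-1 + ε))) +
            ENNReal.ofReal ((M : ℝ) ^ 30 * ((18 * C2) ^ 30 * 2048 * (R : ℝ) ^ (-1 + ε)))) := by gcongr
      _ = _ := by
          rw [← ENNReal.ofReal_add (by positivity) (by positivity), ← ENNReal.ofReal_mul (by positivity),
            ← ENNReal.ofReal_mul (by positivity)]
          congr 1; ring
  exact (ENNReal.mul_le_mul_iff_right (by simp; positivity) ENNReal.ofReal_ne_top).1 hfin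

/-- Dyadic summation of shell estimates. -/
lemma dyadic_tail {α : Type*} [MeasurableSpace α] (μ : Measure α) (f : α → ENNReal) (A : ℝ → Set α)
    (hmono : ∀ R S : ℝ, 0 ≤ R → R ≤ S → A R ⊆ A S) (hun : ∀ x, ∃ R : ℝ, 0 ≤ R ∧ x ∈ A R)
    {C ε : ℝ} (hC : 0 < C) (hε1 : ε < 1)
    (hsh : ∀ R : ℕ, 3 ≤ R → ∫⁻ x in A (2 * R) \ A R, f x ∂μ ≤ ENNReal.ofReal (C * (R : ℝ) ^ (-1 + ε))) :
    ∃ C' : ℝ, 0 < C' ∧ ∀ R : ℝ, 4 ≤ R → ∫⁻ x in (A R)ᶜ, f x ∂μ ≤ ENNReal.ofReal (C' * R ^ (-1 + ε)) := by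
  set θ : ℝ := (2 : ℝ) ^ (-1 + ε) with hθ
  have hθ0 : 0 < θ := by positivity
  have hθ1 : θ < 1 := Real.rpow_lt_one_of_one_lt_of_neg (by norm_num) (by linarith)
  refine ⟨C * (1 - θ)⁻¹ * θ⁻¹, by have := sub_pos.2 hθ1; positivity, fun R hR => ?_⟩
  have hR0 : 0 < R := by linarith
  obtain ⟨n, hn1, hn2⟩ := exists_nat_pow_near (by linarith : (1 : ℝ) ≤ R) (by norm_num : (1 : ℝ) < 2)
  have hn : 2 ≤ n := by
    by_contra hc
    push Not at hc
    have : (2 : ℝ) ^ (n + 1) ≤ 2 ^ 2 := pow_le_pow_right₀ (by norm_num) (by omega)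
    linarith
  have hsub : (A R)ᶜ ⊆ ⋃ m : ℕ, A (2 * ((2 ^ (n + m) : ℕ) : ℝ)) \ A ((2 ^ (n + m) : ℕ) : ℝ) := by
    intro x hx
    obtain ⟨S, h0, hS⟩ := hun x
    have hex : ∃ m : ℕ, x ∈ A ((2 ^ (n + m) : ℕ) : ℝ) := by
      obtain ⟨k, hk⟩ := pow_unbounded_of_one_lt (max S 1) (by norm_num : (1 : ℝ) < 2)
      refine ⟨k, hmono S _ h0 ?_ hS⟩
      push_cast
      calc S ≤ 2 ^ k := (le_max_left _ _).trans hk.le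
        _ ≤ _ := pow_le_pow_right₀ (by norm_num) (by omega)
    classical
    have hm := Nat.find_spec hex
    rcases h : Nat.find hex with _ | m
    · rw [h] at hm
      exact absurd (hmono _ _ (by positivity) (by push_cast; simpa using hn1) hm) hx
    · refine Set.mem_iUnion.2 ⟨m, ?_, Nat.find_min hex (by omega)⟩
      rw [h] at hm
      convert hm using 2
      push_cast
      ring
  have hterm : ∀ m : ℕ, ((2 ^ (n + m) : ℕ) : ℝ) ^ (-1 + ε) = θ ^ n * θ ^ m := by
    intro m
    rw [← pow_add, hθ, ← Real.rpow_natCast _ (n + m), ← Real.rpow_mul (by norm_num), mul_comm, Real.rpow_mul (by norm_num),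
      Real.rpow_natCast]
    push_cast; rfl
  calc ∫⁻ x in (A R)ᶜ, f x ∂μ ≤ ∑' m : ℕ, ∫⁻ x in A (2 * ((2 ^ (n + m) : ℕ) : ℝ)) \ A ((2 ^ (n + m) : ℕ) : ℝ), f x ∂μ :=
        (lintegral_mono_set hsub).trans (lintegral_iUnion_le _ _)
    _ ≤ ∑' m : ℕ, ENNReal.ofReal (C * θ ^ n * θ ^ m) := by
        refine ENNReal.tsum_le_tsum fun m => ?_
        have h3 : 3 ≤ 2 ^ (n + m) := le_trans (by norm_num : 3 ≤ 2 ^ 2) (Nat.pow_le_pow_right (by norm_num) (by omega))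
        refine (hsh _ h3).trans_eq ?_
        rw [hterm, mul_assoc]
    _ = ENNReal.ofReal (C * θ ^ n * (1 - θ)⁻¹) := by
        rw [← ENNReal.ofReal_tsum_of_nonneg (fun m => by positivity)
          ((summable_geometric_of_lt_one hθ0.le hθ1).mul_left _), tsum_mul_left, tsum_geometric_of_lt_one hθ0.le hθ1]
    _ ≤ _ := by
        refine ENNReal.ofReal_le_ofReal ?_
        have h1 : θ ^ n * θ ≤ R ^ (-1 + ε) := by
          have : θ ^ n * θ = ((2 : ℝ) ^ (n + 1)) ^ (-1 + ε) := by
            rw [hθ, ← pow_succ, ← Real.rpow_natCast, ← Real.rpow_mul (by norm_num), mul_comm, Real.rpow_mul (by norm_num),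
              Real.rpow_natCast]
          rw [this]
          exact Real.rpow_le_rpow_of_nonpos hR0 hn2.le (by linarith)
        have h2 : 0 < (1 - θ)⁻¹ := inv_pos.2 (sub_pos.2 hθ1)
        calc C * θ ^ n * (1 - θ)⁻¹ = C * (1 - θ)⁻¹ * θ⁻¹ * (θ ^ n * θ) := by field_simp
          _ ≤ _ := by gcongr

lemma SS_one (a : Fin 3 → ℤ) : SS 1 a = 1 := by
  simp [SS, PP, e_zero]

lemma sv_le_one (c : Fin 3 → ℤ) (x : Σ _ : ℕ, (Fin 3 → ℕ)) : sv c x ≤ 1 := by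
  unfold sv
  refine pow_le_one₀ (norm_nonneg _) ?_
  rw [norm_div, Complex.norm_natCast]
  refine div_le_one_of_le₀ ?_ (by positivity)
  refine (norm_sum_le _ _).trans ?_
  simp [norm_e]

lemma norm_vv_le (β : Fin 3 → ℝ) : ‖vv β‖ ≤ 2 := by
  have := intervalIntegral.norm_integral_le_of_norm_le_const (a := (-1 : ℝ)) (b := 1) (C := 1) (f := fun t => e (PP β t))
    (fun x _ => (norm_e _).le)
  simp only [vv]
  refine this.trans ?_
  norm_num

lemma wv_le (c : Fin 3 → ℤ) (γ) : wv c γ ≤ 2 ^ 30 := by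
  unfold wv
  exact pow_le_pow_left₀ (norm_nonneg _) (norm_vv_le _) 30

lemma wv_zero (c : Fin 3 → ℤ) : wv c 0 = 2 ^ 30 := by
  simp [wv, vv, PP, e_zero]
  norm_num

/-- The tail of the archimedean weight: `transfer` at the single centre `0`, summed dyadically. -/
lemma wv_tail {c : Fin 3 → ℤ} (hc : ∀ i, c i ≠ 0) {ε : ℝ} (hε : 0 < ε) (hε1 : ε < 1) :
    ∃ C : ℝ, 0 < C ∧ ∀ R : ℝ, 4 ≤ R →
      ∫⁻ γ in (rb R)ᶜ, ENNReal.ofReal (wv c γ) ≤ ENNReal.ofReal (C * R ^ (-1 + ε)) := by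
  obtain ⟨C, hC, h⟩ := transfer hc hε
  refine dyadic_tail volume _ rb (fun R S h0 h1 => rb_mono h0 h1) (fun γ => ?_) hC hε1 fun R hR => ?_
  · refine ⟨1 + |γ 0| + |γ 1| + |γ 2|, by positivity, ?_⟩
    rw [mem_rb]
    refine ⟨?_, ?_, ?_⟩
    · nlinarith [abs_nonneg (γ 0), abs_nonneg (γ 1), abs_nonneg (γ 2), sq_nonneg (1 + |γ 0| + |γ 1| + |γ 2|)]
    · linarith [abs_nonneg (γ 0), abs_nonneg (γ 1), abs_nonneg (γ 2)]
    · linarith [abs_nonneg (γ 0), abs_nonneg (γ 1), abs_nonneg (γ 2)]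
  · have hR3 : (3 : ℝ) ≤ R := by exact_mod_cast hR
    have := h R hR {⟨1, fun _ => 1⟩} (by
      rw [singleton_subset_iff, mem_arcs (by positivity)]
      refine ⟨⟨le_rfl, by push_cast; linarith⟩, mem_AA.2 ⟨fun _ => ⟨le_rfl, le_rfl⟩, by simp⟩⟩)
      (rb (2 * R) \ rb R) Set.sdiff_subset ((measurableSet_rb _).diff (measurableSet_rb _)) (fun x _ γ hγ => Or.inr hγ.2)
    rw [sum_singleton] at this
    have e1 : sv c ⟨1, fun _ => 1⟩ = 1 := by simp [sv, SS_one]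
    rwa [e1, ENNReal.ofReal_one, one_mul] at this

/-- The contribution of the denominator `q` to the sum of the local weights. -/
noncomputable def tv (c : Fin 3 → ℤ) (q : ℕ) : ℝ := ∑ a ∈ AA q, sv c ⟨q, a⟩

lemma tv_nonneg (c : Fin 3 → ℤ) (q : ℕ) : 0 ≤ tv c q := sum_nonneg fun _ _ => sv_nonneg _ _

lemma wv_mass_pos (c : Fin 3 → ℤ) : 0 < ∫⁻ γ in rb 1, ENNReal.ofReal (wv c γ) := by
  rw [setLIntegral_pos_iff (continuous_wv c).measurable.ennreal_ofReal]
  have h1 : IsOpen (wv c ⁻¹' Set.Ioi 0) := isOpen_Ioi.preimage (continuous_wv c)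
  have h2 : IsOpen (Set.pi Set.univ fun i : Fin 3 => Set.Ioo (-1 : ℝ) 1) := isOpen_set_pi Set.finite_univ fun _ _ => isOpen_Ioo
  refine lt_of_lt_of_le ((h1.inter h2).measure_pos volume ⟨0, ?_, ?_⟩) (measure_mono ?_)
  · simp [wv_zero]
  · simp
  · rintro γ ⟨hγ1, hγ2⟩
    refine ⟨by simpa using hγ1, mem_rb.2 ?_⟩
    have : ∀ i, |γ i| ≤ 1 := fun i => abs_le.2 ⟨(hγ2 i trivial).1.le, (hγ2 i trivial).2.le⟩
    simpa using ⟨this 0, this 1, this 2⟩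

lemma wv_mass_lt (c : Fin 3 → ℤ) (R : ℝ) : ∫⁻ γ in rb R, ENNReal.ofReal (wv c γ) < ⊤ := by
  calc _ ≤ ∫⁻ γ in rb R, ENNReal.ofReal (2 ^ 30) := lintegral_mono fun γ => ENNReal.ofReal_le_ofReal (wv_le c γ)
    _ = ENNReal.ofReal (2 ^ 30) * volume (rb R) := by simp
    _ < ⊤ := ENNReal.mul_lt_top ENNReal.ofReal_lt_top (isCompact_rb R).measure_lt_top

/-- The tail of the local weights: `transfer` with offsets in a fixed box, summed dyadically. -/
lemma tv_tail {c : Fin 3 → ℤ} (hc : ∀ i, c i ≠ 0) {ε : ℝ} (hε : 0 < ε) (hε1 : ε < 1) :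
    ∃ C : ℝ, 0 < C ∧ ∀ R : ℝ, 4 ≤ R →
      ∫⁻ q in {q : ℕ | (q : ℝ) ≤ R}ᶜ, ENNReal.ofReal (tv c q) ∂Measure.count ≤ ENNReal.ofReal (C * R ^ (-1 + ε)) := by
  obtain ⟨C, hC, h⟩ := transfer hc hε
  set W := ∫⁻ γ in rb 1, ENNReal.ofReal (wv c γ) with hW
  have hW0 : 0 < W := wv_mass_pos c
  have hWt : W < ⊤ := wv_mass_lt c 1
  have hWr : 0 < W.toReal := ENNReal.toReal_pos hW0.ne' hWt.ne
  refine dyadic_tail Measure.count _ (fun R => {q : ℕ | (q : ℝ) ≤ R}) (fun R S h0 h1 q hq => le_trans hq h1)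
    (fun q => ⟨q, by positivity, le_refl (q : ℝ)⟩) (C := C / W.toReal) (by positivity) hε1 fun R hR => ?_
  have hR3 : (3 : ℝ) ≤ R := by exact_mod_cast hR
  have h1 := h R hR (arcs (2 * R) \ arcs R) Finset.sdiff_subset (rb 1) (rb_mono (by norm_num) (by linarith)) (measurableSet_rb 1)
    (fun x hx γ _ => Or.inl (Finset.mem_sdiff.1 hx).2)
  have e0 : {q : ℕ | (q : ℝ) ≤ 2 * R} \ {q : ℕ | (q : ℝ) ≤ R} = ↑(Finset.Ioc R (2 * R)) := by
    ext q
    simp only [Set.mem_sdiff, Set.mem_ofPred_eq, not_le, coe_Ioc, Set.mem_Ioc]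
    rw [and_comm]
    norm_cast
  have e1 : ∫⁻ q in {q : ℕ | (q : ℝ) ≤ 2 * R} \ {q : ℕ | (q : ℝ) ≤ R}, ENNReal.ofReal (tv c q) ∂Measure.count =
      ∑ q ∈ Finset.Ioc R (2 * R), ENNReal.ofReal (tv c q) := by
    rw [e0, lintegral_finset]
    simp
  have e2 : ∑ q ∈ Finset.Ioc R (2 * R), ENNReal.ofReal (tv c q) = ∑ x ∈ arcs (2 * R) \ arcs R, ENNReal.ofReal (sv c x) := by
    have : arcs (2 * R) \ arcs R = (Finset.Ioc R (2 * R)).sigma AA := by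
      ext x
      simp only [Finset.mem_sdiff, mem_arcs (by positivity : (0 : ℝ) ≤ 2 * R), mem_arcs (by positivity : (0 : ℝ) ≤ R),
        mem_sigma, mem_Ioc]
      have a1 : ((x.1 : ℝ) ≤ 2 * R) ↔ x.1 ≤ 2 * R := by norm_cast
      have a2 : ((x.1 : ℝ) ≤ R) ↔ x.1 ≤ R := by norm_cast
      rw [a1, a2]
      constructor
      · rintro ⟨⟨⟨b1, b2⟩, b3⟩, b4⟩
        refine ⟨⟨?_, b2⟩, b3⟩
        by_contra hcon
        exact b4 ⟨⟨b1, by omega⟩, b3⟩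
      · rintro ⟨⟨b1, b2⟩, b3⟩
        exact ⟨⟨⟨by omega, b2⟩, b3⟩, fun b => by omega⟩
    rw [this, sum_sigma]
    refine sum_congr rfl fun q _ => ?_
    rw [tv, ENNReal.ofReal_sum_of_nonneg fun _ _ => sv_nonneg _ _]
  rw [e1, e2]
  refine (ENNReal.mul_le_mul_iff_left hW0.ne' hWt.ne).1 (h1.trans_eq ?_)
  calc ENNReal.ofReal (C * (R : ℝ) ^ (-1 + ε)) = ENNReal.ofReal (C / W.toReal * (R : ℝ) ^ (-1 + ε) * W.toReal) := by
        congr 1; field_simp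
    _ = _ := by rw [ENNReal.ofReal_mul (by positivity), ENNReal.ofReal_toReal hWt.ne]

lemma prod_le_sum_pow {z : Fin 30 → ℝ} (hz : ∀ j, 0 ≤ z j) : ∏ j, z j ≤ ∑ j, z j ^ 30 := by
  obtain ⟨j0, -, h⟩ := Finset.exists_max_image (Finset.univ : Finset (Fin 30)) z ⟨0, mem_univ _⟩
  calc ∏ j, z j ≤ ∏ _j : Fin 30, z j0 := prod_le_prod (fun j _ => hz j) fun j hj => h j hj
    _ = z j0 ^ 30 := by simp
    _ ≤ _ := single_le_sum (f := fun j => z j ^ 30) (fun j _ => pow_nonneg (hz j) 30) (mem_univ j0)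

lemma norm_singIntInner_le (u : Fin 3 → Fin 30 → ℤ) (γ : Fin 3 → ℝ) :
    ‖singIntInner ![1, 3, 5] u γ‖ ≤ ∑ j, wv (fun i => u i j) γ := by
  rw [singIntInner_eq, norm_prod]
  exact prod_le_sum_pow fun j => norm_nonneg _

lemma norm_singSerTerm_le (u : Fin 3 → Fin 30 → ℤ) {q : ℕ} (hq : 1 ≤ q) :
    ‖singSerTerm ![1, 3, 5] u q‖ ≤ ∑ j, tv (fun i => u i j) q := by
  rw [singSerTerm_eq u hq]
  simp only [tv]
  rw [sum_comm]
  refine (norm_sum_le _ _).trans (sum_le_sum fun a _ => ?_)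
  rw [norm_prod]
  exact prod_le_sum_pow fun j => norm_nonneg _

lemma wv_total {c : Fin 3 → ℤ} (hc : ∀ i, c i ≠ 0) : ∫⁻ γ, ENNReal.ofReal (wv c γ) < ⊤ := by
  obtain ⟨C, -, h⟩ := wv_tail hc (ε := 1 / 2) (by norm_num) (by norm_num)
  rw [← lintegral_add_compl _ (measurableSet_rb 4)]
  exact ENNReal.add_lt_top.2 ⟨wv_mass_lt c 4, (h 4 le_rfl).trans_lt ENNReal.ofReal_lt_top⟩

lemma integrable_wv {c : Fin 3 → ℤ} (hc : ∀ i, c i ≠ 0) : Integrable (wv c) := by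
  refine ⟨(continuous_wv c).aestronglyMeasurable, ?_⟩
  rw [hasFiniteIntegral_iff_ofReal (Filter.Eventually.of_forall fun γ => wv_nonneg c γ)]
  exact wv_total hc

lemma summable_tv {c : Fin 3 → ℤ} (hc : ∀ i, c i ≠ 0) : Summable (tv c) := by
  obtain ⟨C, -, h⟩ := tv_tail hc (ε := 1 / 2) (by norm_num) (by norm_num)
  have h1 : ∑' q, ENNReal.ofReal (tv c q) < ⊤ := by
    rw [← lintegral_count, ← lintegral_add_compl _ (Set.to_countable {q : ℕ | (q : ℝ) ≤ 4}).measurableSet]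
    refine ENNReal.add_lt_top.2 ⟨?_, (h 4 le_rfl).trans_lt ENNReal.ofReal_lt_top⟩
    have e0 : {q : ℕ | (q : ℝ) ≤ 4} = ↑(Finset.range 5) := by
      ext q
      simp only [Set.mem_ofPred_eq, coe_range, Set.mem_Iio]
      constructor
      · intro h; have : q ≤ 4 := by exact_mod_cast h
        omega
      · intro h; have : q ≤ 4 := by omega
        exact_mod_cast this
    rw [e0, lintegral_finset]
    refine ENNReal.sum_lt_top.2 fun q _ => ?_
    simp
  have h2 := ENNReal.summable_toReal h1.ne
  refine h2.congr fun q => ENNReal.toReal_ofReal (tv_nonneg c q)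

lemma continuous_singIntInner (u : Fin 3 → Fin 30 → ℤ) : Continuous (singIntInner ![1, 3, 5] u) := by
  have : singIntInner ![1, 3, 5] u = fun γ => ∏ j, vv (fun i => u i j * γ i) := by
    ext γ; exact singIntInner_eq u γ
  rw [this]
  exact continuous_finsetProd _ fun j _ => continuous_vv.comp (by fun_prop)

theorem integrable_singIntInner {u : Fin 3 → Fin 30 → ℤ} (hu : ∀ i j, u i j ≠ 0) :
    Integrable (singIntInner ![1, 3, 5] u) := by
  refine Integrable.mono' (integrable_finsetSum Finset.univ fun j _ => integrable_wv (c := fun i => u i j) fun i => hu i j)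
    (continuous_singIntInner u).aestronglyMeasurable (Filter.Eventually.of_forall fun γ => ?_)
  exact norm_singIntInner_le u γ

theorem summable_singSerTerm {u : Fin 3 → Fin 30 → ℤ} (hu : ∀ i j, u i j ≠ 0) :
    Summable (fun q : ℕ => ‖singSerTerm ![1, 3, 5] u (q + 1)‖) := by
  have h1 : Summable fun q => ∑ j, tv (fun i => u i j) q :=
    summable_sum fun j _ => summable_tv (c := fun i => u i j) fun i => hu i j
  have h2 : Summable fun q : ℕ => ∑ j, tv (fun i => u i j) (q + 1) :=
    (summable_nat_add_iff (f := fun q => ∑ j, tv (fun i => u i j) q) 1).2 h1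
  have h3 : ∀ q : ℕ, ‖singSerTerm ![1, 3, 5] u (q + 1)‖ ≤ ∑ j, tv (fun i => u i j) (q + 1) :=
    fun q => norm_singSerTerm_le u (by omega)
  have h4 : ∀ q : ℕ, 0 ≤ ‖singSerTerm ![1, 3, 5] u (q + 1)‖ := fun q => norm_nonneg _
  exact Summable.of_nonneg_of_le h4 h3 h2

theorem singInt_tail {u : Fin 3 → Fin 30 → ℤ} (hu : ∀ i j, u i j ≠ 0) {ε : ℝ} (hε : 0 < ε) (hε1 : ε < 1) :
    ∃ C : ℝ, 0 < C ∧ ∀ R : ℝ, 4 ≤ R →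
      ‖singInt ![1, 3, 5] u - ∫ γ in rb R, singIntInner ![1, 3, 5] u γ‖ ≤ C * R ^ (-1 + ε) := by
  choose C hC h using fun j => wv_tail (c := fun i => u i j) (fun i => hu i j) hε hε1
  refine ⟨∑ j, C j, sum_pos (fun j _ => hC j) ⟨0, mem_univ _⟩, fun R hR => ?_⟩
  have hR0 : 0 < R := by linarith
  have e1 : singInt ![1, 3, 5] u - ∫ γ in rb R, singIntInner ![1, 3, 5] u γ =
      ∫ γ in (rb R)ᶜ, singIntInner ![1, 3, 5] u γ := by
    rw [singInt, ← integral_add_compl (measurableSet_rb R) (integrable_singIntInner hu), add_sub_cancel_left]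
  rw [e1, sum_mul]
  have h1 : ∀ j, ∫ γ in (rb R)ᶜ, wv (fun i => u i j) γ ≤ C j * R ^ (-1 + ε) := by
    intro j
    rw [integral_eq_lintegral_of_nonneg_ae (Filter.Eventually.of_forall fun γ => wv_nonneg _ γ)
      (continuous_wv _).aestronglyMeasurable]
    exact ENNReal.toReal_le_of_le_ofReal (by have := hC j; positivity) (h j R hR)
  calc _ ≤ ∫ γ in (rb R)ᶜ, ∑ j, wv (fun i => u i j) γ :=
        norm_integral_le_of_norm_le
          (integrable_finsetSum Finset.univ fun j _ => (integrable_wv (c := fun i => u i j) fun i => hu i j).integrableOn)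
          (Filter.Eventually.of_forall fun γ => norm_singIntInner_le u γ)
    _ = ∑ j, ∫ γ in (rb R)ᶜ, wv (fun i => u i j) γ :=
        integral_finsetSum _ fun j _ => (integrable_wv (c := fun i => u i j) fun i => hu i j).integrableOn
    _ ≤ _ := sum_le_sum fun j _ => h1 j

theorem singSer_tail {u : Fin 3 → Fin 30 → ℤ} (hu : ∀ i j, u i j ≠ 0) {ε : ℝ} (hε : 0 < ε) (hε1 : ε < 1) :
    ∃ C : ℝ, 0 < C ∧ ∀ R : ℝ, 4 ≤ R →
      ‖singSer ![1, 3, 5] u - ∑ q ∈ Icc 1 ⌊R⌋₊, singSerTerm ![1, 3, 5] u q‖ ≤ C * R ^ (-1 + ε) := by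
  choose C hC h using fun j => tv_tail (c := fun i => u i j) (fun i => hu i j) hε hε1
  refine ⟨∑ j, C j, sum_pos (fun j _ => hC j) ⟨0, mem_univ _⟩, fun R hR => ?_⟩
  have hR0 : 0 < R := by linarith
  set K := ⌊R⌋₊ with hK
  have hs : Summable fun q : ℕ => singSerTerm ![1, 3, 5] u (q + 1) := (summable_singSerTerm hu).of_norm
  have e0 : ∑ q ∈ Icc 1 K, singSerTerm ![1, 3, 5] u q = ∑ q ∈ range K, singSerTerm ![1, 3, 5] u (q + 1) := by
    rw [← Finset.Ico_add_one_right_eq_Icc, Finset.sum_Ico_eq_sum_range]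
    simp [add_comm]
  have e1 : singSer ![1, 3, 5] u - ∑ q ∈ Icc 1 K, singSerTerm ![1, 3, 5] u q =
      ∑' q, singSerTerm ![1, 3, 5] u (q + K + 1) := by
    rw [singSer, e0, ← hs.sum_add_tsum_nat_add K, add_sub_cancel_left]
  have htv : ∀ j, Summable fun q => tv (fun i => u i j) (q + K + 1) := fun j =>
    (summable_nat_add_iff (K + 1)).2 (summable_tv (c := fun i => u i j) fun i => hu i j)
  have h1 : ∀ j, ∑' q, tv (fun i => u i j) (q + K + 1) ≤ C j * R ^ (-1 + ε) := by
    intro j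
    have h2 : ENNReal.ofReal (∑' q, tv (fun i => u i j) (q + K + 1)) ≤ ENNReal.ofReal (C j * R ^ (-1 + ε)) := by
      refine le_trans ?_ (h j R hR)
      rw [ENNReal.ofReal_tsum_of_nonneg (fun q => tv_nonneg _ _) (htv j),
        ← lintegral_indicator (Set.to_countable _).measurableSet, lintegral_count]
      have hinj : Function.Injective fun q : ℕ => q + K + 1 := fun a b hab => by
        simp only at hab; omega
      refine le_trans (le_of_eq ?_) (ENNReal.tsum_comp_le_tsum_of_injective hinj _)
      refine tsum_congr fun q => ?_
      rw [Set.indicator_of_mem]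
      simp only [Set.mem_compl_iff, Set.mem_ofPred_eq, not_le]
      have := Nat.lt_floor_add_one R
      rw [← hK] at this
      push_cast
      have hq : (0 : ℝ) ≤ q := by positivity
      linarith
    exact (ENNReal.ofReal_le_ofReal_iff (by have := hC j; positivity)).1 h2
  rw [e1, sum_mul]
  calc _ ≤ ∑' q, ∑ j, tv (fun i => u i j) (q + K + 1) :=
        tsum_of_norm_bounded (summable_sum fun j _ => htv j).hasSum fun q => norm_singSerTerm_le u (by omega)
    _ = ∑ j, ∑' q, tv (fun i => u i j) (q + K + 1) := Summable.tsum_finsetSum fun j _ => htv j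
    _ ≤ _ := sum_le_sum fun j _ => h1 j

lemma sum_sv_le {c : Fin 3 → ℤ} (hc : ∀ i, c i ≠ 0) (R : ℝ) : ∑ x ∈ arcs R, sv c x ≤ ∑' q, tv c q := by
  rw [arcs, sum_sigma]
  exact (summable_tv hc).sum_le_tsum _ fun q _ => tv_nonneg c q

/-! ### Major arcs and the asymptotic formula -/

lemma norm_prod_sub_prod_le {ι : Type*} (s : Finset ι) {f m : ι → ℂ} {E B : ℝ} (hE : 0 ≤ E)
    (hf : ∀ j, ‖f j‖ ≤ B) (hm : ∀ j, ‖m j‖ ≤ B) (h : ∀ j, ‖f j - m j‖ ≤ E) :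
    ‖∏ j ∈ s, f j - ∏ j ∈ s, m j‖ ≤ s.card * (E * B ^ (s.card - 1)) := by
  classical
  induction s using Finset.induction_on with
  | empty => simp
  | insert a s ha ih =>
    have hB : 0 ≤ B := (norm_nonneg _).trans (hf a)
    rw [prod_insert ha, prod_insert ha, card_insert_of_notMem ha, Nat.add_sub_cancel]
    have e1 : f a * ∏ j ∈ s, f j - m a * ∏ j ∈ s, m j =
        (f a - m a) * ∏ j ∈ s, f j + m a * (∏ j ∈ s, f j - ∏ j ∈ s, m j) := by ring
    have h1 : ‖(f a - m a) * ∏ j ∈ s, f j‖ ≤ E * B ^ s.card := by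
      rw [norm_mul, norm_prod]
      refine mul_le_mul (h a) ?_ (by positivity) hE
      exact (prod_le_prod (fun j _ => norm_nonneg _) fun j _ => hf j).trans (by simp)
    have h2 : ‖m a * (∏ j ∈ s, f j - ∏ j ∈ s, m j)‖ ≤ s.card * (E * B ^ s.card) := by
      rw [norm_mul]
      refine (mul_le_mul (hm a) ih (by positivity) hB).trans (le_of_eq ?_)
      rcases Nat.eq_zero_or_pos s.card with h0 | h0
      · simp [h0]
      · obtain ⟨n, hn⟩ := Nat.exists_eq_add_of_le' h0
        rw [hn, Nat.add_sub_cancel, pow_succ]; ring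
    rw [e1]
    refine (norm_add_le _ _).trans ?_
    push_cast
    linarith

/-- Replacing each of the thirty factors by an approximation; `R` balances the two error terms. -/
lemma prod_diff_bound {f m : Fin 30 → ℂ} {E R : ℝ} (hR : 1 ≤ R) (hE : 0 ≤ E) (h : ∀ j, ‖f j - m j‖ ≤ E) :
    ‖∏ j, f j - ∏ j, m j‖ ≤ 30 * 2 ^ 30 * ((∑ j, ‖m j‖ ^ 30) / R + R ^ 29 * E ^ 30) := by
  have hR0 : 0 < R := by linarith
  obtain ⟨j0, -, hj0⟩ := Finset.exists_max_image (Finset.univ : Finset (Fin 30)) (fun j => ‖m j‖) ⟨0, mem_univ _⟩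
  set A := ‖m j0‖ with hA
  have hA0 : 0 ≤ A := norm_nonneg _
  set B := A + E with hB
  have hB0 : 0 ≤ B := by positivity
  have hm : ∀ j, ‖m j‖ ≤ B := fun j => (hj0 j (mem_univ j)).trans (by linarith)
  have hf : ∀ j, ‖f j‖ ≤ B := fun j => by
    have h1 : f j = m j + (f j - m j) := by ring
    rw [h1]
    exact (norm_add_le _ _).trans (add_le_add (hj0 j (mem_univ j)) (h j))
  have h1 := norm_prod_sub_prod_le Finset.univ hE hf hm h
  rw [card_univ, Fintype.card_fin] at h1
  have h2 : E * B ^ 29 ≤ B ^ 30 / R + R ^ 29 * E ^ 30 := by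
    rcases le_total (R * E) B with h3 | h3
    · have : E * B ^ 29 ≤ B ^ 30 / R := by
        rw [le_div_iff₀ hR0]
        calc E * B ^ 29 * R = (R * E) * B ^ 29 := by ring
          _ ≤ B * B ^ 29 := by gcongr
          _ = B ^ 30 := by ring
      have : 0 ≤ R ^ 29 * E ^ 30 := by positivity
      linarith
    · have : E * B ^ 29 ≤ R ^ 29 * E ^ 30 :=
        calc E * B ^ 29 ≤ E * (R * E) ^ 29 := by gcongr
          _ = _ := by ring
      have : 0 ≤ B ^ 30 / R := by positivity
      linarith
  have h3 : B ^ 30 ≤ 2 ^ 29 * (A ^ 30 + E ^ 30) := add_pow_thirty_le hA0 hE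
  have h4 : A ^ 30 ≤ ∑ j, ‖m j‖ ^ 30 :=
    single_le_sum (f := fun j => ‖m j‖ ^ 30) (fun j _ => by positivity) (mem_univ j0)
  set T := ∑ j, ‖m j‖ ^ 30 with hT
  have hT0 : 0 ≤ T := le_trans (by positivity) h4
  clear_value T
  have h5 : B ^ 30 / R ≤ 2 ^ 29 * (T / R) + 2 ^ 29 * (R ^ 29 * E ^ 30) := by
    have h6 : B ^ 30 / R ≤ (2 ^ 29 * (T + E ^ 30)) / R := by
      gcongr
      exact h3.trans (by gcongr)
    have h7 : E ^ 30 / R ≤ R ^ 29 * E ^ 30 := by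
      rw [div_le_iff₀ hR0]
      have : (1 : ℝ) ≤ R ^ 29 * R := by
        rw [← pow_succ]; exact one_le_pow₀ hR
      nlinarith [show 0 ≤ E ^ 30 by positivity]
    have h8 : (2 ^ 29 * (T + E ^ 30)) / R = 2 ^ 29 * (T / R) + 2 ^ 29 * (E ^ 30 / R) := by ring
    rw [h8] at h6
    linarith
  have h9 : 0 ≤ T / R := by positivity
  have h10 : 0 ≤ R ^ 29 * E ^ 30 := by positivity
  simp only [Nat.cast_ofNat, Nat.add_one_sub_one] at h1
  norm_num at h1 h5 ⊢
  linarith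

/-- The contribution of the major arcs is the product of the truncated singular series and the truncated
singular integral. The factor `M ^ 9` comes from rescaling the arcs by `M, M ^ 3, M ^ 5`. -/
lemma major_approx {u : Fin 3 → Fin 30 → ℤ} (hu : ∀ i j, u i j ≠ 0) : ∃ C : ℝ, 0 < C ∧ ∀ (M : ℕ) (R : ℝ),
    4 ≤ R → (M : ℝ) = R ^ 8 →
    ‖(M : ℂ) ^ 9 * (∫ α in MajArc R M, ∏ j, ff M (sc (fun i => u i j) α)) -
      (M : ℂ) ^ 30 * ((∑ q ∈ Icc 1 ⌊R⌋₊, singSerTerm ![1, 3, 5] u q) *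
        ∫ γ in rb R, singIntInner ![1, 3, 5] u γ)‖ ≤ C * (M : ℝ) ^ 30 / R := by
  choose C2 hC2 happ using fun j => approx (fun i => u i j)
  set D : ℝ := ∑ j, C2 j with hD
  have hDj : ∀ j, C2 j ≤ D := fun j =>
    single_le_sum (f := C2) (fun j _ => by linarith [hC2 j]) (mem_univ j)
  have hD0 : 1 ≤ D := (hC2 0).trans (hDj 0)
  set W : ℝ := ∑ j, (∑' q, tv (fun i => u i j) q) * ∫ γ, wv (fun i => u i j) γ with hW
  have hW0 : 0 ≤ W := sum_nonneg fun j _ => mul_nonneg (tsum_nonneg fun q => tv_nonneg _ _)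
    (integral_nonneg fun γ => wv_nonneg _ _)
  refine ⟨30 * 2 ^ 30 * (W + 8 * (4 * D) ^ 30), by positivity, fun M R hR hM => ?_⟩
  have hR1 : 1 ≤ R := by linarith
  have hR0 : 0 < R := by linarith
  have hM1 : 1 ≤ M := by
    have : (1 : ℝ) ≤ M := by rw [hM]; exact one_le_pow₀ hR1
    exact_mod_cast this
  have hMz : ((M : ℤ) : ℝ) = R ^ 8 := by exact_mod_cast hM
  set h : (Fin 3 → Tor) → ℂ := fun α => ∏ j, ff M (sc (fun i => u i j) α) with hh
  have hcont : Continuous h := continuous_finsetProd _ fun j _ => (continuous_ff _).comp (continuous_sc _)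
  set m : (Σ _ : ℕ, (Fin 3 → ℕ)) → (Fin 3 → ℝ) → Fin 30 → ℂ := fun x γ j =>
    (M : ℂ) * (SS x.1 (fun i => u i j * x.2 i) / x.1) * vv (fun i => u i j * γ i) with hm
  have hmc : ∀ x, Continuous fun γ => ∏ j, m x γ j := fun x =>
    continuous_finsetProd _ fun j _ => continuous_const.mul (continuous_vv.comp (by fun_prop))
  have hmaj := integral_MajArc hR1 (M := (M : ℤ)) (by exact_mod_cast hM1)
    (dl_small (by linarith) hR1 (by linarith) hMz) hcont
  have e1 : (M : ℂ) ^ 30 * ((∑ q ∈ Icc 1 ⌊R⌋₊, singSerTerm ![1, 3, 5] u q) *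
        ∫ γ in rb R, singIntInner ![1, 3, 5] u γ) = ∑ x ∈ arcs R, ∫ γ in rb R, ∏ j, m x γ j := by
    have h1 : ∑ q ∈ Icc 1 ⌊R⌋₊, singSerTerm ![1, 3, 5] u q =
        ∑ x ∈ arcs R, ∏ j, (SS x.1 (fun i => u i j * x.2 i) / x.1) := by
      rw [arcs, sum_sigma]
      exact sum_congr rfl fun q hq => singSerTerm_eq u (mem_Icc.1 hq).1
    rw [h1, sum_mul, mul_sum]
    refine sum_congr rfl fun x _ => ?_
    rw [← integral_const_mul, ← integral_const_mul]
    refine integral_congr_ae (Filter.Eventually.of_forall fun γ => ?_)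
    simp only [hm, prod_mul_distrib, singIntInner_eq]
    simp
    ring
  have hinteg : ∀ {g : (Fin 3 → ℝ) → ℂ}, Continuous g → IntegrableOn g (rb R) := fun hg =>
    hg.continuousOn.integrableOn_compact (isCompact_rb R)
  have hintR : ∀ {g : (Fin 3 → ℝ) → ℝ}, Continuous g → IntegrableOn g (rb R) := fun hg =>
    hg.continuousOn.integrableOn_compact (isCompact_rb R)
  set E : ℝ := 4 * D * R ^ 3 with hE
  have hE0 : 0 ≤ E := by positivity
  set bd : (Σ _ : ℕ, (Fin 3 → ℕ)) → (Fin 3 → ℝ) → ℝ := fun x γ =>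
    30 * 2 ^ 30 * ((∑ j, (M : ℝ) ^ 30 * sv (fun i => u i j) x * wv (fun i => u i j) γ) / R + R ^ 29 * E ^ 30) with hbd
  have hpt : ∀ x ∈ arcs R, ∀ γ ∈ rb R, ‖h (cen x + tc M γ) - ∏ j, m x γ j‖ ≤ bd x γ := by
    intro x hx γ hγ
    rw [mem_arcs (by linarith)] at hx
    rw [mem_rb] at hγ
    have hj : ∀ j, ‖ff M (sc (fun i => u i j) (cen x + tc M γ)) - m x γ j‖ ≤ E := by
      intro j
      have h1 := happ j M hM1 x.1 hx.1.1 (fun i => (x.2 i : ℤ)) γ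
      refine h1.trans ?_
      calc C2 j * x.1 * (1 + |γ 0| + |γ 1| + |γ 2|) ≤ D * R * (1 + R ^ 2 + R + R) := by
            have h2 := hDj j
            have h3 := hC2 j
            gcongr
            · exact hx.1.2
            · exact hγ.1
            · exact hγ.2.1
            · exact hγ.2.2
        _ ≤ D * R * (4 * R ^ 2) := by gcongr; nlinarith
        _ = E := by rw [hE]; ring
    refine (prod_diff_bound hR1 hE0 hj).trans (le_of_eq ?_)
    simp only [hbd]
    have e2 : ∀ j, ‖m x γ j‖ ^ 30 = (M : ℝ) ^ 30 * sv (fun i => u i j) x * wv (fun i => u i j) γ := fun j => by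
      simp only [hm, sv, wv, norm_mul, mul_pow, Complex.norm_natCast]
    simp only [e2]
  have hbc : ∀ x, Continuous (bd x) := fun x =>
    continuous_const.mul (((continuous_finsetSum _ fun j _ => continuous_const.mul (continuous_wv _)).div_const _).add
      continuous_const)
  have hwle : ∀ j, ∫ γ in rb R, wv (fun i => u i j) γ ≤ ∫ γ, wv (fun i => u i j) γ := fun j =>
    setIntegral_le_integral (integrable_wv fun i => hu i j) (Filter.Eventually.of_forall fun γ => wv_nonneg _ γ)
  have hbi : ∀ x, ∫ γ in rb R, bd x γ = 30 * 2 ^ 30 * (((M : ℝ) ^ 30 *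
      ∑ j, sv (fun i => u i j) x * ∫ γ in rb R, wv (fun i => u i j) γ) / R + R ^ 29 * E ^ 30 * (8 * R ^ 4)) := by
    intro x
    simp only [hbd]
    rw [integral_const_mul, integral_add, integral_div, integral_finsetSum]
    · congr 3
      · rw [mul_sum]
        congr 1
        funext j
        rw [integral_const_mul]; ring
      · rw [setIntegral_const, smul_eq_mul, measureReal_def, volume_rb' hR0.le,
          ENNReal.toReal_ofReal (by positivity)]
        ring
    · exact fun j _ => hintR (continuous_const.mul (continuous_wv _))
    · exact hintR ((continuous_finsetSum _ fun j _ => continuous_const.mul (continuous_wv _)).div_const _)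
    · exact hintR continuous_const
  rw [e1]
  have hmaj' : (M : ℂ) ^ 9 * (∫ α in MajArc R M, h α) = ∑ x ∈ arcs R, ∫ γ in rb R, h (cen x + tc M γ) := by
    exact_mod_cast hmaj
  rw [hmaj', ← sum_sub_distrib]
  have hM30 : (M : ℝ) ^ 30 / R = R ^ 239 := by rw [hM]; field_simp
  calc ‖∑ x ∈ arcs R, ((∫ γ in rb R, h (cen x + tc M γ)) - ∫ γ in rb R, ∏ j, m x γ j)‖
      ≤ ∑ x ∈ arcs R, ∫ γ in rb R, bd x γ := by
        refine (norm_sum_le _ _).trans (sum_le_sum fun x hx => ?_)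
        rw [← integral_sub (f := fun γ => h (cen x + tc M γ)) (hinteg (hcont.comp (continuous_tc M (cen x)))) (hinteg (hmc x))]
        refine norm_integral_le_of_norm_le (hintR (hbc x)) ?_
        exact (ae_restrict_iff' (measurableSet_rb R)).2 (Filter.Eventually.of_forall fun γ hγ => hpt x hx γ hγ)
    _ = 30 * 2 ^ 30 * ((M : ℝ) ^ 30 / R * (∑ j, (∑ x ∈ arcs R, sv (fun i => u i j) x) *
          ∫ γ in rb R, wv (fun i => u i j) γ) + (arcs R).card * (R ^ 29 * E ^ 30 * (8 * R ^ 4))) := by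
        simp only [hbi]
        rw [← mul_sum, sum_add_distrib, sum_const, nsmul_eq_mul, ← sum_div, ← mul_sum, sum_comm]
        simp only [sum_mul]
        ring
    _ ≤ 30 * 2 ^ 30 * ((M : ℝ) ^ 30 / R * W + R ^ 4 * (R ^ 29 * E ^ 30 * (8 * R ^ 4))) := by
        have h1 := card_arcs_le hR1
        have h2 : ∑ j, (∑ x ∈ arcs R, sv (fun i => u i j) x) * ∫ γ in rb R, wv (fun i => u i j) γ ≤ W := by
          refine sum_le_sum fun j _ => mul_le_mul (sum_sv_le (fun i => hu i j) R) (hwle j)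
            (integral_nonneg fun γ => wv_nonneg _ _) (tsum_nonneg fun q => tv_nonneg _ _)
        refine mul_le_mul_of_nonneg_left (add_le_add ?_ ?_) (by positivity)
        · exact mul_le_mul_of_nonneg_left h2 (by positivity)
        · exact mul_le_mul_of_nonneg_right h1 (by positivity)
    _ ≤ 30 * 2 ^ 30 * (W + 8 * (4 * D) ^ 30) * (M : ℝ) ^ 30 / R := by
        rw [mul_div_assoc, hM30, mul_assoc (30 * 2 ^ 30 : ℝ)]
        refine mul_le_mul_of_nonneg_left ?_ (by positivity)
        have h1 : R ^ 4 * (R ^ 29 * E ^ 30 * (8 * R ^ 4)) = 8 * (4 * D) ^ 30 * R ^ 127 := by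
          rw [hE]; ring
        rw [h1, add_mul]
        have h2 : R ^ 127 ≤ R ^ 239 := pow_le_pow_right₀ hR1 (by norm_num)
        have h3 : 8 * (4 * D) ^ 30 * R ^ 127 ≤ 8 * (4 * D) ^ 30 * R ^ 239 :=
          mul_le_mul_of_nonneg_left h2 (by positivity)
        linarith

/-- The minor arcs contribute an error term, by `minor_bound` for each variable and the inequality of
arithmetic and geometric means. -/
lemma minor_prod {u : Fin 3 → Fin 30 → ℤ} (hu : ∀ i j, u i j ≠ 0) {ε : ℝ} (hε : 0 < ε) :
    ∃ C : ℝ, 0 < C ∧ ∀ (M : ℤ) (R : ℝ), 1 ≤ R → (M : ℝ) = R ^ 8 →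
      ‖∫ α in (MajArc R M)ᶜ, ∏ j, ff M (sc (fun i => u i j) α)‖ ≤ C * (M : ℝ) ^ (21 + ε) / R := by
  choose C hC h using fun j => minor_bound (c := fun i => u i j) (fun i => hu i j) hε
  refine ⟨∑ j, C j, sum_pos (fun j _ => hC j) ⟨0, mem_univ _⟩, fun M R hR hM => ?_⟩
  have hM0 : 0 ≤ (M : ℝ) := by rw [hM]; positivity
  have hR0 : 0 < R := by linarith
  have hc : ∀ j, Continuous fun α => ‖ff M (sc (fun i => u i j) α)‖ ^ 30 := fun j =>
    (((continuous_ff M).comp (continuous_sc _)).norm).pow 30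
  have hi : ∀ j, Integrable fun α => ‖ff M (sc (fun i => u i j) α)‖ ^ 30 := fun j =>
    (hc j).integrable_of_hasCompactSupport (HasCompactSupport.of_compactSpace _)
  have h1 : ∀ j, ∫ α in (MajArc R M)ᶜ, ‖ff M (sc (fun i => u i j) α)‖ ^ 30 ≤ C j * (M : ℝ) ^ (21 + ε) / R := by
    intro j
    rw [integral_eq_lintegral_of_nonneg_ae (Filter.Eventually.of_forall fun γ => by positivity)
      (hc j).aestronglyMeasurable]
    exact ENNReal.toReal_le_of_le_ofReal (by have := hC j; positivity) (h j M R hR hM)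
  calc _ ≤ ∫ α in (MajArc R M)ᶜ, ∑ j, ‖ff M (sc (fun i => u i j) α)‖ ^ 30 := by
        refine norm_integral_le_of_norm_le (integrable_finsetSum Finset.univ fun j _ => (hi j).integrableOn)
          (Filter.Eventually.of_forall fun α => ?_)
        rw [norm_prod]
        exact prod_le_sum_pow fun j => norm_nonneg _
    _ = ∑ j, ∫ α in (MajArc R M)ᶜ, ‖ff M (sc (fun i => u i j) α)‖ ^ 30 :=
        integral_finsetSum _ fun j _ => (hi j).integrableOn
    _ ≤ ∑ j, C j * (M : ℝ) ^ (21 + ε) / R := sum_le_sum fun j _ => h1 j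
    _ = _ := by rw [sum_mul, sum_div]

lemma pow_sub_pow_le {X M : ℝ} (hM : 0 ≤ M) (hMX : M ≤ X) (h1 : X ≤ M + 1) : X ^ 21 - M ^ 21 ≤ 21 * X ^ 20 := by
  have hX : 0 ≤ X := hM.trans hMX
  rw [← Commute.mul_geom_sum₂ (Commute.all X M) 21]
  have h2 : ∑ i ∈ range 21, X ^ i * M ^ (21 - 1 - i) ≤ ∑ i ∈ range 21, X ^ 20 := by
    refine sum_le_sum fun i hi => ?_
    have hi' := mem_range.1 hi
    calc X ^ i * M ^ (21 - 1 - i) ≤ X ^ i * X ^ (21 - 1 - i) := by gcongr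
      _ = X ^ 20 := by rw [← pow_add]; congr 1; omega
  simp only [sum_const, card_range, nsmul_eq_mul] at h2
  have h3 : 0 ≤ ∑ i ∈ range 21, X ^ i * M ^ (21 - 1 - i) := sum_nonneg fun i _ => by positivity
  push_cast at h2
  nlinarith

theorem asymp_aux {u : Fin 3 → Fin 30 → ℤ} (hu : ∀ i j, u i j ≠ 0) {ε : ℝ} (hε : 0 < ε) (hε1 : ε < 1 / 2) :
    ∃ C : ℝ, ∀ X : ℝ, 1 ≤ X →
      ‖(NF ![1, 3, 5] u X : ℂ) - singInt ![1, 3, 5] u * singSer ![1, 3, 5] u *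
          ((X ^ (21 : ℕ) : ℝ) : ℂ)‖ ≤ C * X ^ ((21 : ℝ) - 1 / 8 + ε) := by
  obtain ⟨C1, hC1, H1⟩ := minor_prod hu hε
  obtain ⟨C2, hC2, H2⟩ := major_approx hu
  obtain ⟨C3, hC3, H3⟩ := singInt_tail hu hε (by linarith)
  obtain ⟨C4, hC4, H4⟩ := singSer_tail hu hε (by linarith)
  generalize singInt ![1, 3, 5] u = I at H3 ⊢
  generalize singSer ![1, 3, 5] u = S at H4 ⊢
  set g : ℕ → (Fin 3 → Tor) → ℂ := fun M α => ∏ j, ff (M : ℤ) (sc (fun i => u i j) α) with hg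
  have hgi : ∀ M, Integrable (g M) := fun M =>
    (continuous_finsetProd _ fun j _ => (continuous_ff _).comp (continuous_sc _)).integrable_of_hasCompactSupport
      (HasCompactSupport.of_compactSpace _)
  obtain ⟨K, hK0, hK⟩ : ∃ K : ℝ, 0 ≤ K ∧ ∀ m < 65536, ‖∫ α, g m α‖ ≤ K :=
    ⟨∑ m ∈ range 65536, ‖∫ α, g m α‖, sum_nonneg fun m _ => norm_nonneg _, fun m hm =>
      single_le_sum (f := fun m => ‖∫ α, g m α‖) (fun m _ => norm_nonneg _) (mem_range.2 hm)⟩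
  set C5 : ℝ := C4 * (‖I‖ + C3) + ‖S‖ * C3 with hC5
  have hC50 : 0 ≤ C5 := by positivity
  refine ⟨K + ‖I * S‖ * 65536 ^ 21 + (C1 + C2 + C5 + 21 * ‖I * S‖), fun X hX => ?_⟩
  have hX0 : 0 < X := by linarith
  set M := ⌊X⌋₊ with hM
  have hMX : (M : ℝ) ≤ X := Nat.floor_le hX0.le
  have hXM : X < M + 1 := Nat.lt_floor_add_one X
  have hNF : (NF ![1, 3, 5] u X : ℂ) = ∫ α, g M α := NF_eq_integral u hX0.le
  have hpow1 : 1 ≤ X ^ ((21 : ℝ) - 1 / 8 + ε) := Real.one_le_rpow hX (by linarith)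
  set Y := X ^ ((21 : ℝ) - 1 / 8 + ε) with hY
  rw [hNF]
  rcases lt_or_ge M 65536 with hsmall | hlarge
  · have h1 : ‖∫ α, g M α‖ ≤ K := hK M hsmall
    have h2 : X ≤ 65536 := by
      have : (M : ℝ) + 1 ≤ 65536 := by exact_mod_cast hsmall
      linarith
    have h3 : ‖I * S * ((X ^ 21 : ℝ) : ℂ)‖ ≤ ‖I * S‖ * 65536 ^ 21 := by
      rw [norm_mul, Complex.norm_real, Real.norm_of_nonneg (by positivity)]
      gcongr
    calc _ ≤ K + ‖I * S‖ * 65536 ^ 21 := (norm_sub_le _ _).trans (add_le_add h1 h3)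
      _ ≤ (K + ‖I * S‖ * 65536 ^ 21 + (C1 + C2 + C5 + 21 * ‖I * S‖)) * 1 := by
          rw [mul_one]
          have : 0 ≤ C1 + C2 + C5 + 21 * ‖I * S‖ := by positivity
          linarith
      _ ≤ _ := by
          refine mul_le_mul_of_nonneg_left hpow1 (by positivity)
  · have hM1 : (1 : ℝ) ≤ M := by
      have : 1 ≤ M := by omega
      exact_mod_cast this
    have hM0 : (0 : ℝ) < M := by linarith
    set R : ℝ := (M : ℝ) ^ ((1 : ℝ) / 8) with hR
    have hR8 : (M : ℝ) = R ^ 8 := by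
      rw [hR, ← Real.rpow_natCast, ← Real.rpow_mul hM0.le]; norm_num
    have hR4 : 4 ≤ R := by
      have : (65536 : ℝ) ≤ R ^ 8 := by rw [← hR8]; exact_mod_cast hlarge
      by_contra hc
      push Not at hc
      have h5 : R ^ 8 < 4 ^ 8 := by
        have : 0 ≤ R := by rw [hR]; positivity
        gcongr
      norm_num at h5
      linarith
    have hR0 : 0 < R := by linarith
    set Z := (M : ℝ) ^ ((21 : ℝ) - 1 / 8 + ε) with hZ
    have hZ0 : 0 < Z := by positivity
    have hZY : Z ≤ Y := Real.rpow_le_rpow hM0.le hMX (by linarith)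
    have hRinv : 1 / R = (M : ℝ) ^ (-(1 : ℝ) / 8) := by
      rw [hR, one_div, ← Real.rpow_neg hM0.le]; norm_num
    have p1 : (M : ℝ) ^ (21 + ε) / R = Z := by
      rw [div_eq_mul_one_div, hRinv, ← Real.rpow_add hM0]; congr 1; ring
    have p2 : (M : ℝ) ^ 21 / R ≤ Z := by
      rw [div_eq_mul_one_div, hRinv, ← Real.rpow_natCast, ← Real.rpow_add hM0]
      refine Real.rpow_le_rpow_of_exponent_le hM1 ?_
      push_cast; linarith
    have p3 : (M : ℝ) ^ 21 * R ^ (-1 + ε) ≤ Z := by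
      rw [hR, ← Real.rpow_mul hM0.le, ← Real.rpow_natCast, ← Real.rpow_add hM0]
      refine Real.rpow_le_rpow_of_exponent_le hM1 ?_
      push_cast; linarith
    have p4 : X ^ 20 ≤ Y := by
      rw [← Real.rpow_natCast]
      refine Real.rpow_le_rpow_of_exponent_le hX ?_
      push_cast; linarith
    set IR := ∫ γ in rb R, singIntInner ![1, 3, 5] u γ with hIR
    set SR := ∑ q ∈ Icc 1 ⌊R⌋₊, singSerTerm ![1, 3, 5] u q with hSR
    have t3 := H3 R hR4
    have t4 := H4 R hR4
    set ρ := R ^ (-1 + ε) with hρ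
    have hρ0 : 0 < ρ := by positivity
    have hρ1 : ρ ≤ 1 := Real.rpow_le_one_of_one_le_of_nonpos (by linarith) (by linarith)
    have hIRn : ‖IR‖ ≤ ‖I‖ + C3 := by
      have h5 : IR = I - (I - IR) := by ring
      rw [h5]
      refine (norm_sub_le _ _).trans (add_le_add le_rfl (t3.trans ?_))
      exact mul_le_of_le_one_right hC3.le hρ1
    have q1 : ‖SR * IR - I * S‖ ≤ C5 * ρ := by
      have h5 : SR * IR - I * S = -((S - SR) * IR) - S * (I - IR) := by ring
      rw [h5]
      refine (norm_sub_le _ _).trans ?_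
      rw [norm_neg, norm_mul, norm_mul, hC5, add_mul]
      refine add_le_add ?_ ?_
      · calc ‖S - SR‖ * ‖IR‖ ≤ (C4 * ρ) * (‖I‖ + C3) := by gcongr
          _ = _ := by ring
      · calc ‖S‖ * ‖I - IR‖ ≤ ‖S‖ * (C3 * ρ) := by gcongr
          _ = _ := by ring
    have q2 : ‖∫ α in (MajArc R M)ᶜ, g M α‖ ≤ C1 * Z := by
      have := H1 M R (by linarith) (by exact_mod_cast hR8)
      rw [mul_div_assoc, Int.cast_natCast, p1] at this
      exact this
    have q3 : ‖(∫ α in MajArc R M, g M α) - (M : ℂ) ^ 21 * (SR * IR)‖ ≤ C2 * Z := by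
      have h5 := H2 M R hR4 hR8
      have h6 : (M : ℂ) ^ 9 * (∫ α in MajArc R M, g M α) - (M : ℂ) ^ 30 * (SR * IR) =
          (M : ℂ) ^ 9 * ((∫ α in MajArc R M, g M α) - (M : ℂ) ^ 21 * (SR * IR)) := by ring
      rw [h6, norm_mul, norm_pow, Complex.norm_natCast] at h5
      have h7 : C2 * (M : ℝ) ^ 30 / R = (M : ℝ) ^ 9 * (C2 * ((M : ℝ) ^ 21 / R)) := by ring
      rw [h7] at h5
      exact (le_of_mul_le_mul_left h5 (by positivity)).trans (mul_le_mul_of_nonneg_left p2 hC2.le)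
    have q4 : ‖(M : ℂ) ^ 21 * (SR * IR - I * S)‖ ≤ C5 * Z := by
      rw [norm_mul, norm_pow, Complex.norm_natCast]
      calc (M : ℝ) ^ 21 * ‖SR * IR - I * S‖ ≤ (M : ℝ) ^ 21 * (C5 * ρ) := by gcongr
        _ = C5 * ((M : ℝ) ^ 21 * ρ) := by ring
        _ ≤ C5 * Z := mul_le_mul_of_nonneg_left p3 hC50
    have q5 : ‖I * S * ((((X ^ 21 - (M : ℝ) ^ 21 : ℝ))) : ℂ)‖ ≤ 21 * ‖I * S‖ * Y := by
      have h6 : (M : ℝ) ^ 21 ≤ X ^ 21 := by gcongr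
      rw [norm_mul, Complex.norm_real, Real.norm_of_nonneg (by linarith)]
      have h5 := pow_sub_pow_le hM0.le hMX hXM.le
      calc ‖I * S‖ * (X ^ 21 - (M : ℝ) ^ 21) ≤ ‖I * S‖ * (21 * X ^ 20) := by gcongr
        _ ≤ ‖I * S‖ * (21 * Y) := by gcongr
        _ = _ := by ring
    have e1 : (∫ α, g M α) - I * S * ((X ^ 21 : ℝ) : ℂ) =
        ((∫ α in (MajArc R M)ᶜ, g M α) + ((∫ α in MajArc R M, g M α) - (M : ℂ) ^ 21 * (SR * IR)) +
          (M : ℂ) ^ 21 * (SR * IR - I * S)) - I * S * ((((X ^ 21 - (M : ℝ) ^ 21 : ℝ))) : ℂ) := by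
      rw [← integral_add_compl (measurableSet_MajArc R M) (hgi M)]
      push_cast
      ring
    rw [e1]
    have h8 : ∀ c : ℝ, 0 ≤ c → c * Z ≤ c * Y := fun c hc => mul_le_mul_of_nonneg_left hZY hc
    have h9 : 0 ≤ K + ‖I * S‖ * 65536 ^ 21 := by positivity
    calc _ ≤ C1 * Z + C2 * Z + C5 * Z + 21 * ‖I * S‖ * Y :=
          (norm_sub_le _ _).trans (add_le_add ((norm_add_le _ _).trans (add_le_add ((norm_add_le _ _).trans
            (add_le_add q2 q3)) q4)) q5)
      _ ≤ (C1 + C2 + C5 + 21 * ‖I * S‖) * Y := by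
          have := h8 C1 hC1.le
          have := h8 C2 hC2.le
          have := h8 C5 hC50
          linarith
      _ ≤ _ := by
          refine mul_le_mul_of_nonneg_right ?_ (by linarith)
          linarith

/-- The asymptotic formula for the number of solutions. -/
theorem asymp {u : Fin 3 → Fin 30 → ℤ} (hu : ∀ i j, u i j ≠ 0) {ε : ℝ} (hε : 0 < ε) :
    ∃ C : ℝ, ∀ X : ℝ, 1 ≤ X →
      ‖(NF ![1, 3, 5] u X : ℂ) - singInt ![1, 3, 5] u * singSer ![1, 3, 5] u *
          ((X ^ (21 : ℕ) : ℝ) : ℂ)‖ ≤ C * X ^ ((21 : ℝ) - 1 / 8 + ε) := by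
  obtain ⟨C, hC⟩ := asymp_aux hu (ε := min ε (1 / 4)) (by positivity)
    ((min_le_right _ _).trans_lt (by norm_num))
  refine ⟨|C|, fun X hX => (hC X hX).trans ?_⟩
  have hp : 0 ≤ X ^ ((21 : ℝ) - 1 / 8 + min ε (1 / 4)) := by positivity
  refine mul_le_mul (le_abs_self C) ?_ hp (abs_nonneg C)
  exact Real.rpow_le_rpow_of_exponent_le hX (by linarith [min_le_left ε (1 / 4)])

/-! ### Positivity of the singular integral -/

section Local
variable {K : Type*}

lemma dF_smul [Field K] (u : Fin 3 → Fin 30 → ℤ) (i : Fin 3) (c : K) (t : Fin 30 → K) :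
    dF ![1, 3, 5] u i (fun j => c * t j) = c ^ (![1, 3, 5] : Fin 3 → ℕ) i * dF ![1, 3, 5] u i t := by
  unfold dF
  rw [mul_sum]
  refine sum_congr rfl fun j _ => ?_
  rw [mul_pow]; ring

lemma NonsingularSol.smul [Field K] {u : Fin 3 → Fin 30 → ℤ} {η : Fin 30 → K}
    (h : NonsingularSol ![1, 3, 5] u η) {c : K} (hc : c ≠ 0) :
    NonsingularSol ![1, 3, 5] u (fun j => c * η j) := by
  refine ⟨fun i => by rw [dF_smul, h.1 i, mul_zero], ?_⟩
  have e1 : (Matrix.of fun i j => ((![1, 3, 5] : Fin 3 → ℕ) i : K) * (u i j : K) *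
      (c * η j) ^ ((![1, 3, 5] : Fin 3 → ℕ) i - 1)) =
      Matrix.diagonal (fun i => c ^ ((![1, 3, 5] : Fin 3 → ℕ) i - 1)) *
      Matrix.of fun i j => ((![1, 3, 5] : Fin 3 → ℕ) i : K) * (u i j : K) *
        η j ^ ((![1, 3, 5] : Fin 3 → ℕ) i - 1) := by
    ext i j
    rw [Matrix.diagonal_mul]
    simp only [Matrix.of_apply, mul_pow]
    ring
  rw [e1, Matrix.rank_mul_eq_right_of_isUnit_det]
  · exact h.2
  · rw [Matrix.det_diagonal, isUnit_iff_ne_zero]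
    exact prod_ne_zero_iff.2 fun i _ => pow_ne_zero _ hc

lemma exists_columns [Field K] {J : Matrix (Fin 3) (Fin 30) K} (h : J.rank = 3) :
    ∃ σ : Fin 3 → Fin 30, Function.Injective σ ∧ LinearIndependent K fun i => J.col (σ i) := by
  have h1 := Submodule.exists_fun_fin_finrank_span_eq K (Set.range J.col)
  rw [← Matrix.rank_eq_finrank_span_cols, h] at h1
  obtain ⟨f, hf, -, hli⟩ := h1
  choose σ hσ using hf
  have h2 : (fun i => J.col (σ i)) = f := funext hσ
  refine ⟨σ, fun a b hab => hli.injective ?_, h2 ▸ hli⟩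
  rw [← hσ, ← hσ, hab]

open Classical in
/-- The map which replaces the coordinates indexed by `σ` with the values of the three forms. -/
noncomputable def Psi [CommRing K] (u : Fin 3 → Fin 30 → ℤ) (σ : Fin 3 → Fin 30) (t : Fin 30 → K) : Fin 30 → K :=
  fun j => if h : ∃ i, σ i = j then dF ![1, 3, 5] u h.choose t else t j

lemma Psi_apply [CommRing K] (u : Fin 3 → Fin 30 → ℤ) {σ : Fin 3 → Fin 30} (hσ : Function.Injective σ)
    (t : Fin 30 → K) (i : Fin 3) : Psi u σ t (σ i) = dF ![1, 3, 5] u i t := by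
  have h : ∃ i', σ i' = σ i := ⟨i, rfl⟩
  rw [Psi, dif_pos h, hσ h.choose_spec]

lemma Psi_apply_of_notMem [CommRing K] (u : Fin 3 → Fin 30 → ℤ) {σ : Fin 3 → Fin 30}
    (t : Fin 30 → K) {j : Fin 30} (hj : j ∉ Set.range σ) : Psi u σ t j = t j := by
  rw [Psi, dif_neg]; simpa using hj

/-- At a nonsingular solution the forms extend to a local coordinate system, over any complete field. -/
lemma exists_Psi [NontriviallyNormedField K] [CompleteSpace K] {u : Fin 3 → Fin 30 → ℤ} {η : Fin 30 → K}
    (h : NonsingularSol ![1, 3, 5] u η) : ∃ σ : Fin 3 → Fin 30, Function.Injective σ ∧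
      (∃ L : (Fin 30 → K) →L[K] (Fin 30 → K), HasStrictFDerivAt (Psi u σ) L η) ∧
      Filter.map (Psi u σ) (nhds η) = nhds (Psi u σ η) := by
  classical
  set J : Matrix (Fin 3) (Fin 30) K := Matrix.of fun i j => ((![1, 3, 5] : Fin 3 → ℕ) i : K) * (u i j : K) *
    η j ^ ((![1, 3, 5] : Fin 3 → ℕ) i - 1) with hJ
  obtain ⟨σ, hσ, hli⟩ := exists_columns (J := J) h.2
  refine ⟨σ, hσ, ?_⟩
  set ℓ : Fin 3 → ((Fin 30 → K) →L[K] K) := fun i => ∑ j, J i j • ContinuousLinearMap.proj j with hℓ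
  have hd : ∀ i, HasStrictFDerivAt (fun t : Fin 30 → K => dF ![1, 3, 5] u i t) (ℓ i) η := by
    intro i
    unfold dF
    refine HasStrictFDerivAt.fun_sum fun j _ => ?_
    have h1 := ((hasStrictFDerivAt_apply (𝕜 := K) (F' := fun _ : Fin 30 => K) j η).pow ((![1, 3, 5] : Fin 3 → ℕ) i)).const_mul (u i j : K)
    refine h1.congr_fderiv ?_
    ext v
    simp [hJ]
    ring
  set L : (Fin 30 → K) →L[K] (Fin 30 → K) := ContinuousLinearMap.pi fun j =>
    if h : ∃ i, σ i = j then ℓ h.choose else ContinuousLinearMap.proj j with hL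
  have hΨ : HasStrictFDerivAt (Psi u σ) L η := by
    rw [hasStrictFDerivAt_pi']
    intro j
    by_cases hj : ∃ i, σ i = j
    · have e1 : (fun t => Psi u σ t j) = fun t : Fin 30 → K => dF ![1, 3, 5] u hj.choose t := by
        funext t; simp [Psi, hj]
      have e2 : (ContinuousLinearMap.proj j).comp L = ℓ hj.choose := by
        ext v; simp [hL, hj]
      rw [e1, e2]
      exact hd _
    · have e1 : (fun t => Psi u σ t j) = fun t : Fin 30 → K => t j := by
        funext t; simp only [Psi, dif_neg hj]
      have e2 : (ContinuousLinearMap.proj j).comp L = ContinuousLinearMap.proj (R := K) (φ := fun _ : Fin 30 => K) j := by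
        ext v; simp only [hL, ContinuousLinearMap.comp_apply, ContinuousLinearMap.proj_apply,
          ContinuousLinearMap.coe_pi', dif_neg hj]
      rw [e1, e2]
      exact hasStrictFDerivAt_apply j η
  refine ⟨⟨L, hΨ⟩, ?_⟩
  have hinj : Function.Injective (L : (Fin 30 → K) →ₗ[K] (Fin 30 → K)) := by
    rw [injective_iff_map_eq_zero]
    intro v hv
    have hv1 : ∀ j, j ∉ Set.range σ → v j = 0 := by
      intro j hj
      have h1 := congrFun hv j
      have hj' : ¬ ∃ i, σ i = j := by simpa using hj
      simpa only [hL, ContinuousLinearMap.coe_coe, ContinuousLinearMap.coe_pi', dif_neg hj',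
        ContinuousLinearMap.proj_apply, Pi.zero_apply] using h1
    have hv2 : ∀ i, ∑ j, J i j * v j = 0 := by
      intro i
      have h1 := congrFun hv (σ i)
      have hj : ∃ i', σ i' = σ i := ⟨i, rfl⟩
      have h2 : hj.choose = i := hσ hj.choose_spec
      simp only [hL, ContinuousLinearMap.coe_coe, ContinuousLinearMap.coe_pi', dif_pos hj, h2, hℓ,
        Pi.zero_apply] at h1
      simpa using h1
    have hv3 : ∑ l, v (σ l) • J.col (σ l) = 0 := by
      funext i
      rw [Finset.sum_apply, Pi.zero_apply, ← hv2 i]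
      have h3 : ∑ j, J i j * v j = ∑ j ∈ univ.image σ, J i j * v j := by
        refine (sum_subset (subset_univ _) fun j _ hj => ?_).symm
        rw [hv1 j (by simpa using hj), mul_zero]
      rw [h3, sum_image fun a _ b _ hab => hσ hab]
      refine sum_congr rfl fun l _ => ?_
      simp [mul_comm]
    have hv4 := Fintype.linearIndependent_iff.1 hli _ hv3
    funext j
    by_cases hj : j ∈ Set.range σ
    · obtain ⟨i, rfl⟩ := hj
      exact hv4 i
    · exact hv1 j hj
  set Le := (LinearEquiv.ofInjectiveEndo (L : (Fin 30 → K) →ₗ[K] (Fin 30 → K)) hinj).toContinuousLinearEquiv with hLe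
  have hLe' : (Le : (Fin 30 → K) →L[K] (Fin 30 → K)) = L := by ext v; rfl
  rw [← hLe'] at hΨ
  exact hΨ.map_nhds_eq_of_equiv
end Local

lemma card_range_sigma {σ : Fin 3 → Fin 30} (hσ : Function.Injective σ) {M : Type*} [CommMonoid M] (a b : M) :
    (∏ j, if j ∈ univ.image σ then a else b) = a ^ 3 * b ^ 27 := by
  classical
  have h1 : (univ.image σ).card = 3 := by rw [card_image_of_injective _ hσ]; simp
  rw [prod_ite, prod_const, prod_const, Finset.filter_mem_eq_inter, univ_inter, h1]
  congr 2
  rw [Finset.filter_notMem_eq_sdiff, card_sdiff_of_subset (subset_univ _), h1]; simp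

/-- Near a nonsingular real zero, the set where all forms are at most `ρ` has volume at least `c ρ³`. -/
lemma volume_near_zero {u : Fin 3 → Fin 30 → ℤ} {η : Fin 30 → ℝ} (h : NonsingularSol ![1, 3, 5] u η) :
    ∃ c > 0, ∃ ρ₀ > 0, ∀ ρ : ℝ, 0 < ρ → ρ ≤ ρ₀ → ENNReal.ofReal (c * ρ ^ 3) ≤
      volume {t : Fin 30 → ℝ | t ∈ Set.Icc (fun _ : Fin 30 => (-1 : ℝ)) (fun _ => 1) ∧
        ∀ i, |dF ![1, 3, 5] u i t| ≤ ρ} := by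
  classical
  wlog hη : ‖η‖ ≤ 1 / 2 generalizing η
  · have hc : (1 / (2 * (1 + ‖η‖))) ≠ 0 := by positivity
    refine this (h.smul hc) ?_
    have e1 : (fun j => 1 / (2 * (1 + ‖η‖)) * η j) = (1 / (2 * (1 + ‖η‖))) • η := by ext; simp
    rw [e1, norm_smul, Real.norm_of_nonneg (by positivity), div_mul_eq_mul_div, one_mul,
      div_le_iff₀ (by positivity)]
    linarith [norm_nonneg η]
  obtain ⟨σ, hσ, ⟨L, hL⟩, hmap⟩ := exists_Psi h
  obtain ⟨k, s, hs, hlip⟩ := hL.exists_lipschitzOnWith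
  have hU : s ∩ Metric.ball η (1 / 2) ∈ nhds η := Filter.inter_mem hs (Metric.ball_mem_nhds _ (by norm_num))
  have hV : Psi u σ '' (s ∩ Metric.ball η (1 / 2)) ∈ nhds (Psi u σ η) := hmap ▸ Filter.image_mem_map hU
  obtain ⟨r, hr, hrV⟩ := Metric.nhds_basis_closedBall.mem_iff.1 hV
  refine ⟨8 * (2 * r) ^ 27 / (k + 1) ^ 30, by positivity, r, hr, fun ρ hρ hρr => ?_⟩
  set A : Set (Fin 30 → ℝ) := {t : Fin 30 → ℝ | t ∈ Set.Icc (fun _ : Fin 30 => (-1 : ℝ)) (fun _ => 1) ∧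
        ∀ i, |dF ![1, 3, 5] u i t| ≤ ρ} with hA
  set B : Set (Fin 30 → ℝ) := Set.univ.pi fun j => if j ∈ univ.image σ then Set.Icc (-ρ) ρ
    else Set.Icc (η j - r) (η j + r) with hB
  have hBA : B ⊆ Psi u σ '' (A ∩ s) := by
    intro y hy
    have hy1 : y ∈ Metric.closedBall (Psi u σ η) r := by
      rw [Metric.mem_closedBall, dist_pi_le_iff hr.le]
      intro j
      have hj := hy j (Set.mem_univ j)
      by_cases hjσ : j ∈ univ.image σ
      · obtain ⟨i, -, rfl⟩ := mem_image.1 hjσ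
        simp only [if_pos hjσ] at hj
        rw [Psi_apply u hσ, h.1 i, Real.dist_0_eq_abs]
        exact (abs_le.2 hj).trans hρr
      · simp only [if_neg hjσ] at hj
        rw [Psi_apply_of_notMem u η (by simpa using hjσ), Real.dist_eq, abs_le]
        exact ⟨by linarith [hj.1], by linarith [hj.2]⟩
    obtain ⟨t, ⟨hts, htb⟩, rfl⟩ := hrV hy1
    refine ⟨t, ⟨⟨?_, fun i => ?_⟩, hts⟩, rfl⟩
    · have h1 : ‖t‖ ≤ 1 := by
        rw [Metric.mem_ball, dist_eq_norm] at htb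
        calc ‖t‖ = ‖(t - η) + η‖ := by rw [sub_add_cancel]
          _ ≤ 1 := (norm_add_le _ _).trans (by linarith)
      have h2 : ∀ j, |t j| ≤ 1 := fun j => (norm_le_pi_norm t j).trans h1
      exact ⟨fun j => (abs_le.1 (h2 j)).1, fun j => (abs_le.1 (h2 j)).2⟩
    · have hj := hy (σ i) (Set.mem_univ _)
      have hjσ : σ i ∈ univ.image σ := mem_image_of_mem _ (mem_univ i)
      simp only [if_pos hjσ, Psi_apply u hσ] at hj
      exact abs_le.2 hj
  have hvB : volume B = ENNReal.ofReal (8 * (2 * r) ^ 27 * ρ ^ 3) := by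
    rw [hB, volume_pi_pi]
    have e1 : ∀ j, volume (if j ∈ univ.image σ then Set.Icc (-ρ) ρ else Set.Icc (η j - r) (η j + r)) =
        ENNReal.ofReal (if j ∈ univ.image σ then 2 * ρ else 2 * r) := by
      intro j
      split_ifs
      · rw [Real.volume_Icc]; ring_nf
      · rw [Real.volume_Icc]; ring_nf
    rw [prod_congr rfl fun j _ => e1 j, ← ENNReal.ofReal_prod_of_nonneg, card_range_sigma hσ]
    · ring_nf
    · intro j _; split_ifs <;> positivity
  have hle : volume B ≤ ENNReal.ofReal ((k + 1) ^ 30) * volume A := by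
    have h2 := (hlip.mono (Set.inter_subset_right (s := A))).hausdorffMeasure_image_le (d := 30) (by norm_num)
    have h3 : (μH[(30 : ℝ)] : Measure (Fin 30 → ℝ)) = volume := by
      have := hausdorffMeasure_pi_real (ι := Fin 30)
      rwa [Fintype.card_fin, Nat.cast_ofNat] at this
    rw [h3] at h2
    refine (measure_mono hBA).trans (h2.trans (mul_le_mul' ?_ (measure_mono Set.inter_subset_left)))
    have h4 : ((k : ENNReal) ^ (30 : ℝ)) = ENNReal.ofReal ((k : ℝ) ^ 30) := by
      rw [ENNReal.ofReal_pow (by positivity), ENNReal.ofReal_coe_nnreal]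
      exact_mod_cast ENNReal.rpow_natCast (k : ENNReal) 30
    rw [h4]
    refine ENNReal.ofReal_le_ofReal (pow_le_pow_left₀ (by positivity) (by linarith) 30)
  have hk : (0 : ℝ) < (k + 1) ^ 30 := by positivity
  rw [hvB] at hle
  have e2 : 8 * (2 * r) ^ 27 * ρ ^ 3 = (k + 1) ^ 30 * (8 * (2 * r) ^ 27 / (k + 1) ^ 30 * ρ ^ 3) := by
    field_simp
  rw [e2, ENNReal.ofReal_mul hk.le] at hle
  exact (ENNReal.mul_le_mul_iff_right (by simpa using hk) ENNReal.ofReal_ne_top).1 hle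

lemma gauss_fourier {ρ : ℝ} (hρ : 0 < ρ) (g : ℝ) :
    ∫ x : ℝ, e (x * g) * (Real.exp (-(Real.pi * ρ ^ 2 * x ^ 2)) : ℂ) =
      ((ρ⁻¹ * Real.exp (-(Real.pi * g ^ 2 / ρ ^ 2)) : ℝ) : ℂ) := by
  have hρc : (ρ : ℂ) ≠ 0 := by exact_mod_cast hρ.ne'
  have hπ : (Real.pi : ℂ) ≠ 0 := by exact_mod_cast Real.pi_ne_zero
  have hb : (((-(Real.pi * ρ ^ 2) : ℝ)) : ℂ).re < 0 := by
    rw [Complex.ofReal_re]; have := Real.pi_pos; nlinarith [mul_pos Real.pi_pos (pow_pos hρ 2)]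
  have h := integral_cexp_quadratic hb (2 * Real.pi * Complex.I * g) 0
  have e1 : ∀ x : ℝ, e (x * g) * (Real.exp (-(Real.pi * ρ ^ 2 * x ^ 2)) : ℂ) =
      Complex.exp (((-(Real.pi * ρ ^ 2) : ℝ) : ℂ) * x ^ 2 + 2 * Real.pi * Complex.I * g * x + 0) := by
    intro x
    rw [e, Complex.ofReal_exp, ← Complex.exp_add]
    congr 1
    push_cast
    ring
  simp only [e1]
  rw [h]
  have e2 : ((Real.pi : ℂ) / -((-(Real.pi * ρ ^ 2) : ℝ) : ℂ)) = (((ρ⁻¹) ^ 2 : ℝ) : ℂ) := by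
    push_cast
    field_simp
  have e3 : (0 : ℂ) - (2 * Real.pi * Complex.I * g) ^ 2 / (4 * ((-(Real.pi * ρ ^ 2) : ℝ) : ℂ)) =
      ((-(Real.pi * g ^ 2 / ρ ^ 2) : ℝ) : ℂ) := by
    push_cast
    rw [mul_pow, mul_pow, mul_pow, Complex.I_sq]
    field_simp
    ring
  rw [e2, e3]
  have e4 : ((((ρ⁻¹) ^ 2 : ℝ) : ℂ)) ^ (1 / 2 : ℂ) = ((ρ⁻¹ : ℝ) : ℂ) := by
    have : (1 / 2 : ℂ) = ((1 / 2 : ℝ) : ℂ) := by push_cast; rfl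
    rw [this, ← Complex.ofReal_cpow (by positivity), ← Real.sqrt_eq_rpow, Real.sqrt_sq (by positivity)]
  rw [e4, ← Complex.ofReal_exp]
  push_cast
  rfl

/-- The Gaussian weight of width `ρ⁻¹`. -/
noncomputable def gw (ρ : ℝ) (β : Fin 3 → ℝ) : ℝ := ∏ i, Real.exp (-(Real.pi * ρ ^ 2 * β i ^ 2))

lemma gw_nonneg (ρ : ℝ) (β) : 0 ≤ gw ρ β := prod_nonneg fun _ _ => (Real.exp_pos _).le

lemma gw_le_one (ρ : ℝ) (β) : gw ρ β ≤ 1 :=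
  prod_le_one (fun i _ => (Real.exp_pos _).le) fun i _ => Real.exp_le_one_iff.2 (by
    have := Real.pi_pos
    have : 0 ≤ Real.pi * ρ ^ 2 * β i ^ 2 := by positivity
    linarith)

lemma integrable_gw {ρ : ℝ} (hρ : 0 < ρ) : Integrable (gw ρ) := by
  unfold gw
  refine Integrable.fintype_prod (f := fun _ x => Real.exp (-(Real.pi * ρ ^ 2 * x ^ 2))) fun i => ?_
  have := integrable_exp_neg_mul_sq (b := Real.pi * ρ ^ 2) (by have := Real.pi_pos; positivity)
  simpa only [neg_mul] using this

lemma continuous_dF (u : Fin 3 → Fin 30 → ℤ) (i : Fin 3) :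
    Continuous fun t : Fin 30 → ℝ => dF ![1, 3, 5] u i t := by unfold dF; fun_prop

/-- A Gaussian factor in the singular integral amounts to counting, with Gaussian weight, the points at
which all forms are of size `ρ`. -/
lemma smoothed_singInt (u : Fin 3 → Fin 30 → ℤ) {ρ : ℝ} (hρ : 0 < ρ) :
    ∫ β, singIntInner ![1, 3, 5] u β * (gw ρ β : ℂ) =
      ((∫ t in Set.Icc (fun _ : Fin 30 => (-1 : ℝ)) (fun _ => 1),
        ∏ i, (ρ⁻¹ * Real.exp (-(Real.pi * dF ![1, 3, 5] u i t ^ 2 / ρ ^ 2))) : ℝ) : ℂ) := by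
  have hcd := continuous_dF u
  have e1 : ∀ β, singIntInner ![1, 3, 5] u β * (gw ρ β : ℂ) =
      ∫ t in Set.Icc (fun _ : Fin 30 => (-1 : ℝ)) (fun _ => 1),
        ∏ i, (e (β i * dF ![1, 3, 5] u i t) * (Real.exp (-(Real.pi * ρ ^ 2 * β i ^ 2)) : ℂ)) := by
    intro β
    rw [singIntInner, ← integral_mul_const]
    refine integral_congr_ae (Filter.Eventually.of_forall fun t => ?_)
    simp only [prod_mul_distrib, gw, e_sum]
    push_cast
    rfl
  simp only [e1]
  rw [integral_integral_swap]
  · refine Eq.trans ?_ integral_complex_ofReal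
    refine integral_congr_ae (Filter.Eventually.of_forall fun t => ?_)
    simp only
    refine (integral_fintype_prod_eq_prod (𝕜 := ℂ) (μ := fun _ : Fin 3 => (volume : Measure ℝ))
      (fun i (x : ℝ) => e (x * dF ![1, 3, 5] u i t) *
        (Real.exp (-(Real.pi * ρ ^ 2 * x ^ 2)) : ℂ))).trans ?_
    simp only [gauss_fourier hρ]
    push_cast
    rfl
  · have : IsFiniteMeasure ((volume : Measure (Fin 30 → ℝ)).restrict
        (Set.Icc (fun _ : Fin 30 => (-1 : ℝ)) (fun _ => 1))) :=
      ⟨by rw [Measure.restrict_apply_univ]; exact isCompact_Icc.measure_lt_top⟩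
    refine Integrable.mono' (g := fun z => gw ρ z.1 * 1) ((integrable_gw hρ).mul_prod (integrable_const (1 : ℝ))) ?_
      (Filter.Eventually.of_forall fun z => ?_)
    · refine Continuous.aestronglyMeasurable ?_
      refine continuous_finsetProd _ fun i _ => Continuous.mul (continuous_e.comp ?_) ?_
      · exact ((continuous_apply i).comp continuous_fst).mul ((hcd i).comp continuous_snd)
      · fun_prop
    · simp only [Function.uncurry, norm_prod, norm_mul, norm_e, one_mul, mul_one, gw]
      refine le_of_eq (prod_congr rfl fun i _ => ?_)
      rw [Complex.norm_real, Real.norm_of_nonneg (Real.exp_pos _).le]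

/-- The singular integral is positive when there is a nonsingular real zero. -/
theorem singInt_pos {u : Fin 3 → Fin 30 → ℤ} (hu : ∀ i j, u i j ≠ 0)
    (h : ∃ η : Fin 30 → ℝ, NonsingularSol ![1, 3, 5] u η) :
    ∃ c : ℝ, 0 < c ∧ singInt ![1, 3, 5] u = (c : ℂ) := by
  obtain ⟨η, hη⟩ := h
  obtain ⟨c, hc, ρ₀, hρ₀, hvol⟩ := volume_near_zero hη
  set c' := c * Real.exp (-Real.pi) ^ 3 with hc'
  have hc'0 : 0 < c' := by positivity
  have hlow : ∀ ρ, 0 < ρ → ρ ≤ ρ₀ → c' ≤ ∫ t in Set.Icc (fun _ : Fin 30 => (-1 : ℝ)) (fun _ => 1),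
        ∏ i, (ρ⁻¹ * Real.exp (-(Real.pi * dF ![1, 3, 5] u i t ^ 2 / ρ ^ 2))) := by
    intro ρ hρ hρ1
    set A : Set (Fin 30 → ℝ) := {t : Fin 30 → ℝ | t ∈ Set.Icc (fun _ : Fin 30 => (-1 : ℝ)) (fun _ => 1) ∧
        ∀ i, |dF ![1, 3, 5] u i t| ≤ ρ} with hA
    have hAs : A ⊆ Set.Icc (fun _ : Fin 30 => (-1 : ℝ)) (fun _ => 1) := fun t ht => ht.1
    have hAc : IsClosed A := by
      have : A = Set.Icc (fun _ : Fin 30 => (-1 : ℝ)) (fun _ => 1) ∩ ⋂ i, {t | |dF ![1, 3, 5] u i t| ≤ ρ} := by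
        ext t; simp [hA]
      rw [this]
      exact isClosed_Icc.inter (isClosed_iInter fun i => isClosed_le (continuous_dF u i).abs continuous_const)
    have hAlt : volume A < ⊤ := (measure_mono hAs).trans_lt isCompact_Icc.measure_lt_top
    have hvolA : c * ρ ^ 3 ≤ volume.real A :=
      (ENNReal.ofReal_le_iff_le_toReal hAlt.ne).1 (hvol ρ hρ hρ1)
    have hcont : Continuous fun t : Fin 30 → ℝ =>
        ∏ i, (ρ⁻¹ * Real.exp (-(Real.pi * dF ![1, 3, 5] u i t ^ 2 / ρ ^ 2))) :=
      continuous_finsetProd _ fun i _ => continuous_const.mul (Real.continuous_exp.comp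
        ((continuous_const.mul ((continuous_dF u i).pow 2)).div_const _).neg)
    have hinteg : IntegrableOn (fun t : Fin 30 → ℝ =>
        ∏ i, (ρ⁻¹ * Real.exp (-(Real.pi * dF ![1, 3, 5] u i t ^ 2 / ρ ^ 2))))
        (Set.Icc (fun _ : Fin 30 => (-1 : ℝ)) (fun _ => 1)) :=
      hcont.continuousOn.integrableOn_compact isCompact_Icc
    calc c' = (ρ⁻¹ * Real.exp (-Real.pi)) ^ 3 * (c * ρ ^ 3) := by rw [hc']; field_simp
      _ ≤ (ρ⁻¹ * Real.exp (-Real.pi)) ^ 3 * volume.real A := by gcongr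
      _ = ∫ t in A, (ρ⁻¹ * Real.exp (-Real.pi)) ^ 3 := by rw [setIntegral_const, smul_eq_mul, mul_comm]
      _ ≤ ∫ t in A, ∏ i, (ρ⁻¹ * Real.exp (-(Real.pi * dF ![1, 3, 5] u i t ^ 2 / ρ ^ 2))) := by
          refine setIntegral_mono_on (integrableOn_const hAlt.ne) (hinteg.mono_set hAs)
            hAc.measurableSet fun t ht => ?_
          have e3 : (ρ⁻¹ * Real.exp (-Real.pi)) ^ 3 = ∏ _i : Fin 3, (ρ⁻¹ * Real.exp (-Real.pi)) := by simp
          rw [e3]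
          refine prod_le_prod (fun i _ => by positivity) fun i _ => ?_
          refine mul_le_mul_of_nonneg_left (Real.exp_le_exp.2 (neg_le_neg ?_)) (by positivity)
          rw [div_le_iff₀ (by positivity)]
          refine mul_le_mul_of_nonneg_left ?_ Real.pi_pos.le
          exact sq_le_sq.2 ((ht.2 i).trans (le_abs_self ρ))
      _ ≤ _ := setIntegral_mono_set hinteg (Filter.Eventually.of_forall fun t =>
            prod_nonneg fun i _ => by positivity) hAs.eventuallyLE
  have htend : Filter.Tendsto (fun n : ℕ => ∫ β, singIntInner ![1, 3, 5] u β * (gw (1 / ((n : ℝ) + 1)) β : ℂ))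
      Filter.atTop (nhds (singInt ![1, 3, 5] u)) := by
    unfold singInt
    refine tendsto_integral_of_dominated_convergence (fun β => ‖singIntInner ![1, 3, 5] u β‖) (fun n => ?_)
      (integrable_singIntInner hu).norm (fun n => Filter.Eventually.of_forall fun β => ?_)
      (Filter.Eventually.of_forall fun β => ?_)
    · refine ((continuous_singIntInner u).mul ?_).aestronglyMeasurable
      refine Complex.continuous_ofReal.comp ?_
      unfold gw
      fun_prop
    · rw [norm_mul, Complex.norm_real, Real.norm_of_nonneg (gw_nonneg _ _)]
      exact mul_le_of_le_one_right (norm_nonneg _) (gw_le_one _ _)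
    · have h1 : Filter.Tendsto (fun n : ℕ => gw (1 / ((n : ℝ) + 1)) β) Filter.atTop (nhds (gw 0 β)) := by
        have h2 : Continuous fun ρ => gw ρ β := by unfold gw; fun_prop
        exact (h2.tendsto 0).comp tendsto_one_div_add_atTop_nhds_zero_nat
      have h3 : gw 0 β = 1 := by simp [gw]
      rw [h3] at h1
      have h4 := ((Complex.continuous_ofReal.tendsto 1).comp h1).const_mul (singIntInner ![1, 3, 5] u β)
      simpa using h4
  have hcl : IsClosed {z : ℂ | z.im = 0 ∧ c' ≤ z.re} :=
    (isClosed_eq Complex.continuous_im continuous_const).inter (isClosed_le continuous_const Complex.continuous_re)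
  have hmem : singInt ![1, 3, 5] u ∈ {z : ℂ | z.im = 0 ∧ c' ≤ z.re} := by
    refine hcl.mem_of_tendsto htend ?_
    have h5 : ∀ᶠ n : ℕ in Filter.atTop, 1 / ((n : ℝ) + 1) ≤ ρ₀ :=
      tendsto_one_div_add_atTop_nhds_zero_nat.eventually_le_const hρ₀
    filter_upwards [h5] with n hn
    have hρ : 0 < 1 / ((n : ℝ) + 1) := by positivity
    rw [smoothed_singInt u hρ]
    exact ⟨Complex.ofReal_im _, by rw [Complex.ofReal_re]; exact hlow _ hρ hn⟩
  refine ⟨(singInt ![1, 3, 5] u).re, hc'0.trans_le hmem.2, ?_⟩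
  exact Complex.ext (by simp) (by simpa using hmem.1)

/-! ### Positivity of the singular series -/

lemma SS_mul {g d : ℕ} (hg : 1 ≤ g) (hd : 1 ≤ d) (b : Fin 3 → ℤ) :
    SS (g * d) (fun i => g * b i) = g * SS d b := by
  have hg0 : (g : ℝ) ≠ 0 := by positivity
  have hd0 : (d : ℝ) ≠ 0 := by positivity
  have h1 : SS (g * d) (fun i => g * b i) =
      ∑ r ∈ range (g * d), e (PP (fun i => (b i : ℝ) / d) r) := by
    refine sum_congr rfl fun r _ => ?_
    congr 2
    ext i
    push_cast
    field_simp
  have h2 : ∀ m : ℕ, ∑ r ∈ range (m * d), e (PP (fun i => (b i : ℝ) / d) r) = m * SS d b := by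
    intro m
    induction m with
    | zero => simp
    | succ m ih =>
      rw [add_mul, one_mul, sum_range_add, ih]
      have h := sum_period (ψ := fun x => e (PP (fun i => (b i : ℝ) / d) x))
        (PP_frac_periodic d hd b) ((m * d : ℕ) : ℤ)
      push_cast at h
      push_cast
      rw [h, SS]
      ring
  rw [h1, h2]

/-- Each vector modulo `q` is uniquely `q / d` times a vector reduced modulo `d`, for a divisor `d` of `q`. -/
lemma sum_divisors_reduced {q : ℕ} (hq : 1 ≤ q) (f : (Fin 3 → ℕ) → ℂ) :
    ∑ d ∈ q.divisors, ∑ a ∈ AA d, f (fun i => q / d * a i) =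
      ∑ a ∈ Fintype.piFinset fun _ : Fin 3 => Icc 1 q, f a := by
  rw [sum_sigma']
  refine sum_bij (fun x _ => fun i => q / x.1 * x.2 i) ?_ ?_ ?_ ?_
  · rintro ⟨d, a⟩ hx
    simp only [mem_sigma, Nat.mem_divisors, mem_AA] at hx
    obtain ⟨⟨hd, -⟩, ha, -⟩ := hx
    rw [Fintype.mem_piFinset]
    intro i
    rw [mem_Icc]
    refine ⟨Nat.mul_pos (Nat.div_pos (Nat.le_of_dvd hq hd) (Nat.pos_of_dvd_of_pos hd hq)) (ha i).1, ?_⟩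
    calc q / d * a i ≤ q / d * d := Nat.mul_le_mul_left _ (ha i).2
      _ = q := Nat.div_mul_cancel hd
  · have key : ∀ d a, d ∣ q → a ∈ AA d → Nat.gcd (univ.gcd fun i => q / d * a i) q = q / d := by
      intro d a hd ha
      rw [mem_AA] at ha
      rw [Finset.gcd_mul_left, normalize_eq]
      conv_lhs => rw [← Nat.div_mul_cancel hd]
      rw [Nat.mul_div_cancel _ (Nat.pos_of_dvd_of_pos hd hq), Nat.gcd_mul_left, ha.2, mul_one]
    rintro ⟨d, a⟩ hx ⟨d', a'⟩ hx' h
    simp only [mem_sigma, Nat.mem_divisors] at hx hx'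
    simp only at h
    have k1 := key d a hx.1.1 hx.2
    rw [h, key d' a' hx'.1.1 hx'.2] at k1
    have hdd : d = d' := by
      rw [← Nat.div_div_self hx.1.1 (by omega), ← k1, Nat.div_div_self hx'.1.1 (by omega)]
    subst hdd
    have hpos : 0 < q / d := Nat.div_pos (Nat.le_of_dvd hq hx.1.1) (Nat.pos_of_dvd_of_pos hx.1.1 hq)
    have : a = a' := by
      ext i
      exact Nat.eq_of_mul_eq_mul_left hpos (congrFun h i)
    rw [this]
  · intro a ha
    simp only [Fintype.mem_piFinset, mem_Icc] at ha
    set g := Nat.gcd (univ.gcd a) q with hg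
    have hgq : g ∣ q := Nat.gcd_dvd_right _ _
    have hg0 : 0 < g := Nat.pos_of_dvd_of_pos hgq hq
    have hga : ∀ i, g ∣ a i := fun i => (Nat.gcd_dvd_left _ _).trans (Finset.gcd_dvd (mem_univ i))
    have hqq : q / (q / g) = g := Nat.div_div_self hgq (by omega)
    refine ⟨⟨q / g, fun i => a i / g⟩, ?_, ?_⟩
    · simp only [mem_sigma, Nat.mem_divisors, mem_AA]
      refine ⟨⟨Nat.div_dvd_of_dvd hgq, by omega⟩, fun i => ⟨?_, ?_⟩, ?_⟩
      · exact Nat.div_pos (Nat.le_of_dvd (ha i).1 (hga i)) hg0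
      · exact Nat.div_le_div_right (ha i).2
      · refine Nat.eq_of_mul_eq_mul_left hg0 ?_
        rw [mul_one, ← Nat.gcd_mul_left, Nat.mul_div_cancel' hgq]
        have : (g * univ.gcd fun i => a i / g) = univ.gcd a := by
          rw [← normalize_eq g, ← Finset.gcd_mul_left]
          congr 1
          ext i
          rw [normalize_eq, Nat.mul_div_cancel' (hga i)]
        rw [this]
    · ext i
      simp only [hqq]
      exact Nat.mul_div_cancel' (hga i)
  · rintro ⟨d, a⟩ _
    rfl

/-- Orthogonality of the additive characters modulo `q`. -/
lemma sum_e_Icc {q : ℕ} (hq : 1 ≤ q) (n : ℤ) :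
    ∑ a ∈ Icc 1 q, e ((a : ℝ) * n / q) = if (q : ℤ) ∣ n then (q : ℂ) else 0 := by
  have hq0 : (q : ℝ) ≠ 0 := by positivity
  have hpow : ∀ a : ℕ, e ((a : ℝ) * n / q) = e ((n : ℝ) / q) ^ a := by
    intro a
    induction a with
    | zero => simp [e_zero]
    | succ a ih =>
      rw [pow_succ, ← ih, ← e_add]
      congr 1
      push_cast
      ring
  split_ifs with h
  · obtain ⟨m, rfl⟩ := h
    have h1 : ∀ a ∈ Icc 1 q, e ((a : ℝ) * ((q * m : ℤ) : ℝ) / q) = 1 := by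
      intro a _
      rw [← e_int (a * m)]
      congr 1
      push_cast
      field_simp
    rw [sum_congr rfl h1]
    simp
  · simp only [hpow]
    have hne : e ((n : ℝ) / q) ≠ 1 := by
      intro h1
      rw [e, Complex.exp_eq_one_iff] at h1
      obtain ⟨m, hm⟩ := h1
      apply h
      refine ⟨m, ?_⟩
      have h2 : (2 * Real.pi * Complex.I : ℂ) ≠ 0 := Complex.two_pi_I_ne_zero
      have h3 : (((n : ℝ) / q : ℝ) : ℂ) = m := by
        apply mul_left_cancel₀ h2
        rw [hm]
        ring
      have h4 : (n : ℝ) / q = m := by exact_mod_cast h3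
      have h5 : (n : ℝ) = q * m := by rw [← h4]; field_simp
      exact_mod_cast h5
    have hq1 : e ((n : ℝ) / q) ^ q = 1 := by
      rw [← hpow, ← e_int n]
      congr 1
      field_simp
    rw [← Finset.Ico_add_one_right_eq_Icc, Finset.sum_Ico_eq_sum_range]
    simp only [pow_add, pow_one, ← mul_sum, Nat.add_sub_cancel]
    rw [geom_sum_eq hne, hq1]
    simp

/-- The number of solutions of the system modulo `q`. -/
noncomputable def MM (u : Fin 3 → Fin 30 → ℤ) (q : ℕ) : ℕ :=
  Nat.card {r : Fin 30 → ZMod q // ∀ i, dF ![1, 3, 5] u i r = 0}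

lemma dF_map {R S : Type*} [CommRing R] [CommRing S] (φ : R →+* S) (u : Fin 3 → Fin 30 → ℤ) (i : Fin 3)
    (t : Fin 30 → R) : dF ![1, 3, 5] u i (fun j => φ (t j)) = φ (dF ![1, 3, 5] u i t) := by
  simp [dF]

open scoped Classical in
lemma MM_eq_card (u : Fin 3 → Fin 30 → ℤ) {q : ℕ} (hq : 1 ≤ q) :
    MM u q = #{r ∈ Fintype.piFinset fun _ : Fin 30 => Icc 1 q |
      ∀ i, (q : ℤ) ∣ dF ![1, 3, 5] u i fun j => (r j : ℤ)} := by
  have : NeZero q := ⟨by omega⟩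
  have hd : ∀ (r : Fin 30 → ℕ) i, dF ![1, 3, 5] u i (fun j => (r j : ZMod q)) = 0 ↔
      (q : ℤ) ∣ dF ![1, 3, 5] u i fun j => (r j : ℤ) := by
    intro r i
    rw [← ZMod.intCast_zmod_eq_zero_iff_dvd]
    have := dF_map (Int.castRingHom (ZMod q)) u i (fun j => (r j : ℤ))
    simp only [eq_intCast, Int.cast_natCast] at this
    rw [this]
  rw [MM, Nat.card_eq_fintype_card, Fintype.card_subtype]
  symm
  refine card_bij (fun r _ j => (r j : ZMod q)) ?_ ?_ ?_
  · intro r hr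
    simp only [mem_filter, mem_univ, true_and] at hr ⊢
    exact fun i => (hd r i).2 (hr.2 i)
  · intro r hr r' hr' h
    simp only [mem_filter, Fintype.mem_piFinset, mem_Icc] at hr hr'
    ext j
    have h1 : (r j : ZMod q) = (r' j : ZMod q) := congrFun h j
    rw [ZMod.natCast_eq_natCast_iff] at h1
    have a1 := hr.1 j
    have a2 := hr'.1 j
    have h3 : (q : ℤ) ∣ (r' j : ℤ) - r j := (Nat.modEq_iff_dvd).1 h1
    have h4 : (r' j : ℤ) - r j = 0 := by
      refine Int.eq_zero_of_abs_lt_dvd h3 ?_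
      rw [abs_lt]
      constructor <;> omega
    omega
  · intro t ht
    simp only [mem_filter, mem_univ, true_and] at ht
    have ex : ∀ j, ∃ m : ℕ, (1 ≤ m ∧ m ≤ q) ∧ (m : ZMod q) = t j := by
      intro j
      by_cases h0 : (t j).val = 0
      · exact ⟨q, ⟨hq, le_rfl⟩, by rw [ZMod.natCast_self]; exact ((ZMod.val_eq_zero _).1 h0).symm⟩
      · exact ⟨(t j).val, ⟨by omega, (ZMod.val_lt _).le⟩, ZMod.natCast_zmod_val _⟩
    choose r hr1 hr2 using ex
    have e1 : (fun j => (r j : ZMod q)) = t := funext hr2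
    refine ⟨r, ?_, e1⟩
    simp only [mem_filter, Fintype.mem_piFinset, mem_Icc]
    refine ⟨hr1, fun i => (hd r i).1 ?_⟩
    rw [e1]
    exact ht i

lemma sum_divisors_aux (u : Fin 3 → Fin 30 → ℤ) {q : ℕ} (hq : 1 ≤ q) :
    ∑ d ∈ q.divisors, singSerTerm ![1, 3, 5] u d =
      ∑ a ∈ Fintype.piFinset fun _ : Fin 3 => Icc 1 q, ∏ j, (SS q (fun i => u i j * a i) / q) := by
  rw [← sum_divisors_reduced hq (fun a => ∏ j, (SS q (fun i => u i j * a i) / q))]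
  refine sum_congr rfl fun d hd => ?_
  rw [Nat.mem_divisors] at hd
  have hd1 : 1 ≤ d := Nat.pos_of_dvd_of_pos hd.1 hq
  rw [singSerTerm_eq u hd1]
  refine sum_congr rfl fun a _ => prod_congr rfl fun j _ => ?_
  obtain ⟨g, hg⟩ := hd.1
  have hg1 : 1 ≤ g := by
    rcases Nat.eq_zero_or_pos g with h | h
    · subst h; omega
    · exact h
  have e1 : q / d = g := by rw [hg, Nat.mul_div_cancel_left _ hd1]
  have e2 := SS_mul hg1 hd1 (fun i => u i j * a i)
  have e3 : SS q (fun i => u i j * ((q / d * a i : ℕ) : ℤ)) = g * SS d (fun i => u i j * a i) := by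
    rw [← e2, e1, hg, mul_comm d g]
    congr 1
    ext i
    push_cast
    ring
  rw [e3, hg]
  have hg0 : (g : ℂ) ≠ 0 := by exact_mod_cast (by omega : g ≠ 0)
  push_cast
  rw [mul_comm (d : ℂ), mul_div_mul_left _ _ hg0]

open scoped Classical in
lemma sum_e_box (u : Fin 3 → Fin 30 → ℤ) {q : ℕ} (hq : 1 ≤ q) (r : Fin 30 → ℕ) :
    ∑ a ∈ Fintype.piFinset fun _ : Fin 3 => Icc 1 q,
      e ((∑ i, (a i : ℝ) * ((dF ![1, 3, 5] u i fun j => ((r j : ℤ))) : ℝ)) / q) =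
      if ∀ i, (q : ℤ) ∣ dF ![1, 3, 5] u i fun j => (r j : ℤ) then (q : ℂ) ^ 3 else 0 := by
  have hc : ∀ i, dF ![1, 3, 5] u i (fun j => (((r j : ℤ)) : ℝ)) =
      ((dF ![1, 3, 5] u i (fun j => (r j : ℤ)) : ℤ) : ℝ) := fun i =>
    dF_map (Int.castRingHom ℝ) u i (fun j => (r j : ℤ))
  simp only [hc]
  generalize hn : (fun i => dF ![1, 3, 5] u i fun j => (r j : ℤ)) = n
  have hn' : ∀ i, (dF ![1, 3, 5] u i fun j => (r j : ℤ)) = n i := fun i => congrFun hn i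
  simp only [hn']
  have : ∀ a : Fin 3 → ℕ, e ((∑ i, (a i : ℝ) * (n i : ℝ)) / q) = ∏ i, e ((a i : ℝ) * (n i : ℝ) / q) := by
    intro a
    rw [sum_div, e_sum]
  simp only [this]
  rw [← prod_univ_sum (t := fun _ => Icc 1 q) (f := fun i a => e ((a : ℝ) * (n i : ℝ) / q))]
  simp only [sum_e_Icc hq]
  split_ifs with h
  · simp [h]
  · push Not at h
    obtain ⟨i, hi⟩ := h
    exact prod_eq_zero (mem_univ i) (if_neg hi)

/-- The partial sum of the singular series over the divisors of `q` is the normalised count of solutions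
modulo `q`. -/
theorem sum_divisors_singSerTerm (u : Fin 3 → Fin 30 → ℤ) {q : ℕ} (hq : 1 ≤ q) :
    ∑ d ∈ q.divisors, singSerTerm ![1, 3, 5] u d = (((MM u q : ℝ) / (q : ℝ) ^ 27 : ℝ) : ℂ) := by
  classical
  have hq0 : (q : ℂ) ≠ 0 := by exact_mod_cast (by omega : q ≠ 0)
  rw [sum_divisors_aux u hq]
  simp only [← sum_e_eq_prod_SS u hq]
  rw [← mul_sum, sum_comm, sum_congr rfl fun r _ => sum_e_box u hq r, ← sum_filter, sum_const,
    MM_eq_card u hq]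
  generalize #{r ∈ Fintype.piFinset fun _ : Fin 30 => Icc 1 q |
      ∀ i, (q : ℤ) ∣ dF ![1, 3, 5] u i fun j => (r j : ℤ)} = m
  push_cast
  rw [nsmul_eq_mul, eq_div_iff (pow_ne_zero _ hq0), one_div, mul_assoc, mul_assoc, ← pow_add,
    inv_mul_eq_iff_eq_mul₀ (pow_ne_zero _ hq0), mul_comm]

lemma MM_mul (u : Fin 3 → Fin 30 → ℤ) {m n : ℕ} (h : m.Coprime n) :
    MM u (m * n) = MM u m * MM u n := by
  unfold MM
  rw [← Nat.card_prod]
  set φ := ZMod.chineseRemainder h with hφ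
  have key : ∀ (t : Fin 30 → ZMod (m * n)) i, dF ![1, 3, 5] u i t = 0 ↔
      dF ![1, 3, 5] u i (fun j => (φ (t j)).1) = 0 ∧ dF ![1, 3, 5] u i (fun j => (φ (t j)).2) = 0 := by
    intro t i
    have h1 := dF_map ((RingHom.fst (ZMod m) (ZMod n)).comp φ.toRingHom) u i t
    have h2 := dF_map ((RingHom.snd (ZMod m) (ZMod n)).comp φ.toRingHom) u i t
    simp only [RingHom.comp_apply, RingHom.coe_fst, RingHom.coe_snd, RingEquiv.toRingHom_eq_coe,
      RingHom.coe_coe] at h1 h2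
    rw [h1, h2, ← Prod.mk_eq_zero, Prod.mk.eta, map_eq_zero_iff φ φ.injective]
  refine Nat.card_congr
    { toFun := fun t => (⟨fun j => (φ (t.1 j)).1, fun i => ((key t.1 i).1 (t.2 i)).1⟩,
        ⟨fun j => (φ (t.1 j)).2, fun i => ((key t.1 i).1 (t.2 i)).2⟩)
      invFun := fun x => ⟨fun j => φ.symm (x.1.1 j, x.2.1 j), fun i => (key _ i).2 ?_⟩
      left_inv := fun t => ?_
      right_inv := fun x => ?_ }
  · simp only [RingEquiv.apply_symm_apply]
    exact ⟨x.1.2 i, x.2.2 i⟩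
  · ext j
    simp
  · ext j <;> simp

/-- The density of solutions modulo `q`. -/
noncomputable def TT (u : Fin 3 → Fin 30 → ℤ) (q : ℕ) : ℝ := (MM u q : ℝ) / (q : ℝ) ^ 27

lemma TT_mul (u : Fin 3 → Fin 30 → ℤ) (m n : ℕ) (h : m.Coprime n) :
    TT u (m * n) = TT u m * TT u n := by
  unfold TT
  rw [MM_mul u h]
  push_cast
  rw [mul_pow, mul_div_mul_comm]

lemma one_le_MM (u : Fin 3 → Fin 30 → ℤ) {q : ℕ} (hq : 1 ≤ q) : 1 ≤ MM u q := by
  have : NeZero q := ⟨by omega⟩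
  unfold MM
  have : Nonempty {r : Fin 30 → ZMod q // ∀ i, dF ![1, 3, 5] u i r = 0} := by
    refine ⟨⟨fun _ => 0, fun i => ?_⟩⟩
    simp only [dF]
    refine sum_eq_zero fun j _ => ?_
    fin_cases i <;> simp
  exact Nat.card_pos

lemma TT_one (u : Fin 3 → Fin 30 → ℤ) : TT u 1 = 1 := by
  have h : MM u 1 = 1 := by
    refine le_antisymm ?_ (one_le_MM u le_rfl)
    unfold MM
    rw [Finite.card_le_one_iff_subsingleton]
    infer_instance
  simp [TT, h]

lemma card_compl_range {σ : Fin 3 → Fin 30} (hσ : Function.Injective σ) :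
    Nat.card {j // j ∉ Set.range σ} = 27 := by
  classical
  rw [Nat.card_eq_fintype_card, Fintype.card_subtype_compl, Fintype.card_fin]
  have : Fintype.card {x // x ∈ Set.range σ} = 3 := by
    have := Set.card_range_of_injective hσ
    rw [Fintype.card_fin] at this
    convert this
  rw [this]

/-- Near a nonsingular `p`-adic integral zero one may prescribe `27` of the coordinates freely. -/
lemma padic_lift {p : ℕ} [Fact p.Prime] {u : Fin 3 → Fin 30 → ℤ} {η : Fin 30 → ℚ_[p]}
    (hη : NonsingularSol ![1, 3, 5] u η) (hinteg : ∀ j, ‖η j‖ ≤ 1) :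
    ∃ (σ : Fin 3 → Fin 30) (m : ℕ), Function.Injective σ ∧ ∀ z : Fin 30 → ℕ,
      ∃ x : Fin 30 → ℤ_[p], (∀ i, dF ![1, 3, 5] u i x = 0) ∧
        ∀ j, j ∉ Set.range σ → (x j : ℚ_[p]) = η j + (p : ℚ_[p]) ^ m * z j := by
  classical
  obtain ⟨σ, hσ, -, hmap⟩ := exists_Psi hη
  have hU : Metric.ball η 1 ∈ nhds η := Metric.ball_mem_nhds _ one_pos
  have h1 : Psi u σ '' Metric.ball η 1 ∈ nhds (Psi u σ η) := by
    rw [← hmap]; exact Filter.image_mem_map hU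
  obtain ⟨r, hr, hball⟩ := Metric.mem_nhds_iff.1 h1
  have hp1 : (1 : ℝ) < p := by exact_mod_cast (Fact.out : p.Prime).one_lt
  have hnp : ‖(p : ℚ_[p])‖ < 1 := Padic.norm_p_lt_one
  obtain ⟨m, hm⟩ := exists_pow_lt_of_lt_one hr hnp
  refine ⟨σ, m, hσ, fun z => ?_⟩
  set y : Fin 30 → ℚ_[p] := fun j => if j ∈ Set.range σ then 0 else η j + (p : ℚ_[p]) ^ m * z j with hy
  have hyb : y ∈ Metric.ball (Psi u σ η) r := by
    rw [mem_ball_iff_norm, pi_norm_lt_iff hr]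
    intro j
    rw [Pi.sub_apply]
    by_cases hj : j ∈ Set.range σ
    · obtain ⟨i, rfl⟩ := hj
      rw [Psi_apply u hσ, hη.1 i]
      simpa [hy] using hr
    · rw [Psi_apply_of_notMem u η hj]
      simp only [hy, hj, if_false, add_sub_cancel_left, norm_mul, norm_pow]
      refine lt_of_le_of_lt ?_ hm
      refine mul_le_of_le_one_right (by positivity) ?_
      exact_mod_cast Padic.norm_int_le_one (z j : ℤ)
  obtain ⟨x, hx, hxy⟩ := hball hyb
  have hxint : ∀ j, ‖x j‖ ≤ 1 := by
    intro j
    have h2 : ‖x j - η j‖ ≤ 1 := by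
      rw [mem_ball_iff_norm] at hx
      exact (norm_le_pi_norm (x - η) j).trans hx.le
    have h3 := Padic.nonarchimedean (x j - η j) (η j)
    rw [sub_add_cancel] at h3
    exact h3.trans (max_le h2 (hinteg j))
  refine ⟨fun j => ⟨x j, hxint j⟩, fun i => ?_, fun j hj => ?_⟩
  · have h2 := dF_map (PadicInt.Coe.ringHom (p := p)) u i (fun j => ⟨x j, hxint j⟩)
    have h3 : dF ![1, 3, 5] u i x = 0 := by
      rw [← Psi_apply u hσ x i, hxy]
      simp [hy]
    apply PadicInt.coe_eq_zero.1
    rw [← h3]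
    exact h2.symm
  · have := congrFun hxy j
    rw [Psi_apply_of_notMem u x hj] at this
    refine this.trans ?_
    simp only [hy, hj, if_false]

/-- A nonsingular `p`-adic zero bounds the solution densities modulo powers of `p` from below. -/
theorem TT_prime_pow_ge {p : ℕ} [Fact p.Prime] {u : Fin 3 → Fin 30 → ℤ}
    (h : ∃ η : Fin 30 → ℚ_[p], NonsingularSol ![1, 3, 5] u η) :
    ∃ c : ℝ, 0 < c ∧ ∀ n : ℕ, c ≤ TT u (p ^ n) := by
  obtain ⟨η₀, hη₀⟩ := h
  have hpp : p.Prime := Fact.out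
  have hp0 : (0 : ℝ) < p := by exact_mod_cast hpp.pos
  have hp1 : (1 : ℝ) ≤ p := by exact_mod_cast hpp.one_lt.le
  obtain ⟨a, ha0, ha⟩ := NormedField.exists_norm_lt ℚ_[p] (r := (1 + ‖η₀‖)⁻¹) (by positivity)
  have hη := hη₀.smul (norm_pos_iff.1 ha0)
  have hinteg : ∀ j, ‖a * η₀ j‖ ≤ 1 := by
    intro j
    rw [norm_mul]
    calc ‖a‖ * ‖η₀ j‖ ≤ (1 + ‖η₀‖)⁻¹ * (1 + ‖η₀‖) := by
          refine mul_le_mul ha.le ?_ (norm_nonneg _) (by positivity)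
          linarith [norm_le_pi_norm η₀ j]
      _ = 1 := inv_mul_cancel₀ (by positivity)
  obtain ⟨σ, m, hσ, hx⟩ := padic_lift hη hinteg
  refine ⟨((p : ℝ) ^ (27 * m))⁻¹, by positivity, fun n => ?_⟩
  unfold TT
  push_cast
  rw [← pow_mul, inv_eq_one_div, div_le_div_iff₀ (by positivity) (by positivity), one_mul]
  have hpn : 1 ≤ p ^ n := Nat.one_le_pow _ _ hpp.pos
  rcases le_total n m with hnm | hnm
  · have h1 : (1 : ℝ) ≤ MM u (p ^ n) := by exact_mod_cast one_le_MM u hpn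
    calc (p : ℝ) ^ (n * 27) ≤ (p : ℝ) ^ (27 * m) := pow_le_pow_right₀ hp1 (by omega)
      _ ≤ _ := le_mul_of_one_le_left (by positivity) h1
  · suffices h : p ^ ((n - m) * 27) ≤ MM u (p ^ n) by
      have h' : (p : ℝ) ^ ((n - m) * 27) ≤ MM u (p ^ n) := by exact_mod_cast h
      calc (p : ℝ) ^ (n * 27) = (p : ℝ) ^ ((n - m) * 27) * (p : ℝ) ^ (27 * m) := by
            rw [← pow_add]; congr 1; omega
        _ ≤ _ := mul_le_mul_of_nonneg_right h' (by positivity)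
    classical
    choose X hX0 hX using hx
    have : NeZero (p ^ n) := ⟨by omega⟩
    let ext : ({j // j ∉ Set.range σ} → Fin (p ^ (n - m))) → Fin 30 → ℕ := fun z j =>
      if hj : j ∉ Set.range σ then (z ⟨j, hj⟩ : ℕ) else 0
    let Φ : ({j // j ∉ Set.range σ} → Fin (p ^ (n - m))) →
        {r : Fin 30 → ZMod (p ^ n) // ∀ i, dF ![1, 3, 5] u i r = 0} := fun z =>
      ⟨fun j => PadicInt.toZModPow n (X (ext z) j), fun i => by
        rw [dF_map, hX0, map_zero]⟩
    have hΦ : Function.Injective Φ := by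
      intro z z' hz
      ext j
      have h1 : PadicInt.toZModPow n (X (ext z) j.1) = PadicInt.toZModPow n (X (ext z') j.1) :=
        congrFun (congrArg Subtype.val hz) j.1
      have h2 : X (ext z) j.1 - X (ext z') j.1 =
          (((p : ℤ) ^ m * ((z j : ℕ) - (z' j : ℕ) : ℤ) : ℤ) : ℤ_[p]) := by
        apply PadicInt.ext
        push_cast
        rw [hX _ _ j.2, hX _ _ j.2]
        simp only [ext, j.2, not_false_eq_true, dif_pos]
        ring
      have h3 : PadicInt.toZModPow n (X (ext z) j.1 - X (ext z') j.1) = 0 := by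
        rw [map_sub, h1, sub_self]
      rw [h2, map_intCast, ZMod.intCast_zmod_eq_zero_iff_dvd] at h3
      have h4 : (p : ℤ) ^ (n - m) ∣ ((z j : ℕ) - (z' j : ℕ) : ℤ) := by
        have e1 : ((p ^ n : ℕ) : ℤ) = (p : ℤ) ^ m * (p : ℤ) ^ (n - m) := by
          push_cast; rw [← pow_add]; congr 1; omega
        rw [e1] at h3
        refine Int.dvd_of_mul_dvd_mul_left ?_ h3
        exact pow_ne_zero _ (by exact_mod_cast hpp.ne_zero)
      have b1 : ((z j : ℕ) : ℤ) < (p : ℤ) ^ (n - m) := by exact_mod_cast (z j).2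
      have b2 : ((z' j : ℕ) : ℤ) < (p : ℤ) ^ (n - m) := by exact_mod_cast (z' j).2
      have h5 := Int.eq_zero_of_abs_lt_dvd h4 (by rw [abs_lt]; constructor <;> omega)
      omega
    have hc := Nat.card_le_card_of_injective Φ hΦ
    rw [Nat.card_fun, card_compl_range hσ, Nat.card_fin, ← pow_mul] at hc
    exact hc

lemma one_sub_sum_le_prod {ι : Type*} (s : Finset ι) (y : ι → ℝ) (h0 : ∀ i ∈ s, 0 ≤ y i)
    (h1 : ∀ i ∈ s, y i ≤ 1) : 1 - ∑ i ∈ s, y i ≤ ∏ i ∈ s, (1 - y i) := by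
  classical
  induction s using Finset.induction_on with
  | empty => simp
  | insert a s ha ih =>
    rw [sum_insert ha, prod_insert ha]
    have ih' := ih (fun i hi => h0 i (mem_insert_of_mem hi)) (fun i hi => h1 i (mem_insert_of_mem hi))
    have a0 := h0 a (mem_insert_self a s)
    have a1 := h1 a (mem_insert_self a s)
    have s0 : 0 ≤ ∑ i ∈ s, y i := sum_nonneg fun i hi => h0 i (mem_insert_of_mem hi)
    nlinarith [mul_le_mul_of_nonneg_left ih' (sub_nonneg.2 a1), mul_nonneg a0 s0]

/-- Abstract form of the positivity of an absolutely convergent Euler product: `T` is multiplicative, its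
values are the divisor sums of an absolutely summable `A`, and on the powers of each prime `T` is bounded
below by a positive constant. -/
lemma divisor_sum_ge {A : ℕ → ℂ} {T : ℕ → ℝ} (hA : Summable fun q => ‖A q‖)
    (hAT : ∀ q, 1 ≤ q → ∑ d ∈ q.divisors, A d = (T q : ℂ))
    (hmul : ∀ m n : ℕ, m.Coprime n → T (m * n) = T m * T n) (hT1 : T 1 = 1)
    (hp : ∀ p : ℕ, p.Prime → ∃ c : ℝ, 0 < c ∧ ∀ n : ℕ, c ≤ T (p ^ n)) :
    ∃ c : ℝ, 0 < c ∧ ∀ q, 1 ≤ q → c ≤ T q := by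
  classical
  have ex : ∀ p : ℕ, ∃ c : ℝ, 0 < c ∧ c ≤ 1 ∧ (p.Prime → ∀ n : ℕ, c ≤ T (p ^ n)) := by
    intro p
    by_cases h : p.Prime
    · obtain ⟨c, hc, hcn⟩ := hp p h
      exact ⟨min c 1, lt_min hc one_pos, min_le_right _ _, fun _ n => (min_le_left _ _).trans (hcn n)⟩
    · exact ⟨1, one_pos, le_rfl, fun h' => absurd h' h⟩
  choose c hc0 hc1 hcT using ex
  have hA1 : A 1 = 1 := by
    have := hAT 1 le_rfl
    rw [Nat.divisors_one, sum_singleton, hT1] at this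
    simpa using this
  obtain ⟨s, hs⟩ := summable_iff_vanishing_norm.1 hA (1 / 2) (by norm_num)
  set N := s.sup id + 1 with hN
  refine ⟨(∏ p ∈ range N, c p) * (1 / 2), mul_pos (prod_pos fun p _ => hc0 p) (by norm_num),
    fun q hq => ?_⟩
  have hfac := Nat.multiplicative_factorization T hmul hT1 (n := q) (by omega)
  rw [hfac, Finsupp.prod, Nat.support_factorization]
  have hpr : ∀ p ∈ q.primeFactors, p.Prime := fun p h => Nat.prime_of_mem_primeFactors h
  generalize hv : q.factorization = v
  rw [← prod_filter_mul_prod_filter_not q.primeFactors (fun p => p < N)]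
  have hsmall : ∏ p ∈ range N, c p ≤ ∏ p ∈ q.primeFactors with p < N, T (p ^ v p) := by
    calc ∏ p ∈ range N, c p ≤ ∏ p ∈ q.primeFactors with p < N, c p := by
          rw [← prod_sdiff (s₁ := q.primeFactors.filter (fun p => p < N)) (s₂ := range N)
            fun p h => mem_range.2 (mem_filter.1 h).2]
          exact mul_le_of_le_one_left (prod_nonneg fun p _ => (hc0 p).le)
            (prod_le_one (fun p _ => (hc0 p).le) fun p _ => hc1 p)
      _ ≤ _ := prod_le_prod (fun p _ => (hc0 p).le) fun p h => hcT p (hpr p (mem_filter.1 h).1) _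
  set L := q.primeFactors.filter (fun p => ¬ p < N) with hL
  have hLp : ∀ p ∈ L, p.Prime ∧ N ≤ p := fun p h =>
    ⟨hpr p (mem_filter.1 h).1, by have := (mem_filter.1 h).2; omega⟩
  set D : ℕ → Finset ℕ := fun p => (p ^ v p).divisors.erase 1 with hD
  have hDp : ∀ p ∈ L, ∀ d ∈ D p, p ∣ d := by
    intro p hpL d hd
    simp only [hD, mem_erase, Nat.mem_divisors] at hd
    obtain ⟨k, -, rfl⟩ := (Nat.dvd_prime_pow (hLp p hpL).1).1 hd.2.1
    exact dvd_pow_self p (by rintro rfl; exact hd.1 (pow_zero p))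
  have hDsum : ∀ t ⊆ L, ∑ p ∈ t, ∑ d ∈ D p, ‖A d‖ < 1 / 2 := by
    intro t ht
    rw [← sum_biUnion]
    · refine (le_abs_self _).trans_lt (hs _ ?_)
      rw [Finset.disjoint_left]
      intro d hd hds
      rw [mem_biUnion] at hd
      obtain ⟨p, hpt, hdp⟩ := hd
      have h1 := Nat.le_of_dvd (by
        simp only [hD, mem_erase, Nat.mem_divisors] at hdp
        exact Nat.pos_of_dvd_of_pos hdp.2.1 (Nat.pos_of_ne_zero hdp.2.2)) (hDp p (ht hpt) d hdp)
      have h2 := (hLp p (ht hpt)).2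
      have h3 : d ≤ s.sup id := le_sup (f := id) hds
      omega
    · intro p hpt p' hpt' hne
      rw [Function.onFun, Finset.disjoint_left]
      intro d hd hd'
      have h1 := hDp p' (ht hpt') d hd'
      simp only [hD, mem_erase, Nat.mem_divisors] at hd
      have h2 := (hLp p (ht hpt)).1
      have h3 := (hLp p' (ht hpt')).1
      exact hne ((Nat.prime_dvd_prime_iff_eq h3 h2).1 (h3.dvd_of_dvd_pow (h1.trans hd.2.1))).symm
  have hy0 : ∀ p, 0 ≤ ∑ d ∈ D p, ‖A d‖ := fun p => sum_nonneg fun _ _ => norm_nonneg _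
  have hy1 : ∀ p ∈ L, ∑ d ∈ D p, ‖A d‖ ≤ 1 := by
    intro p hpL
    have := hDsum {p} (by simpa using hpL)
    rw [sum_singleton] at this
    linarith
  have hTp : ∀ p ∈ L, 1 - ∑ d ∈ D p, ‖A d‖ ≤ T (p ^ v p) := by
    intro p hpL
    have hpos : 1 ≤ p ^ v p := Nat.one_le_pow _ _ (hLp p hpL).1.pos
    have h1 := hAT (p ^ v p) hpos
    rw [← add_sum_erase _ _ (Nat.one_mem_divisors.2 (by omega)), hA1] at h1
    have h2 : ‖((T (p ^ v p) - 1 : ℝ) : ℂ)‖ ≤ ∑ d ∈ D p, ‖A d‖ := by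
      push_cast
      rw [← h1, add_sub_cancel_left]
      exact norm_sum_le _ _
    rw [Complex.norm_real] at h2
    have h3 := neg_abs_le (T (p ^ v p) - 1)
    rw [Real.norm_eq_abs] at h2
    linarith
  have hlarge : (1 / 2 : ℝ) ≤ ∏ p ∈ L, T (p ^ v p) := by
    calc (1 / 2 : ℝ) ≤ 1 - ∑ p ∈ L, ∑ d ∈ D p, ‖A d‖ := by linarith [hDsum L (Subset.refl _)]
      _ ≤ ∏ p ∈ L, (1 - ∑ d ∈ D p, ‖A d‖) := one_sub_sum_le_prod _ _ (fun p _ => hy0 p) hy1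
      _ ≤ _ := prod_le_prod (fun p hpL => sub_nonneg.2 (hy1 p hpL)) hTp
  exact mul_le_mul hsmall hlarge (by norm_num) ((prod_pos fun p _ => hc0 p).le.trans hsmall)

lemma tsum_pos_of_divisor_sum {A : ℕ → ℂ} {T : ℕ → ℝ} (hA : Summable fun q => ‖A q‖) (hA0 : A 0 = 0)
    (hAT : ∀ q, 1 ≤ q → ∑ d ∈ q.divisors, A d = (T q : ℂ)) {c : ℝ} (hc : ∀ q, 1 ≤ q → c ≤ T q) :
    (∑' q, A q).im = 0 ∧ c ≤ (∑' q, A q).re := by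
  have htend : Filter.Tendsto (fun n : ℕ => ∑ d ∈ insert 0 (n.factorial.divisors), A d) Filter.atTop
      (nhds (∑' q, A q)) := by
    have h1 : HasSum A (∑' q, A q) := hA.of_norm.hasSum
    rw [HasSum, SummationFilter.unconditional_filter] at h1
    refine h1.comp (Filter.tendsto_atTop_finset_of_monotone ?_ ?_)
    · intro m n hmn
      exact insert_subset_insert _ (Nat.divisors_subset_of_dvd (Nat.factorial_ne_zero _)
        (Nat.factorial_dvd_factorial hmn))
    · intro x
      rcases Nat.eq_zero_or_pos x with rfl | hx
      · exact ⟨0, mem_insert_self _ _⟩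
      · exact ⟨x, mem_insert_of_mem (Nat.mem_divisors.2 ⟨Nat.dvd_factorial hx le_rfl, Nat.factorial_ne_zero _⟩)⟩
  have hcl : IsClosed {z : ℂ | z.im = 0 ∧ c ≤ z.re} :=
    (isClosed_eq Complex.continuous_im continuous_const).inter (isClosed_le continuous_const Complex.continuous_re)
  refine hcl.mem_of_tendsto htend (Filter.Eventually.of_forall fun n => ?_)
  rw [sum_insert (by simp), hA0, zero_add, hAT _ n.factorial_pos]
  exact ⟨Complex.ofReal_im _, by rw [Complex.ofReal_re]; exact hc _ n.factorial_pos⟩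

/-- The singular series is positive when there are nonsingular `p`-adic zeros for all `p`. -/
theorem singSer_pos {u : Fin 3 → Fin 30 → ℤ} (hu : ∀ i j, u i j ≠ 0)
    (h : ∀ (p : ℕ) (_ : Fact p.Prime), ∃ η : Fin 30 → ℚ_[p], NonsingularSol ![1, 3, 5] u η) :
    ∃ c : ℝ, 0 < c ∧ singSer ![1, 3, 5] u = (c : ℂ) := by
  have hA0 : singSerTerm ![1, 3, 5] u 0 = 0 := by simp [singSerTerm]
  have hA : Summable fun q => ‖singSerTerm ![1, 3, 5] u q‖ :=
    (summable_nat_add_iff 1).1 (summable_singSerTerm hu)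
  have hAT : ∀ q, 1 ≤ q → ∑ d ∈ q.divisors, singSerTerm ![1, 3, 5] u d = (TT u q : ℂ) :=
    fun q hq => sum_divisors_singSerTerm u hq
  have hS : singSer ![1, 3, 5] u = ∑' q, singSerTerm ![1, 3, 5] u q := by
    rw [hA.of_norm.tsum_eq_zero_add, hA0, zero_add, singSer]
  obtain ⟨c, hc, hcT⟩ := divisor_sum_ge hA hAT (TT_mul u) (TT_one u) fun p hp => by
    have : Fact p.Prime := ⟨hp⟩
    exact TT_prime_pow_ge (h p this)
  have key := tsum_pos_of_divisor_sum hA hA0 hAT hcT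
  rw [← hS] at key
  exact ⟨(singSer ![1, 3, 5] u).re, hc.trans_le key.2, Complex.ext (by simp) (by simpa using key.1)⟩

theorem stmt1 (u : Fin 3 → Fin 30 → ℤ) (hu : ∀ i j, u i j ≠ 0) :
    Integrable (singIntInner ![1, 3, 5] u) ∧
    Summable (fun q : ℕ => ‖singSerTerm ![1, 3, 5] u (q + 1)‖) ∧
    (∀ ε : ℝ, 0 < ε → ∃ C : ℝ, ∀ X : ℝ, 1 ≤ X →
      ‖(NF ![1, 3, 5] u X : ℂ) - singInt ![1, 3, 5] u * singSer ![1, 3, 5] u *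
          ((X ^ (21 : ℕ) : ℝ) : ℂ)‖ ≤ C * X ^ ((21 : ℝ) - 1 / 8 + ε)) ∧
    ((∃ η : Fin 30 → ℝ, NonsingularSol ![1, 3, 5] u η) →
      (∀ (p : ℕ) (_ : Fact p.Prime),
        ∃ η : Fin 30 → ℚ_[p], NonsingularSol ![1, 3, 5] u η) →
      ∃ c : ℝ, 0 < c ∧ singInt ![1, 3, 5] u * singSer ![1, 3, 5] u = (c : ℂ)) := by
  refine ⟨integrable_singIntInner hu, summable_singSerTerm hu, fun ε hε => asymp hu hε,
    fun hr hp => ?_⟩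
  obtain ⟨c₁, hc₁, h₁⟩ := singInt_pos hu hr
  obtain ⟨c₂, hc₂, h₂⟩ := singSer_pos hu hp
  exact ⟨c₁ * c₂, mul_pos hc₁ hc₂, by rw [h₁, h₂, Complex.ofReal_mul]⟩
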